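/- The largest positive integer that is both a sum of three Fibonacci numbers and a concatenation of three repdigits in base 3 is 196829. That is: 196829 = F_{27} + F_{14} + F_{9}, 196829 is a concatenation of three repdigits in base 3 (its base-3 expansion is 100222222222, with d_1 = 1, ℓ_1 = 1, d_2 = 0, ℓ_2 = 2, d_3 = 2, ℓ_3 = 9), and every positive integer N that equals F_{n_1} + F_{n_2} + F_{n_3} for some integers n_1 ≥ n_2 ≥ n_3 ≥ 0 and is a concatenation of three repdigits in base 3 satisfies N ≤ 196829. -/

import Mathlib

/-!
Let `N = F_{n₁} + F_{n₂} + F_{n₃}` be a concatenation of three repdigits in base `3`. By Binet's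
formula `√5 N` is `φ ^ n * u` up to a bounded error, where `n = n₁` and
`u = 1 + φ ^ (-D₂) + φ ^ (-D₃)`; by geometric series `2 N` is `3 ^ a * v` up to a bounded error,
where `v = d - e₁ * 3 ^ (-g) - e₂ * 3 ^ (-h)` with small digits. So
`n log φ - a log 3 - log (√5 v / (2 u))` is of size `3 ^ (-a)`. This is the structure `LRel`, and
`exists_LRel` derives it, with well separated indices, for every `N > 196829`.

*Linear forms.* `linear_form_lower` is a lower bound for `n log φ - a log 3 - log γ` with `γ` in
`ℚ(√5)`, of the shape `exp (-C W ^ 3 h)` where `h` bounds the height of `γ` and `W ≈ log n`. It is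
proved by Baker's method with real analysis only. The pigeonhole principle gives a nonzero integer
polynomial in `x, y, Z` which is small wherever `x log φ + y log 3 ≈ log Z`
(`exists_auxiliary`, `auxiliary_small`). If the linear form were tiny, this would apply to the points
`(λ₁ + λ₃ n, λ₂ - λ₃ a, φ ^ λ₁ 3 ^ λ₂ γ ^ λ₃)` for `λ` in a box; Liouville's inequality for the
norm from `ℚ(√5)` then makes the polynomial vanish there, which `zero_estimate` forbids. The zero
estimate rests on Vandermonde-type determinants of shifted polynomials, which eliminate `Z`, and on
Bézout's inequality for plane curves (`bezout`).

*Gap principle.* Given a threshold `G`, drop from `u` and `v` the terms whose gap among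
`D₂, D₃, g, h` exceeds `G`. The rest has height `O(G)`, so the lower bound yields a gap in an
explicit window `(G, G']` (`gap_step`). Five disjoint windows cannot be served by four gaps, hence
`n < 2 ^ 455` (`LRel.initial`).

*Reduction.* Multiply the linear form by the denominator `q` of a convergent of `log φ / log 3`
with `q` large against `n`: then `n q log φ / log 3` is close to an integer, so `q log u / log 3`
and `q log (√5 v / 2) / log 3` nearly agree modulo `1`. All values of `log u` and `log v` with gaps
below a bound are computed in fixed-point arithmetic and compared modulo `1` for three convergents
at once, by bitmaps of buckets (`pairCheck_sound`). Coincidences which come from true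
multiplicative relations are recognised separately and bound `n` directly. Since only the gaps
not yet known to be small are truncated, each comparison shows that some gap is small, and the gap
principle with fewer gaps left gives a better bound for `n`: successively `3 * 10 ^ 82`,
`3 * 10 ^ 55`, `15 * 10 ^ 28`, `260` and `82` (`LRel.bound_two`, …, `LRel.bound_seven`).

*Enumeration.* The triples of indices at most `82` are checked by counting the runs of base-`3`
digits of the sum (`small_enum`).
-/

open Real

/-- `N` is a concatenation of three repdigits in base `b`. -/
def IsConcatThreeRepdigits (b N : ℕ) : Prop :=
  ∃ d1 d2 d3 l1 l2 l3 : ℕ,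
    1 ≤ d1 ∧ d1 < b ∧ d2 < b ∧ d3 < b ∧
    1 ≤ l1 ∧ 1 ≤ l2 ∧ 1 ≤ l3 ∧
    N = d1 * ((b ^ l1 - 1) / (b - 1)) * b ^ (l2 + l3) +
        d2 * ((b ^ l2 - 1) / (b - 1)) * b ^ l3 +
        d3 * ((b ^ l3 - 1) / (b - 1))

/-! ### Zero estimate: one progression -/

section

open Polynomial

/-- The matrix with entries `q s (X + m) * b s ^ m`, in row `m` and column `s`. -/
noncomputable def shiftMat {k : ℕ} (q : Fin k → ℝ[X]) (b : Fin k → ℝ) : Matrix (Fin k) (Fin k) ℝ[X] :=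
  Matrix.of fun m s => taylor (m : ℝ) (q s) * C (b s ^ (m : ℕ))

theorem shiftMat_det_natDegree_le {k : ℕ} (q : Fin k → ℝ[X]) (b : Fin k → ℝ) :
    (shiftMat q b).det.natDegree ≤ ∑ s, (q s).natDegree := by
  rw [Matrix.det_apply]
  refine natDegree_sum_le_of_forall_le _ _ fun σ _ => ?_
  refine (natDegree_smul_le _ _).trans ?_
  refine (natDegree_prod_le _ _).trans (Finset.sum_le_sum fun s _ => ?_)
  simp only [shiftMat, Matrix.of_apply]
  refine natDegree_mul_le.trans ?_
  simp [natDegree_taylor]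

/-- The coefficient of highest possible degree is, up to leading coefficients, a Vandermonde determinant. -/
theorem shiftMat_det_coeff {k : ℕ} (q : Fin k → ℝ[X]) (b : Fin k → ℝ) :
    (shiftMat q b).det.coeff (∑ s, (q s).natDegree)
      = (∏ s, (q s).leadingCoeff) * (Matrix.vandermonde b).det := by
  rw [← Matrix.det_transpose (Matrix.vandermonde b), Matrix.det_apply, Matrix.det_apply, finsetSum_coeff, Finset.mul_sum]
  refine Finset.sum_congr rfl fun σ _ => ?_
  have h : (∏ i, shiftMat q b (σ i) i).coeff (∑ s, (q s).natDegree)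
      = ∏ i, (q i).leadingCoeff * b i ^ ((σ i : Fin k) : ℕ) := by
    have key : ∀ t : Finset (Fin k), (∏ i ∈ t, shiftMat q b (σ i) i).coeff (∑ s ∈ t, (q s).natDegree)
      = ∏ i ∈ t, (q i).leadingCoeff * b i ^ ((σ i : Fin k) : ℕ) := by
      intro t
      induction t using Finset.induction_on with
      | empty => simp
      | insert i t hi ih =>
        rw [Finset.prod_insert hi, Finset.sum_insert hi, Finset.prod_insert hi, ← ih]
        rw [coeff_mul_add_eq_of_natDegree_le]
        · congr 1
          simp only [shiftMat, Matrix.of_apply, coeff_mul_C]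
          congr 1
          rw [← leadingCoeff_taylor (r := ((σ i : ℕ) : ℝ)), leadingCoeff, natDegree_taylor]
        · simp only [shiftMat, Matrix.of_apply]
          refine natDegree_mul_le.trans ?_
          simp [natDegree_taylor]
        · refine (natDegree_prod_le _ _).trans (Finset.sum_le_sum fun s _ => ?_)
          simp only [shiftMat, Matrix.of_apply]
          refine natDegree_mul_le.trans ?_
          simp [natDegree_taylor]
    exact key Finset.univ
  rw [Units.smul_def, Units.smul_def, coeff_smul, h, Finset.prod_mul_distrib]
  simp only [Matrix.transpose_apply, Matrix.vandermonde_apply]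
  rw [mul_smul_comm]

theorem shiftMat_det_ne_zero {k : ℕ} (q : Fin k → ℝ[X]) (b : Fin k → ℝ)
    (hq : ∀ s, q s ≠ 0) (hb : Function.Injective b) : (shiftMat q b).det ≠ 0 := by
  intro h
  have := shiftMat_det_coeff q b
  rw [h, coeff_zero] at this
  have h2 : (∏ s, (q s).leadingCoeff) * (Matrix.vandermonde b).det ≠ 0 :=
    mul_ne_zero (Finset.prod_ne_zero_iff.2 fun s _ => leadingCoeff_ne_zero.2 (hq s))
      (Matrix.det_vandermonde_ne_zero_iff.2 hb)
  exact h2 this.symm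

/-- A family `q` of polynomials of degree at most `D`, not all zero: the points `t` such that
`∑ s, q s (t + m) (Z β ^ m) ^ s` vanishes for `m = 0, …, S` and some `Z ≠ 0`
number at most `D (S + 1)`. -/
theorem line_count {S D : ℕ} (q : ℕ → ℝ[X]) (β : ℝ) (hβ : 0 < β) (hβ1 : β ≠ 1)
    (hD : ∀ s, (q s).natDegree ≤ D) (hne : ∃ s ≤ S, q s ≠ 0) (A : Finset ℝ)
    (hA : ∀ t ∈ A, ∃ Z : ℝ, Z ≠ 0 ∧
      ∀ m ≤ S, ∑ s ∈ Finset.range (S + 1), (q s).eval (t + m) * (Z * β ^ m) ^ s = 0) :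
    A.card ≤ D * (S + 1) := by
  classical
  set J : Finset ℕ := (Finset.range (S + 1)).filter (fun s => q s ≠ 0) with hJ
  set k := J.card with hk
  have hkS : k ≤ S + 1 := (Finset.card_filter_le _ _).trans (by simp)
  have hk0 : 0 < k := by
    obtain ⟨s, hs, hs0⟩ := hne
    exact Finset.card_pos.2 ⟨s, by simp [hJ, hs0]; omega⟩
  let e : J ≃ Fin k := J.equivFin
  let sv : Fin k → ℕ := fun i => ((e.symm i : J) : ℕ)
  have hsv : Function.Injective sv := fun i j h => e.symm.injective (Subtype.ext h)
  let Q : Fin k → ℝ[X] := fun i => q (sv i)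
  let b : Fin k → ℝ := fun i => β ^ (sv i)
  have hQ : ∀ i, Q i ≠ 0 := fun i => (Finset.mem_filter.1 (e.symm i).2).2
  have hb : Function.Injective b := fun i j h => hsv (pow_right_injective₀ hβ hβ1 h)
  have hdet := shiftMat_det_ne_zero Q b hQ hb
  have hroot : ∀ t ∈ A, (shiftMat Q b).det.IsRoot t := by
    intro t ht
    obtain ⟨Z, hZ, hz⟩ := hA t ht
    have h1 : (shiftMat Q b).det.eval t = ((evalRingHom t).mapMatrix (shiftMat Q b)).det := by
      rw [← RingHom.map_det]; rfl
    rw [IsRoot.def, h1]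
    by_contra hcon
    have hmul : ((evalRingHom t).mapMatrix (shiftMat Q b)).mulVec (fun i => Z ^ sv i) = 0 := by
      ext m
      have hm : (m : ℕ) ≤ S := by have := m.2; omega
      have := hz m hm
      rw [← Finset.sum_filter_of_ne (p := fun s => q s ≠ 0)] at this
      · rw [Pi.zero_apply, ← this, ← hJ, ← Finset.sum_coe_sort J, ← Equiv.sum_comp e.symm]
        simp only [Matrix.mulVec, dotProduct]
        refine Finset.sum_congr rfl fun i _ => ?_
        simp [shiftMat, taylor_eval, Q, b, sv]
        ring
      · intro s _ h hq; exact h (by simp [hq])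
    have := Matrix.eq_zero_of_mulVec_eq_zero hcon hmul
    have h3 := congrFun this ⟨0, hk0⟩
    exact pow_ne_zero _ hZ h3
  have hcard : A.card ≤ (shiftMat Q b).det.natDegree := by
    have : A ⊆ (shiftMat Q b).det.roots.toFinset := by
      intro t ht
      rw [Multiset.mem_toFinset, mem_roots hdet]; exact hroot t ht
    exact (Finset.card_le_card this).trans ((Multiset.toFinset_card_le _).trans (card_roots' _))
  calc A.card ≤ _ := hcard
    _ ≤ ∑ i, (Q i).natDegree := shiftMat_det_natDegree_le _ _
    _ ≤ ∑ _i : Fin k, D := Finset.sum_le_sum fun i _ => hD _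
    _ = k * D := by simp
    _ ≤ D * (S + 1) := by rw [mul_comm]; exact Nat.mul_le_mul_left _ hkS

end

/-! ### Zero estimate: eliminating the exponential -/

section

open MvPolynomial

/-- Translation of a plane polynomial by the vector `v`. -/
noncomputable def tr (v : Fin 2 → ℝ) : MvPolynomial (Fin 2) ℝ →ₐ[ℝ] MvPolynomial (Fin 2) ℝ :=
  aeval fun i => X i + C (v i)

/-- Restriction of a plane polynomial to the line `t ↦ z + t v`. -/
noncomputable def restr (z v : Fin 2 → ℝ) : MvPolynomial (Fin 2) ℝ →ₐ[ℝ] Polynomial ℝ :=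
  aeval fun i => Polynomial.C (z i) + Polynomial.X * Polynomial.C (v i)

theorem eval_tr (z v : Fin 2 → ℝ) (p : MvPolynomial (Fin 2) ℝ) :
    eval z (tr v p) = eval (z + v) p := by
  have : (aeval z : MvPolynomial (Fin 2) ℝ →ₐ[ℝ] ℝ).comp (tr v) = aeval (z + v) := by
    ext i; simp [tr]
  have := DFunLike.congr_fun this p
  simpa [aeval_eq_eval] using this

theorem eval_restr (z v : Fin 2 → ℝ) (t : ℝ) (p : MvPolynomial (Fin 2) ℝ) :
    (restr z v p).eval t = eval (z + t • v) p := by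
  have : (Polynomial.aeval t).comp (restr z v) = aeval (z + t • v) := by
    ext i; simp [restr]; ring
  have := DFunLike.congr_fun this p
  simpa [aeval_eq_eval, Polynomial.coe_aeval_eq_eval] using this

theorem restr_tr (z v : Fin 2 → ℝ) (m : ℝ) (p : MvPolynomial (Fin 2) ℝ) :
    restr z v (tr (m • v) p) = Polynomial.taylor m (restr z v p) := by
  apply Polynomial.funext
  intro t
  rw [eval_restr, eval_tr, Polynomial.taylor_eval, eval_restr]
  have : z + t • v + m • v = z + (t + m) • v := by rw [add_smul, add_assoc]
  rw [this]

theorem natDegree_restr_le (z v : Fin 2 → ℝ) (p : MvPolynomial (Fin 2) ℝ) :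
    (restr z v p).natDegree ≤ p.totalDegree := by
  rw [restr, aeval_def, eval₂_eq]
  refine Polynomial.natDegree_sum_le_of_forall_le _ _ fun d hd => ?_
  refine (Polynomial.natDegree_C_mul_le _ _).trans ?_
  refine (Polynomial.natDegree_prod_le _ _).trans ?_
  refine le_trans ?_ (le_totalDegree hd)
  refine Finset.sum_le_sum fun i _ => ?_
  refine Polynomial.natDegree_pow_le.trans ?_
  have : (Polynomial.C (z i) + Polynomial.X * Polynomial.C (v i)).natDegree ≤ 1 := by
    compute_degree
  calc _ ≤ d i * 1 := Nat.mul_le_mul_left _ this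
    _ = _ := mul_one _

theorem totalDegree_tr_le (v : Fin 2 → ℝ) (p : MvPolynomial (Fin 2) ℝ) :
    (tr v p).totalDegree ≤ p.totalDegree := by
  rw [tr, aeval_def, eval₂_eq]
  refine totalDegree_finsetSum_le fun d hd => ?_
  refine (totalDegree_mul _ _).trans ?_
  rw [algebraMap_eq, totalDegree_C, zero_add]
  refine (totalDegree_finsetProd _ _).trans ?_
  refine le_trans ?_ (le_totalDegree hd)
  refine Finset.sum_le_sum fun i _ => ?_
  refine (totalDegree_pow _ _).trans ?_
  have : (X i + C (v i) : MvPolynomial (Fin 2) ℝ).totalDegree ≤ 1 := by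
    refine (totalDegree_add _ _).trans ?_
    simp
  calc _ ≤ d i * 1 := Nat.mul_le_mul_left _ this
    _ = _ := mul_one _

theorem exists_eval_ne_zero {p : MvPolynomial (Fin 2) ℝ} (hp : p ≠ 0) : ∃ z, eval z p ≠ 0 := by
  by_contra h
  push Not at h
  exact hp (MvPolynomial.funext fun z => by simpa using h z)

theorem tr_tr (v w : Fin 2 → ℝ) (p) : tr v (tr w p) = tr (v + w) p := by
  apply MvPolynomial.funext; intro z
  rw [eval_tr, eval_tr, eval_tr, add_assoc]

theorem tr_zero (p) : tr 0 p = p := by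
  apply MvPolynomial.funext; intro z
  rw [eval_tr, add_zero]

theorem totalDegree_tr (v : Fin 2 → ℝ) (p : MvPolynomial (Fin 2) ℝ) :
    (tr v p).totalDegree = p.totalDegree := by
  refine le_antisymm (totalDegree_tr_le v p) ?_
  have := totalDegree_tr_le (-v) (tr v p)
  rwa [tr_tr, neg_add_cancel, tr_zero] at this

/-- Elimination of the exponential: if `∑ s, p s Z ^ s` vanishes along progressions of length
`S + 1` in direction `v`, a nonzero polynomial of degree at most `D (S + 1)` vanishes at their
starting points. -/
theorem elim_exp {S D : ℕ} (p : ℕ → MvPolynomial (Fin 2) ℝ) (β : ℝ) (hβ : 0 < β) (hβ1 : β ≠ 1)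
    (v : Fin 2 → ℝ)
    (hD : ∀ s, (p s).totalDegree ≤ D) (hne : ∃ s ≤ S, p s ≠ 0) :
    ∃ f : MvPolynomial (Fin 2) ℝ, f ≠ 0 ∧ f.totalDegree ≤ D * (S + 1) ∧
      ∀ z : Fin 2 → ℝ, (∃ Z : ℝ, Z ≠ 0 ∧ ∀ m ≤ S, ∑ s ∈ Finset.range (S + 1),
        eval (z + (m : ℝ) • v) (p s) * (Z * β ^ m) ^ s = 0) → eval z f = 0 := by
  classical
  set J : Finset ℕ := (Finset.range (S + 1)).filter (fun s => p s ≠ 0) with hJ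
  set k := J.card with hk
  have hkS : k ≤ S + 1 := (Finset.card_filter_le _ _).trans (by simp)
  have hk0 : 0 < k := by
    obtain ⟨s, hs, hs0⟩ := hne
    exact Finset.card_pos.2 ⟨s, by simp [hJ, hs0]; omega⟩
  let e : J ≃ Fin k := J.equivFin
  let sv : Fin k → ℕ := fun i => ((e.symm i : J) : ℕ)
  have hsv : Function.Injective sv := fun i j h => e.symm.injective (Subtype.ext h)
  let b : Fin k → ℝ := fun i => β ^ (sv i)
  have hb : Function.Injective b := fun i j h => hsv (pow_right_injective₀ hβ hβ1 h)
  have hp0 : ∀ i, p (sv i) ≠ 0 := fun i => (Finset.mem_filter.1 (e.symm i).2).2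
  let M : Matrix (Fin k) (Fin k) (MvPolynomial (Fin 2) ℝ) :=
    Matrix.of fun m i => tr (((m : ℕ) : ℝ) • v) (p (sv i)) * C (b i ^ (m : ℕ))
  refine ⟨M.det, ?_, ?_, ?_⟩
  · obtain ⟨z, hz⟩ := exists_eval_ne_zero (p := ∏ i, p (sv i)) (Finset.prod_ne_zero_iff.2 fun i _ => hp0 i)
    rw [map_prod, Finset.prod_ne_zero_iff] at hz
    have hQ : ∀ i, restr z v (p (sv i)) ≠ 0 := by
      intro i h
      have := eval_restr z v 0 (p (sv i))
      rw [h] at this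
      simp at this
      exact hz i (Finset.mem_univ _) this.symm
    have hdet := shiftMat_det_ne_zero _ b hQ hb
    intro h0
    apply hdet
    have h1 : restr z v M.det = 0 := by rw [h0, map_zero]
    rw [AlgHom.map_det] at h1
    rw [← h1]
    congr 1
    ext1 m i
    simp [M, shiftMat, restr_tr, MvPolynomial.algHom_C]
  · rw [Matrix.det_apply]
    refine totalDegree_finsetSum_le fun σ _ => ?_
    refine (totalDegree_smul_le _ _).trans ?_
    refine (totalDegree_finsetProd _ _).trans ?_
    calc _ ≤ ∑ _i : Fin k, D := Finset.sum_le_sum fun i _ => by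
            refine (totalDegree_mul _ _).trans ?_
            rw [totalDegree_C, add_zero]
            exact (totalDegree_tr_le _ _).trans (hD _)
      _ = k * D := by simp
      _ ≤ D * (S + 1) := by rw [mul_comm]; exact Nat.mul_le_mul_left _ hkS
  · rintro z ⟨Z, hZ, hz⟩
    have h1 : eval z M.det = ((eval z).mapMatrix M).det := by
      rw [← RingHom.map_det]
    rw [h1]
    by_contra hcon
    have hmul : ((eval z).mapMatrix M).mulVec (fun i => Z ^ sv i) = 0 := by
      ext m
      have hm : (m : ℕ) ≤ S := by have := m.2; omega
      have := hz m hm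
      rw [← Finset.sum_filter_of_ne (p := fun s => p s ≠ 0)] at this
      · rw [Pi.zero_apply, ← this, ← hJ, ← Finset.sum_coe_sort J, ← Equiv.sum_comp e.symm]
        simp only [Matrix.mulVec, dotProduct]
        refine Finset.sum_congr rfl fun i _ => ?_
        simp [M, eval_tr, b, sv]
        ring
      · intro s _ h hq; exact h (by simp [hq])
    have := Matrix.eq_zero_of_mulVec_eq_zero hcon hmul
    have h3 := congrFun this ⟨0, hk0⟩
    exact pow_ne_zero _ hZ h3

end

/-! ### Bézout inequality for plane curves -/

section

open MvPolynomial Module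

/-- Number of monomials of degree at most `n` in two variables. -/
theorem card_monomials (n : ℕ) :
    2 * Nat.card {d : Fin 2 →₀ ℕ | (d.sum fun _ e => e) ≤ n} = (n + 1) * (n + 2) := by
  have e : {d : Fin 2 →₀ ℕ | (d.sum fun _ e => e) ≤ n} ≃ (Σ i : Fin (n + 1), Fin (n - i + 1)) :=
    { toFun := fun d => ⟨⟨d.1 0, by
          have := d.2; rw [Set.mem_ofPred_eq, Finsupp.sum_fintype _ _ (by simp), Fin.sum_univ_two] at this
          omega⟩, ⟨d.1 1, by
          have := d.2; rw [Set.mem_ofPred_eq, Finsupp.sum_fintype _ _ (by simp), Fin.sum_univ_two] at this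
          simp only; omega⟩⟩
      invFun := fun x => ⟨Finsupp.equivFunOnFinite.symm ![x.1, x.2], by
          have h1 := x.1.2; have h2 := x.2.2
          rw [Set.mem_ofPred_eq, Finsupp.sum_fintype _ _ (by simp), Fin.sum_univ_two]
          simp; omega⟩
      left_inv := fun d => by
        apply Subtype.ext; ext i; fin_cases i <;> simp
      right_inv := fun x => by
        rcases x with ⟨⟨i, hi⟩, ⟨j, hj⟩⟩; simp }
  rw [Nat.card_congr e, Nat.card_eq_fintype_card, Fintype.card_sigma]
  simp only [Fintype.card_fin]
  rw [Fin.sum_univ_eq_sum_range (fun i => n - i + 1)]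
  have h2 : ∀ n : ℕ, 2 * ∑ i ∈ Finset.range (n + 1), (n - i + 1) = (n + 1) * (n + 2) := by
    intro n
    induction n with
    | zero => simp
    | succ n ih =>
      rw [Finset.sum_range_succ']
      simp only [Nat.add_sub_add_right, Nat.sub_zero]
      rw [mul_add, ih]; ring
  exact h2 n

theorem finrank_deg (n : ℕ) :
    2 * finrank ℝ (restrictTotalDegree (Fin 2) ℝ n) = (n + 1) * (n + 2) := by
  rw [← card_monomials]
  exact congrArg (2 * ·) (finrank_eq_nat_card_basis
    (basisRestrictSupport ℝ {d : Fin 2 →₀ ℕ | (d.sum fun _ e => e) ≤ n}))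

theorem exists_separating (A : Finset (Fin 2 → ℝ)) (z : Fin 2 → ℝ) (hz : z ∈ A) :
    ∃ p : MvPolynomial (Fin 2) ℝ, p.totalDegree ≤ A.card ∧ eval z p = 1 ∧
      ∀ w ∈ A, w ≠ z → eval w p = 0 := by
  classical
  have h : ∀ w : Fin 2 → ℝ, ∃ l : MvPolynomial (Fin 2) ℝ, l.totalDegree ≤ 1 ∧
      (w ≠ z → eval z l = 1 ∧ eval w l = 0) := by
    intro w
    by_cases hw : w = z
    · exact ⟨0, by simp, fun h => absurd hw h⟩
    · obtain ⟨i, hi⟩ := Function.ne_iff.1 hw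
      have hi' : z i - w i ≠ 0 := sub_ne_zero.2 (Ne.symm hi)
      refine ⟨C (z i - w i)⁻¹ * (X i - C (w i)), ?_, fun _ => ?_⟩
      · refine (totalDegree_mul _ _).trans ?_
        rw [totalDegree_C, zero_add]
        refine (totalDegree_sub _ _).trans ?_
        simp
      · simp [hi']
  choose l hl1 hl2 using h
  refine ⟨∏ w ∈ A.erase z, l w, ?_, ?_, ?_⟩
  · refine (totalDegree_finsetProd _ _).trans ?_
    calc _ ≤ ∑ _w ∈ A.erase z, 1 := Finset.sum_le_sum fun w _ => hl1 w
      _ ≤ _ := by simp [Finset.card_erase_of_mem hz]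
  · rw [map_prod]
    exact Finset.prod_eq_one fun w hw => (hl2 w (Finset.ne_of_mem_erase hw)).1
  · intro w hw hne
    rw [map_prod]
    exact Finset.prod_eq_zero (Finset.mem_erase.2 ⟨hne, hw⟩) (hl2 w hne).2

/-- Bézout's inequality for plane curves without common component. -/
theorem bezout {f g : MvPolynomial (Fin 2) ℝ} (hf : f ≠ 0) (hg : g ≠ 0) (hfg : IsRelPrime f g)
    (A : Finset (Fin 2 → ℝ)) (hA : ∀ z ∈ A, eval z f = 0 ∧ eval z g = 0) :
    A.card ≤ f.totalDegree * g.totalDegree := by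
  classical
  set d1 := f.totalDegree with hd1
  set d2 := g.totalDegree with hd2
  set k := A.card
  let D := k + d1 + d2
  let P := fun n => restrictTotalDegree (Fin 2) ℝ n
  have hmem : ∀ n p, p ∈ P n ↔ p.totalDegree ≤ n := fun n p => mem_restrictTotalDegree _ _ _
  -- the map `(a, b) ↦ f a + g b`
  let φ : (P (k + d2) × P (k + d1)) →ₗ[ℝ] MvPolynomial (Fin 2) ℝ :=
    (LinearMap.mulLeft ℝ f ∘ₗ (P (k + d2)).subtype).coprod
      (LinearMap.mulLeft ℝ g ∘ₗ (P (k + d1)).subtype)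
  have hφ : ∀ x, φ x = f * x.1 + g * x.2 := fun x => by simp [φ]
  have hrange : ∀ x, φ x ∈ P D := by
    intro x
    rw [hφ, hmem]
    refine (totalDegree_add _ _).trans (max_le ?_ ?_)
    · refine (totalDegree_mul _ _).trans ?_
      have := (hmem _ _).1 x.1.2; simp only [D]; omega
    · refine (totalDegree_mul _ _).trans ?_
      have := (hmem _ _).1 x.2.2; simp only [D]; omega
  let φ' : (P (k + d2) × P (k + d1)) →ₗ[ℝ] P D := φ.codRestrict _ hrange
  let ψ : P k →ₗ[ℝ] MvPolynomial (Fin 2) ℝ := (P k).subtype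
  -- kernel
  have hker : finrank ℝ (LinearMap.ker φ') ≤ finrank ℝ (P k) := by
    have hx : ∀ x : LinearMap.ker φ', ∃ c : P k, g * (c : MvPolynomial (Fin 2) ℝ) = x.1.1 := by
      intro x
      have h0 : f * (x.1.1 : MvPolynomial (Fin 2) ℝ) + g * x.1.2 = 0 := by
        have := congrArg Subtype.val (LinearMap.mem_ker.1 x.2)
        rw [← hφ]; exact this
      have hdvd : g ∣ f * (x.1.1 : MvPolynomial (Fin 2) ℝ) := ⟨-x.1.2, by linear_combination h0⟩
      obtain ⟨c, hc⟩ := hfg.symm.dvd_of_dvd_mul_left hdvd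
      refine ⟨⟨c, ?_⟩, hc.symm⟩
      rw [hmem]
      by_cases hc0 : c = 0
      · simp [hc0]
      have h1 := (hmem _ _).1 x.1.1.2
      rw [hc, totalDegree_mul_of_isDomain hg hc0] at h1
      omega
    have h2 : ∃ ρ : P k →ₗ[ℝ] (P (k + d2) × P (k + d1)), LinearMap.ker φ' ≤ LinearMap.range ρ := by
      have hm1 : ∀ c : P k, g * (c : MvPolynomial (Fin 2) ℝ) ∈ P (k + d2) := fun c => by
        rw [hmem]; refine (totalDegree_mul _ _).trans ?_
        have := (hmem _ _).1 c.2; omega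
      have hm2 : ∀ c : P k, -f * (c : MvPolynomial (Fin 2) ℝ) ∈ P (k + d1) := fun c => by
        rw [hmem]; refine (totalDegree_mul _ _).trans ?_
        have := (hmem _ _).1 c.2; rw [totalDegree_neg]; omega
      refine ⟨((LinearMap.mulLeft ℝ g ∘ₗ (P k).subtype).codRestrict _ hm1).prod
        ((LinearMap.mulLeft ℝ (-f) ∘ₗ (P k).subtype).codRestrict _ hm2), ?_⟩
      intro x hxk
      obtain ⟨c, hc⟩ := hx ⟨x, hxk⟩
      refine ⟨c, ?_⟩
      have h0 : f * (x.1 : MvPolynomial (Fin 2) ℝ) + g * x.2 = 0 := by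
        have := congrArg Subtype.val (LinearMap.mem_ker.1 hxk)
        rw [← hφ]; exact this
      simp only at hc
      refine Prod.ext (Subtype.ext ?_) (Subtype.ext ?_)
      · exact hc
      · show -f * (c : MvPolynomial (Fin 2) ℝ) = x.2
        have : g * (-f * c - x.2) = 0 := by rw [← hc] at h0; linear_combination -h0
        rcases mul_eq_zero.1 this with h | h
        · exact absurd h hg
        · exact sub_eq_zero.1 h
    obtain ⟨ρ, hρ⟩ := h2
    exact (Submodule.finrank_mono hρ).trans (LinearMap.finrank_range_le ρ)
  -- evaluation
  let E : P D →ₗ[ℝ] (A → ℝ) := LinearMap.pi fun z => (aeval z.1).toLinearMap ∘ₗ (P D).subtype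
  have hE : ∀ x z, E x z = eval z.1 x.1 := fun x z => by simp [E, aeval_eq_eval]
  have hsurj : LinearMap.range E = ⊤ := by
    rw [eq_top_iff]
    intro y _
    choose s hs1 hs2 hs3 using fun z : A => exists_separating A z.1 z.2
    have hsm : ∀ z, s z ∈ P D := fun z => by
      rw [hmem]; exact (hs1 z).trans (by simp only [D, k]; omega)
    refine ⟨∑ z, y z • ⟨s z, hsm z⟩, ?_⟩
    ext w
    rw [map_sum, Finset.sum_apply, Finset.sum_eq_single w]
    · simp [hE, hs2]
    · intro z _ hzw
      simp [hE, hs3 z w.1 w.2 (fun h => hzw (Subtype.ext h.symm))]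
    · simp
  have hle : LinearMap.range φ' ≤ LinearMap.ker E := by
    rintro _ ⟨x, rfl⟩
    rw [LinearMap.mem_ker]
    ext z
    rw [hE]
    show eval z.1 (φ x) = 0
    rw [hφ]; simp [hA z.1 z.2]
  have e1 := LinearMap.finrank_range_add_finrank_ker φ'
  have e2 := LinearMap.finrank_range_add_finrank_ker E
  rw [hsurj, finrank_top, finrank_fintype_fun_eq_card, Fintype.card_coe] at e2
  have e3 := Submodule.finrank_mono hle
  rw [finrank_prod] at e1
  have c1 := finrank_deg (k + d2)
  have c2 := finrank_deg (k + d1)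
  have c3 := finrank_deg k
  have c4 := finrank_deg D
  simp only [P, D] at *
  nlinarith

end

/-! ### Common components of translated curves -/

section

open MvPolynomial Module

/-- The real vector attached to an integer vector. -/
def vec (w : ℤ × ℤ) : Fin 2 → ℝ := ![(w.1 : ℝ), (w.2 : ℝ)]

/-- The linear form whose level sets are the lines of direction `ν`. -/
def crs (ν w : ℤ × ℤ) : ℤ := ν.1 * w.2 - ν.2 * w.1

theorem vec_sub (v w : ℤ × ℤ) : vec (v - w) = vec v - vec w := by
  ext i; fin_cases i <;> simp [vec]

theorem vec_add (v w : ℤ × ℤ) : vec (v + w) = vec v + vec w := by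
  ext i; fin_cases i <;> simp [vec]

/-- A polynomial whose translate by `v` is associated to it is constant in the direction `v`. -/
theorem const_of_tr_associated {p : MvPolynomial (Fin 2) ℝ} {v : Fin 2 → ℝ}
    (h : Associated (tr v p) p) (z : Fin 2 → ℝ) (t : ℝ) : eval (z + t • v) p = eval z p := by
  obtain ⟨u, hu⟩ := h.symm
  obtain ⟨c, hc, huc⟩ := isUnit_iff_eq_C_of_isReduced.1 u.isUnit
  set q := restr z v p with hq
  have h1 : Polynomial.taylor 1 q = Polynomial.C c * q := by
    have := restr_tr z v 1 p
    rw [one_smul] at this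
    rw [← this, ← hu, map_mul, huc, mul_comm]
    congr 1
    simp [restr]
  have h2 : Polynomial.taylor 1 q = q := by
    by_cases h0 : q = 0
    · simp [h0]
    have := congrArg Polynomial.leadingCoeff h1
    rw [Polynomial.leadingCoeff_taylor, Polynomial.leadingCoeff_mul, Polynomial.leadingCoeff_C] at this
    have hl : q.leadingCoeff ≠ 0 := by simpa using h0
    have : c = 1 := by
      field_simp at this; exact this.symm
    rw [h1, this]; simp
  have h3 : ∀ k : ℕ, q.eval (k : ℝ) = q.eval 0 := by
    intro k
    induction k with
    | zero => simp
    | succ k ih =>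
      rw [← ih]; conv_rhs => rw [← h2]
      rw [Polynomial.taylor_eval]; push_cast; rfl
  have h4 : q = Polynomial.C (q.eval 0) := by
    apply Polynomial.eq_of_infinite_eval_eq
    refine Set.Infinite.mono (s := Set.range (fun k : ℕ => (k : ℝ))) ?_
      (Set.infinite_range_of_injective Nat.cast_injective)
    rintro _ ⟨k, rfl⟩
    simp [h3 k]
  rw [← eval_restr, ← hq, h4, Polynomial.eval_C, hq, eval_restr]; simp

theorem tr_irreducible {p : MvPolynomial (Fin 2) ℝ} (hp : Irreducible p) (v : Fin 2 → ℝ) :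
    Irreducible (tr v p) := by
  let e : MvPolynomial (Fin 2) ℝ ≃ₐ[ℝ] MvPolynomial (Fin 2) ℝ :=
    AlgEquiv.ofAlgHom (tr v) (tr (-v))
      (AlgHom.ext fun p => by simp [tr_tr, tr_zero])
      (AlgHom.ext fun p => by simp [tr_tr, tr_zero])
  exact (MulEquiv.irreducible_iff e).2 hp

theorem totalDegree_pos_of_irreducible {p : MvPolynomial (Fin 2) ℝ} (hp : Irreducible p) :
    1 ≤ p.totalDegree := by
  by_contra h
  have h0 : p.totalDegree = 0 := by omega
  refine hp.not_isUnit (isUnit_iff_totalDegree_of_isReduced.2 ⟨?_, h0⟩)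
  rw [totalDegree_eq_zero_iff_eq_C] at h0
  rw [isUnit_iff_ne_zero]
  intro h1; rw [h1, C_0] at h0; exact hp.ne_zero h0

/-- Pairwise non-associated irreducible divisors of `f` are at most `deg f` in number. -/
theorem card_irreducible_divisors_le {ι : Type*} (V : Finset ι) (q : ι → MvPolynomial (Fin 2) ℝ)
    {f : MvPolynomial (Fin 2) ℝ} (hf : f ≠ 0) (hq : ∀ i ∈ V, Irreducible (q i))
    (hd : ∀ i ∈ V, q i ∣ f) (hV : ∀ i ∈ V, ∀ j ∈ V, i ≠ j → ¬ Associated (q i) (q j)) :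
    V.card ≤ f.totalDegree := by
  classical
  have h1 : ∏ i ∈ V, q i ∣ f := by
    refine Finset.prod_dvd_of_isRelPrime ?_ hd
    intro i hi j hj hij
    rw [Function.onFun]
    rw [(hq i hi).isRelPrime_iff_not_dvd]
    intro h
    exact hV i hi j hj hij ((hq i hi).associated_of_dvd (hq j hj) h)
  have h2 : ∀ V' ⊆ V, V'.card ≤ (∏ i ∈ V', q i).totalDegree := by
    intro V'
    induction V' using Finset.induction_on with
    | empty => simp
    | insert a s ha ih =>
      intro hs
      rw [Finset.prod_insert ha, totalDegree_mul_of_isDomain, Finset.card_insert_of_notMem ha]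
      · have := ih ((Finset.subset_insert _ _).trans hs)
        have := totalDegree_pos_of_irreducible (hq a (hs (Finset.mem_insert_self _ _)))
        omega
      · exact (hq a (hs (Finset.mem_insert_self _ _))).ne_zero
      · exact Finset.prod_ne_zero_iff.2 fun i hi => (hq i (hs (Finset.mem_insert_of_mem hi))).ne_zero
  exact (h2 V subset_rfl).trans (totalDegree_le_of_dvd_of_isDomain h1 hf)

theorem exists_primitive (v : ℤ × ℤ) (hv : v ≠ 0) :
    ∃ ν : ℤ × ℤ, IsCoprime ν.1 ν.2 ∧ ∃ k : ℤ, k ≠ 0 ∧ v = (k * ν.1, k * ν.2) := by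
  have hg : (Int.gcd v.1 v.2 : ℤ) ≠ 0 := by
    intro h
    have : Int.gcd v.1 v.2 = 0 := by exact_mod_cast h
    rw [Int.gcd_eq_zero_iff] at this
    exact hv (Prod.ext this.1 this.2)
  obtain ⟨a, ha⟩ := Int.gcd_dvd_left (a := v.1) (b := v.2)
  obtain ⟨b, hb⟩ := Int.gcd_dvd_right (a := v.1) (b := v.2)
  refine ⟨(a, b), ?_, _, hg, Prod.ext ha hb⟩
  have := Int.gcd_eq_gcd_ab v.1 v.2
  refine ⟨Int.gcdA v.1 v.2, Int.gcdB v.1 v.2, ?_⟩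
  simp only
  have h2 : (Int.gcd v.1 v.2 : ℤ) * (Int.gcdA v.1 v.2 * a + Int.gcdB v.1 v.2 * b) =
      (Int.gcd v.1 v.2 : ℤ) * 1 := by
    linear_combination -Int.gcdA v.1 v.2 * ha - Int.gcdB v.1 v.2 * hb - this
  exact mul_left_cancel₀ hg h2

/-- If an irreducible `p` divides many translates of `f`, then the translation vectors lie on at
most `deg f` parallel lines. -/
theorem exists_direction {p f : MvPolynomial (Fin 2) ℝ} (hp : Irreducible p) (hf : f ≠ 0)
    (W : Finset (ℤ × ℤ)) (hW : ∀ w ∈ W, p ∣ tr (vec w) f) :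
    ∃ ν : ℤ × ℤ, IsCoprime ν.1 ν.2 ∧ (W.image (crs ν)).card ≤ f.totalDegree := by
  classical
  -- all stabilising translations are parallel to one primitive vector
  have h1 : ∃ ν : ℤ × ℤ, IsCoprime ν.1 ν.2 ∧
      ∀ v : ℤ × ℤ, Associated (tr (vec v) p) p → crs ν v = 0 := by
    by_cases h : ∃ v : ℤ × ℤ, v ≠ 0 ∧ Associated (tr (vec v) p) p
    · obtain ⟨v, hv, hvp⟩ := h
      obtain ⟨ν, hν, k, hk, hvk⟩ := exists_primitive v hv
      refine ⟨ν, hν, fun w hw => ?_⟩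
      by_contra hc
      have hdet : (v.1 : ℝ) * w.2 - v.2 * w.1 ≠ 0 := by
        have : v.1 * w.2 - v.2 * w.1 = k * crs ν w := by rw [hvk, crs]; ring
        have h2 : v.1 * w.2 - v.2 * w.1 ≠ 0 := by rw [this]; exact mul_ne_zero hk hc
        exact_mod_cast h2
      -- `p` is constant on the plane
      have hconst : ∀ z, eval z p = eval 0 p := by
        intro z
        set Δ := (v.1 : ℝ) * w.2 - v.2 * w.1
        have hz : z = (0 + ((z 0 * w.2 - z 1 * w.1) / Δ) • vec v) +
            ((v.1 * z 1 - v.2 * z 0) / Δ) • vec w := by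
          ext i; fin_cases i <;> simp [vec] <;> field_simp <;> simp only [Δ] <;> ring
        rw [hz, const_of_tr_associated hw, const_of_tr_associated hvp]
      have hpC : p = C (eval 0 p) := MvPolynomial.funext fun z => by rw [hconst z]; simp
      have := totalDegree_pos_of_irreducible hp
      rw [hpC, totalDegree_C] at this
      omega
    · push Not at h
      refine ⟨(1, 0), isCoprime_one_left, fun v hv => ?_⟩
      have : v = 0 := by by_contra h0; exact h v h0 hv
      simp [this, crs]
  obtain ⟨ν, hν, hst⟩ := h1
  refine ⟨ν, hν, ?_⟩
  have hr : ∀ c ∈ W.image (crs ν), ∃ w ∈ W, crs ν w = c := fun c hc => Finset.mem_image.1 hc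
  choose! r hr1 hr2 using hr
  refine card_irreducible_divisors_le (W.image (crs ν)) (fun c => tr (-vec (r c)) p) hf
    (fun c _ => tr_irreducible hp _) ?_ ?_
  · intro c hc
    have := map_dvd (tr (-vec (r c))) (hW _ (hr1 c hc))
    rwa [tr_tr, neg_add_cancel, tr_zero] at this
  · intro c hc c' hc' hne hass
    apply hne
    have h2 : Associated (tr (vec (r c' - r c)) p) p := by
      have := hass.map (tr (vec (r c')))
      rw [tr_tr, tr_tr, add_neg_cancel, tr_zero] at this
      rwa [vec_sub, sub_eq_add_neg]
    have h3 := hst _ h2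
    have h4 : crs ν (r c' - r c) = crs ν (r c') - crs ν (r c) := by simp [crs]; ring
    rw [h4, hr2 _ hc, hr2 _ hc'] at h3
    omega

/-- A generic combination of translates of `f` is coprime to `f`, unless all translates share an
irreducible factor with `f`. -/
theorem exists_coprime_combination {f : MvPolynomial (Fin 2) ℝ} (hf : f ≠ 0) (hu : ¬ IsUnit f)
    (W : Finset (ℤ × ℤ))
    (hW : ∀ p, Irreducible p → p ∣ f → ∃ w ∈ W, ¬ p ∣ tr (vec w) f) :
    ∃ c : ℤ × ℤ → ℝ, (∑ w ∈ W, c w • tr (vec w) f) ≠ 0 ∧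
      IsRelPrime f (∑ w ∈ W, c w • tr (vec w) f) := by
  classical
  let Φ : (ℤ × ℤ → ℝ) →ₗ[ℝ] MvPolynomial (Fin 2) ℝ :=
    ∑ w ∈ W, (LinearMap.toSpanSingleton ℝ _ (tr (vec w) f)) ∘ₗ (LinearMap.proj w)
  have hΦ : ∀ c, Φ c = ∑ w ∈ W, c w • tr (vec w) f := fun c => by simp [Φ]
  let sub : MvPolynomial (Fin 2) ℝ → Subspace ℝ (ℤ × ℤ → ℝ) := fun p =>
    ((Ideal.span {p}).restrictScalars ℝ).comap Φ
  have hsub : ∀ p c, c ∈ sub p ↔ p ∣ Φ c := fun p c => by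
    simp [sub, Ideal.mem_span_singleton]
  let Q := (UniqueFactorizationMonoid.factors f).toFinset
  have hQ : ∀ p ∈ Q, Irreducible p ∧ p ∣ f := fun p hp => by
    rw [Multiset.mem_toFinset] at hp
    exact ⟨UniqueFactorizationMonoid.irreducible_of_factor p hp,
      UniqueFactorizationMonoid.dvd_of_mem_factors hp⟩
  have htop : ⊤ ∉ Q.image sub := by
    intro h
    obtain ⟨p, hp, hpt⟩ := Finset.mem_image.1 h
    obtain ⟨w, hw, hnd⟩ := hW p (hQ p hp).1 (hQ p hp).2
    have : Pi.single w 1 ∈ sub p := by rw [hpt]; trivial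
    rw [hsub, hΦ, Finset.sum_eq_single w] at this
    · simp at this; exact hnd this
    · intro b _ hb; simp [hb]
    · intro h; exact absurd hw h
  have hne := Subspace.biUnion_ne_univ_of_top_notMem htop
  rw [Set.ne_univ_iff_exists_notMem] at hne
  obtain ⟨c, hc⟩ := hne
  have hc' : ∀ p, Irreducible p → p ∣ f → ¬ p ∣ Φ c := by
    intro p hp hpf hpc
    obtain ⟨q, hq, hpq⟩ := UniqueFactorizationMonoid.exists_mem_factors_of_dvd hf hp hpf
    apply hc
    rw [Set.mem_iUnion₂]
    refine ⟨sub q, Finset.mem_image_of_mem _ (Multiset.mem_toFinset.2 hq), ?_⟩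
    exact (hsub q c).2 (hpq.symm.dvd.trans hpc)
  refine ⟨c, ?_, ?_⟩
  · rw [← hΦ]
    intro h0
    obtain ⟨p, hp, hpf⟩ := WfDvdMonoid.exists_irreducible_factor hu hf
    exact hc' p hp hpf (by rw [h0]; exact dvd_zero p)
  · rw [← hΦ]
    exact WfDvdMonoid.isRelPrime_of_no_irreducible_factors (fun h => hf h.1)
      fun p hp h1 h2 => hc' p hp h1 h2

end

/-! ### Integer points of the box on lines -/

section

open MvPolynomial Module

/-- The integer point with coordinates `λ₁ + λ₃ n` and `λ₂ - λ₃ a`. -/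
def pt (n a : ℤ) (x : ℤ × ℤ × ℤ) : ℤ × ℤ := (x.1 + x.2.2 * n, x.2.1 - x.2.2 * a)

theorem pt_add (n a : ℤ) (x y : ℤ × ℤ × ℤ) : pt n a (x + y) = pt n a x + pt n a y := by
  simp [pt]; constructor <;> ring

/-- The integer box `[0, L)² × [0, R)`. -/
noncomputable def box (L R : ℕ) : Finset (ℤ × ℤ × ℤ) :=
  Finset.Ico 0 (L : ℤ) ×ˢ Finset.Ico 0 (L : ℤ) ×ˢ Finset.Ico 0 (R : ℤ)

theorem mem_box {L R : ℕ} {x : ℤ × ℤ × ℤ} : x ∈ box L R ↔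
    (0 ≤ x.1 ∧ x.1 < L) ∧ (0 ≤ x.2.1 ∧ x.2.1 < L) ∧ (0 ≤ x.2.2 ∧ x.2.2 < R) := by
  simp [box]

theorem card_box (L R : ℕ) : (box L R).card = L * (L * R) := by
  simp [box, Finset.card_product]

/-- A line of primitive direction `ν` meets a slice of the box in at most `L / V + 1` points, if
`|ν| ≥ V`. -/
theorem card_slice_le {ν : ℤ × ℤ} (hν : IsCoprime ν.1 ν.2) {V L : ℕ} (hV : 0 < V)
    (h : (V : ℤ) ≤ |ν.1| ∨ (V : ℤ) ≤ |ν.2|) (c : ℤ)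
    (A : Finset (ℤ × ℤ)) (hA : ∀ x ∈ A, (0 ≤ x.1 ∧ x.1 < L) ∧ (0 ≤ x.2 ∧ x.2 < L) ∧
      ν.1 * x.2 - ν.2 * x.1 = c) : A.card ≤ L / V + 1 := by
  have key : ∀ (N M : ℤ), IsCoprime N M → (V : ℤ) ≤ |N| → ∀ (i i' j j' : ℤ),
      0 ≤ i → i < L → 0 ≤ i' → i' < L → N * (j - j') = M * (i - i') → i / |N| = i' / |N| →
      i = i' ∧ j = j' := by
    intro N M hc hN i i' j j' _ _ _ _ he hq
    have hNpos : 0 < |N| := by omega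
    have hdvd : |N| ∣ i - i' := by
      rw [abs_dvd]
      exact hc.dvd_of_dvd_mul_left ⟨_, he.symm⟩
    have hii : i = i' := by
      have h1 : i % |N| = i' % |N| := Int.emod_eq_emod_iff_emod_sub_eq_zero.2 (Int.emod_eq_zero_of_dvd hdvd)
      rw [← Int.mul_ediv_add_emod i |N|, ← Int.mul_ediv_add_emod i' |N|, hq, h1]
    refine ⟨hii, ?_⟩
    rw [hii, sub_self, mul_zero] at he
    have hN0 : N ≠ 0 := abs_pos.1 hNpos
    have := (mul_eq_zero.1 he).resolve_left hN0
    omega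
  have hb : ∀ N : ℤ, (V : ℤ) ≤ |N| → ∀ i : ℤ, 0 ≤ i → i < L → i / |N| ∈ Finset.Ico (0 : ℤ) ((L / V + 1 : ℕ) : ℤ) := by
    intro N hN i h0 h1
    rw [Finset.mem_Ico]
    have hNpos : 0 < |N| := by omega
    refine ⟨Int.ediv_nonneg h0 hNpos.le, ?_⟩
    have e1 : i / |N| ≤ i / V := by
      apply Int.le_ediv_of_mul_le (by exact_mod_cast hV)
      have := Int.ediv_nonneg h0 hNpos.le
      have h3 := Int.ediv_mul_le i hNpos.ne'
      nlinarith
    have e2 : i / V ≤ (L : ℤ) / V := Int.ediv_le_ediv (by exact_mod_cast hV) h1.le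
    push_cast
    omega
  have hcard : (Finset.Ico (0 : ℤ) ((L / V + 1 : ℕ) : ℤ)).card = L / V + 1 := by
    rw [Int.card_Ico, sub_zero, Int.toNat_natCast]
  rw [← hcard]
  rcases h with h | h
  · refine Finset.card_le_card_of_injOn (fun x => x.1 / |ν.1|) (fun x hx => ?_) ?_
    · exact hb _ h _ (hA x hx).1.1 (hA x hx).1.2
    · intro x hx y hy hxy
      have := key ν.1 ν.2 hν h x.1 y.1 x.2 y.2 (hA x hx).1.1 (hA x hx).1.2 (hA y hy).1.1 (hA y hy).1.2
        (by linarith [(hA x hx).2.2, (hA y hy).2.2]) hxy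
      exact Prod.ext this.1 this.2
  · refine Finset.card_le_card_of_injOn (fun x => x.2 / |ν.2|) (fun x hx => ?_) ?_
    · exact hb _ h _ (hA x hx).2.1.1 (hA x hx).2.1.2
    · intro x hx y hy hxy
      have := key ν.2 ν.1 hν.symm h x.2 y.2 x.1 y.1 (hA x hx).2.1.1 (hA x hx).2.1.2 (hA y hy).2.1.1 (hA y hy).2.1.2
        (by linarith [(hA x hx).2.2, (hA y hy).2.2]) hxy
      exact Prod.ext this.2 this.1

/-- If `∑ s, p s Z ^ s` vanishes at many points of a line, then all `p s` vanish on the line. -/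
theorem vanish_on_line {S D L R V : ℕ} (p : ℕ → MvPolynomial (Fin 2) ℝ)
    (hD : ∀ s, (p s).totalDegree ≤ D) (b1 b2 γ : ℝ) (hb1 : 0 < b1) (hb2 : 0 < b2) (hγ : 0 < γ)
    (hind : ∀ u v : ℤ, b1 ^ u * b2 ^ v = 1 → u = 0 ∧ v = 0) (n a : ℤ)
    (hvan : ∀ x ∈ box (3 * L) (2 * R), ∑ s ∈ Finset.range (S + 1),
      eval (vec (pt n a x)) (p s) * (b1 ^ x.1 * b2 ^ x.2.1 * γ ^ x.2.2) ^ s = 0)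
    (hSV : S * V ≤ L) (ν : ℤ × ℤ) (hν0 : ν ≠ 0) (h1 : |ν.1| ≤ V) (h2 : |ν.2| ≤ V) (c : ℤ)
    (A : Finset (ℤ × ℤ × ℤ)) (hA : A ⊆ box L R) (hinj : Set.InjOn (pt n a) A)
    (hAc : ∀ x ∈ A, crs ν (pt n a x) = c) (hcard : D * (S + 1) < A.card)
    (z : Fin 2 → ℝ) (hz : ν.1 * z 1 - ν.2 * z 0 = c + L * (ν.1 - ν.2)) (s : ℕ) (hs : s ≤ S) :
    eval z (p s) = 0 := by
  classical
  by_contra hcon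
  have hN : (0 : ℝ) < (ν.1 : ℝ) ^ 2 + (ν.2 : ℝ) ^ 2 := by
    have : ν.1 ≠ 0 ∨ ν.2 ≠ 0 := by
      by_contra h; push Not at h; exact hν0 (Prod.ext h.1 h.2)
    rcases this with h | h
    · have : (ν.1 : ℝ) ≠ 0 := by exact_mod_cast h
      positivity
    · have : (ν.2 : ℝ) ≠ 0 := by exact_mod_cast h
      positivity
  set N := (ν.1 : ℝ) ^ 2 + (ν.2 : ℝ) ^ 2 with hNd
  let τ : ℤ × ℤ × ℤ → ℝ := fun x =>
    (((pt n a x).1 + L - z 0) * ν.1 + ((pt n a x).2 + L - z 1) * ν.2) / N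
  have hτ : ∀ x ∈ A, z + τ x • vec ν = vec (pt n a x + ((L : ℤ), (L : ℤ))) := by
    intro x hx
    have hc := hAc x hx
    have hc' : (ν.1 : ℝ) * (pt n a x).2 - ν.2 * (pt n a x).1 = c := by
      rw [← hc, crs]; push_cast; ring
    ext i
    fin_cases i
    · simp [vec, τ]
      field_simp
      rw [hNd]
      linear_combination (ν.2 : ℝ) * (hc' - hz)
    · simp [vec, τ]
      field_simp
      rw [hNd]
      linear_combination (ν.1 : ℝ) * (hz - hc')
  have hτinj : Set.InjOn τ A := by
    intro x hx y hy hxy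
    apply hinj hx hy
    have e := hτ x hx
    rw [hxy, hτ y hy] at e
    have e0 := congrFun e 0
    have e1 := congrFun e 1
    simp [vec] at e0 e1
    exact (Prod.ext e0 e1).symm
  have hβ : 0 < b1 ^ ν.1 * b2 ^ ν.2 := by positivity
  have hβ1 : b1 ^ ν.1 * b2 ^ ν.2 ≠ 1 := fun h =>
    hν0 (Prod.ext (hind _ _ h).1 (hind _ _ h).2)
  have := line_count (S := S) (D := D) (fun s => restr z (vec ν) (p s)) (b1 ^ ν.1 * b2 ^ ν.2) hβ hβ1
    (fun s => (natDegree_restr_le _ _ _).trans (hD s)) ⟨s, hs, fun h => hcon (by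
      have := eval_restr z (vec ν) 0 (p s)
      rw [h] at this; simpa using this.symm)⟩ (A.image τ) (by
      intro t ht
      obtain ⟨x, hx, rfl⟩ := Finset.mem_image.1 ht
      refine ⟨b1 ^ (x.1 + L) * b2 ^ (x.2.1 + L) * γ ^ x.2.2, by positivity, fun m hm => ?_⟩
      have hxb := mem_box.1 (hA hx)
      have hmV : (m : ℤ) * V ≤ L := by
        have : m * V ≤ L := (Nat.mul_le_mul_right _ hm).trans hSV
        exact_mod_cast this
      have hm1 : |(m : ℤ) * ν.1| ≤ L := by
        rw [abs_mul, Nat.abs_cast]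
        exact (mul_le_mul_of_nonneg_left h1 (by positivity)).trans hmV
      have hm2 : |(m : ℤ) * ν.2| ≤ L := by
        rw [abs_mul, Nat.abs_cast]
        exact (mul_le_mul_of_nonneg_left h2 (by positivity)).trans hmV
      rw [abs_le] at hm1 hm2
      have hv := hvan (x.1 + L + m * ν.1, x.2.1 + L + m * ν.2, x.2.2) (by
        rw [mem_box]; push_cast
        refine ⟨⟨?_, ?_⟩, ⟨?_, ?_⟩, ⟨?_, ?_⟩⟩ <;> linarith [hxb.1.1, hxb.1.2, hxb.2.1.1, hxb.2.1.2, hxb.2.2.1, hxb.2.2.2])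
      rw [← hv]
      refine Finset.sum_congr rfl fun s _ => ?_
      rw [eval_restr]
      have hpt : z + (τ x + (m : ℝ)) • vec ν =
          vec (pt n a (x.1 + L + m * ν.1, x.2.1 + L + m * ν.2, x.2.2)) := by
        rw [add_smul, ← add_assoc, hτ x hx]
        ext i
        fin_cases i
        · simp [vec, pt]; ring
        · simp [vec, pt]; ring
      rw [hpt]
      congr 2
      · rw [zpow_add₀ hb1.ne' (x.1 + L), zpow_add₀ hb2.ne' (x.2.1 + L), mul_pow, ← zpow_natCast (b1 ^ ν.1),
          ← zpow_natCast (b2 ^ ν.2), ← zpow_mul, ← zpow_mul, mul_comm ν.1, mul_comm ν.2]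
        ring)
  rw [Finset.card_image_of_injOn hτinj] at this
  omega

end

/-! ### The zero estimate -/

section

open MvPolynomial Module

theorem card_image_gt_of_fiber {α β : Type*} [DecidableEq β] (A : Finset α) (φ : α → β) (m d : ℕ)
    (hm : ∀ c, (A.filter (fun x => φ x = c)).card ≤ m) (h : m * d < A.card) :
    d < (A.image φ).card := by
  have := Finset.card_le_mul_card_image (f := φ) A m (fun c _ => hm c)
  by_contra hc
  have : m * (A.image φ).card ≤ m * d := Nat.mul_le_mul_left _ (by omega)
  omega

set_option maxHeartbeats 2000000 in
/-- Zero estimate: a polynomial in `x, y, Z` vanishing on the points attached to a large box is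
zero. -/
theorem zero_estimate {S D L R V K : ℕ} (p : ℕ → MvPolynomial (Fin 2) ℝ)
    (hD : ∀ s, (p s).totalDegree ≤ D) (b1 b2 γ : ℝ) (hb1 : 0 < b1) (hb2 : 0 < b2) (hγ : 0 < γ)
    (hind : ∀ u v : ℤ, b1 ^ u * b2 ^ v = 1 → u = 0 ∧ v = 0) (n a : ℤ)
    (hvan : ∀ x ∈ box (3 * L) (2 * R), ∑ s ∈ Finset.range (S + 1),
      eval (vec (pt n a x)) (p s) * (b1 ^ x.1 * b2 ^ x.2.1 * γ ^ x.2.2) ^ s = 0)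
    (hV : 0 < V) (hK : 2 ≤ K) (hSV : S * V ≤ L)
    (hcase_a : (L / V + 1) * (D * (S + 1)) < L * L)
    (hcase_b : (D * (S + 1)) * (D * (S + 1)) + D * (R * (L / K + 1)) < L * (L * R))
    (hcase_c : D * (S + 1) < L * R)
    (hna : ∀ ν : ℤ × ℤ, ν ≠ 0 → |ν.1| < K → |ν.2| < K → (K : ℤ) * L ≤ |ν.1 * a + ν.2 * n|) :
    ∀ s ≤ S, p s = 0 := by
  classical
  by_contra hcon
  push Not at hcon
  set d := D * (S + 1) with hd
  have hLpos : 0 < L := by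
    rcases Nat.eq_zero_or_pos L with h | h
    · simp [h] at hcase_c
    · exact h
  have hRpos : 0 < R := by
    rcases Nat.eq_zero_or_pos R with h | h
    · simp [h] at hcase_c
    · exact h
  have hSL : S ≤ L := (Nat.le_mul_of_pos_right S hV).trans hSV
  have hcrs : ∀ ν x, crs ν (pt n a x) = ν.1 * x.2.1 - ν.2 * x.1 - x.2.2 * (ν.1 * a + ν.2 * n) := by
    intro ν x; simp [crs, pt]; ring
  -- small multiples of `K L` cannot be small
  have hsmall : ∀ m k t : ℤ, (K : ℤ) * L ≤ |m| → k * m = t → |t| < K * L → k = 0 := by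
    intro m k t hm hkt ht
    by_contra hk
    have : 1 ≤ |k| := Int.one_le_abs hk
    rw [← hkt, abs_mul] at ht
    exact absurd (hm.trans (le_mul_of_one_le_left (abs_nonneg m) this)) (not_le.2 ht)
  have hinj : Set.InjOn (pt n a) (box L R) := by
    intro x hx y hy hxy
    have hx' := mem_box.1 (Finset.mem_coe.1 hx)
    have hy' := mem_box.1 (Finset.mem_coe.1 hy)
    have hn := hna (0, 1) (by simp) (by simp; omega) (by simp; omega)
    simp only [zero_mul, one_mul, zero_add] at hn
    have e1 : x.1 + x.2.2 * n = y.1 + y.2.2 * n := congrArg Prod.fst hxy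
    have e2 : x.2.1 - x.2.2 * a = y.2.1 - y.2.2 * a := congrArg Prod.snd hxy
    have hLK : (L : ℤ) ≤ K * L :=
      le_mul_of_one_le_left (by positivity) (by exact_mod_cast (by omega : 1 ≤ K))
    have h3 := hsmall n (x.2.2 - y.2.2) (y.1 - x.1) hn (by linarith) (by
      rw [abs_lt]; constructor <;> linarith [hx'.1.1, hx'.1.2, hy'.1.1, hy'.1.2])
    have h4 : x.2.2 = y.2.2 := by omega
    rw [h4] at e1 e2
    exact Prod.ext (by linarith) (Prod.ext (by linarith) h4)
  obtain ⟨s0, hs0, hps0⟩ := hcon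
  have hmain : ∀ ν : ℤ × ℤ, IsCoprime ν.1 ν.2 →
      d < (((box L R).image (pt n a)).image (crs ν)).card := by
    intro ν hν
    have hν0 : ν ≠ 0 := by
      intro h; rw [h] at hν; simp [isCoprime_zero_left] at hν
    rw [Finset.image_image]
    by_cases hbig : (V : ℤ) ≤ |ν.1| ∨ (V : ℤ) ≤ |ν.2|
    · -- long direction: a single slice suffices
      let B : Finset (ℤ × ℤ) := Finset.Ico 0 (L : ℤ) ×ˢ Finset.Ico 0 (L : ℤ)
      have hB : ∀ x, x ∈ B ↔ (0 ≤ x.1 ∧ x.1 < L) ∧ (0 ≤ x.2 ∧ x.2 < L) := by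
        intro x; simp [B]
      have h1 : d < (B.image (fun x => ν.1 * x.2 - ν.2 * x.1)).card := by
        apply card_image_gt_of_fiber B _ (L / V + 1) d
        · intro c
          apply card_slice_le hν hV hbig c
          intro x hx
          rw [Finset.mem_filter, hB] at hx
          exact ⟨hx.1.1, hx.1.2, hx.2⟩
        · simpa [B] using hcase_a
      refine h1.trans_le (Finset.card_le_card ?_)
      intro c hc
      obtain ⟨x, hx, rfl⟩ := Finset.mem_image.1 hc
      rw [hB] at hx
      refine Finset.mem_image.2 ⟨(x.1, x.2, 0), ?_, ?_⟩
      · rw [mem_box]; simp only; exact ⟨hx.1, hx.2, le_rfl, by exact_mod_cast hRpos⟩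
      · simp [hcrs]
    · push Not at hbig
      by_cases hmid : (K : ℤ) ≤ |ν.1| ∨ (K : ℤ) ≤ |ν.2|
      · -- medium direction
        by_contra hle
        push Not at hle
        set φ : ℤ × ℤ × ℤ → ℤ := crs ν ∘ pt n a with hφ
        set cl : ℤ → Finset (ℤ × ℤ × ℤ) := fun c => (box L R).filter (fun x => φ x = c) with hcl
        have hclmax : ∀ c, (cl c).card ≤ (L / K + 1) * R := by
          intro c
          have h1 : ((cl c).image (fun x => x.2.2)).card ≤ R := by
            have : (cl c).image (fun x => x.2.2) ⊆ Finset.Ico 0 (R : ℤ) := by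
              intro k hk
              obtain ⟨x, hx, rfl⟩ := Finset.mem_image.1 hk
              exact Finset.mem_Ico.2 (mem_box.1 (Finset.mem_filter.1 hx).1).2.2
            exact (Finset.card_le_card this).trans (by simp)
          refine (Finset.card_le_mul_card_image (f := fun x : ℤ × ℤ × ℤ => x.2.2) (cl c) (L / K + 1)
            (fun k _ => ?_)).trans (Nat.mul_le_mul_left _ h1)
          rw [← Finset.card_image_of_injOn (f := fun x : ℤ × ℤ × ℤ => (x.1, x.2.1))]
          · apply card_slice_le hν (by omega : 0 < K) hmid (c + k * (ν.1 * a + ν.2 * n))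
            intro y hy
            obtain ⟨x, hx, rfl⟩ := Finset.mem_image.1 hy
            obtain ⟨hx1, hx2⟩ := Finset.mem_filter.1 hx
            obtain ⟨hx3, hx4⟩ := Finset.mem_filter.1 hx1
            have hb := mem_box.1 hx3
            refine ⟨hb.1, hb.2.1, ?_⟩
            rw [hφ, Function.comp, hcrs, hx2] at hx4
            simp only; linarith
          · intro x hx y hy hxy
            have h1 := (Finset.mem_filter.1 hx).2
            have h2 := (Finset.mem_filter.1 hy).2
            simp only [Prod.mk.injEq] at hxy
            exact Prod.ext hxy.1 (Prod.ext hxy.2 (h1.trans h2.symm))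
        let Bg := ((box L R).image φ).filter (fun c => d < (cl c).card)
        by_cases hBg : Bg.card ≤ D
        · have h1 : (box L R).card = ∑ c ∈ (box L R).image φ, (cl c).card :=
            Finset.card_eq_sum_card_image φ _
          have h2 : ∑ c ∈ (box L R).image φ, (cl c).card ≤
              ∑ c ∈ (box L R).image φ, (d + if d < (cl c).card then (L / K + 1) * R else 0) := by
            refine Finset.sum_le_sum fun c _ => ?_
            split_ifs with h
            · exact (hclmax c).trans (by omega)
            · omega
          rw [Finset.sum_add_distrib, ← Finset.sum_filter, Finset.sum_const, Finset.sum_const,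
            smul_eq_mul, smul_eq_mul, ← h1, card_box] at h2
          have h3 : ((box L R).image φ).card * d ≤ d * d := Nat.mul_le_mul_right _ hle
          have h4 : Bg.card * ((L / K + 1) * R) ≤ D * ((L / K + 1) * R) := Nat.mul_le_mul_right _ hBg
          have h5 : D * ((L / K + 1) * R) = D * (R * (L / K + 1)) := by ring
          simp only [Bg] at h4
          omega
        · push Not at hBg
          apply hps0
          apply MvPolynomial.funext
          intro z
          rw [map_zero]
          have hN : (0 : ℝ) < (ν.1 : ℝ) ^ 2 + (ν.2 : ℝ) ^ 2 := by
            have : 0 < ν.1 ^ 2 + ν.2 ^ 2 := by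
              rcases hmid with h | h
              · have := abs_pos.1 (show 0 < |ν.1| by omega); positivity
              · have := abs_pos.1 (show 0 < |ν.2| by omega); positivity
            exact_mod_cast this
          set N := (ν.1 : ℝ) ^ 2 + (ν.2 : ℝ) ^ 2 with hNd
          let w : Fin 2 → ℝ := ![-(ν.2 : ℝ), (ν.1 : ℝ)]
          let q := restr z w (p s0)
          let t : ℤ → ℝ := fun c => (c + L * (ν.1 - ν.2) - (ν.1 * z 1 - ν.2 * z 0)) / N
          have hq : q = 0 := by
            apply Polynomial.eq_zero_of_natDegree_lt_card_of_eval_eq_zero' q (Bg.image t)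
            · intro r hr
              obtain ⟨c, hc, rfl⟩ := Finset.mem_image.1 hr
              rw [eval_restr]
              refine vanish_on_line p hD b1 b2 γ hb1 hb2 hγ hind n a hvan hSV ν hν0 hbig.1.le
                hbig.2.le c (cl c) (Finset.filter_subset _ _)
                (hinj.mono (Finset.coe_subset.2 (Finset.filter_subset _ _)))
                (fun x hx => (Finset.mem_filter.1 hx).2) (Finset.mem_filter.1 hc).2 _ ?_ s0 hs0
              simp [w, t]
              field_simp
              rw [hNd]; ring
            · rw [Finset.card_image_of_injective]
              · exact ((natDegree_restr_le _ _ _).trans (hD s0)).trans_lt hBg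
              · intro c c' h
                simp only [t] at h
                field_simp at h
                have : (c : ℝ) = c' := by linarith
                exact_mod_cast this
          have := eval_restr z w 0 (p s0)
          rw [show restr z w (p s0) = 0 from hq] at this
          simpa using this.symm
      · -- short direction
        push Not at hmid
        have hm := hna ν hν0 hmid.1 hmid.2
        let B : Finset (ℤ × ℤ) := Finset.Ico 0 (L : ℤ) ×ˢ Finset.Ico 0 (R : ℤ)
        have hB : ∀ x, x ∈ B ↔ (0 ≤ x.1 ∧ x.1 < L) ∧ (0 ≤ x.2 ∧ x.2 < R) := by
          intro x; simp [B]
        have hBc : B.card = L * R := by simp [B]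
        have hgen : ∀ u : ℤ, u ≠ 0 → |u| < K → ∀ x ∈ B, ∀ y ∈ B,
            u * x.1 - x.2 * (ν.1 * a + ν.2 * n) = u * y.1 - y.2 * (ν.1 * a + ν.2 * n) → x = y := by
          intro u hu huK x hx y hy he
          rw [hB] at hx hy
          have hlt : |u * (x.1 - y.1)| < K * L := by
            rw [abs_mul]
            have h1 : |x.1 - y.1| < L := by rw [abs_lt]; constructor <;> linarith [hx.1.1, hx.1.2, hy.1.1, hy.1.2]
            exact mul_lt_mul'' huK h1 (abs_nonneg _) (abs_nonneg _)
          have h3 := hsmall _ (x.2 - y.2) (u * (x.1 - y.1)) hm (by linarith) hlt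
          have h4 : x.2 = y.2 := by omega
          rw [h4] at he
          have h5 : u * (x.1 - y.1) = 0 := by linarith
          have h6 := (mul_eq_zero.1 h5).resolve_left hu
          exact Prod.ext (by omega) h4
        by_cases h1 : ν.1 = 0
        · have h2 : ν.2 ≠ 0 := fun h => hν0 (Prod.ext h1 h)
          rw [← hBc] at hcase_c
          refine hcase_c.trans_le (Finset.card_le_card_of_injOn
            (fun x => crs ν (pt n a (x.1, 0, x.2))) (fun x hx => ?_) ?_)
          · rw [Finset.mem_coe, hB] at hx
            refine Finset.mem_coe.2 (Finset.mem_image.2 ⟨(x.1, 0, x.2), ?_, rfl⟩)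
            rw [mem_box]; exact ⟨hx.1, ⟨le_rfl, Int.natCast_pos.2 hLpos⟩, hx.2⟩
          · intro x hx y hy hxy
            simp only [hcrs] at hxy
            exact hgen (-ν.2) (neg_ne_zero.2 h2) (by rw [abs_neg]; exact hmid.2) x hx y hy (by linarith)
        · rw [← hBc] at hcase_c
          refine hcase_c.trans_le (Finset.card_le_card_of_injOn
            (fun x => crs ν (pt n a (0, x.1, x.2))) (fun x hx => ?_) ?_)
          · rw [Finset.mem_coe, hB] at hx
            refine Finset.mem_coe.2 (Finset.mem_image.2 ⟨(0, x.1, x.2), ?_, rfl⟩)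
            rw [mem_box]; exact ⟨⟨le_rfl, Int.natCast_pos.2 hLpos⟩, hx.1, hx.2⟩
          · intro x hx y hy hxy
            simp only [hcrs] at hxy
            exact hgen ν.1 h1 hmid.1 x hx y hy (by linarith)
  -- eliminate the exponential
  have hb11 : b1 ≠ 1 := by
    intro h
    have := hind 1 0 (by simp [h])
    omega
  obtain ⟨f, hf, hfd, hfz⟩ := elim_exp (S := S) p b1 hb1 hb11 (vec (1, 0)) hD ⟨s0, hs0, hps0⟩
  have hfv : ∀ x ∈ box (2 * L) (2 * R), eval (vec (pt n a x)) f = 0 := by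
    intro x hx
    apply hfz
    refine ⟨b1 ^ x.1 * b2 ^ x.2.1 * γ ^ x.2.2, by positivity, fun m hm => ?_⟩
    have hxb := mem_box.1 hx
    push_cast at hxb
    have hmL : (m : ℤ) ≤ L := by exact_mod_cast hm.trans hSL
    have := hvan (x.1 + m, x.2.1, x.2.2) (by
      rw [mem_box]; push_cast
      refine ⟨⟨?_, ?_⟩, ⟨?_, ?_⟩, ⟨?_, ?_⟩⟩ <;>
        linarith [hxb.1.1, hxb.1.2, hxb.2.1.1, hxb.2.1.2, hxb.2.2.1, hxb.2.2.2])
    rw [← this]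
    refine Finset.sum_congr rfl fun s _ => ?_
    have hpt : vec (pt n a x) + (m : ℝ) • vec (1, 0) = vec (pt n a (x.1 + m, x.2.1, x.2.2)) := by
      ext i; fin_cases i
      · simp [vec, pt]; ring
      · simp [vec, pt]
    rw [hpt]
    congr 2
    rw [zpow_add₀ hb1.ne', zpow_natCast]; ring
  have hfu : ¬ IsUnit f := by
    intro hu
    obtain ⟨c, hc, hfc⟩ := isUnit_iff_eq_C_of_isReduced.1 hu
    have := hfv (0, 0, 0) (by rw [mem_box]; push_cast; simp; omega)
    rw [hfc, eval_C] at this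
    rw [this] at hc
    exact not_isUnit_zero hc
  obtain ⟨c, hg0, hrel⟩ := exists_coprime_combination hf hfu ((box L R).image (pt n a)) (by
    intro q hq _
    by_contra hcon
    push Not at hcon
    obtain ⟨ν, hν, hle⟩ := exists_direction hq hf _ hcon
    have := hmain ν hν
    omega)
  set g := ∑ w ∈ (box L R).image (pt n a), c w • tr (vec w) f with hg
  have hgd : g.totalDegree ≤ d := by
    refine totalDegree_finsetSum_le fun w _ => ?_
    exact (totalDegree_smul_le _ _).trans ((totalDegree_tr_le _ _).trans hfd)
  have hbz := bezout hf hg0 hrel (((box L R).image (pt n a)).image vec) (by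
    intro z hz
    obtain ⟨w, hw, rfl⟩ := Finset.mem_image.1 hz
    obtain ⟨x, hx, rfl⟩ := Finset.mem_image.1 hw
    have hxb := mem_box.1 hx
    refine ⟨hfv x ?_, ?_⟩
    · rw [mem_box]; push_cast
      refine ⟨⟨?_, ?_⟩, ⟨?_, ?_⟩, ⟨?_, ?_⟩⟩ <;>
        linarith [hxb.1.1, hxb.1.2, hxb.2.1.1, hxb.2.1.2, hxb.2.2.1, hxb.2.2.2]
    · rw [hg, map_sum]
      refine Finset.sum_eq_zero fun w hw => ?_
      obtain ⟨y, hy, rfl⟩ := Finset.mem_image.1 hw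
      have hyb := mem_box.1 hy
      rw [smul_eval, eval_tr, ← vec_add, ← pt_add, hfv, mul_zero]
      rw [mem_box]; push_cast
      rw [Prod.snd_add, Prod.fst_add, Prod.fst_add, Prod.snd_add]
      refine ⟨⟨?_, ?_⟩, ⟨?_, ?_⟩, ⟨?_, ?_⟩⟩ <;>
        linarith [hxb.1.1, hxb.1.2, hxb.2.1.1, hxb.2.1.2, hxb.2.2.1, hxb.2.2.2,
          hyb.1.1, hyb.1.2, hyb.2.1.1, hyb.2.1.2, hyb.2.2.1, hyb.2.2.2])
  rw [Finset.card_image_of_injective _ (by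
    intro v w h
    have e0 := congrFun h 0
    have e1 := congrFun h 1
    simp [vec] at e0 e1
    exact Prod.ext e0 e1), Finset.card_image_of_injOn hinj, card_box] at hbz
  have : f.totalDegree * g.totalDegree ≤ d * d := Nat.mul_le_mul hfd hgd
  omega

end

/-! ### Pigeonhole principle and Liouville inequality -/

section

/-- Pigeonhole principle for real linear forms with bounded integer unknowns. -/
theorem siegel_real {I J : Type*} [Fintype I] [Fintype J] (A : I → J → ℝ) {C : ℝ}
    (hC : 0 < C) (hA : ∀ i j, |A i j| ≤ C) {H : ℕ} (hH : 1 ≤ H) (hJ : 0 < Fintype.card J)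
    (hIJ : 3 * Fintype.card J ≤ Fintype.card I) :
    ∃ p : I → ℤ, p ≠ 0 ∧ (∀ i, |p i| ≤ H) ∧
      ∀ j, |∑ i, (p i : ℝ) * A i j| ≤ 2 * Fintype.card I * C / H ^ 2 := by
  classical
  set N := Fintype.card I with hN
  have hNpos : (0 : ℝ) < N := by
    have : 0 < N := by omega
    exact_mod_cast this
  have hHr : (1 : ℝ) ≤ H := by exact_mod_cast hH
  have hHpos : (0 : ℝ) < H := by linarith
  set M : ℝ := N * C * H with hM
  have hMpos : 0 < M := by positivity
  let v : (I → Fin (H + 1)) → J → ℝ := fun q j => ∑ i, ((q i : ℕ) : ℝ) * A i j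
  have hv : ∀ q j, |v q j| ≤ M := by
    intro q j
    calc |v q j| ≤ ∑ i, |((q i : ℕ) : ℝ) * A i j| := Finset.abs_sum_le_sum_abs _ _
      _ ≤ ∑ _i : I, (H : ℝ) * C := Finset.sum_le_sum fun i _ => by
          rw [abs_mul, Nat.abs_cast]
          have : ((q i : ℕ) : ℝ) ≤ H := by exact_mod_cast Nat.lt_succ_iff.1 (q i).2
          exact mul_le_mul this (hA i j) (abs_nonneg _) hHpos.le
      _ = M := by simp [hM, ← hN]; ring
  have hb : ∀ q j, ⌊(v q j + M) * H ^ 2 / (2 * N * C)⌋₊ < H ^ 3 + 1 := by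
    intro q j
    have h1 := abs_le.1 (hv q j)
    rw [Nat.lt_succ_iff]
    apply Nat.floor_le_of_le
    rw [div_le_iff₀ (by positivity)]
    push_cast
    have : v q j + M ≤ 2 * M := by linarith
    calc (v q j + M) * H ^ 2 ≤ 2 * M * H ^ 2 := by gcongr
      _ = _ := by rw [hM]; ring
  let bin : (I → Fin (H + 1)) → (J → Fin (H ^ 3 + 1)) := fun q j => ⟨_, hb q j⟩
  have hcard : Fintype.card (J → Fin (H ^ 3 + 1)) < Fintype.card (I → Fin (H + 1)) := by
    rw [Fintype.card_fun, Fintype.card_fun, Fintype.card_fin, Fintype.card_fin]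
    calc (H ^ 3 + 1) ^ Fintype.card J < ((H + 1) ^ 3) ^ Fintype.card J := by
          apply Nat.pow_lt_pow_left _ (by omega)
          have : (H + 1) ^ 3 = H ^ 3 + 1 + 3 * H ^ 2 + 3 * H := by ring
          have : 0 < 3 * H := by omega
          nlinarith [Nat.zero_le (3 * H ^ 2)]
      _ = (H + 1) ^ (3 * Fintype.card J) := by rw [pow_mul]
      _ ≤ _ := Nat.pow_le_pow_right (by omega) hIJ
  obtain ⟨q, q', hne, heq⟩ := Fintype.exists_ne_map_eq_of_card_lt bin hcard
  refine ⟨fun i => ((q i : ℕ) : ℤ) - ((q' i : ℕ) : ℤ), ?_, ?_, ?_⟩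
  · intro h0
    apply hne
    funext i
    have := congrFun h0 i
    simp only [Pi.zero_apply] at this
    exact Fin.ext (by omega)
  · intro i
    have h1 := (q i).2
    have h2 := (q' i).2
    show |((q i : ℕ) : ℤ) - ((q' i : ℕ) : ℤ)| ≤ H
    rw [abs_le]; constructor <;> omega
  · intro j
    have h1 : ∑ i, (((((q i : ℕ) : ℤ) - ((q' i : ℕ) : ℤ) : ℤ)) : ℝ) * A i j = v q j - v q' j := by
      simp only [v]
      rw [← Finset.sum_sub_distrib]
      refine Finset.sum_congr rfl fun i _ => ?_
      push_cast; ring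
    rw [h1]
    have h2 : ⌊(v q j + M) * H ^ 2 / (2 * N * C)⌋₊ = ⌊(v q' j + M) * H ^ 2 / (2 * N * C)⌋₊ :=
      congrArg Fin.val (congrFun heq j)
    have p1 : 0 ≤ (v q j + M) * H ^ 2 / (2 * N * C) := by
      have := abs_le.1 (hv q j)
      have : 0 ≤ v q j + M := by linarith
      positivity
    have p2 : 0 ≤ (v q' j + M) * H ^ 2 / (2 * N * C) := by
      have := abs_le.1 (hv q' j)
      have : 0 ≤ v q' j + M := by linarith
      positivity
    have a1 := Nat.floor_le p1
    have a2 := Nat.lt_floor_add_one ((v q j + M) * H ^ 2 / (2 * N * C))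
    have a3 := Nat.floor_le p2
    have a4 := Nat.lt_floor_add_one ((v q' j + M) * H ^ 2 / (2 * N * C))
    rw [h2] at a1 a2
    have h3 : |(v q j - v q' j) * H ^ 2 / (2 * N * C)| ≤ 1 := by
      have : (v q j - v q' j) * H ^ 2 / (2 * N * C) =
        (v q j + M) * H ^ 2 / (2 * N * C) - (v q' j + M) * H ^ 2 / (2 * N * C) := by ring
      rw [this, abs_le]; constructor <;> linarith
    have h4 : v q j - v q' j = ((v q j - v q' j) * H ^ 2 / (2 * N * C)) * (2 * N * C / H ^ 2) := by
      field_simp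
    rw [h4, abs_mul, abs_of_pos (show 0 < 2 * N * C / (H : ℝ) ^ 2 by positivity)]
    have : 0 < 2 * N * C / (H : ℝ) ^ 2 := by positivity
    nlinarith

/-- Liouville's inequality in the ring generated by the golden ratio: the norm of a nonzero element
has absolute value at least one. -/
theorem liouville_golden (θ : Polynomial ℤ) (h : Polynomial.aeval goldenRatio θ ≠ 0) :
    1 ≤ |Polynomial.aeval goldenRatio θ| * |Polynomial.aeval goldenConj θ| := by
  have hred : ∀ θ : Polynomial ℤ, ∃ c d : ℤ, Polynomial.aeval goldenRatio θ = c + d * goldenRatio ∧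
      Polynomial.aeval goldenConj θ = c + d * goldenConj := by
    intro θ
    induction θ using Polynomial.induction_on' with
    | add p q hp hq =>
      obtain ⟨c, d, h1, h2⟩ := hp
      obtain ⟨c', d', h3, h4⟩ := hq
      refine ⟨c + c', d + d', ?_, ?_⟩
      · rw [map_add, h1, h3]; push_cast; ring
      · rw [map_add, h2, h4]; push_cast; ring
    | monomial n a =>
      induction n with
      | zero => exact ⟨a, 0, by simp, by simp⟩
      | succ n ih =>
        obtain ⟨c, d, h1, h2⟩ := ih
        have e1 := goldenRatio_sq
        have e2 := goldenConj_sq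
        rw [Polynomial.aeval_monomial] at h1 h2
        refine ⟨d, c + d, ?_, ?_⟩
        · rw [Polynomial.aeval_monomial, pow_succ, ← mul_assoc, h1]; push_cast
          linear_combination (d : ℝ) * e1
        · rw [Polynomial.aeval_monomial, pow_succ, ← mul_assoc, h2]; push_cast
          linear_combination (d : ℝ) * e2
  obtain ⟨c, d, h1, h2⟩ := hred θ
  rw [← abs_mul]
  have hprod : Polynomial.aeval goldenRatio θ * Polynomial.aeval goldenConj θ =
      ((c ^ 2 + c * d - d ^ 2 : ℤ) : ℝ) := by
    rw [h1, h2]; push_cast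
    have e1 := goldenRatio_mul_goldenConj
    have e2 := goldenRatio_add_goldenConj
    linear_combination (d : ℝ) ^ 2 * e1 + (c : ℝ) * d * e2
  have h3 : Polynomial.aeval goldenConj θ ≠ 0 := by
    intro h0
    rw [h2] at h0
    by_cases hd : d = 0
    · rw [hd] at h0 h1; simp at h0 h1
      apply h; rw [h1, h0]; simp
    · have hd' : (d : ℝ) ≠ 0 := by exact_mod_cast hd
      have : goldenConj = ((-c / d : ℚ) : ℝ) := by
        push_cast; rw [eq_div_iff hd']; linarith
      exact goldenConj_irrational ⟨_, this.symm⟩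
  have h4 : (c ^ 2 + c * d - d ^ 2 : ℤ) ≠ 0 := by
    intro h0
    rw [h0] at hprod
    simp at hprod
    exact hprod.elim (fun h' => h h') h3
  rw [hprod, ← Int.cast_abs]
  exact_mod_cast Int.one_le_abs h4

end

/-! ### The auxiliary function -/

section

/-- Combinations with small coefficients of functions that are short sums of monomials: a nontrivial
integer combination is small wherever the monomials are bounded by `μ`. -/
theorem siegel_monomials {I J ρ : Type*} [Fintype I] [Fintype J] [DecidableEq J]
    (tm : I → Finset ρ) (g : I → ρ → J) (c : I → ρ → ℝ) (μ : J → ℝ) (hμ : ∀ j, 0 < μ j) {C : ℝ}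
    (hC : 0 < C) (hc : ∀ i, ∑ r ∈ tm i, |c i r| * μ (g i r) ≤ C) {H : ℕ} (hH : 1 ≤ H)
    (hJ : 0 < Fintype.card J) (hIJ : 3 * Fintype.card J ≤ Fintype.card I) :
    ∃ p : I → ℤ, p ≠ 0 ∧ (∀ i, |p i| ≤ H) ∧ ∀ M : J → ℝ, (∀ j, |M j| ≤ μ j) →
      |∑ i, (p i : ℝ) * ∑ r ∈ tm i, c i r * M (g i r)| ≤
        Fintype.card J * (2 * Fintype.card I * C / H ^ 2) := by
  let A : I → J → ℝ := fun i j => ∑ r ∈ tm i, if g i r = j then c i r * μ j else 0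
  have hA : ∀ i j, |A i j| ≤ C := by
    intro i j
    refine le_trans ?_ (hc i)
    refine (Finset.abs_sum_le_sum_abs _ _).trans (Finset.sum_le_sum fun r _ => ?_)
    split_ifs with h
    · rw [abs_mul, h, abs_of_pos (hμ j)]
    · rw [abs_zero]; exact mul_nonneg (abs_nonneg _) (hμ _).le
  obtain ⟨p, hp0, hpH, hp⟩ := siegel_real A hC hA hH hJ hIJ
  refine ⟨p, hp0, hpH, fun M hM => ?_⟩
  have key : ∑ i, (p i : ℝ) * ∑ r ∈ tm i, c i r * M (g i r) =
      ∑ j, (M j / μ j) * ∑ i, (p i : ℝ) * A i j := by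
    simp only [Finset.mul_sum]
    rw [Finset.sum_comm (s := (Finset.univ : Finset J))]
    refine Finset.sum_congr rfl fun i _ => ?_
    simp only [A, Finset.mul_sum]
    rw [Finset.sum_comm (s := (Finset.univ : Finset J))]
    refine Finset.sum_congr rfl fun r _ => ?_
    rw [Finset.sum_eq_single (g i r)]
    · rw [if_pos rfl]
      have := (hμ (g i r)).ne'
      field_simp
    · intro j _ hj
      rw [if_neg (Ne.symm hj)]; ring
    · simp
  rw [key]
  refine (Finset.abs_sum_le_sum_abs _ _).trans ?_
  calc ∑ j, |M j / μ j * ∑ i, (p i : ℝ) * A i j| ≤ ∑ _j : J, (2 * Fintype.card I * C / H ^ 2) := by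
        refine Finset.sum_le_sum fun j _ => ?_
        rw [abs_mul]
        have h1 : |M j / μ j| ≤ 1 := by
          rw [abs_div, abs_of_pos (hμ j), div_le_one (hμ j)]; exact hM j
        calc _ ≤ 1 * |∑ i, (p i : ℝ) * A i j| := by gcongr
          _ ≤ _ := by rw [one_mul]; exact hp j
    _ = _ := by simp

theorem sum_pow_div_factorial_le_exp (K : ℕ) {x : ℝ} (hx : 0 ≤ x) :
    ∑ m ∈ Finset.range K, x ^ m / (m.factorial : ℝ) ≤ exp x := Real.sum_le_exp_of_nonneg hx K

/-- The auxiliary function. -/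
theorem exists_auxiliary (T S K H : ℕ) (hK : 1 ≤ K) (hH : 1 ≤ H)
    (hcount : 3 * ((K + T) * (2 * T + 1)) ≤ (T + 1) * ((T + 1) * (S + 1)))
    (l b U X B : ℝ) (hl : 0 < l) (hb : 0 < b) (hU : 0 < U) (hX : 0 < X) (hB1 : 1 ≤ B)
    (hB : (U + b * X) / l ≤ B) (hXB : X ≤ B) :
    ∃ p : Fin (T + 1) × Fin (T + 1) × Fin (S + 1) → ℤ, p ≠ 0 ∧ (∀ i, |p i| ≤ H) ∧
      ∀ u y : ℝ, |u| ≤ U → |y| ≤ X →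
        |∑ i, (p i : ℝ) * (((u - b * y) / l) ^ (i.1 : ℕ) * y ^ (i.2.1 : ℕ) *
          ∑ m ∈ Finset.range K, ((i.2.2 : ℕ) * u) ^ m / (m.factorial : ℝ))| ≤
        ((K + T) * (2 * T + 1) : ℕ) * (2 * ((T + 1) * ((T + 1) * (S + 1)) : ℕ) *
          (B ^ (2 * T) * exp (S * U)) / H ^ 2) := by
  let I := Fin (T + 1) × Fin (T + 1) × Fin (S + 1)
  let J := Fin (K + T) × Fin (2 * T + 1)
  let tm : I → Finset (ℕ × ℕ) := fun i => Finset.range (i.1 + 1) ×ˢ Finset.range K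
  have hJpos : 0 < K + T := by omega
  let g : I → ℕ × ℕ → J := fun i r =>
    (⟨(r.1 + r.2) % (K + T), Nat.mod_lt _ hJpos⟩,
     ⟨((i.1 : ℕ) - r.1 + i.2.1) % (2 * T + 1), Nat.mod_lt _ (by omega)⟩)
  have hg : ∀ i : I, ∀ r ∈ tm i, ((g i r).1 : ℕ) = r.1 + r.2 ∧
      ((g i r).2 : ℕ) = (i.1 : ℕ) - r.1 + i.2.1 := by
    intro i r hr
    simp only [tm, Finset.mem_product, Finset.mem_range] at hr
    have h1 := i.1.2; have h2 := i.2.1.2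
    exact ⟨Nat.mod_eq_of_lt (by omega), Nat.mod_eq_of_lt (by omega)⟩
  let c : I → ℕ × ℕ → ℝ := fun i r =>
    (1 / l) ^ (i.1 : ℕ) * ((-b) ^ ((i.1 : ℕ) - r.1) * ((i.1 : ℕ).choose r.1 : ℝ)) *
      (((i.2.2 : ℕ) : ℝ) ^ r.2 / (r.2.factorial : ℝ))
  have expand : ∀ (i : I) (β u y : ℝ), ((u + β * y) / l) ^ (i.1 : ℕ) * y ^ (i.2.1 : ℕ) *
      ∑ m ∈ Finset.range K, ((i.2.2 : ℕ) * u) ^ m / (m.factorial : ℝ) =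
      ∑ r ∈ tm i, ((1 / l) ^ (i.1 : ℕ) * (β ^ ((i.1 : ℕ) - r.1) * ((i.1 : ℕ).choose r.1 : ℝ)) *
      (((i.2.2 : ℕ) : ℝ) ^ r.2 / (r.2.factorial : ℝ))) * (u ^ (r.1 + r.2) * y ^ ((i.1 : ℕ) - r.1 + i.2.1)) := by
    intro i β u y
    rw [Finset.sum_product, div_eq_mul_one_div, mul_pow, add_pow, Finset.sum_mul, Finset.sum_mul, Finset.sum_mul]
    refine Finset.sum_congr rfl fun t _ => ?_
    rw [Finset.mul_sum]
    refine Finset.sum_congr rfl fun m _ => ?_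
    simp only
    rw [mul_pow, mul_pow, pow_add, pow_add]
    ring
  let μ : J → ℝ := fun j => U ^ (j.1 : ℕ) * X ^ (j.2 : ℕ)
  have hμ : ∀ j, 0 < μ j := fun j => by positivity
  have hCbound : ∀ i, ∑ r ∈ tm i, |c i r| * μ (g i r) ≤ B ^ (2 * T) * exp (S * U) := by
    intro i
    have e1 : ∑ r ∈ tm i, |c i r| * μ (g i r) = ((U + b * X) / l) ^ (i.1 : ℕ) * X ^ (i.2.1 : ℕ) *
      ∑ m ∈ Finset.range K, ((i.2.2 : ℕ) * U) ^ m / (m.factorial : ℝ) := by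
      rw [expand]
      refine Finset.sum_congr rfl fun r hr => ?_
      simp only [μ]
      rw [(hg i r hr).1, (hg i r hr).2]
      congr 1
      simp only [c, abs_mul, abs_pow, abs_neg, abs_div, abs_one, Nat.abs_cast, abs_of_pos hb, abs_of_pos hl]
    rw [e1]
    have hi := i.1.2; have hj := i.2.1.2
    have f1 : ((U + b * X) / l) ^ (i.1 : ℕ) ≤ B ^ T :=
      (pow_le_pow_left₀ (by positivity) hB _).trans (pow_le_pow_right₀ hB1 (by omega))
    have f2 : X ^ (i.2.1 : ℕ) ≤ B ^ T :=
      (pow_le_pow_left₀ hX.le hXB _).trans (pow_le_pow_right₀ hB1 (by omega))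
    have f3 : ∑ m ∈ Finset.range K, ((i.2.2 : ℕ) * U) ^ m / (m.factorial : ℝ) ≤ exp (S * U) := by
      refine (sum_pow_div_factorial_le_exp K (by positivity)).trans (exp_le_exp.2 ?_)
      have : ((i.2.2 : ℕ) : ℝ) ≤ S := by exact_mod_cast Nat.lt_succ_iff.1 i.2.2.2
      gcongr
    rw [two_mul, pow_add]
    gcongr
  obtain ⟨p, hp0, hpH, hp⟩ := siegel_monomials tm g c μ hμ (C := B ^ (2 * T) * exp (S * U))
    (by positivity) hCbound hH (by simp [J]; omega) (by
      simp only [I, J, Fintype.card_prod, Fintype.card_fin]; exact hcount)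
  refine ⟨p, hp0, hpH, fun u y hu hy => ?_⟩
  have := hp (fun j => u ^ (j.1 : ℕ) * y ^ (j.2 : ℕ)) (fun j => by
    rw [abs_mul, abs_pow, abs_pow]; simp only [μ]; gcongr)
  simp only [I, J, Fintype.card_prod, Fintype.card_fin] at this
  refine le_trans (le_of_eq ?_) this
  congr 1
  refine Finset.sum_congr rfl fun i _ => ?_
  congr 1
  rw [show u - b * y = u + (-b) * y by ring, expand]
  refine Finset.sum_congr rfl fun r hr => ?_
  rw [(hg i r hr).1, (hg i r hr).2]

end

/-! ### Smallness of the auxiliary function -/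

section

theorem pow_div_factorial_small {x : ℝ} {K : ℕ} (hx : 0 ≤ x) (hK : 30 * x ≤ K) :
    x ^ K / (K.factorial : ℝ) ≤ exp (-(2 * K)) := by
  have h1 : (K : ℝ) ^ K / (K.factorial : ℝ) ≤ exp K := pow_div_factorial_le_exp _ (by positivity) K
  have h2 : x ^ K ≤ (K : ℝ) ^ K * exp (-(3 * K)) := by
    have e3 : exp 3 ≤ 30 := by
      have : exp 3 = exp 1 ^ 3 := by rw [← exp_nat_mul]; norm_num
      rw [this]
      have := exp_one_lt_d9
      have h0 := exp_pos 1
      calc exp 1 ^ 3 ≤ 2.7182818286 ^ 3 := by gcongr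
        _ ≤ 30 := by norm_num
    have h3 : x ≤ K * exp (-3) := by
      rw [exp_neg, ← div_eq_mul_inv, le_div_iff₀ (exp_pos _)]
      nlinarith
    calc x ^ K ≤ (K * exp (-3)) ^ K := by gcongr
      _ = _ := by rw [mul_pow, ← exp_nat_mul]; ring_nf
  calc x ^ K / (K.factorial : ℝ) ≤ (K : ℝ) ^ K * exp (-(3 * K)) / (K.factorial : ℝ) := by gcongr
    _ = (K : ℝ) ^ K / (K.factorial : ℝ) * exp (-(3 * K)) := by ring
    _ ≤ exp K * exp (-(3 * K)) := by gcongr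
    _ = _ := by rw [← exp_add]; ring_nf

theorem exp_sub_trunc_le {x y : ℝ} {K : ℕ} (hx : |x| ≤ y) (hK : 30 * y ≤ K) :
    |exp x - ∑ m ∈ Finset.range K, x ^ m / (m.factorial : ℝ)| ≤ 2 * exp (-(2 * K)) := by
  have hy : 0 ≤ y := (abs_nonneg _).trans hx
  have h := Complex.exp_bound' (x := (x : ℂ)) (n := K) (by
    rw [Complex.norm_real, Real.norm_eq_abs, div_le_iff₀ (by positivity)]
    push_cast
    linarith)
  rw [Complex.norm_real, Real.norm_eq_abs] at h
  have e : Complex.exp x - ∑ m ∈ Finset.range K, (x : ℂ) ^ m / (m.factorial : ℂ)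
      = ((exp x - ∑ m ∈ Finset.range K, x ^ m / (m.factorial : ℝ) : ℝ) : ℂ) := by
    push_cast; rfl
  rw [e, Complex.norm_real, Real.norm_eq_abs] at h
  have h2 : |x| ^ K / (K.factorial : ℝ) ≤ y ^ K / (K.factorial : ℝ) := by gcongr
  have h3 := pow_div_factorial_small hy hK
  linarith

theorem abs_pow_sub_pow_le_mul {x y B : ℝ} (hx : |x| ≤ B) (hy : |y| ≤ B) (hB : 1 ≤ B) {i T : ℕ}
    (hi : i ≤ T) : |x ^ i - y ^ i| ≤ T * B ^ T * |x - y| := by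
  have h := abs_pow_sub_pow_le x y i
  have h1 : max |x| |y| ^ (i - 1) ≤ B ^ T := by
    calc max |x| |y| ^ (i - 1) ≤ B ^ (i - 1) := by gcongr; exact max_le hx hy
      _ ≤ B ^ T := pow_le_pow_right₀ hB (by omega)
  have h2 : (i : ℝ) ≤ T := by exact_mod_cast hi
  calc |x ^ i - y ^ i| ≤ |x - y| * i * max |x| |y| ^ (i - 1) := h
    _ ≤ |x - y| * T * B ^ T := by gcongr
    _ = _ := by ring

/-- The auxiliary function stays small at the points `(x, y, exp u)` at which
`l * x + b * y` is very close to `u`. -/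
theorem auxiliary_small (T S K H : ℕ) (hK : 1 ≤ K) (hH : 1 ≤ H)
    (hcount : 3 * ((K + T) * (2 * T + 1)) ≤ (T + 1) * ((T + 1) * (S + 1)))
    (l b U X B ε : ℝ) (hl : 0 < l) (hb : 0 < b) (hU : 0 < U) (hX : 0 < X) (hB1 : 1 ≤ B)
    (hB : (U + b * X) / l ≤ B) (hXB : X ≤ B) (hKU : 30 * (S * U) ≤ K) :
    ∃ p : Fin (T + 1) × Fin (T + 1) × Fin (S + 1) → ℤ, p ≠ 0 ∧ (∀ i, |p i| ≤ H) ∧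
      ∀ x u y, |u| ≤ U → |y| ≤ X → |x| ≤ X → |x - (u - b * y) / l| ≤ ε →
        |∑ i, (p i : ℝ) * (x ^ (i.1 : ℕ) * y ^ (i.2.1 : ℕ) * exp u ^ (i.2.2 : ℕ))| ≤
          ((K + T) * (2 * T + 1) : ℕ) * (2 * ((T + 1) * ((T + 1) * (S + 1)) : ℕ) *
            (B ^ (2 * T) * exp (S * U)) / H ^ 2) +
          ((T + 1) * ((T + 1) * (S + 1)) : ℕ) * (H * (T * B ^ (2 * T) * ε * exp (S * U)
            + B ^ (2 * T) * (2 * exp (-(2 * K))))) := by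
  obtain ⟨p, hp0, hpH, hp⟩ := exists_auxiliary T S K H hK hH hcount l b U X B hl hb hU hX hB1 hB hXB
  refine ⟨p, hp0, hpH, fun x u y hu hy hx hxu => ?_⟩
  set x' := (u - b * y) / l with hx'
  have hε : 0 ≤ ε := (abs_nonneg _).trans hxu
  have hx'B : |x'| ≤ B := by
    refine le_trans ?_ hB
    rw [hx', abs_div, abs_of_pos hl]
    gcongr
    calc |u - b * y| ≤ |u| + |b * y| := abs_sub _ _
      _ = |u| + b * |y| := by rw [abs_mul, abs_of_pos hb]
      _ ≤ _ := by gcongr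
  have hxB : |x| ≤ B := hx.trans hXB
  have hyB : |y| ≤ B := hy.trans hXB
  have key : ∀ i : Fin (T + 1) × Fin (T + 1) × Fin (S + 1),
      |(p i : ℝ) * (x ^ (i.1 : ℕ) * y ^ (i.2.1 : ℕ) * exp u ^ (i.2.2 : ℕ)) -
        (p i : ℝ) * (x' ^ (i.1 : ℕ) * y ^ (i.2.1 : ℕ) *
          ∑ m ∈ Finset.range K, ((i.2.2 : ℕ) * u) ^ m / (m.factorial : ℝ))| ≤
      H * (T * B ^ (2 * T) * ε * exp (S * U) + B ^ (2 * T) * (2 * exp (-(2 * K)))) := by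
    intro i
    have hi1 : (i.1 : ℕ) ≤ T := Nat.lt_succ_iff.1 i.1.2
    have hi2 : (i.2.1 : ℕ) ≤ T := Nat.lt_succ_iff.1 i.2.1.2
    have hi3 : (i.2.2 : ℕ) ≤ S := Nat.lt_succ_iff.1 i.2.2.2
    generalize (i.1 : ℕ) = α at *
    generalize (i.2.1 : ℕ) = β at *
    generalize (i.2.2 : ℕ) = s at *
    have hsU : |(s : ℝ) * u| ≤ S * U := by
      rw [abs_mul, Nat.abs_cast]
      have : (s : ℝ) ≤ S := by exact_mod_cast hi3
      gcongr
    have hpi : |(p i : ℝ)| ≤ H := by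
      have := hpH i
      exact_mod_cast this
    have hyβ : |y ^ β| ≤ B ^ T := by
      rw [abs_pow]
      calc |y| ^ β ≤ B ^ β := by gcongr
        _ ≤ B ^ T := pow_le_pow_right₀ hB1 hi2
    have hxα : |x' ^ α| ≤ B ^ T := by
      rw [abs_pow]
      calc |x'| ^ α ≤ B ^ α := by gcongr
        _ ≤ B ^ T := pow_le_pow_right₀ hB1 hi1
    have h1 := abs_pow_sub_pow_le_mul hxB hx'B hB1 hi1
    have h2 := exp_sub_trunc_le hsU hKU
    set P := ∑ m ∈ Finset.range K, ((s : ℝ) * u) ^ m / (m.factorial : ℝ)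
    have he : exp u ^ s = exp (s * u) := by rw [← exp_nat_mul]
    have heU : exp (s * u) ≤ exp (S * U) := exp_le_exp.2 ((le_abs_self _).trans hsU)
    have hBT : B ^ (2 * T) = B ^ T * B ^ T := by rw [two_mul, pow_add]
    have hBp : 0 ≤ B ^ T := by positivity
    rw [← mul_sub, abs_mul]
    have e : x ^ α * y ^ β * exp u ^ s - x' ^ α * y ^ β * P =
        (x ^ α - x' ^ α) * y ^ β * exp (s * u) + x' ^ α * y ^ β * (exp (s * u) - P) := by
      rw [he]; ring
    have hmain : |x ^ α * y ^ β * exp u ^ s - x' ^ α * y ^ β * P| ≤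
        T * B ^ (2 * T) * ε * exp (S * U) + B ^ (2 * T) * (2 * exp (-(2 * K))) := by
      rw [e]
      refine (abs_add_le _ _).trans (add_le_add ?_ ?_)
      · rw [abs_mul, abs_mul, abs_of_pos (exp_pos _), hBT]
        calc |x ^ α - x' ^ α| * |y ^ β| * exp (s * u)
            ≤ (T * B ^ T * ε) * B ^ T * exp (S * U) := by
              gcongr
              exact h1.trans (by gcongr)
          _ = _ := by ring
      · rw [abs_mul, abs_mul, hBT]
        gcongr
    gcongr
  have hsum := Finset.abs_sum_le_sum_abs (fun i => (p i : ℝ) * (x ^ (i.1 : ℕ) * y ^ (i.2.1 : ℕ) *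
    exp u ^ (i.2.2 : ℕ)) - (p i : ℝ) * (x' ^ (i.1 : ℕ) * y ^ (i.2.1 : ℕ) *
          ∑ m ∈ Finset.range K, ((i.2.2 : ℕ) * u) ^ m / (m.factorial : ℝ))) Finset.univ
  have hsum2 := hsum.trans (Finset.sum_le_sum fun i _ => key i)
  rw [Finset.sum_const, Finset.sum_sub_distrib, nsmul_eq_mul] at hsum2
  have hcard : (Finset.univ : Finset (Fin (T + 1) × Fin (T + 1) × Fin (S + 1))).card =
      (T + 1) * ((T + 1) * (S + 1)) := by simp
  rw [hcard] at hsum2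
  have h3 := hp u y hu hy
  have h4 := abs_sub_abs_le_abs_sub (∑ i, (p i : ℝ) * (x ^ (i.1 : ℕ) * y ^ (i.2.1 : ℕ) *
    exp u ^ (i.2.2 : ℕ))) (∑ i, (p i : ℝ) * (x' ^ (i.1 : ℕ) * y ^ (i.2.1 : ℕ) *
          ∑ m ∈ Finset.range K, ((i.2.2 : ℕ) * u) ^ m / (m.factorial : ℝ)))
  linarith

end

/-! ### Arithmetic lower bounds -/

section

/-- Liouville's inequality for the values of the auxiliary function. -/
theorem liouville_auxiliary {T S H M Q : ℕ} (p : Fin (T + 1) × Fin (T + 1) × Fin (S + 1) → ℤ)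
    (hp : ∀ i, |p i| ≤ H) (x y : ℤ) (X E : ℝ) (hX : 1 ≤ X) (hE : 1 ≤ E) (hx : |(x : ℝ)| ≤ X)
    (hy : |(y : ℝ)| ≤ X) (l1 l2 l3 : ℕ) (h1 : l2 ≤ M) (h3 : l3 ≤ Q)
    (η δ : Polynomial ℤ) (hδ0 : Polynomial.aeval goldenRatio δ ≠ 0)
    (hδ : |Polynomial.aeval goldenRatio δ| ≤ E) (hδ' : |Polynomial.aeval goldenConj δ| ≤ E)
    (hη' : |Polynomial.aeval goldenConj η| ≤ E)
    (hF : ∑ i, (p i : ℝ) * ((x : ℝ) ^ (i.1 : ℕ) * (y : ℝ) ^ (i.2.1 : ℕ) *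
      (goldenRatio ^ l1 * 3 ^ l2 * (Polynomial.aeval goldenRatio η /
        Polynomial.aeval goldenRatio δ) ^ l3) ^ (i.2.2 : ℕ)) ≠ 0) :
    1 ≤ |∑ i, (p i : ℝ) * ((x : ℝ) ^ (i.1 : ℕ) * (y : ℝ) ^ (i.2.1 : ℕ) *
      (goldenRatio ^ l1 * 3 ^ l2 * (Polynomial.aeval goldenRatio η /
        Polynomial.aeval goldenRatio δ) ^ l3) ^ (i.2.2 : ℕ))| *
      (E ^ (Q * S) * (((T + 1) * ((T + 1) * (S + 1)) : ℕ) *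
        (H * (X ^ (2 * T) * (3 ^ (M * S) * E ^ (Q * S)))))) := by
  set F := ∑ i, (p i : ℝ) * ((x : ℝ) ^ (i.1 : ℕ) * (y : ℝ) ^ (i.2.1 : ℕ) *
      (goldenRatio ^ l1 * 3 ^ l2 * (Polynomial.aeval goldenRatio η /
        Polynomial.aeval goldenRatio δ) ^ l3) ^ (i.2.2 : ℕ)) with hFdef
  let θ : Polynomial ℤ := ∑ i : Fin (T + 1) × Fin (T + 1) × Fin (S + 1),
    Polynomial.C (p i * (x ^ (i.1 : ℕ) * y ^ (i.2.1 : ℕ) * 3 ^ (l2 * (i.2.2 : ℕ)))) *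
      (Polynomial.X ^ (l1 * (i.2.2 : ℕ)) * (η ^ (l3 * (i.2.2 : ℕ)) *
        δ ^ (Q * S - l3 * (i.2.2 : ℕ))))
  have hθ : Polynomial.aeval goldenRatio θ = F * (Polynomial.aeval goldenRatio δ) ^ (Q * S) := by
    rw [hFdef, Finset.sum_mul]
    simp only [θ, map_sum, map_mul, map_pow, Polynomial.aeval_X, Polynomial.aeval_C]
    refine Finset.sum_congr rfl fun i _ => ?_
    have hi3 : l3 * (i.2.2 : ℕ) ≤ Q * S := Nat.mul_le_mul h3 (Nat.lt_succ_iff.1 i.2.2.2)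
    generalize (i.2.2 : ℕ) = s at *
    obtain ⟨k, hk⟩ := Nat.exists_eq_add_of_le hi3
    rw [hk, Nat.add_sub_cancel_left]
    simp only [eq_intCast, Int.cast_ofNat]
    rw [pow_add, mul_pow, mul_pow, ← pow_mul, ← pow_mul, ← pow_mul]
    have hz : (Polynomial.aeval goldenRatio η / Polynomial.aeval goldenRatio δ) ^ (l3 * s) *
        Polynomial.aeval goldenRatio δ ^ (l3 * s) = Polynomial.aeval goldenRatio η ^ (l3 * s) := by
      rw [← mul_pow, div_mul_cancel₀ _ hδ0]
    rw [← hz]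
    ring
  have hθ0 : Polynomial.aeval goldenRatio θ ≠ 0 := by
    rw [hθ]; exact mul_ne_zero hF (pow_ne_zero _ hδ0)
  have hL := liouville_golden θ hθ0
  have hconj : |Polynomial.aeval goldenConj θ| ≤ ((T + 1) * ((T + 1) * (S + 1)) : ℕ) *
        (H * (X ^ (2 * T) * (3 ^ (M * S) * E ^ (Q * S)))) := by
    have hcard : (Finset.univ : Finset (Fin (T + 1) × Fin (T + 1) × Fin (S + 1))).card =
      (T + 1) * ((T + 1) * (S + 1)) := by simp
    simp only [θ, map_sum, map_mul, map_pow, Polynomial.aeval_X, Polynomial.aeval_C]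
    rw [← hcard, ← nsmul_eq_mul]
    refine (Finset.abs_sum_le_sum_abs _ _).trans (Finset.sum_le_card_nsmul _ _ _ fun i _ => ?_)
    have hi1 : (i.1 : ℕ) ≤ T := Nat.lt_succ_iff.1 i.1.2
    have hi2 : (i.2.1 : ℕ) ≤ T := Nat.lt_succ_iff.1 i.2.1.2
    have hi3 : (i.2.2 : ℕ) ≤ S := Nat.lt_succ_iff.1 i.2.2.2
    have hpi : |(p i : ℝ)| ≤ H := by
      have := hp i
      exact_mod_cast this
    generalize (i.1 : ℕ) = α at *
    generalize (i.2.1 : ℕ) = β at *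
    generalize (i.2.2 : ℕ) = s at *
    have hψ : |goldenConj| ≤ 1 := by
      rw [abs_le]; constructor
      · exact neg_one_lt_goldenConj.le
      · linarith [goldenConj_neg]
    have hl : l3 * s ≤ Q * S := Nat.mul_le_mul h3 hi3
    simp only [eq_intCast, Int.cast_ofNat, abs_mul, abs_pow]
    have a1 : |(x : ℝ)| ^ α * |(y : ℝ)| ^ β ≤ X ^ (2 * T) := by
      calc |(x : ℝ)| ^ α * |(y : ℝ)| ^ β ≤ X ^ α * X ^ β := by gcongr
        _ = X ^ (α + β) := by rw [pow_add]
        _ ≤ X ^ (2 * T) := pow_le_pow_right₀ hX (by omega)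
    have a2 : |(3 : ℝ)| ^ (l2 * s) ≤ 3 ^ (M * S) := by
      rw [abs_of_pos (by norm_num)]
      exact pow_le_pow_right₀ (by norm_num) (Nat.mul_le_mul h1 hi3)
    have a3 : |goldenConj| ^ (l1 * s) ≤ 1 := pow_le_one₀ (abs_nonneg _) hψ
    have a4 : |Polynomial.aeval goldenConj η| ^ (l3 * s) *
        |Polynomial.aeval goldenConj δ| ^ (Q * S - l3 * s) ≤ E ^ (Q * S) := by
      calc _ ≤ E ^ (l3 * s) * E ^ (Q * S - l3 * s) := by gcongr
        _ = E ^ (Q * S) := by rw [← pow_add, Nat.add_sub_cancel' hl]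
    calc |(p i : ℝ)| * (|(x : ℝ)| ^ α * |(y : ℝ)| ^ β * |(3 : ℝ)| ^ (l2 * s)) *
          (|goldenConj| ^ (l1 * s) * (|Polynomial.aeval goldenConj η| ^ (l3 * s) *
        |Polynomial.aeval goldenConj δ| ^ (Q * S - l3 * s)))
        ≤ H * (X ^ (2 * T) * 3 ^ (M * S)) * (1 * E ^ (Q * S)) := by gcongr
      _ = _ := by ring
  calc 1 ≤ |Polynomial.aeval goldenRatio θ| * |Polynomial.aeval goldenConj θ| := hL
    _ ≤ (|F| * E ^ (Q * S)) * (((T + 1) * ((T + 1) * (S + 1)) : ℕ) *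
        (H * (X ^ (2 * T) * (3 ^ (M * S) * E ^ (Q * S))))) := by
        rw [hθ, abs_mul, abs_pow]
        gcongr
    _ = _ := by ring

/-- `φ` and `3` are multiplicatively independent. -/
theorem golden_three_independent (u v : ℤ) (h : goldenRatio ^ u * (3 : ℝ) ^ v = 1) :
    u = 0 ∧ v = 0 := by
  have key : ∀ (k : ℕ) (v : ℤ), 0 < k → goldenRatio ^ k * (3 : ℝ) ^ v ≠ 1 := by
    intro k v hk h
    have h3 : (3 : ℝ) ^ v ≠ 0 := zpow_ne_zero _ (by norm_num)
    have e : goldenRatio ^ k = ((3 ^ (-v) : ℚ) : ℝ) := by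
      push_cast
      rw [zpow_neg]
      field_simp
      exact h
    obtain ⟨m, rfl⟩ := Nat.exists_eq_succ_of_ne_zero hk.ne'
    have hf := goldenRatio_mul_fib_succ_add_fib m
    rw [Nat.succ_eq_add_one] at e
    have hirr : Irrational (goldenRatio * (Nat.fib (m + 1) : ℝ) + (Nat.fib m : ℝ)) := by
      apply Irrational.add_natCast
      exact goldenRatio_irrational.mul_natCast (Nat.fib_pos.2 (by omega)).ne'
    rw [hf, e] at hirr
    exact hirr ⟨_, rfl⟩
  have hu : u = 0 := by
    rcases lt_trichotomy u 0 with hu | hu | hu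
    · exfalso
      obtain ⟨k, hk⟩ : ∃ k : ℕ, u = -k := ⟨(-u).toNat, by omega⟩
      apply key k (-v) (by omega)
      rw [hk, zpow_neg, zpow_natCast] at h
      rw [zpow_neg]
      have h0 := goldenRatio_pos.ne'
      have h3 : (3 : ℝ) ^ v ≠ 0 := zpow_ne_zero _ (by norm_num)
      have : (3 : ℝ) ^ v = goldenRatio ^ k := by
        field_simp at h
        exact h
      rw [this]
      field_simp
    · exact hu
    · exfalso
      obtain ⟨k, hk⟩ : ∃ k : ℕ, u = k := ⟨u.toNat, by omega⟩
      apply key k v (by omega)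
      rw [hk, zpow_natCast] at h
      exact h
  refine ⟨hu, ?_⟩
  rw [hu, zpow_zero, one_mul] at h
  exact (zpow_eq_one_iff_right₀ (by norm_num) (by norm_num)).1 h

end

/-! ### The auxiliary function as a polynomial -/

section

/-- The coefficients of the auxiliary function as polynomials in the two rational coordinates. -/
theorem exists_auxiliary_poly (T S : ℕ) (p : Fin (T + 1) × Fin (T + 1) × Fin (S + 1) → ℤ) :
    ∃ P : ℕ → MvPolynomial (Fin 2) ℝ, (∀ s, (P s).totalDegree ≤ 2 * T) ∧
      (∀ (w : ℤ × ℤ) (Z : ℝ), ∑ s ∈ Finset.range (S + 1), MvPolynomial.eval (vec w) (P s) * Z ^ s =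
        ∑ i, (p i : ℝ) * ((w.1 : ℝ) ^ (i.1 : ℕ) * (w.2 : ℝ) ^ (i.2.1 : ℕ) * Z ^ (i.2.2 : ℕ))) ∧
      ((∀ s ≤ S, P s = 0) → p = 0) := by
  classical
  let P : ℕ → MvPolynomial (Fin 2) ℝ := fun s => if hs : s < S + 1 then
    ∑ i : Fin (T + 1), ∑ j : Fin (T + 1), MvPolynomial.monomial
      (Finsupp.single 0 (i : ℕ) + Finsupp.single 1 (j : ℕ)) (p (i, j, ⟨s, hs⟩) : ℝ) else 0
  refine ⟨P, fun s => ?_, fun w Z => ?_, fun h => ?_⟩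
  · by_cases hs : s < S + 1
    · simp only [P, hs, dif_pos]
      refine MvPolynomial.totalDegree_finsetSum_le fun i _ =>
        MvPolynomial.totalDegree_finsetSum_le fun j _ => ?_
      refine (MvPolynomial.totalDegree_monomial_le _ _).trans ?_
      rw [Finsupp.sum_add_index' (by simp) (by simp)]
      simp
      omega
    · rw [show P s = 0 from dif_neg hs]; simp
  · rw [Finset.sum_range]
    have e1 : ∀ s : Fin (S + 1), MvPolynomial.eval (vec w) (P s) * Z ^ (s : ℕ) =
        ∑ i : Fin (T + 1), ∑ j : Fin (T + 1),
          (p (i, j, s) : ℝ) * ((w.1 : ℝ) ^ (i : ℕ) * (w.2 : ℝ) ^ (j : ℕ) * Z ^ (s : ℕ)) := by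
      intro s
      simp only [P, s.2, dif_pos, map_sum, Finset.sum_mul]
      refine Finset.sum_congr rfl fun i _ => Finset.sum_congr rfl fun j _ => ?_
      rw [MvPolynomial.eval_monomial, Finsupp.prod_add_index' (by simp) (by intros; rw [pow_add])]
      simp [vec]
      ring
    simp only [e1]
    rw [Fintype.sum_prod_type, Finset.sum_comm]
    refine Finset.sum_congr rfl fun i _ => ?_
    rw [Fintype.sum_prod_type, Finset.sum_comm]
  · funext ⟨i, j, s⟩
    have hs := h s (Nat.lt_succ_iff.1 s.2)
    simp only [P, s.2, dif_pos] at hs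
    have hc := congrArg (MvPolynomial.coeff (Finsupp.single 0 (i : ℕ) + Finsupp.single 1 (j : ℕ))) hs
    simp only [MvPolynomial.coeff_sum, MvPolynomial.coeff_monomial, MvPolynomial.coeff_zero] at hc
    have hinj : ∀ i' j' : Fin (T + 1), ((Finsupp.single 0 (i' : ℕ) + Finsupp.single 1 (j' : ℕ) :
        Fin 2 →₀ ℕ) = Finsupp.single 0 (i : ℕ) + Finsupp.single 1 (j : ℕ)) ↔ (i' = i ∧ j' = j) := by
      intro i' j'
      constructor
      · intro he
        have h0 := DFunLike.congr_fun he 0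
        have h1 := DFunLike.congr_fun he 1
        simp at h0 h1
        exact ⟨Fin.ext h0, Fin.ext h1⟩
      · rintro ⟨rfl, rfl⟩; rfl
    simp only [hinj] at hc
    rw [Finset.sum_eq_single i, Finset.sum_eq_single j] at hc
    · simpa using hc
    · intro j' _ hj; simp [hj]
    · simp
    · intro i' _ hi; simp [hi]
    · simp

end

/-! ### The lower bound for linear forms in three logarithms -/

section

/-- All the size estimates used in the extrapolation, with `Y = L * S`. -/
theorem extrapolation_sizes {Y N T H B Fc ε Kt SU : ℝ} (hY : 10 ≤ Y) (hN0 : 0 ≤ N)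
    (hN : N ≤ exp (3 * Y)) (hT0 : 0 ≤ T) (hT : T ≤ exp Y) (hH : exp (99 * Y) ≤ H)
    (hH' : H ≤ exp (100 * Y)) (hB0 : 0 ≤ B) (hB : B ≤ exp (18 * Y)) (hF0 : 0 ≤ Fc)
    (hF : Fc ≤ exp (3 * Y)) (hε0 : 0 ≤ ε) (hε : ε ≤ exp (-(600 * Y))) (hK : 270 * Y ≤ Kt)
    (hSU : SU ≤ 9 * Y) :
    Fc * (2 * N * (B * exp SU) / H ^ 2) + N * (H * (T * B * ε * exp SU
      + B * (2 * exp (-(2 * Kt))))) < exp (-(150 * Y)) := by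
  have h1 : Fc * (2 * N * (B * exp SU) / H ^ 2) ≤ 2 * exp (-(155 * Y)) := by
    calc Fc * (2 * N * (B * exp SU) / H ^ 2)
        ≤ exp (3 * Y) * (2 * exp (3 * Y) * (exp (18 * Y) * exp (9 * Y)) / (exp (99 * Y)) ^ 2) := by
          gcongr
      _ = 2 * exp (-(165 * Y)) := by
          rw [← exp_nat_mul, div_eq_mul_inv, ← exp_neg]
          have : exp (-(165 * Y)) = exp (3 * Y) * exp (3 * Y) * (exp (18 * Y) * exp (9 * Y)) *
            exp (-((2 : ℕ) * (99 * Y))) := by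
            simp only [← exp_add]; congr 1; push_cast; ring
          rw [this]; ring
      _ ≤ _ := by gcongr; norm_num
  have h2 : N * (H * (T * B * ε * exp SU + B * (2 * exp (-(2 * Kt))))) ≤
      3 * exp (-(155 * Y)) := by
    have hH0 : 0 ≤ H := (exp_pos _).le.trans hH
    calc N * (H * (T * B * ε * exp SU + B * (2 * exp (-(2 * Kt)))))
        ≤ exp (3 * Y) * (exp (100 * Y) * (exp Y * exp (18 * Y) * exp (-(600 * Y)) * exp (9 * Y)
          + exp (18 * Y) * (2 * exp (-(2 * (270 * Y)))))) := by
          gcongr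
      _ = exp (-(469 * Y)) + 2 * exp (-(419 * Y)) := by
          have e1 : exp (-(469 * Y)) = exp (3 * Y) * (exp (100 * Y) * (exp Y * exp (18 * Y) *
            exp (-(600 * Y)) * exp (9 * Y))) := by
            simp only [← exp_add]; congr 1; ring
          have e2 : exp (-(419 * Y)) = exp (3 * Y) * (exp (100 * Y) * (exp (18 * Y) *
            exp (-(2 * (270 * Y))))) := by
            simp only [← exp_add]; congr 1; ring
          rw [e1, e2]; ring
      _ ≤ exp (-(155 * Y)) + 2 * exp (-(155 * Y)) := by
          gcongr <;> linarith
      _ = _ := by ring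
  have h3 : 5 * exp (-(155 * Y)) < exp (-(150 * Y)) := by
    have e : exp (-(150 * Y)) = exp (5 * Y) * exp (-(155 * Y)) := by
      rw [← exp_add]; congr 1; ring
    rw [e]
    have : 5 < exp (5 * Y) := by linarith [add_one_le_exp (5 * Y)]
    have h0 := exp_pos (-(155 * Y))
    nlinarith
  linarith

/-- The parameters of the construction satisfy the counting conditions of the zero estimate. -/
theorem zero_estimate_parameters {W h R L T S : ℕ} (hW : 1 ≤ W) (hh : 1 ≤ h)
    (hR : R = 2 * 10 ^ 13 * W ^ 2) (hL : L = h * R) (hT : T = 3240 * L) (hS : S = 360 * W) :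
    S * (10000000 * W) ≤ L ∧ (L / (10000000 * W) + 1) * (2 * T * (S + 1)) < L * L ∧
    2 * T * (S + 1) * (2 * T * (S + 1)) + 2 * T * (R * (L / 20000 + 1)) < L * (L * R) ∧
    2 * T * (S + 1) < L * R := by
  have hW2 : 1 ≤ W ^ 2 := Nat.one_le_pow _ _ hW
  have hWW : W ≤ W ^ 2 := by
    rw [sq]; exact Nat.le_mul_of_pos_left W hW
  have hR1 : 2 * 10 ^ 13 ≤ R := by omega
  have hLR : R ≤ L := by rw [hL]; exact Nat.le_mul_of_pos_left R hh
  have hWR : 2 * 10 ^ 13 * W ≤ R := by omega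
  clear hL
  refine ⟨?_, ?_, ?_, ?_⟩
  · rw [hS]
    calc 360 * W * (10000000 * W) = 3600000000 * W ^ 2 := by ring
      _ ≤ R := by rw [hR]; gcongr; norm_num
      _ ≤ L := hLR
  · have h1 : L / (10000000 * W) * (10000000 * W) ≤ L := Nat.div_mul_le_self _ _
    generalize L / (10000000 * W) = q at h1
    have h2 : 2 * T * (S + 1) ≤ L * (2339280 * W) := by
      rw [hT, hS]
      calc 2 * (3240 * L) * (360 * W + 1) ≤ 2 * (3240 * L) * (361 * W) := by gcongr; omega
        _ = _ := by ring
    have h3 : (q + 1) * (2339280 * W) < L := by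
      have e : (q + 1) * (2339280 * W) = 2339280 * (q * W) + 2339280 * W := by ring
      have e2 : q * (10000000 * W) = 10000000 * (q * W) := by ring
      rw [e2] at h1
      rw [e]
      generalize q * W = z at *
      omega
    calc (q + 1) * (2 * T * (S + 1)) ≤ (q + 1) * (L * (2339280 * W)) := by gcongr
      _ = L * ((q + 1) * (2339280 * W)) := by ring
      _ < L * L := by
        apply Nat.mul_lt_mul_of_pos_left h3
        omega
  · have h2 : 2 * T * (S + 1) ≤ L * (2339280 * W) := by
      rw [hT, hS]
      calc 2 * (3240 * L) * (360 * W + 1) ≤ 2 * (3240 * L) * (361 * W) := by gcongr; omega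
        _ = _ := by ring
    have h3 : L / 20000 * 20000 ≤ L := Nat.div_mul_le_self _ _
    generalize L / 20000 = q at h3
    have h4 : 6480 * (q + 1) ≤ L / 2 := by omega
    have h5 : 2 * T * (R * (q + 1)) ≤ L * R * (L / 2) := by
      rw [hT]
      calc 2 * (3240 * L) * (R * (q + 1)) = L * R * (6480 * (q + 1)) := by ring
        _ ≤ _ := by gcongr
    have h5' : 2 * (2 * T * (R * (q + 1))) ≤ L * R * L := by
      calc 2 * (2 * T * (R * (q + 1))) ≤ 2 * (L * R * (L / 2)) := by gcongr
        _ = L * R * (2 * (L / 2)) := by ring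
        _ ≤ L * R * L := by gcongr; exact Nat.mul_div_le L 2
    have h6 : 3 * (2 * T * (S + 1) * (2 * T * (S + 1))) ≤ L * R * L := by
      calc 3 * (2 * T * (S + 1) * (2 * T * (S + 1)))
          ≤ 3 * (L * (2339280 * W) * (L * (2339280 * W))) := by gcongr
        _ = L * (16416692755200 * W ^ 2) * L := by ring
        _ ≤ L * R * L := by rw [hR]; gcongr; norm_num
    have e : L * (L * R) = L * R * L := by ring
    have hpos : 0 < L * R * L := by
      have : 0 < R := by omega
      have : 0 < L := by omega
      positivity
    rw [e]
    generalize L * R * L = z at *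
    generalize 2 * T * (S + 1) * (2 * T * (S + 1)) = z1 at *
    generalize 2 * T * (R * (q + 1)) = z2 at *
    omega
  · have h2 : 2 * T * (S + 1) ≤ L * (2339280 * W) := by
      rw [hT, hS]
      calc 2 * (3240 * L) * (360 * W + 1) ≤ 2 * (3240 * L) * (361 * W) := by gcongr; omega
        _ = _ := by ring
    refine lt_of_le_of_lt h2 (Nat.mul_lt_mul_of_pos_left ?_ (by omega))
    omega

/-- No integer vector of moderate size is nearly orthogonal to `(a, n)`, which makes the points `pt n a x`
of the box sufficiently spread out for the zero estimate. -/
theorem no_small_relation {W h n a R L : ℕ} {l b g Λ : ℝ} (hW : 1 ≤ W)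
    (hR : R = 2 * 10 ^ 13 * W ^ 2) (hL : L = h * R) (hb : 1.09 ≤ b)
    (hΛdef : Λ = n * l - a * b - g) (hg : |g| ≤ 2 * h) (hΛ1 : |Λ| ≤ h)
    (hκ : ∀ ν1 ν2 : ℤ, (ν1 ≠ 0 ∨ ν2 ≠ 0) → |ν1| < 20000 → b ≤ 60000 * |ν1 * l + ν2 * b|)
    (hn : 3 * 10 ^ 22 * W ^ 2 * h ≤ n) (ν : ℤ × ℤ) (hν : ν ≠ 0) (h1 : |ν.1| < 20000) :
    20000 * (L : ℤ) ≤ |ν.1 * a + ν.2 * n| := by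
  obtain ⟨ν1, ν2⟩ := ν
  have hW1' : (1 : ℝ) ≤ W := by exact_mod_cast hW
  simp only at h1 ⊢
  have hν' : ν1 ≠ 0 ∨ ν2 ≠ 0 := by
    by_contra hc; push Not at hc; exact hν (by rw [hc.1, hc.2]; rfl)
  have hk := hκ ν1 ν2 hν' h1
  have e : ((ν1 * a + ν2 * n : ℤ) : ℝ) * b =
      n * (ν1 * l + ν2 * b) - ν1 * (g + Λ) := by
    rw [hΛdef]; push_cast; ring
  have h1r : |(ν1 : ℝ)| ≤ 20000 := by exact_mod_cast h1.le
  have h3 : |(ν1 : ℝ) * (g + Λ)| ≤ 60000 * h := by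
    rw [abs_mul]
    calc |(ν1 : ℝ)| * |g + Λ| ≤ 20000 * (3 * h) := by
          gcongr
          exact (abs_add_le _ _).trans (by linarith)
      _ = _ := by ring
  have h4 : |((ν1 * a + ν2 * n : ℤ) : ℝ)| * b ≥ n * |ν1 * l + ν2 * b| - 60000 * h := by
    rw [← abs_of_pos (show 0 < b by linarith), ← abs_mul, abs_of_pos (show 0 < b by linarith), e]
    have h5 := abs_sub_abs_le_abs_sub ((n : ℝ) * (ν1 * l + ν2 * b)) (ν1 * (g + Λ))
    rw [abs_mul, Nat.abs_cast] at h5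
    linarith
  have hn' : (3 * 10 ^ 22 * W ^ 2 * h : ℝ) ≤ n := by exact_mod_cast hn
  have h6 : (n : ℝ) * b ≤ 60000 * (n * |ν1 * l + ν2 * b|) := by
    calc (n : ℝ) * b ≤ n * (60000 * |ν1 * l + ν2 * b|) := by gcongr
      _ = _ := by ring
  have hh2 : (h : ℝ) ≤ W ^ 2 * h := by
    have : (1 : ℝ) ≤ (W : ℝ) ^ 2 := one_le_pow₀ hW1'
    nlinarith
  have hLe : (L : ℝ) = 2 * 10 ^ 13 * (W ^ 2 * h) := by rw [hL, hR]; push_cast; ring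
  have hz : (n : ℝ) ≥ 3 * 10 ^ 22 * (W ^ 2 * h) := by linarith
  generalize (W : ℝ) ^ 2 * h = z at *
  have hfin : (20000 * L : ℝ) * b ≤ |((ν1 * a + ν2 * n : ℤ) : ℝ)| * b := by
    have h7 : (20000 * L + 60000 * h : ℝ) * 60000 ≤ n := by
      rw [hLe]; linarith
    have h8 : (20000 * L + 60000 * h : ℝ) * 60000 * b ≤ n * b := by gcongr
    have h9 : (60000 * h : ℝ) ≤ 60000 * h * b := by
      have : (1 : ℝ) ≤ b := by linarith
      exact le_mul_of_one_le_right (by positivity) this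
    linarith
  have hfin2 := le_of_mul_le_mul_right hfin (by linarith)
  exact_mod_cast hfin2

set_option maxHeartbeats 1000000 in
/-- A lower bound for `n log φ - a log 3 - log γ`, for `γ` in the field of the golden ratio. -/
theorem linear_form_lower (W h n a : ℕ) (hW : 1 ≤ W) (hh : 1 ≤ h) (η δ : Polynomial ℤ)
    (hδ : |Polynomial.aeval goldenRatio δ| ≤ exp h) (hδ' : |Polynomial.aeval goldenConj δ| ≤ exp h)
    (hη' : |Polynomial.aeval goldenConj η| ≤ exp h)
    (hγ : 0 < Polynomial.aeval goldenRatio η / Polynomial.aeval goldenRatio δ)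
    (hlogγ : |log (Polynomial.aeval goldenRatio η / Polynomial.aeval goldenRatio δ)| ≤ 2 * h)
    (hl : 0.48 ≤ log goldenRatio) (hl' : log goldenRatio ≤ 0.49)
    (hb : 1.09 ≤ log 3) (hb' : log 3 ≤ 1.1)
    (hκ : ∀ ν1 ν2 : ℤ, (ν1 ≠ 0 ∨ ν2 ≠ 0) → |ν1| < 20000 →
      log 3 ≤ 60000 * |ν1 * log goldenRatio + ν2 * log 3|)
    (hn : 3 * 10 ^ 22 * W ^ 2 * h ≤ n)
    (hWn : ((10 ^ 14 * W ^ 2 * (3 * h + 2 * (n + a)) : ℕ) : ℝ) ≤ exp W) :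
    exp (-(4536000000000000000 * W ^ 3 * h)) <
      |n * log goldenRatio - a * log 3 -
        log (Polynomial.aeval goldenRatio η / Polynomial.aeval goldenRatio δ)| := by
  by_contra! hΛ
  set γ := Polynomial.aeval goldenRatio η / Polynomial.aeval goldenRatio δ with hγdef
  set l := log goldenRatio with hldef
  set b := log 3 with hbdef
  set Λ := n * l - a * b - log γ with hΛdef
  obtain ⟨R, hR⟩ : ∃ z : ℕ, z = 2 * 10 ^ 13 * W ^ 2 := ⟨_, rfl⟩
  obtain ⟨L, hL⟩ : ∃ z : ℕ, z = h * R := ⟨_, rfl⟩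
  obtain ⟨T, hT⟩ : ∃ z : ℕ, z = 3240 * L := ⟨_, rfl⟩
  obtain ⟨S, hS⟩ : ∃ z : ℕ, z = 360 * W := ⟨_, rfl⟩
  obtain ⟨K, hK⟩ : ∃ z : ℕ, z = 97200 * L * W := ⟨_, rfl⟩
  obtain ⟨Y, hY⟩ : ∃ z : ℝ, z = 360 * (L * W : ℕ) := ⟨_, rfl⟩
  obtain ⟨H, hH⟩ : ∃ z : ℕ, z = ⌈exp (99 * Y)⌉₊ := ⟨_, rfl⟩
  obtain ⟨X, hX⟩ : ∃ z : ℝ, z = ((3 * L + 2 * R * (n + a) : ℕ) : ℝ) := ⟨_, rfl⟩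
  have hpar := zero_estimate_parameters hW hh hR hL hT hS
  have hW2 : 1 ≤ W ^ 2 := Nat.one_le_pow _ _ hW
  have hR1 : 2 * 10 ^ 13 ≤ R := by omega
  have hLR : R ≤ L := by rw [hL]; exact Nat.le_mul_of_pos_left R hh
  have hL1 : 2 * 10 ^ 13 ≤ L := hR1.trans hLR
  have hLW : L ≤ L * W := Nat.le_mul_of_pos_right _ hW
  have hWLW : W ≤ L * W := Nat.le_mul_of_pos_left _ (by omega)
  have hYL : 360 * (L : ℝ) ≤ Y := by
    rw [hY]; gcongr
  have hYW : 360 * (W : ℝ) ≤ Y := by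
    rw [hY]; gcongr
  have hL1' : (2 * 10 ^ 13 : ℝ) ≤ L := by exact_mod_cast hL1
  have hLR' : (R : ℝ) ≤ L := by exact_mod_cast hLR
  have hY10 : 10000 ≤ Y := by linarith
  have hLh : (R : ℝ) * h = L := by rw [hL]; push_cast; ring
  have hW1' : (1 : ℝ) ≤ W := by exact_mod_cast hW
  have hh1' : (1 : ℝ) ≤ h := by exact_mod_cast hh
  have hexpY : 1 + Y + Y ^ 2 / 2 ≤ exp Y := quadratic_le_exp_of_nonneg (by linarith)
  have hexpY' : 20 * Y + 1 ≤ exp Y := by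
    have : 10000 * Y ≤ Y ^ 2 := by rw [sq]; gcongr
    linarith
  have hTY : (T : ℝ) + 1 ≤ exp Y := by
    rw [hT]; push_cast; linarith
  have hSY : (S : ℝ) + 1 ≤ exp Y := by
    rw [hS]; push_cast; linarith
  have hN : (((T + 1) * ((T + 1) * (S + 1)) : ℕ) : ℝ) ≤ exp (3 * Y) := by
    push_cast
    have : exp (3 * Y) = exp Y * (exp Y * exp Y) := by
      simp only [← exp_add]; congr 1; ring
    rw [this]; gcongr
  have hcount : 3 * ((K + T) * (2 * T + 1)) ≤ (T + 1) * ((T + 1) * (S + 1)) := by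
    have e : K + T = T * (30 * W + 1) := by rw [hK, hT]; ring
    have e2 : (30 * W + 1) * 6 ≤ S + 1 := by rw [hS]; omega
    rw [e]
    calc 3 * (T * (30 * W + 1) * (2 * T + 1)) ≤ 3 * (T * (30 * W + 1) * (2 * (T + 1))) := by
          gcongr; omega
      _ = T * ((T + 1) * ((30 * W + 1) * 6)) := by ring
      _ ≤ (T + 1) * ((T + 1) * (S + 1)) := by gcongr; omega
  have hFc : (((K + T) * (2 * T + 1) : ℕ) : ℝ) ≤ exp (3 * Y) := by
    refine le_trans ?_ hN
    have : (K + T) * (2 * T + 1) ≤ (T + 1) * ((T + 1) * (S + 1)) := by omega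
    exact_mod_cast this
  have hHlow : exp (99 * Y) ≤ H := by rw [hH]; exact Nat.le_ceil _
  have hHpos : 1 ≤ H := Nat.one_le_iff_ne_zero.2 (by
    intro h0; rw [h0] at hHlow; have := exp_pos (99 * Y); push_cast at hHlow; linarith)
  have hHup : (H : ℝ) ≤ exp (100 * Y) := by
    have h1 := (Nat.ceil_lt_add_one (exp_pos (99 * Y)).le).le
    have e : exp (100 * Y) = exp (99 * Y) * exp Y := by rw [← exp_add]; congr 1; ring
    rw [e]
    have h2 : 1 ≤ exp (99 * Y) := by apply one_le_exp; linarith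
    rw [hH]
    have h3 : exp (99 * Y) * 2 ≤ exp (99 * Y) * exp Y := by gcongr; linarith
    linarith
  have hX0 : 1 ≤ X := by
    rw [hX]
    have : 1 ≤ 3 * L + 2 * R * (n + a) := by omega
    exact_mod_cast this
  have h5X : 5 * X ≤ exp W := by
    refine le_trans (le_of_eq ?_) hWn
    rw [hX, hL, hR]; push_cast; ring
  have hB : (5 * X) ^ (2 * T) ≤ exp (18 * Y) := by
    calc (5 * X) ^ (2 * T) ≤ exp W ^ (2 * T) := by gcongr
      _ = exp (18 * Y) := by
        rw [← exp_nat_mul, hY, hT]; congr 1; push_cast; ring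
  have hn9 : 9 * L ≤ 2 * R * (n + a) := by
    rw [hL]
    have h1 : 5 * h ≤ n := le_trans (by gcongr; omega) hn
    calc 9 * (h * R) ≤ 2 * R * (5 * h) := by linarith [Nat.zero_le (h * R)]
      _ ≤ 2 * R * (n + a) := by gcongr; omega
  have hUX : 9 * (L : ℝ) ≤ X := by
    rw [hX]
    have : 9 * L ≤ 3 * L + 2 * R * (n + a) := by omega
    exact_mod_cast this
  obtain ⟨p, hp0, hpH, hp⟩ := auxiliary_small T S K H (by rw [hK, mul_assoc]; omega) hHpos hcount l b
    (9 * L) X (5 * X) (2 * R * |Λ| / l) (by linarith) (by linarith) (by linarith) (by linarith)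
    (by linarith) (by
      rw [div_le_iff₀ (by linarith)]
      have h1 : b * X ≤ 1.1 * X := by gcongr
      have h2 : 5 * X * 0.48 ≤ 5 * X * l := by gcongr
      linarith) (by linarith) (by
      rw [hS, hK]; push_cast; linarith)
  obtain ⟨P, hPdeg, hPeval, hPzero⟩ := exists_auxiliary_poly T S p
  apply hp0
  apply hPzero
  have hΛ600 : 2 * R * |Λ| / l ≤ exp (-(600 * Y)) := by
    have h1 : 2 * R / l ≤ exp Y := by
      rw [div_le_iff₀ (by linarith)]
      have h2 : (20 * Y + 1) * 0.48 ≤ exp Y * l := by gcongr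
      linarith
    have h2 : |Λ| ≤ exp (-(630 * Y)) := by
      refine hΛ.trans (le_of_eq ?_)
      rw [hY, hL, hR]; congr 1; push_cast; ring
    calc 2 * R * |Λ| / l = 2 * R / l * |Λ| := by ring
      _ ≤ exp Y * exp (-(630 * Y)) := by gcongr
      _ = exp (-(629 * Y)) := by rw [← exp_add]; congr 1; ring
      _ ≤ _ := by gcongr; norm_num
  have hsize := extrapolation_sizes (Y := Y) (N := (((T + 1) * ((T + 1) * (S + 1)) : ℕ) : ℝ))
    (T := T) (H := H) (B := (5 * X) ^ (2 * T)) (Fc := (((K + T) * (2 * T + 1) : ℕ) : ℝ))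
    (ε := 2 * R * |Λ| / l) (Kt := K) (SU := S * (9 * L)) (by linarith) (by positivity) hN
    (by positivity) (by linarith) hHlow hHup (by positivity) hB (by positivity) hFc
    (by have : 0 < l := by linarith
        positivity) hΛ600 (by rw [hY, hK]; push_cast; linarith) (by
        rw [hY, hS]; push_cast; linarith)
  have hδ0 : Polynomial.aeval goldenRatio δ ≠ 0 := by
    intro h0; rw [hγdef, h0, div_zero] at hγ; exact lt_irrefl _ hγ
  have hφ0 := goldenRatio_pos
  refine zero_estimate (L := L) (R := R) (V := 10000000 * W) (K := 20000) (D := 2 * T) P hPdeg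
    goldenRatio 3 γ goldenRatio_pos (by norm_num) hγ golden_three_independent n a ?_
    (by omega) (by norm_num) ?_ ?_ ?_ ?_ ?_
  · intro x hx
    rw [mem_box] at hx
    obtain ⟨⟨hx1, hx1'⟩, ⟨hx2, hx2'⟩, hx3, hx3'⟩ := hx
    rw [hPeval]
    obtain ⟨x1, x2, x3⟩ := x
    simp only at hx1 hx1' hx2 hx2' hx3 hx3'
    lift x1 to ℕ using hx1
    lift x2 to ℕ using hx2
    lift x3 to ℕ using hx3
    simp only [pt]
    simp only [zpow_natCast]
    set w1 : ℤ := (x1 : ℤ) + x3 * n with hw1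
    set w2 : ℤ := (x2 : ℤ) - x3 * a with hw2
    have hx1r : (x1 : ℝ) ≤ 3 * L := by exact_mod_cast hx1'.le
    have hx2r : (x2 : ℝ) ≤ 3 * L := by exact_mod_cast hx2'.le
    have hx3r : (x3 : ℝ) ≤ 2 * R := by exact_mod_cast hx3'.le
    have hXe : X = 3 * L + 2 * R * (n + a) := by rw [hX]; push_cast; ring
    have hRn : (0 : ℝ) ≤ R * n := by positivity
    have hRa : (0 : ℝ) ≤ R * a := by positivity
    have hxn : (x3 : ℝ) * n ≤ 2 * R * n := by gcongr
    have hxa : (x3 : ℝ) * a ≤ 2 * R * a := by gcongr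
    have hxn0 : (0 : ℝ) ≤ x3 * n := by positivity
    have hxa0 : (0 : ℝ) ≤ x3 * a := by positivity
    have hx10 : (0 : ℝ) ≤ x1 := by positivity
    have hx20 : (0 : ℝ) ≤ x2 := by positivity
    have hx30 : (0 : ℝ) ≤ x3 := by positivity
    have hw1X : |(w1 : ℝ)| ≤ X := by
      rw [hXe, abs_le, hw1]; push_cast; constructor <;> linarith
    have hw2X : |(w2 : ℝ)| ≤ X := by
      rw [hXe, abs_le, hw2]; push_cast; constructor <;> linarith
    set u : ℝ := x1 * l + x2 * b + x3 * log γ with hu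
    have hexpu : goldenRatio ^ x1 * 3 ^ x2 * γ ^ x3 = exp u := by
      rw [hu, exp_add, exp_add, mul_comm (x1 : ℝ), mul_comm (x2 : ℝ), mul_comm (x3 : ℝ),
        exp_mul, exp_mul, exp_mul, hldef, hbdef, exp_log hφ0, exp_log (by norm_num), exp_log hγ,
        rpow_natCast, rpow_natCast, rpow_natCast]
    have huU : |u| ≤ 9 * L := by
      have h1 : |(x1 : ℝ) * l| ≤ 3 * L * 0.49 := by
        rw [abs_of_nonneg (by positivity)]; gcongr
      have h2 : |(x2 : ℝ) * b| ≤ 3 * L * 1.1 := by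
        rw [abs_of_nonneg (by positivity)]; gcongr
      have h3 : |(x3 : ℝ) * log γ| ≤ 4 * L := by
        rw [abs_mul, abs_of_nonneg hx30]
        calc (x3 : ℝ) * |log γ| ≤ (2 * R) * (2 * h) := by gcongr
          _ = 4 * (R * h) := by ring
          _ = 4 * L := by rw [hLh]
      calc |u| ≤ |(x1 : ℝ) * l| + |(x2 : ℝ) * b| + |(x3 : ℝ) * log γ| := abs_add_three _ _ _
        _ ≤ _ := by linarith
    have hxε : |(w1 : ℝ) - (u - b * w2) / l| ≤ 2 * R * |Λ| / l := by
      have hl0 : 0 < l := by linarith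
      have e : (w1 : ℝ) - (u - b * w2) / l = x3 * Λ / l := by
        rw [hw1, hw2, hu, hΛdef]; push_cast; field_simp; ring
      rw [e, abs_div, abs_mul, abs_of_pos hl0, abs_of_nonneg hx30]
      gcongr
    have hsmall := hp w1 u w2 huU hw2X hw1X hxε
    rw [hexpu]
    by_contra hF
    have hliou := liouville_auxiliary (M := 3 * L) (Q := 2 * R) p hpH w1 w2 X (exp h) hX0
      (one_le_exp (by positivity)) hw1X hw2X x1 x2 x3 (by omega) (by omega) η δ hδ0 hδ hδ' hη'
      (by rw [← hγdef, hexpu]; exact hF)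
    rw [← hγdef, hexpu] at hliou
    have hc : exp h ^ (2 * R * S) * (((T + 1) * ((T + 1) * (S + 1)) : ℕ) *
        (H * (X ^ (2 * T) * (3 ^ (3 * L * S) * exp h ^ (2 * R * S))))) ≤ exp (150 * Y) := by
      have e1 : exp h ^ (2 * R * S) = exp (2 * Y) := by
        rw [← exp_nat_mul, hY, hS, hL]; congr 1; push_cast; ring
      have e2 : (3 : ℝ) ^ (3 * L * S) ≤ exp (6 * Y) := by
        have : (3 : ℝ) ≤ exp 2 := by linarith [add_one_le_exp (2 : ℝ)]
        calc (3 : ℝ) ^ (3 * L * S) ≤ exp 2 ^ (3 * L * S) := by gcongr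
          _ = exp (6 * Y) := by rw [← exp_nat_mul, hY, hS]; congr 1; push_cast; ring
      have e3 : X ^ (2 * T) ≤ exp (18 * Y) := by
        refine le_trans ?_ hB
        gcongr; linarith
      rw [e1]
      calc exp (2 * Y) * (((T + 1) * ((T + 1) * (S + 1)) : ℕ) *
          (H * (X ^ (2 * T) * (3 ^ (3 * L * S) * exp (2 * Y)))))
          ≤ exp (2 * Y) * (exp (3 * Y) *
          (exp (100 * Y) * (exp (18 * Y) * (exp (6 * Y) * exp (2 * Y))))) := by gcongr
        _ = exp (131 * Y) := by simp only [← exp_add]; congr 1; ring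
        _ ≤ _ := by gcongr; norm_num
    have hlt := lt_of_le_of_lt hsmall hsize
    have : (1 : ℝ) < exp (-(150 * Y)) * exp (150 * Y) := by
      refine lt_of_le_of_lt hliou ?_
      exact mul_lt_mul_of_lt_of_le_of_nonneg_of_pos hlt hc (abs_nonneg _) (exp_pos _)
    rw [← exp_add] at this
    simp at this
  · exact hpar.1
  · exact hpar.2.1
  · exact hpar.2.2.1
  · exact hpar.2.2.2
  · intro ν hν h1 _
    have hΛ1 : |Λ| ≤ h := (hΛ.trans (by
      rw [exp_le_one_iff]
      have : (0 : ℝ) ≤ 4536000000000000000 * W ^ 3 * h := by positivity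
      linarith)).trans hh1'
    exact_mod_cast no_small_relation hW hR hL hb hΛdef hlogγ hΛ1 hκ hn ν hν (by exact_mod_cast h1)

end

/-! ### Fixed-point logarithms -/

section

/-- `forceN n f` is `f n`; the recursor makes the kernel evaluate `n` to a numeral first. -/
def forceN {α : Type} (n : ℕ) (f : ℕ → α) : α :=
  Nat.rec (f 0) (fun k _ => f (Nat.succ k)) n

theorem forceN_eq {α : Type} (n : ℕ) (f : ℕ → α) : forceN n f = f n := by
  cases n <;> rfl

/-- Horner scheme for `P * ∑_{j<K} (-ω)^j / (j+1)` with `P = 2^p`, `ω = w / P`, rounded down. -/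
def hornerAlt (p P w K : ℕ) : ℕ → ℕ :=
  Nat.rec 0 (fun i ih =>
    Nat.sub (Nat.div P (Nat.sub K i)) (Nat.shiftRight (Nat.mul w ih) p))

/-- Horner scheme for `P * ∑_{j<K} ω^j / (j+1)` with `P = 2^p`, `ω = w / P`, rounded down. -/
def hornerPos (p P w K : ℕ) : ℕ → ℕ :=
  Nat.rec 0 (fun i ih =>
    Nat.add (Nat.div P (Nat.sub K i)) (Nat.shiftRight (Nat.mul w ih) p))

/-- Fixed-point value of `base + P * log (1 ± ω)`; the sign is minus when `s` is true. -/
def addLog (s : Bool) (p P base w K : ℕ) : ℕ :=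
  Bool.rec (Nat.add base (Nat.shiftRight (Nat.mul w (hornerAlt p P w K K)) p))
    (Nat.sub base (Nat.shiftRight (Nat.mul w (hornerPos p P w K K)) p)) s

/-- The real number `±1` attached to a sign. -/
def sgnR (s : Bool) : ℝ := if s then -1 else 1

/-- The real Horner recursion. -/
noncomputable def hornerReal (x : ℝ) (K : ℕ) : ℕ → ℝ
  | 0 => 0
  | i + 1 => 1 / ((K - i : ℕ) : ℝ) + x * hornerReal x K i

theorem hornerReal_eq (x : ℝ) (K i : ℕ) (hi : i ≤ K) :
    hornerReal x K i = ∑ m ∈ Finset.range i, x ^ m / ((K - i + 1 + m : ℕ) : ℝ) := by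
  induction i with
  | zero => simp [hornerReal]
  | succ i ih =>
    rw [hornerReal, ih (by omega), Finset.sum_range_succ', Finset.mul_sum, add_comm]
    congr 1
    · refine Finset.sum_congr rfl fun m _ => ?_
      rw [show K - (i + 1) + 1 + (m + 1) = K - i + 1 + m by omega]
      ring
    · rw [show K - (i + 1) + 1 + 0 = K - i by omega]; simp

theorem shiftRight_real (a p : ℕ) :
    (a : ℝ) / 2 ^ p - 1 ≤ (Nat.shiftRight a p : ℕ) ∧ ((Nat.shiftRight a p : ℕ) : ℝ) ≤ a / 2 ^ p := by
  have h : Nat.shiftRight a p = a / 2 ^ p := Nat.shiftRight_eq_div_pow a p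
  rw [h]
  constructor
  · have := Nat.lt_div_mul_add (a := a) (b := 2 ^ p) (by positivity)
    have h2 : (a : ℝ) < ((a / 2 ^ p : ℕ) : ℝ) * 2 ^ p + 2 ^ p := by exact_mod_cast this
    rw [sub_le_iff_le_add, div_le_iff₀ (by positivity)]
    linarith
  · exact_mod_cast Nat.cast_div_le (α := ℝ) (m := a) (n := 2 ^ p)

theorem div_real (a b : ℕ) (hb : 0 < b) :
    (a : ℝ) / b - 1 ≤ (Nat.div a b : ℕ) ∧ ((Nat.div a b : ℕ) : ℝ) ≤ a / b := by
  have h : Nat.div a b = a / b := rfl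
  rw [h]
  have hb' : (0 : ℝ) < b := by exact_mod_cast hb
  constructor
  · have := Nat.lt_div_mul_add (a := a) (b := b) hb
    have h2 : (a : ℝ) < ((a / b : ℕ) : ℝ) * b + b := by exact_mod_cast this
    rw [sub_le_iff_le_add, div_le_iff₀ hb']
    linarith
  · exact Nat.cast_div_le

theorem hornerAlt_bound (p w K i : ℕ) :
    hornerAlt p (2 ^ p) w K (i + 1) ≤ 2 ^ p / (K - i) := by
  exact Nat.sub_le _ _

theorem hornerAlt_close (p w K i : ℕ) (hw : (w : ℝ) ≤ 3 / 5 * 2 ^ p) (hi : i ≤ K) :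
    |(hornerAlt p (2 ^ p) w K i : ℝ) - 2 ^ p * hornerReal (-(w / 2 ^ p)) K i| ≤ 5 := by
  have hP : (0 : ℝ) < 2 ^ p := by positivity
  have hwP : w ≤ 2 ^ p := by
    have : (w : ℝ) ≤ 2 ^ p := by linarith
    exact_mod_cast this
  induction i with
  | zero =>
    have : hornerAlt p (2 ^ p) w K 0 = 0 := rfl
    rw [this]; simp [hornerReal]
  | succ i ih =>
    have ih := ih (by omega)
    set v := hornerAlt p (2 ^ p) w K i with hv
    have hstep : hornerAlt p (2 ^ p) w K (i + 1) =
      Nat.div (2 ^ p) (K - i) - Nat.shiftRight (w * v) p := rfl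
    have hle : Nat.shiftRight (w * v) p ≤ Nat.div (2 ^ p) (K - i) := by
      have h1 : Nat.shiftRight (w * v) p ≤ v := by
        have : Nat.shiftRight (w * v) p = w * v / 2 ^ p := Nat.shiftRight_eq_div_pow _ p
        rw [this]
        calc w * v / 2 ^ p ≤ 2 ^ p * v / 2 ^ p := Nat.div_le_div_right (Nat.mul_le_mul_right _ hwP)
          _ = v := Nat.mul_div_cancel_left _ (by positivity)
      refine h1.trans ?_
      rcases i with _ | i
      · exact Nat.zero_le _
      · refine (hornerAlt_bound p w K i).trans ?_
        exact Nat.div_le_div_left (by omega) (by omega)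
    rw [hstep, Nat.cast_sub hle, hornerReal]
    obtain ⟨a1, a2⟩ := div_real (2 ^ p) (K - i) (by omega)
    obtain ⟨b1, b2⟩ := shiftRight_real (w * v) p
    push_cast at a1 a2 b1 b2
    have e : (w : ℝ) * v / 2 ^ p = (w / 2 ^ p) * v := by ring
    rw [e] at b1 b2
    set ω : ℝ := (w : ℝ) / 2 ^ p with hω
    have hω0 : 0 ≤ ω := by positivity
    have hω1 : ω ≤ 3 / 5 := by rw [hω, div_le_iff₀ hP]; exact hw
    set S := hornerReal (-ω) K i
    have h3 : |ω * (v - 2 ^ p * S)| ≤ 3 := by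
      rw [abs_mul, abs_of_nonneg hω0]
      calc ω * |(v : ℝ) - 2 ^ p * S| ≤ 3 / 5 * 5 := by gcongr
        _ = 3 := by norm_num
    have e2 : (2 : ℝ) ^ p * (1 / ((K - i : ℕ) : ℝ) + -ω * S) =
      2 ^ p / ((K - i : ℕ) : ℝ) - ω * (2 ^ p * S) := by ring
    rw [e2]
    rw [abs_le] at h3 ⊢
    constructor <;> nlinarith [h3.1, h3.2]

theorem hornerPos_close (p w K i : ℕ) (hw : (w : ℝ) ≤ 3 / 5 * 2 ^ p) (hi : i ≤ K) :
    |(hornerPos p (2 ^ p) w K i : ℝ) - 2 ^ p * hornerReal (w / 2 ^ p) K i| ≤ 5 := by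
  have hP : (0 : ℝ) < 2 ^ p := by positivity
  induction i with
  | zero =>
    have : hornerPos p (2 ^ p) w K 0 = 0 := rfl
    rw [this]; simp [hornerReal]
  | succ i ih =>
    have ih := ih (by omega)
    set v := hornerPos p (2 ^ p) w K i with hv
    have hstep : hornerPos p (2 ^ p) w K (i + 1) =
      Nat.div (2 ^ p) (K - i) + Nat.shiftRight (w * v) p := rfl
    rw [hstep, Nat.cast_add, hornerReal]
    obtain ⟨a1, a2⟩ := div_real (2 ^ p) (K - i) (by omega)
    obtain ⟨b1, b2⟩ := shiftRight_real (w * v) p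
    push_cast at a1 a2 b1 b2
    have e : (w : ℝ) * v / 2 ^ p = (w / 2 ^ p) * v := by ring
    rw [e] at b1 b2
    set ω : ℝ := (w : ℝ) / 2 ^ p with hω
    have hω0 : 0 ≤ ω := by positivity
    have hω1 : ω ≤ 3 / 5 := by rw [hω, div_le_iff₀ hP]; exact hw
    set S := hornerReal ω K i
    have h3 : |ω * (v - 2 ^ p * S)| ≤ 3 := by
      rw [abs_mul, abs_of_nonneg hω0]
      calc ω * |(v : ℝ) - 2 ^ p * S| ≤ 3 / 5 * 5 := by gcongr
        _ = 3 := by norm_num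
    have e2 : (2 : ℝ) ^ p * (1 / ((K - i : ℕ) : ℝ) + ω * S) =
      2 ^ p / ((K - i : ℕ) : ℝ) + ω * (2 ^ p * S) := by ring
    rw [e2]
    rw [abs_le] at h3 ⊢
    constructor <;> nlinarith [h3.1, h3.2]

theorem horner_log {x : ℝ} {K p : ℕ} (hx : |x| ≤ 3 / 5) (hK : |x| ^ (K + 1) * 2 ^ p ≤ 1) :
    |2 ^ p * (x * hornerReal x K K) + 2 ^ p * log (1 - x)| ≤ 5 / 2 := by
  have h := Real.abs_log_sub_add_sum_range_le (x := x) (by linarith) K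
  have e : x * hornerReal x K K = ∑ i ∈ Finset.range K, x ^ (i + 1) / (i + 1) := by
    rw [hornerReal_eq x K K le_rfl, Finset.mul_sum]
    refine Finset.sum_congr rfl fun m _ => ?_
    rw [Nat.sub_self]; push_cast; ring
  rw [← mul_add, e, abs_mul, abs_of_pos (by positivity)]
  calc (2 : ℝ) ^ p * |_| ≤ 2 ^ p * (|x| ^ (K + 1) / (1 - |x|)) := by gcongr
    _ = (|x| ^ (K + 1) * 2 ^ p) / (1 - |x|) := by ring
    _ ≤ 1 / (1 - 3 / 5) := by gcongr
    _ = 5 / 2 := by norm_num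

/-- `addLog` adds a fixed-point approximation of `log (1 ± ω)`; `ω'` is the exact argument and
`w / 2^p` its computed value. -/
theorem addLog_close (s : Bool) (p base w K : ℕ) (ω' : ℝ) (hω0 : 0 ≤ ω') (hω' : ω' ≤ 3 / 5)
    (hw : (w : ℝ) ≤ 3 / 5 * 2 ^ p) (hww : |(w : ℝ) - 2 ^ p * ω'| ≤ 16)
    (hK : ((w : ℝ) / 2 ^ p) ^ (K + 1) * 2 ^ p ≤ 1)
    (hp : 6 ≤ p) (hbase : s = true → 2 * 2 ^ p ≤ base) :
    |(addLog s p (2 ^ p) base w K : ℝ) - (base + 2 ^ p * log (1 + sgnR s * ω'))| ≤ 50 := by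
  have hP : (0 : ℝ) < 2 ^ p := by positivity
  set ω : ℝ := (w : ℝ) / 2 ^ p with hω
  have hω0' : 0 ≤ ω := by positivity
  have hω1 : ω ≤ 3 / 5 := by rw [hω, div_le_iff₀ hP]; exact hw
  have hωω : |2 ^ p * ω - 2 ^ p * ω'| ≤ 16 := by
    rw [hω, mul_div_cancel₀ _ hP.ne']; exact hww
  have hdiff : |2 ^ p * log (1 + sgnR s * ω) - 2 ^ p * log (1 + sgnR s * ω')| ≤ 40 := by
    have key : ∀ a b : ℝ, 2 / 5 ≤ a → 2 / 5 ≤ b → log a - log b ≤ 5 / 2 * |a - b| := by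
      intro a b ha hb
      rw [← Real.log_div (by linarith) (by linarith)]
      have h1 := Real.log_le_sub_one_of_pos (show 0 < a / b by apply div_pos <;> linarith)
      have h2 : a / b - 1 = (a - b) / b := by field_simp
      rw [h2] at h1
      refine h1.trans ?_
      calc (a - b) / b ≤ |a - b| / b := by gcongr; exact le_abs_self _
        _ ≤ |a - b| / (2 / 5) := by gcongr
        _ = _ := by ring
    have ha : 2 / 5 ≤ 1 + sgnR s * ω := by unfold sgnR; split_ifs <;> linarith
    have hb : 2 / 5 ≤ 1 + sgnR s * ω' := by unfold sgnR; split_ifs <;> linarith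
    have hab : |(1 + sgnR s * ω) - (1 + sgnR s * ω')| = |ω - ω'| := by
      rw [show (1 + sgnR s * ω) - (1 + sgnR s * ω') = sgnR s * (ω - ω') by ring, abs_mul]
      unfold sgnR; split_ifs <;> simp
    have h1 := key _ _ ha hb
    have h2 := key _ _ hb ha
    rw [abs_sub_comm (1 + sgnR s * ω')] at h2
    rw [hab] at h1 h2
    rw [← mul_sub, abs_mul, abs_of_pos hP] at hωω ⊢
    have h3 : |log (1 + sgnR s * ω) - log (1 + sgnR s * ω')| ≤ 5 / 2 * |ω - ω'| := by
      rw [abs_le]; constructor <;> linarith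
    nlinarith
  have hx : |sgnR s * ω| ≤ 3 / 5 := by
    rw [abs_mul, abs_of_nonneg hω0']; unfold sgnR; split_ifs <;> simpa using hω1
  have hxa : |-(sgnR s * ω)| = ω := by
    rw [abs_neg, abs_mul, abs_of_nonneg hω0']; unfold sgnR; split_ifs <;> simp
  have hl := horner_log (x := -(sgnR s * ω)) (K := K) (p := p) (by rw [hxa]; exact hω1)
    (by rw [hxa]; exact hK)
  rw [sub_neg_eq_add] at hl
  cases s with
  | false =>
    have e : addLog false p (2 ^ p) base w K =
      base + Nat.shiftRight (w * hornerAlt p (2 ^ p) w K K) p := rfl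
    rw [e]
    obtain ⟨b1, b2⟩ := shiftRight_real (w * hornerAlt p (2 ^ p) w K K) p
    have hc := hornerAlt_close p w K K hw le_rfl
    simp only [sgnR, Bool.false_eq_true, if_false, one_mul] at *
    rw [← hω] at hc
    push_cast at b1 b2 ⊢
    set v : ℝ := (hornerAlt p (2 ^ p) w K K : ℝ)
    rw [show (w : ℝ) * v / 2 ^ p = ω * v by rw [hω]; ring] at b1 b2
    set S := hornerReal (-ω) K K
    have h3 : |ω * (v - 2 ^ p * S)| ≤ 3 := by
      rw [abs_mul, abs_of_nonneg hω0']
      calc ω * |v - 2 ^ p * S| ≤ 3 / 5 * 5 := by gcongr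
        _ = 3 := by norm_num
    rw [show ω * (v - 2 ^ p * S) = ω * v + 2 ^ p * (-ω * S) by ring] at h3
    rw [abs_le] at *
    constructor <;> linarith [h3.1, h3.2, hl.1, hl.2, hdiff.1, hdiff.2]
  | true =>
    have e : addLog true p (2 ^ p) base w K =
      base - Nat.shiftRight (w * hornerPos p (2 ^ p) w K K) p := rfl
    rw [e]
    obtain ⟨b1, b2⟩ := shiftRight_real (w * hornerPos p (2 ^ p) w K K) p
    have hc := hornerPos_close p w K K hw le_rfl
    simp only [sgnR, if_true, neg_mul, one_mul, neg_neg] at *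
    rw [← hω] at hc
    have hb2 : 2 * (2 : ℝ) ^ p ≤ base := by exact_mod_cast hbase trivial
    push_cast at b1 b2
    set v : ℝ := (hornerPos p (2 ^ p) w K K : ℝ)
    rw [show (w : ℝ) * v / 2 ^ p = ω * v by rw [hω]; ring] at b1 b2
    set S := hornerReal ω K K
    have h3 : |ω * (v - 2 ^ p * S)| ≤ 3 := by
      rw [abs_mul, abs_of_nonneg hω0']
      calc ω * |v - 2 ^ p * S| ≤ 3 / 5 * 5 := by gcongr
        _ = 3 := by norm_num
    rw [show ω * (v - 2 ^ p * S) = ω * v - 2 ^ p * (ω * S) by ring] at h3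
    by_cases hle : Nat.shiftRight (w * hornerPos p (2 ^ p) w K K) p ≤ base
    · rw [Nat.cast_sub hle]
      rw [abs_le] at *
      constructor <;> linarith [h3.1, h3.2, hl.1, hl.2, hdiff.1, hdiff.2]
    · exfalso
      have hlt : (base : ℝ) < (Nat.shiftRight (w * hornerPos p (2 ^ p) w K K) p : ℕ) := by
        exact_mod_cast not_le.mp hle
      have hl1 : -(3 / 2) ≤ log (1 + -ω) := by
        have h1 := Real.log_le_sub_one_of_pos (show 0 < (1 + -ω)⁻¹ by
          apply inv_pos.mpr; linarith)
        rw [Real.log_inv] at h1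
        have h2 : (1 + -ω)⁻¹ ≤ (2 / 5)⁻¹ := by gcongr; linarith
        norm_num at h2
        linarith
      have hp2 : (2 : ℝ) ^ 6 ≤ 2 ^ p := pow_le_pow_right₀ (by norm_num) hp
      rw [abs_le] at hl h3
      nlinarith [h3.1, h3.2, hl.1, hl.2]

end

/-! ### Families of fixed-point logarithms -/

section

/-- Folds `f` over the fixed-point values `base + P * log (1 ± ω ρ^k)`, `k = 1, …, n`, where
`r ≈ P ρ`, the argument `w ≈ P ω` is updated at every step, and `kn / m` terms of the series are
used. -/
def rowF (s : Bool) (p P r kn base : ℕ) (f : ℕ → ℕ → ℕ) (n : ℕ) : ℕ → ℕ → ℕ → ℕ :=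
  Nat.rec (fun _ _ acc => acc) (fun _ ih w m acc =>
    forceN (Nat.shiftRight (Nat.mul w r) p) fun w' =>
    forceN (addLog s p P base w' (Nat.div kn m)) fun z =>
    forceN (f acc z) fun acc' => ih w' (Nat.succ m) acc') n

/-- The list of values over which `rowF` folds. -/
def rowL (s : Bool) (p P r kn base : ℕ) : ℕ → ℕ → ℕ → List ℕ
  | 0, _, _ => []
  | n + 1, w, m =>
    addLog s p P base (Nat.shiftRight (Nat.mul w r) p) (Nat.div kn m) ::
      rowL s p P r kn base n (Nat.shiftRight (Nat.mul w r) p) (m + 1)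

theorem rowF_eq (s : Bool) (p P r kn base : ℕ) (f : ℕ → ℕ → ℕ) (n w m acc : ℕ) :
    rowF s p P r kn base f n w m acc = (rowL s p P r kn base n w m).foldl f acc := by
  induction n generalizing w m acc with
  | zero => rfl
  | succ n ih =>
    have e : rowF s p P r kn base f (n + 1) w m acc =
      forceN (Nat.shiftRight (Nat.mul w r) p) fun w' =>
      forceN (addLog s p P base w' (Nat.div kn m)) fun z =>
      forceN (f acc z) fun acc' => rowF s p P r kn base f n w' (Nat.succ m) acc' := rfl
    rw [e]
    simp only [forceN_eq]
    rw [ih]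
    rfl

/-- Folds `f` over the fixed-point values `base + P * log (1 ± c₁ ρ^x ± c₂ ρ^y)`, `x < y ≤ N`; the
state consists of `w ≈ P c₁ ρ^x`, `v ≈ P c₂ ρ^x` and `x`. -/
def famF (s1 s2 : Bool) (p P r kn N base : ℕ) (f : ℕ → ℕ → ℕ) (n : ℕ) : ℕ → ℕ → ℕ → ℕ → ℕ :=
  Nat.rec (fun _ _ _ acc => acc) (fun _ ih w v x acc =>
    forceN (addLog s1 p P base w (Nat.div kn x)) fun z =>
    forceN (rowF s2 p P r kn z f (Nat.sub N x)
      (Nat.div (Nat.mul v P) (Bool.rec (Nat.add P w) (Nat.sub P w) s1)) x acc) fun acc' =>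
    forceN (Nat.shiftRight (Nat.mul w r) p) fun w' =>
    forceN (Nat.shiftRight (Nat.mul v r) p) fun v' =>
    ih w' v' (Nat.succ x) acc') n

/-- The list of values over which `famF` folds. -/
def famL (s1 s2 : Bool) (p P r kn N base : ℕ) : ℕ → ℕ → ℕ → ℕ → List ℕ
  | 0, _, _, _ => []
  | n + 1, w, v, x =>
    rowL s2 p P r kn (addLog s1 p P base w (Nat.div kn x)) (Nat.sub N x)
      (Nat.div (Nat.mul v P) (Bool.rec (Nat.add P w) (Nat.sub P w) s1)) x ++
      famL s1 s2 p P r kn N base n (Nat.shiftRight (Nat.mul w r) p)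
        (Nat.shiftRight (Nat.mul v r) p) (x + 1)

theorem famF_eq (s1 s2 : Bool) (p P r kn N base : ℕ) (f : ℕ → ℕ → ℕ) (n w v x acc : ℕ) :
    famF s1 s2 p P r kn N base f n w v x acc =
      (famL s1 s2 p P r kn N base n w v x).foldl f acc := by
  induction n generalizing w v x acc with
  | zero => rfl
  | succ n ih =>
    have e : famF s1 s2 p P r kn N base f (n + 1) w v x acc =
      forceN (addLog s1 p P base w (Nat.div kn x)) fun z =>
      forceN (rowF s2 p P r kn z f (Nat.sub N x)
        (Nat.div (Nat.mul v P) (Bool.rec (Nat.add P w) (Nat.sub P w) s1)) x acc) fun acc' =>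
      forceN (Nat.shiftRight (Nat.mul w r) p) fun w' =>
      forceN (Nat.shiftRight (Nat.mul v r) p) fun v' =>
      famF s1 s2 p P r kn N base f n w' v' (Nat.succ x) acc' := rfl
    rw [e]
    simp only [forceN_eq]
    rw [ih, rowF_eq, famL, List.foldl_append]

theorem mul_shift_le {w r p : ℕ} {a ρ : ℝ} (ha : 0 ≤ a) (hw : (w : ℝ) ≤ 2 ^ p * a)
    (hr : (r : ℝ) ≤ 2 ^ p * ρ) :
    ((Nat.shiftRight (Nat.mul w r) p : ℕ) : ℝ) ≤ 2 ^ p * (a * ρ) := by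
  have hP : (0 : ℝ) < 2 ^ p := by positivity
  refine (shiftRight_real _ p).2.trans ?_
  rw [div_le_iff₀ hP]
  have : ((Nat.mul w r : ℕ) : ℝ) = w * r := by exact_mod_cast rfl
  rw [this]
  calc (w : ℝ) * r ≤ (2 ^ p * a) * (2 ^ p * ρ) := by gcongr
    _ = _ := by ring

theorem mul_shift_close {w r p : ℕ} {a ρ e : ℝ} (ha : 0 ≤ a)
    (hw : |(w : ℝ) - 2 ^ p * a| ≤ e) (hr : (r : ℝ) ≤ 2 ^ p * ρ) (hr' : 2 ^ p * ρ - 1 ≤ r) :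
    |((Nat.shiftRight (Nat.mul w r) p : ℕ) : ℝ) - 2 ^ p * (a * ρ)| ≤ 1 + ρ * e + a := by
  have hP : (0 : ℝ) < 2 ^ p := by positivity
  obtain ⟨b1, b2⟩ := shiftRight_real (Nat.mul w r) p
  have : ((Nat.mul w r : ℕ) : ℝ) = w * r := by exact_mod_cast rfl
  rw [this] at b1 b2
  have e1 : (w : ℝ) * r / 2 ^ p - 2 ^ p * (a * ρ) =
      (w - 2 ^ p * a) * (r / 2 ^ p) + a * (r - 2 ^ p * ρ) := by field_simp; ring
  have h1 : |(w - 2 ^ p * a) * (r / 2 ^ p)| ≤ e * ρ := by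
    rw [abs_mul, abs_of_nonneg (show (0 : ℝ) ≤ r / 2 ^ p by positivity)]
    have : (r : ℝ) / 2 ^ p ≤ ρ := by rw [div_le_iff₀ hP]; linarith
    have he : 0 ≤ e := (abs_nonneg _).trans hw
    gcongr
  have h2 : |a * (r - 2 ^ p * ρ)| ≤ a := by
    rw [abs_mul, abs_of_nonneg ha]
    have : |(r : ℝ) - 2 ^ p * ρ| ≤ 1 := by rw [abs_le]; constructor <;> linarith
    nlinarith
  rw [abs_le] at *
  constructor <;> linarith [h1.1, h1.2, h2.1, h2.2]

theorem pow_terms_le {t ρ : ℝ} {p kn m : ℕ} (ht : 0 ≤ t) (hρ0 : 0 < ρ) (hρ1 : ρ ≤ 1)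
    (hm : 1 ≤ m) (htm : t ≤ ρ ^ m) (hkn : ρ ^ kn * 2 ^ p ≤ 1) :
    t ^ (Nat.div kn m + 1) * 2 ^ p ≤ 1 := by
  refine le_trans ?_ hkn
  gcongr
  calc t ^ (Nat.div kn m + 1) ≤ (ρ ^ m) ^ (Nat.div kn m + 1) := by gcongr
    _ = ρ ^ (m * (Nat.div kn m + 1)) := by rw [← pow_mul]
    _ ≤ ρ ^ kn := by
      apply pow_le_pow_of_le_one hρ0.le hρ1
      exact (Nat.lt_mul_div_succ kn (by omega)).le

theorem rowL_close (s : Bool) (p r kn base : ℕ) (ρ : ℝ) (hρ0 : 0 < ρ) (hρ1 : ρ ≤ 0.62)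
    (hr : (r : ℝ) ≤ 2 ^ p * ρ) (hr' : 2 ^ p * ρ - 1 ≤ r) (hkn : ρ ^ kn * 2 ^ p ≤ 1) (hp : 6 ≤ p)
    (hbase : s = true → 2 * 2 ^ p ≤ base) (n w m : ℕ) (ω : ℝ) (hω0 : 0 ≤ ω) (hω1 : ω ≤ 1)
    (hωρ : ω * ρ ≤ 3 / 5) (hm : 1 ≤ m) (hmρ : ρ ^ m ≤ 3 / 5) (hw : |(w : ℝ) - 2 ^ p * ω| ≤ 16)
    (hwm : (w : ℝ) ≤ 2 ^ p * ρ ^ (m - 1)) (k : ℕ) (hk : k < n) :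
    ∃ z ∈ rowL s p (2 ^ p) r kn base n w m,
      |(z : ℝ) - (base + 2 ^ p * log (1 + sgnR s * (ω * ρ ^ (k + 1))))| ≤ 50 := by
  have hP : (0 : ℝ) < 2 ^ p := by positivity
  induction n generalizing w m ω k with
  | zero => omega
  | succ n ih =>
    have h1 : ((Nat.shiftRight (Nat.mul w r) p : ℕ) : ℝ) ≤ 2 ^ p * ρ ^ m := by
      have := mul_shift_le (a := ρ ^ (m - 1)) (by positivity) hwm hr
      rwa [← pow_succ, Nat.sub_add_cancel hm] at this
    have h2 : |((Nat.shiftRight (Nat.mul w r) p : ℕ) : ℝ) - 2 ^ p * (ω * ρ)| ≤ 16 :=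
      (mul_shift_close hω0 hw hr hr').trans (by linarith)
    rw [rowL]
    rcases k with _ | k
    · refine ⟨_, List.mem_cons_self, ?_⟩
      rw [zero_add, pow_one]
      refine addLog_close s p base _ _ (ω * ρ) (by positivity) hωρ ?_ h2 ?_ hp hbase
      · calc _ ≤ 2 ^ p * ρ ^ m := h1
          _ ≤ 2 ^ p * (3 / 5) := by gcongr
          _ = _ := by ring
      · refine pow_terms_le (by positivity) hρ0 (by linarith) hm ?_ hkn
        rw [div_le_iff₀ hP]; linarith
    · obtain ⟨z, hz, hz'⟩ := ih (Nat.shiftRight (Nat.mul w r) p) (m + 1) (ω * ρ) (by positivity)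
        (by linarith) (by nlinarith [mul_nonneg hω0 hρ0.le]) (by omega)
        (by rw [pow_succ]; nlinarith [pow_pos hρ0 m]) h2
        (by simpa using h1) k (by omega)
      refine ⟨z, List.mem_cons_of_mem _ hz, ?_⟩
      rwa [show ω * ρ * ρ ^ (k + 1) = ω * ρ ^ (k + 1 + 1) by ring] at hz'

set_option maxHeartbeats 1000000 in
theorem famL_close (s1 s2 : Bool) (p r kn N base : ℕ) (ρ c1 c2 : ℝ) (hρ0 : 0 < ρ) (hρ1 : ρ ≤ 0.62)
    (hr : (r : ℝ) ≤ 2 ^ p * ρ) (hr' : 2 ^ p * ρ - 1 ≤ r) (hkn : ρ ^ kn * 2 ^ p ≤ 1) (hp : 7 ≤ p)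
    (hbase : s1 = true ∨ s2 = true → 3 * 2 ^ p ≤ base) (hc10 : 0 ≤ c1) (hc11 : c1 ≤ 1)
    (hc20 : 0 ≤ c2) (hc21 : c2 * ρ ≤ 2 / 3) (n w v x : ℕ) (hx1 : 1 ≤ x)
    (hs1 : s1 = true → c1 * ρ ^ x ≤ 1 / 3) (hx : ρ ^ x ≤ 3 / 5)
    (hw : |(w : ℝ) - 2 ^ p * (c1 * ρ ^ x)| ≤ 5) (hwle : (w : ℝ) ≤ 2 ^ p * (c1 * ρ ^ x))
    (hv : |(v : ℝ) - 2 ^ p * (c2 * ρ ^ x)| ≤ 5) (hvle : (v : ℝ) ≤ 2 ^ p * (c2 * ρ ^ x))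
    (k y : ℕ) (hk : k < n) (hy : x + k < y) (hyN : y ≤ N) :
    ∃ z ∈ famL s1 s2 p (2 ^ p) r kn N base n w v x,
      |(z : ℝ) - (base + 2 ^ p * log (1 + sgnR s1 * (c1 * ρ ^ (x + k))
        + sgnR s2 * (c2 * ρ ^ y)))| ≤ 100 := by
  have hP : (0 : ℝ) < 2 ^ p := by positivity
  induction n generalizing w v x k with
  | zero => omega
  | succ n ih =>
    rw [famL]
    have hρx : 0 < ρ ^ x := by positivity
    have hρx1 : ρ ^ x ≤ ρ := by
      calc ρ ^ x ≤ ρ ^ 1 := pow_le_pow_of_le_one hρ0.le (by linarith) hx1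
        _ = ρ := pow_one _
    have hc1x : c1 * ρ ^ x ≤ ρ ^ x := mul_le_of_le_one_left hρx.le hc11
    have hc2x : c2 * ρ ^ x ≤ 2 / 3 := (by gcongr : c2 * ρ ^ x ≤ c2 * ρ).trans hc21
    rcases k with _ | k
    · rw [Nat.add_zero] at hy ⊢
      have hlog := addLog_close s1 p base w (Nat.div kn x) (c1 * ρ ^ x) (by positivity)
        (by linarith)
        (by calc (w : ℝ) ≤ 2 ^ p * (c1 * ρ ^ x) := hwle
              _ ≤ 2 ^ p * (3 / 5) := by gcongr; linarith
              _ = _ := by ring)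
        (hw.trans (by norm_num))
        (by refine pow_terms_le (by positivity) hρ0 (by linarith) hx1 ?_ hkn
            rw [div_le_iff₀ hP]
            have := mul_le_mul_of_nonneg_left hc1x hP.le
            linarith)
        (by omega) (fun h => (by have := hbase (Or.inl h); omega))
      set z1 := addLog s1 p (2 ^ p) base w (Nat.div kn x) with hz1
      set A : ℝ := 1 + sgnR s1 * (c1 * ρ ^ x) with hA
      have hA0 : 2 / 3 ≤ A := by
        rw [hA]; unfold sgnR
        have h0 : 0 ≤ c1 * ρ ^ x := by positivity
        split_ifs with h
        · linarith [hs1 h]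
        · linarith
      have hz2 : s2 = true → 2 * 2 ^ p ≤ z1 := by
        intro h
        have hb3 : (3 : ℝ) * 2 ^ p ≤ base := by exact_mod_cast hbase (Or.inr h)
        have hlA : -(1 / 2) ≤ log A := by
          have h1 := Real.log_le_sub_one_of_pos (show 0 < A⁻¹ by apply inv_pos.mpr; linarith)
          rw [Real.log_inv] at h1
          have h2 : A⁻¹ ≤ (2 / 3)⁻¹ := by gcongr
          norm_num at h2
          linarith
        have hp2 : (2 : ℝ) ^ 7 ≤ 2 ^ p := pow_le_pow_right₀ (by norm_num) hp
        have : (2 : ℝ) * 2 ^ p ≤ z1 := by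
          rw [abs_le] at hlog
          have := mul_le_mul_of_nonneg_left hlA hP.le
          linarith [hlog.1]
        exact_mod_cast this
      -- the integer denominator, close to `P * A`
      set den : ℕ := (Bool.rec (Nat.add (2 ^ p) w) (Nat.sub (2 ^ p) w) s1 : ℕ) with hden
      have hdenr : (den : ℝ) = 2 ^ p + sgnR s1 * w := by
        rw [hden]
        cases s1 with
        | false =>
          change (((2 ^ p + w : ℕ)) : ℝ) = _
          simp [sgnR]
        | true =>
          change (((2 ^ p - w : ℕ)) : ℝ) = _
          have : w ≤ 2 ^ p := by
            have : (w : ℝ) ≤ 2 ^ p := hwle.trans (by nlinarith [hs1 rfl])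
            exact_mod_cast this
          rw [Nat.cast_sub this]
          simp [sgnR, sub_eq_add_neg]
      have hdA : |(den : ℝ) - 2 ^ p * A| ≤ 5 := by
        rw [hdenr, hA, show (2 : ℝ) ^ p + sgnR s1 * w - 2 ^ p * (1 + sgnR s1 * (c1 * ρ ^ x)) =
          sgnR s1 * (w - 2 ^ p * (c1 * ρ ^ x)) by ring, abs_mul]
        have : |sgnR s1| = 1 := by unfold sgnR; split_ifs <;> simp
        rw [this, one_mul]; exact hw
      have hd23 : 2 ^ p * (2 / 3) ≤ (den : ℝ) := by
        rw [hdenr]; unfold sgnR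
        split_ifs with h
        · have := mul_le_mul_of_nonneg_left (hs1 h) hP.le
          linarith
        · have : (0 : ℝ) ≤ w := by positivity
          linarith
      have hden0 : 0 < den := by
        have : (0 : ℝ) < den := lt_of_lt_of_le (by positivity) hd23
        exact_mod_cast this
      obtain ⟨q1, q2⟩ := div_real (Nat.mul v (2 ^ p)) den hden0
      have evm : ((Nat.mul v (2 ^ p) : ℕ) : ℝ) = v * 2 ^ p := by
        exact_mod_cast (rfl : Nat.mul v (2 ^ p) = v * 2 ^ p)
      rw [evm] at q1 q2
      set W := Nat.div (Nat.mul v (2 ^ p)) den with hW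
      set ω : ℝ := c2 * ρ ^ x / A with hω
      have hdpos : (0 : ℝ) < den := by exact_mod_cast hden0
      have hω0 : 0 ≤ ω := by positivity
      have hω1 : ω ≤ 1 := by rw [hω, div_le_one (by linarith)]; linarith
      have hquo : |(v : ℝ) * 2 ^ p / den - 2 ^ p * ω| ≤ 15 := by
        have e : (v : ℝ) * 2 ^ p / den - 2 ^ p * ω =
            ((v - 2 ^ p * (c2 * ρ ^ x)) - ω * (den - 2 ^ p * A)) * (2 ^ p / den) := by
          have hAω : ω * A = c2 * ρ ^ x := by rw [hω]; field_simp
          rw [← hAω]; field_simp; ring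
        rw [e, abs_mul, abs_of_pos (show (0 : ℝ) < 2 ^ p / den by positivity)]
        have h1 : |(v : ℝ) - 2 ^ p * (c2 * ρ ^ x) - ω * (den - 2 ^ p * A)| ≤ 10 := by
          refine (abs_sub _ _).trans ?_
          rw [abs_mul, abs_of_nonneg hω0]
          have := mul_le_mul hω1 hdA (abs_nonneg _) zero_le_one
          linarith
        have h2 : (2 : ℝ) ^ p / den ≤ 3 / 2 := by rw [div_le_iff₀ hdpos]; linarith
        calc _ ≤ (10 : ℝ) * (3 / 2) := by gcongr
          _ = 15 := by norm_num
      have hWc : |(W : ℝ) - 2 ^ p * ω| ≤ 16 := by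
        rw [abs_le] at hquo ⊢
        constructor <;> linarith [hquo.1, hquo.2]
      have hWle : (W : ℝ) ≤ 2 ^ p * ρ ^ (x - 1) := by
        refine q2.trans ?_
        rw [div_le_iff₀ hdpos]
        have e : ρ ^ x = ρ ^ (x - 1) * ρ := by rw [← pow_succ, Nat.sub_add_cancel hx1]
        calc (v : ℝ) * 2 ^ p ≤ (2 ^ p * (c2 * ρ ^ x)) * 2 ^ p := by gcongr
          _ = 2 ^ p * ρ ^ (x - 1) * (2 ^ p * (c2 * ρ)) := by rw [e]; ring
          _ ≤ 2 ^ p * ρ ^ (x - 1) * den := by gcongr; exact le_trans (by gcongr) hd23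
      have hωρ : ω * ρ ≤ 3 / 5 := by
        refine le_trans ?_ hx
        have e : ρ ^ x = ρ ^ (x - 1) * ρ := by rw [← pow_succ, Nat.sub_add_cancel hx1]
        rw [hω, e]
        have : c2 * (ρ ^ (x - 1) * ρ) / A ≤ ρ ^ (x - 1) := by
          rw [div_le_iff₀ (by linarith)]
          have h0 : 0 < ρ ^ (x - 1) := by positivity
          have h1 := mul_le_mul_of_nonneg_left (hc21.trans hA0) h0.le
          linarith
        gcongr
      obtain ⟨z, hz, hzc⟩ := rowL_close s2 p r kn z1 ρ hρ0 hρ1 hr hr' hkn (by omega) hz2 (N - x) W x ω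
        hω0 hω1 hωρ hx1 hx hWc hWle (y - x - 1) (by omega)
      refine ⟨z, List.mem_append_left _ hz, ?_⟩
      have e1 : y - x - 1 + 1 = y - x := by omega
      rw [e1] at hzc
      have e2 : A * (1 + sgnR s2 * (ω * ρ ^ (y - x))) = A + sgnR s2 * (c2 * ρ ^ y) := by
        have : ρ ^ y = ρ ^ x * ρ ^ (y - x) := by rw [← pow_add]; congr 1; omega
        rw [this, hω]; field_simp
      have hfac : 0 < 1 + sgnR s2 * (ω * ρ ^ (y - x)) := by
        have h1 : ω * ρ ^ (y - x) ≤ 3 / 5 := by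
          refine le_trans ?_ hωρ
          gcongr
          calc ρ ^ (y - x) ≤ ρ ^ 1 := pow_le_pow_of_le_one hρ0.le (by linarith) (by omega)
            _ = ρ := pow_one _
        have h0 : 0 ≤ ω * ρ ^ (y - x) := by positivity
        unfold sgnR; split_ifs <;> linarith
      rw [Nat.add_zero, ← hA, ← e2, Real.log_mul (by linarith) hfac.ne']
      rw [abs_le] at hlog hzc ⊢
      constructor <;> linarith [hlog.1, hlog.2, hzc.1, hzc.2]
    · have hstep : ∀ (u : ℕ) (c : ℝ), 0 ≤ c → c * ρ ^ x ≤ 2 / 3 →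
          |(u : ℝ) - 2 ^ p * (c * ρ ^ x)| ≤ 5 →
          |((Nat.shiftRight (Nat.mul u r) p : ℕ) : ℝ) - 2 ^ p * (c * ρ ^ (x + 1))| ≤ 5 := by
        intro u c hc hcx hu
        have := mul_shift_close (a := c * ρ ^ x) (by positivity) hu hr hr'
        rw [show c * ρ ^ (x + 1) = c * ρ ^ x * ρ by ring]
        exact this.trans (by linarith)
      have hstep2 : ∀ (u : ℕ) (c : ℝ), 0 ≤ c → (u : ℝ) ≤ 2 ^ p * (c * ρ ^ x) →
          ((Nat.shiftRight (Nat.mul u r) p : ℕ) : ℝ) ≤ 2 ^ p * (c * ρ ^ (x + 1)) := by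
        intro u c hc hu
        have := mul_shift_le (a := c * ρ ^ x) (by positivity) hu hr
        rwa [show c * ρ ^ (x + 1) = c * ρ ^ x * ρ by ring]
      have hρs : ρ ^ (x + 1) ≤ ρ ^ x := pow_le_pow_of_le_one hρ0.le (by linarith) (by omega)
      obtain ⟨z, hz, hzc⟩ := ih (Nat.shiftRight (Nat.mul w r) p) (Nat.shiftRight (Nat.mul v r) p)
        (x + 1) (by omega)
        (fun h => (by gcongr : c1 * ρ ^ (x + 1) ≤ c1 * ρ ^ x).trans (hs1 h))
        (hρs.trans hx) (hstep w c1 hc10 (by linarith) hw) (hstep2 w c1 hc10 hwle)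
        (hstep v c2 hc20 hc2x hv) (hstep2 v c2 hc20 hvle) k (by omega) (by omega)
      refine ⟨z, List.mem_append_right _ hz, ?_⟩
      rwa [show x + 1 + k = x + (k + 1) by omega] at hzc

end

/-! ### Comparing two families modulo a lattice -/

section

/-- `c a` and `c b` agree modulo `C` up to an error `T`. -/
def NearMod (c C T a b : ℕ) : Prop :=
  ∃ k : ℤ, |(c : ℤ) * a - c * b - k * C| ≤ T

/-- `acc` if `t = 0`, and `nxt` otherwise; `nxt` is not evaluated when `t = 0`. -/
def selN (t acc nxt : ℕ) : ℕ := Nat.rec acc (fun _ _ => nxt) t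

/-- Sets the bits of the bitmap `acc` at the (one or two) buckets modulo `M` met by the interval of
radius `T` about `c z`; a bucket has length `2^s`. -/
def setBuckets (c s M T acc z : ℕ) : ℕ :=
  forceN (Nat.add (Nat.mul c z) (Nat.mul M (Nat.pow 2 s))) fun y =>
    Nat.lor (Nat.lor acc (Nat.shiftLeft 1 (Nat.mod (Nat.shiftRight (Nat.sub y T) s) M)))
      (Nat.shiftLeft 1 (Nat.mod (Nat.shiftRight (Nat.add y T) s) M))

/-- The bit of the bitmap `B` at the bucket of `c z`. -/
def bucketBit (c s M B z : ℕ) : ℕ :=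
  Nat.land 1 (Nat.shiftRight B (Nat.mod (Nat.shiftRight (Nat.mul c z) s) M))

/-- `0` if `c a` and `c b` differ by more than `T` modulo `C`, and `1` otherwise. -/
def nearBit (c C T a b : ℕ) : ℕ :=
  Bool.rec 0 1 (Nat.ble (Nat.mod (Nat.add (Nat.add (Nat.mod (Nat.mul c a) C)
    (Nat.sub C (Nat.mod (Nat.mul c b) C))) T) C) (Nat.mul 2 T))

/-- `0` if `a + i lφ - b` is within `tol` of a multiple of `l3` for some `i < I`, and `1`
otherwise. -/
def exactBit (lφ l3 tol a b I : ℕ) : ℕ :=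
  Nat.rec 1 (fun i ih => Bool.rec ih 0
    (Nat.ble (Nat.mod (Nat.add (Nat.sub (Nat.add (Nat.add a (Nat.mul i lφ)) (Nat.mul 16 l3)) b) tol)
      l3) (Nat.mul 2 tol))) I

/-- Counts the pair `(a, b)` unless one of the three multipliers separates `a` from `b`, or
`exactBit` finds a multiplicative relation. -/
def pairCount (c1 c2 c3 C T lφ l3 tol I a acc b : ℕ) : ℕ :=
  selN (nearBit c1 C T a b) acc (selN (nearBit c2 C T a b) acc (selN (nearBit c3 C T a b) acc
    (Nat.add acc (exactBit lφ l3 tol a b I))))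

/-- Compares the value `a` with all the values `b` behind the fold `FB`: quickly through the three
bitmaps, and one by one if this fails. -/
def itemCount (c1 c2 c3 s M T lφ l3 tol I : ℕ) (FB : (ℕ → ℕ → ℕ) → ℕ → ℕ) (B1 B2 B3 acc a : ℕ) : ℕ :=
  selN (bucketBit c1 s M B1 a) acc (selN (bucketBit c2 s M B2 a) acc (selN (bucketBit c3 s M B3 a) acc
    (FB (pairCount c1 c2 c3 (Nat.mul M (Nat.pow 2 s)) T lφ l3 tol I a) acc)))

/-- Number of pairs that are neither separated nor multiplicatively related. -/
def pairCheck (c1 c2 c3 s M T lφ l3 tol I : ℕ) (FA FB : (ℕ → ℕ → ℕ) → ℕ → ℕ) : ℕ :=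
  forceN (FB (setBuckets c1 s M T) 0) fun B1 =>
  forceN (FB (setBuckets c2 s M T) 0) fun B2 =>
  forceN (FB (setBuckets c3 s M T) 0) fun B3 =>
  FA (itemCount c1 c2 c3 s M T lφ l3 tol I FB B1 B2 B3) 0

theorem selN_eq (t acc nxt : ℕ) : selN t acc nxt = if t = 0 then acc else nxt := by
  cases t <;> simp [selN]

theorem le_foldl {f : ℕ → ℕ → ℕ} (hf : ∀ acc z, acc ≤ f acc z) (l : List ℕ) (acc : ℕ) :
    acc ≤ l.foldl f acc := by
  induction l generalizing acc with
  | nil => exact le_rfl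
  | cons a l ih => exact (hf acc a).trans (ih _)

theorem foldl_zero {f : ℕ → ℕ → ℕ} (hf : ∀ acc z, acc ≤ f acc z) (l : List ℕ)
    (h : l.foldl f 0 = 0) : ∀ z ∈ l, f 0 z = 0 := by
  induction l with
  | nil => simp
  | cons a l ih =>
    rw [List.foldl_cons] at h
    have h1 : f 0 a = 0 := by have := le_foldl hf l (f 0 a); omega
    rw [h1] at h
    intro z hz
    rcases List.mem_cons.mp hz with rfl | hz
    · exact h1
    · exact ih h z hz

theorem setBuckets_eq (c s M T acc z : ℕ) : setBuckets c s M T acc z =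
    acc ||| (1 <<< ((c * z + M * 2 ^ s - T) / 2 ^ s % M)) |||
      (1 <<< ((c * z + M * 2 ^ s + T) / 2 ^ s % M)) := by
  unfold setBuckets
  rw [forceN_eq, ← Nat.shiftRight_eq_div_pow, ← Nat.shiftRight_eq_div_pow]
  rfl

theorem testBit_foldl_of_acc (c s M T : ℕ) (l : List ℕ) (acc b : ℕ) (h : acc.testBit b = true) :
    (l.foldl (setBuckets c s M T) acc).testBit b = true := by
  induction l generalizing acc with
  | nil => exact h
  | cons a l ih =>
    rw [List.foldl_cons]
    apply ih
    rw [setBuckets_eq, Nat.testBit_or, Nat.testBit_or, h]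
    simp

theorem testBit_foldl (c s M T : ℕ) (l : List ℕ) (acc z : ℕ) (hz : z ∈ l) :
    (l.foldl (setBuckets c s M T) acc).testBit ((c * z + M * 2 ^ s - T) / 2 ^ s % M) = true ∧
    (l.foldl (setBuckets c s M T) acc).testBit ((c * z + M * 2 ^ s + T) / 2 ^ s % M) = true := by
  induction l generalizing acc with
  | nil => simp at hz
  | cons a l ih =>
    rw [List.foldl_cons]
    rcases List.mem_cons.mp hz with rfl | hz
    · constructor <;> apply testBit_foldl_of_acc <;>
        rw [setBuckets_eq, Nat.testBit_or, Nat.testBit_or] <;> simp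
    · exact ih _ hz

theorem bucketBit_eq_zero (c s M B z : ℕ) (h : bucketBit c s M B z = 0) :
    B.testBit (c * z / 2 ^ s % M) = false := by
  unfold bucketBit at h
  rw [← Nat.shiftRight_eq_div_pow]
  have h' : 1 &&& (B >>> (((c * z) >>> s) % M)) = 0 := h
  simp [Nat.testBit, h']

/-- If the bit of `a` is not set, then `a` is far from every `b` recorded in the bitmap. -/
theorem not_near_of_bucketBit {c s M T a b : ℕ} {l : List ℕ} (hM : 0 < M) (hT : 2 * T < 2 ^ s)
    (hb : b ∈ l) (h : bucketBit c s M (l.foldl (setBuckets c s M T) 0) a = 0) :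
    ¬ NearMod c (M * 2 ^ s) T a b := by
  rintro ⟨k, hk⟩
  have h0 := bucketBit_eq_zero _ _ _ _ _ h
  obtain ⟨h1, h2⟩ := testBit_foldl c s M T l 0 b hb
  set w := 2 ^ s with hw
  have hw0 : 0 < w := by positivity
  set y := c * b + M * w with hy
  have hTy : T ≤ y := by nlinarith
  -- `c a` lies, modulo `M w`, in the interval `[y - T, y + T]`
  obtain ⟨t, ht, e⟩ : ∃ t : ℕ, t ≤ 2 * T ∧ ((c * a : ℕ) : ℤ) = (y - T : ℕ) + t + (k - 1) * (M * w : ℕ) := by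
    rw [abs_le] at hk
    refine ⟨((c : ℤ) * a - c * b - k * (M * w : ℕ) + T).toNat, ?_, ?_⟩
    · omega
    · rw [Int.toNat_of_nonneg (by linarith [hk.1]), Nat.cast_sub hTy, hy]
      push_cast; ring
  have hcong : c * a / w % M = ((y - T) + t) / w % M := by
    have e2 : ((c * a : ℕ) : ℤ) / w = (((y - T) + t : ℕ) : ℤ) / w + (k - 1) * M := by
      rw [e, show ((y - T : ℕ) : ℤ) + t + (k - 1) * (M * w : ℕ) =
        (((y - T) + t : ℕ) : ℤ) + ((k - 1) * M) * (w : ℤ) by push_cast; ring]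
      exact Int.add_mul_ediv_right _ _ (by exact_mod_cast hw0.ne')
    have e3 : ((c * a / w % M : ℕ) : ℤ) = (((y - T) + t) / w % M : ℕ) := by
      rw [Int.natCast_mod, Int.natCast_mod, Int.natCast_div, Int.natCast_div, e2,
        Int.add_mul_emod_self_right]
    exact_mod_cast e3
  rw [hcong] at h0
  have hlo : (y - T) / w ≤ ((y - T) + t) / w := Nat.div_le_div_right (by omega)
  have hhi : ((y - T) + t) / w ≤ (y + T) / w := Nat.div_le_div_right (by omega)
  have hspan : (y + T) / w ≤ (y - T) / w + 1 := by
    calc (y + T) / w ≤ ((y - T) + w) / w := Nat.div_le_div_right (by omega)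
      _ = _ := Nat.add_div_right _ hw0
  rcases (show ((y - T) + t) / w = (y - T) / w ∨ ((y - T) + t) / w = (y + T) / w by omega) with h3 | h3
  · rw [h3, h1] at h0; exact absurd h0 (by simp)
  · rw [h3, h2] at h0; exact absurd h0 (by simp)

theorem not_near_of_nearBit {c C T a b : ℕ} (hC : 0 < C) (hT : 2 * T < C)
    (h : nearBit c C T a b = 0) : ¬ NearMod c C T a b := by
  rintro ⟨k, hk⟩
  unfold nearBit at h
  have h1 : ¬ ((c * a % C + (C - c * b % C) + T) % C ≤ 2 * T) := by
    intro hle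
    have : Nat.ble ((c * a % C + (C - c * b % C) + T) % C) (2 * T) = true := Nat.ble_eq.mpr hle
    have h' : (Bool.rec 0 1 (Nat.ble ((c * a % C + (C - c * b % C) + T) % C) (2 * T)) : ℕ) = 0 := h
    rw [this] at h'
    exact absurd h' (by simp)
  apply h1
  set y := c * a % C + (C - c * b % C) + T with hy
  rw [abs_le] at hk
  have hbm : c * b % C < C := Nat.mod_lt _ hC
  have ea : ((c * a : ℕ) : ℤ) = (c * a % C : ℕ) + C * (c * a / C : ℕ) := by
    exact_mod_cast (Nat.mod_add_div (c * a) C).symm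
  have eb : ((c * b : ℕ) : ℤ) = (c * b % C : ℕ) + C * (c * b / C : ℕ) := by
    exact_mod_cast (Nat.mod_add_div (c * b) C).symm
  have ey : (y : ℤ) = (c * a % C : ℕ) + (C - (c * b % C : ℕ)) + T := by
    rw [hy]; push_cast [Nat.cast_sub hbm.le]; ring
  set r : ℤ := (c : ℤ) * a - c * b - k * C + T with hr
  have e : (y : ℤ) = r + (k - (c * a / C : ℕ) + (c * b / C : ℕ) + 1) * C := by
    rw [ey, hr]; push_cast at ea eb ⊢
    linear_combination ((-1 : ℤ)) * ea + eb
  have e2 : ((y % C : ℕ) : ℤ) = r := by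
    rw [Int.natCast_mod, e, Int.add_mul_emod_self_right]
    exact Int.emod_eq_of_lt (by linarith [hk.1]) (by
      have : ((2 * T : ℕ) : ℤ) < C := by exact_mod_cast hT
      push_cast at this
      linarith [hk.2])
  have : ((y % C : ℕ) : ℤ) ≤ 2 * T := by rw [e2]; linarith [hk.2]
  exact_mod_cast this

theorem exists_of_exactBit {lφ l3 tol a b I : ℕ} (hb : b ≤ 16 * l3)
    (h : exactBit lφ l3 tol a b I = 0) :
    ∃ i < I, ∃ j : ℤ, |(a : ℤ) + i * lφ - b - j * l3| ≤ tol := by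
  induction I with
  | zero => exact absurd h (by simp [exactBit])
  | succ I ih =>
    have e : exactBit lφ l3 tol a b (I + 1) = Bool.rec (exactBit lφ l3 tol a b I) 0
      (Nat.ble ((a + I * lφ + 16 * l3 - b + tol) % l3) (2 * tol)) := rfl
    rw [e] at h
    by_cases hc : (a + I * lφ + 16 * l3 - b + tol) % l3 ≤ 2 * tol
    · refine ⟨I, by omega, ((a + I * lφ + 16 * l3 - b + tol) / l3 : ℕ) - 16, ?_⟩
      have e1 := Nat.mod_add_div (a + I * lφ + 16 * l3 - b + tol) l3
      have e2 : (((a + I * lφ + 16 * l3 - b + tol) % l3 : ℕ) : ℤ) +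
        l3 * ((a + I * lφ + 16 * l3 - b + tol) / l3 : ℕ) = a + I * lφ + 16 * l3 - b + tol := by
        have h3 : b ≤ a + I * lφ + 16 * l3 := by omega
        zify [h3] at e1
        exact_mod_cast e1
      have hc' : (((a + I * lφ + 16 * l3 - b + tol) % l3 : ℕ) : ℤ) ≤ 2 * tol := by exact_mod_cast hc
      have hc0 : (0 : ℤ) ≤ ((a + I * lφ + 16 * l3 - b + tol) % l3 : ℕ) := by positivity
      rw [abs_le]
      constructor <;> linarith
    · have : Nat.ble ((a + I * lφ + 16 * l3 - b + tol) % l3) (2 * tol) = false := by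
        rw [Bool.eq_false_iff]; intro h'; exact hc (Nat.ble_eq.mp h')
      rw [this] at h
      obtain ⟨i, hi, j, hj⟩ := ih h
      exact ⟨i, by omega, j, hj⟩

/-- If the count is zero, two values that are near modulo all three multipliers satisfy a
multiplicative relation found by `exactBit`. -/
theorem pairCheck_sound {c1 c2 c3 s M T lφ l3 tol I : ℕ} {FA FB : (ℕ → ℕ → ℕ) → ℕ → ℕ}
    {LA LB : List ℕ} (hA : ∀ f acc, FA f acc = LA.foldl f acc)
    (hB : ∀ f acc, FB f acc = LB.foldl f acc) (hM : 0 < M) (hT : 2 * T < 2 ^ s)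
    (h : pairCheck c1 c2 c3 s M T lφ l3 tol I FA FB = 0) (a b : ℕ) (ha : a ∈ LA) (hb : b ∈ LB)
    (hb16 : b ≤ 16 * l3)
    (h1 : NearMod c1 (M * 2 ^ s) T a b) (h2 : NearMod c2 (M * 2 ^ s) T a b)
    (h3 : NearMod c3 (M * 2 ^ s) T a b) :
    ∃ i < I, ∃ j : ℤ, |(a : ℤ) + i * lφ - b - j * l3| ≤ tol := by
  unfold pairCheck at h
  simp only [forceN_eq, hA, hB] at h
  have hpc : ∀ a acc b, acc ≤ pairCount c1 c2 c3 (M * 2 ^ s) T lφ l3 tol I a acc b := by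
    intro a acc b
    unfold pairCount
    simp only [selN_eq]
    split_ifs
    · exact le_rfl
    · exact le_rfl
    · exact le_rfl
    · exact Nat.le_add_right _ _
  have hic : ∀ B1 B2 B3 acc a,
      acc ≤ itemCount c1 c2 c3 s M T lφ l3 tol I FB B1 B2 B3 acc a := by
    intro B1 B2 B3 acc a
    unfold itemCount
    simp only [selN_eq, hB]
    split_ifs
    · exact le_rfl
    · exact le_rfl
    · exact le_rfl
    · exact le_foldl (hpc a) _ _
  have hz := foldl_zero (hic _ _ _) LA h a ha
  unfold itemCount at hz
  simp only [selN_eq, hB] at hz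
  have hMs : 2 ^ s ≤ M * 2 ^ s := Nat.le_mul_of_pos_left _ hM
  split_ifs at hz with g1 g2 g3
  · exact absurd h1 (not_near_of_bucketBit hM hT hb g1)
  · exact absurd h2 (not_near_of_bucketBit hM hT hb g2)
  · exact absurd h3 (not_near_of_bucketBit hM hT hb g3)
  · have hq := foldl_zero (hpc a) LB hz b hb
    unfold pairCount at hq
    simp only [selN_eq] at hq
    have hC : 0 < M * 2 ^ s := by positivity
    split_ifs at hq with k1 k2 k3
    · exact absurd h1 (not_near_of_nearBit hC (by omega) k1)
    · exact absurd h2 (not_near_of_nearBit hC (by omega) k2)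
    · exact absurd h3 (not_near_of_nearBit hC (by omega) k3)
    · exact exists_of_exactBit hb16 (by
        have : 0 + exactBit lφ l3 tol a b I = 0 := hq
        omega)

end

/-! ### The constants `log φ`, `log 2`, `log 3`, `log 5` -/

section

/-- `⌊2 ^ 1100 / φ⌋`. -/
def rGold : ℕ := 8394746578215068546376512034652809011602222812455583922489580028925820290390104420508681255636241520243568672906389354737739661708086377423968907568815477945809656555192835176773693857902448456601196921367843704019757114471450402093617778441486725445320220897692805156953342699271462763948922220833179017832630888459421797133789306

/-- Fixed-point value of `2 ^ 1100 * log φ`. -/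
def cPhi : ℕ := 2 * 2 ^ 1100 - addLog true 1100 (2 ^ 1100) (2 * 2 ^ 1100) (2 ^ 1100 - rGold - 1) 800
/-- Fixed-point value of `2 ^ 1100 * log (4 / 3)`. -/
def cA : ℕ := 2 * 2 ^ 1100 - addLog true 1100 (2 ^ 1100) (2 * 2 ^ 1100) (2 ^ 1098) 560
/-- Fixed-point value of `2 ^ 1100 * log (9 / 8)`. -/
def cB : ℕ := addLog false 1100 (2 ^ 1100) 0 (2 ^ 1097) 380
/-- Fixed-point value of `2 ^ 1100 * log (5 / 4)`. -/
def cC : ℕ := addLog false 1100 (2 ^ 1100) 0 (2 ^ 1098) 560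

/-- Literal value of `2 ^ 1100 * log φ`, rounded. -/
def lPhi : ℕ := 6536293141396297547224074417826123549276486068776638409145829295305498056227620717485793776296399639973386062435999440521279613856317126318019134968703936595391071344206028879658970133102819578347513869684883932309891855389562331971131620044170148194821857726892749579288655963036752150386912379435035453878066896499870778891401377
/-- Literal value of `2 ^ 1100 * log 2`, rounded. -/
def lTwo : ℕ := 9415007957693027722880307929188276968141403835976026293480465945092879697822594116595490940881469751071240532962845064503783534149501481202023296491837926205797251605390177906738680991136124350219660442834568659180208927874712149672486236366455706064521696188835824276673088219872239739540577668248528012974373879443656803826075151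
/-- Literal value of `2 ^ 1100 * log 3`, rounded. -/
def lThree : ℕ := 14922434556934726639352149267159486710291139828039802477472903099001043301307095546813278125343135654043811857938808685572264866053029156500808861946639119578768110828835809871985055733744773165681689749220213569370566532846357715299082695067720146596457295542879988607481450196749476027147087226994442130271993309073805059611288273
/-- Literal value of `2 ^ 1100 * log 5`, rounded. -/
def lFive : ℕ := 21860971490555528064232859720241822997150425499932835633074180207382034209636708509038089294402498114606436708050198081069195015070208841280070049197838228457290112925137409394728554525655702268751347327104357747579548329105829368667885116837620945074511026632077766032256388667648919784599570785763453617694805994182937247652585761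

set_option maxRecDepth 100000 in
theorem rGold_check : ((2 * rGold + 2 ^ 1100) ^ 2 ≤ 5 * (2 ^ 1100) ^ 2) ∧
    5 * (2 ^ 1100) ^ 2 < (2 * rGold + 2 + 2 ^ 1100) ^ 2 := by decide +kernel

set_option maxRecDepth 100000 in
theorem const_check : lPhi = cPhi ∧ lTwo = 2 * cA + cB ∧ lThree = 3 * cA + 2 * cB ∧
    lFive = 2 * (2 * cA + cB) + cC ∧
    addLog true 1100 (2 ^ 1100) (2 * 2 ^ 1100) (2 ^ 1100 - rGold - 1) 800 ≤ 2 * 2 ^ 1100 ∧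
    addLog true 1100 (2 ^ 1100) (2 * 2 ^ 1100) (2 ^ 1098) 560 ≤ 2 * 2 ^ 1100 := by
  decide +kernel

theorem goldenInv_bounds : (0.618 : ℝ) < goldenRatio⁻¹ ∧ goldenRatio⁻¹ < (0.6181 : ℝ) := by
  rw [inv_goldenRatio]
  have h1 : √5 < 2.2361 := by
    rw [Real.sqrt_lt' (by norm_num)]; norm_num
  have h2 : 2.236 < √5 := by
    rw [Real.lt_sqrt (by norm_num)]; norm_num
  unfold goldenConj
  constructor <;> linarith

theorem goldenInv_sq : 1 - goldenRatio⁻¹ ^ 2 = goldenRatio⁻¹ := by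
  rw [inv_goldenRatio]
  have := goldenConj_sq
  linear_combination - this

theorem goldenInv_floor {P r : ℕ} (hP : 0 < P) (h1 : (2 * r + P) ^ 2 ≤ 5 * P ^ 2)
    (h2 : 5 * P ^ 2 < (2 * r + 2 + P) ^ 2) :
    (r : ℝ) ≤ P * goldenRatio⁻¹ ∧ P * goldenRatio⁻¹ - 1 ≤ r := by
  have h1' : ((2 * r + P) ^ 2 : ℝ) ≤ 5 * P ^ 2 := by exact_mod_cast h1
  have h2' : (5 * P ^ 2 : ℝ) < (2 * r + 2 + P) ^ 2 := by exact_mod_cast h2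
  rw [inv_goldenRatio, goldenConj]
  have h5 : √5 ^ 2 = 5 := Real.sq_sqrt (by norm_num)
  have e : (5 * P ^ 2 : ℝ) = (√5 * P) ^ 2 := by rw [mul_pow, h5]
  rw [e] at h1' h2'
  have a1 := le_of_sq_le_sq h1' (by positivity)
  have a2 := lt_of_pow_lt_pow_left₀ 2 (by positivity) h2'
  constructor <;> linarith

theorem log_golden_fixed {p r K : ℕ} (hp : 7 ≤ p) (h1 : (2 * r + 2 ^ p) ^ 2 ≤ 5 * (2 ^ p) ^ 2)
    (h2 : 5 * (2 ^ p) ^ 2 < (2 * r + 2 + 2 ^ p) ^ 2) (hK : 382 ^ (K + 1) * 2 ^ p ≤ 1000 ^ (K + 1))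
    (hle : addLog true p (2 ^ p) (2 * 2 ^ p) (2 ^ p - r - 1) K ≤ 2 * 2 ^ p) :
    |((2 * 2 ^ p - addLog true p (2 ^ p) (2 * 2 ^ p) (2 ^ p - r - 1) K : ℕ) : ℝ)
      - 2 ^ p * log goldenRatio| ≤ 50 := by
  obtain ⟨a1, a2⟩ := goldenInv_floor (by positivity) h1 h2
  push_cast at a1 a2
  have hP : (128 : ℝ) ≤ 2 ^ p := by
    calc (128 : ℝ) = 2 ^ 7 := by norm_num
      _ ≤ 2 ^ p := pow_le_pow_right₀ (by norm_num) hp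
  obtain ⟨b1, b2⟩ := goldenInv_bounds
  have e := goldenInv_sq
  have hrl : r + 1 ≤ 2 ^ p := by
    have : (r : ℝ) + 1 ≤ 2 ^ p := by nlinarith
    exact_mod_cast this
  have hw : ((2 ^ p - r - 1 : ℕ) : ℝ) = 2 ^ p - r - 1 := by
    rw [Nat.sub_sub, Nat.cast_sub hrl]; push_cast; ring
  have hw1 : ((2 ^ p - r - 1 : ℕ) : ℝ) ≤ 382 / 1000 * 2 ^ p := by
    rw [hw]; nlinarith
  have h := addLog_close true p (2 * 2 ^ p) (2 ^ p - r - 1) K (goldenRatio⁻¹ ^ 2)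
    (by positivity) (by nlinarith) (hw1.trans (by linarith)) ?_ ?_ (by omega)
    (fun _ => le_rfl)
  · rw [Nat.cast_sub hle]
    rw [sgnR, if_pos rfl, neg_one_mul, ← sub_eq_add_neg, e, log_inv] at h
    rw [← abs_neg]
    push_cast at h ⊢
    convert h using 2
    ring
  · rw [hw, abs_le]
    have e2 : (2 : ℝ) ^ p * goldenRatio⁻¹ ^ 2 = 2 ^ p - 2 ^ p * goldenRatio⁻¹ := by
      linear_combination (-(2 : ℝ) ^ p) * e
    rw [e2]
    constructor <;> linarith
  · have h3 : ((2 ^ p - r - 1 : ℕ) : ℝ) / 2 ^ p ≤ 382 / 1000 := by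
      rw [div_le_iff₀ (by positivity)]; exact hw1
    have hK' : (382 ^ (K + 1) * 2 ^ p : ℝ) ≤ 1000 ^ (K + 1) := by exact_mod_cast hK
    calc _ ≤ (382 / 1000 : ℝ) ^ (K + 1) * 2 ^ p := by gcongr
      _ ≤ 1 := by
        rw [div_pow, div_mul_eq_mul_div, div_le_one (by positivity)]; exact hK'

theorem addLog_pow_close (s : Bool) {t q K base : ℕ} (ht : 1 ≤ t) (hq : 6 ≤ q)
    (hK : t + q ≤ t * (K + 1)) (hbase : s = true → 2 * 2 ^ (t + q) ≤ base) :
    |(addLog s (t + q) (2 ^ (t + q)) base (2 ^ q) K : ℝ)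
      - (base + 2 ^ (t + q) * log (1 + sgnR s * (1 / 2 ^ t)))| ≤ 50 := by
  have h2 : (1 / 2 ^ t : ℝ) ≤ 1 / 2 := by
    gcongr
    exact le_self_pow₀ (by norm_num) (by omega)
  have e : ((2 ^ q : ℕ) : ℝ) / 2 ^ (t + q) = 1 / 2 ^ t := by
    push_cast; rw [pow_add]; field_simp
  have e' : ((2 ^ q : ℕ) : ℝ) = 2 ^ (t + q) * (1 / 2 ^ t) := by
    push_cast; rw [pow_add]; field_simp
  refine addLog_close s (t + q) base (2 ^ q) K (1 / 2 ^ t) (by positivity) (by linarith) ?_ ?_ ?_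
    (by omega) hbase
  · rw [e']
    have : (0 : ℝ) < 2 ^ (t + q) := by positivity
    nlinarith
  · rw [e', sub_self, abs_zero]; norm_num
  · rw [e, div_pow, one_pow, ← pow_mul, div_mul_eq_mul_div, one_mul, div_le_one (by positivity)]
    exact pow_le_pow_right₀ (by norm_num) hK

set_option exponentiation.threshold 3000

theorem lPhi_close : |(lPhi : ℝ) - 2 ^ 1100 * log goldenRatio| ≤ 50 := by
  have hc := const_check
  rw [hc.1, cPhi]
  exact log_golden_fixed (by norm_num) rGold_check.1 rGold_check.2 (by decide +kernel)
    hc.2.2.2.2.1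

theorem cA_close : |(cA : ℝ) - 2 ^ 1100 * (2 * log 2 - log 3)| ≤ 50 := by
  have h := addLog_pow_close true (t := 2) (q := 1098) (K := 560) (base := 2 * 2 ^ 1100)
    (by norm_num) (by norm_num) (by norm_num) (fun _ => le_rfl)
  have hc := const_check
  have e : log (1 + sgnR true * (1 / 2 ^ 2)) = log 3 - 2 * log 2 := by
    rw [sgnR, if_pos rfl, show (1 + -1 * (1 / 2 ^ 2) : ℝ) = 3 / 2 ^ 2 by norm_num,
      log_div (by norm_num) (by norm_num), log_pow]; norm_num
  rw [cA, Nat.cast_sub hc.2.2.2.2.2, ← abs_neg]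
  rw [e, show 2 + 1098 = 1100 from rfl] at h
  rw [Nat.cast_mul, Nat.cast_pow, Nat.cast_ofNat] at h ⊢
  generalize (2 : ℝ) ^ 1100 = P at *
  convert h using 2
  ring

theorem cB_close : |(cB : ℝ) - 2 ^ 1100 * (2 * log 3 - 3 * log 2)| ≤ 50 := by
  have h := addLog_pow_close false (t := 3) (q := 1097) (K := 380) (base := 0)
    (by norm_num) (by norm_num) (by norm_num) (fun h => by simp at h)
  have e : log (1 + sgnR false * (1 / 2 ^ 3)) = 2 * log 3 - 3 * log 2 := by
    rw [sgnR, if_neg (by simp), show (1 + 1 * (1 / 2 ^ 3) : ℝ) = 3 ^ 2 / 2 ^ 3 by norm_num,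
      log_div (by norm_num) (by norm_num), log_pow, log_pow]; norm_num
  rw [e, Nat.cast_zero, zero_add] at h
  exact h

theorem cC_close : |(cC : ℝ) - 2 ^ 1100 * (log 5 - 2 * log 2)| ≤ 50 := by
  have h := addLog_pow_close false (t := 2) (q := 1098) (K := 560) (base := 0)
    (by norm_num) (by norm_num) (by norm_num) (fun h => by simp at h)
  have e : log (1 + sgnR false * (1 / 2 ^ 2)) = log 5 - 2 * log 2 := by
    rw [sgnR, if_neg (by simp), show (1 + 1 * (1 / 2 ^ 2) : ℝ) = 5 / 2 ^ 2 by norm_num,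
      log_div (by norm_num) (by norm_num), log_pow]; norm_num
  rw [e, Nat.cast_zero, zero_add] at h
  exact h

theorem lThree_lTwo_lFive_close : |(lThree : ℝ) - 2 ^ 1100 * log 3| ≤ 250 ∧
    |(lTwo : ℝ) - 2 ^ 1100 * log 2| ≤ 150 ∧ |(lFive : ℝ) - 2 ^ 1100 * log 5| ≤ 350 := by
  have h1 := cA_close
  have h2 := cB_close
  have h3 := cC_close
  rw [const_check.2.1, const_check.2.2.1, const_check.2.2.2.1]
  rw [Nat.cast_add, Nat.cast_add, Nat.cast_add, Nat.cast_mul, Nat.cast_mul, Nat.cast_mul,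
    Nat.cast_mul, Nat.cast_add, Nat.cast_mul, Nat.cast_ofNat, Nat.cast_ofNat]
  generalize (2 : ℝ) ^ 1100 = P at *
  rw [abs_le] at h1 h2 h3
  refine ⟨?_, ?_, ?_⟩ <;> rw [abs_le] <;> constructor <;> linarith

theorem log_of_fixed {L P A B C : ℕ} {x : ℝ} (h : |(L : ℝ) - P * x| ≤ 250) (hC : 0 < C)
    (hP : 0 < P) (h1 : A * P + 250 * C ≤ C * L) (h2 : C * L + 250 * C ≤ B * P) :
    (A : ℝ) / C ≤ x ∧ x ≤ (B : ℝ) / C := by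
  have h1' : (A * P + 250 * C : ℝ) ≤ C * L := by exact_mod_cast h1
  have h2' : (C * L + 250 * C : ℝ) ≤ B * P := by exact_mod_cast h2
  have hC' : (0 : ℝ) < C := by exact_mod_cast hC
  have hP' : (0 : ℝ) < P := by exact_mod_cast hP
  obtain ⟨h3, h4⟩ := abs_le.1 h
  rw [div_le_iff₀ hC', le_div_iff₀ hC']
  constructor
  · refine le_of_mul_le_mul_right ?_ hP'
    nlinarith
  · refine le_of_mul_le_mul_right ?_ hP'
    nlinarith

theorem log_bounds : 0.48 ≤ log goldenRatio ∧ log goldenRatio ≤ 0.49 ∧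
    1.09 ≤ log 3 ∧ log 3 ≤ 1.1 := by
  have h1 := log_of_fixed (L := lPhi) (P := 2 ^ 1100) (A := 481) (B := 482) (C := 1000)
    (x := log goldenRatio)
    (by rw [Nat.cast_pow, Nat.cast_ofNat]; exact lPhi_close.trans (by norm_num)) (by norm_num)
    (by positivity) (by decide +kernel) (by decide +kernel)
  have h2 := log_of_fixed (L := lThree) (P := 2 ^ 1100) (A := 1098) (B := 1099) (C := 1000)
    (x := log 3)
    (by rw [Nat.cast_pow, Nat.cast_ofNat]; exact lThree_lTwo_lFive_close.1) (by norm_num)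
    (by positivity) (by decide +kernel) (by decide +kernel)
  norm_num at h1 h2
  norm_num
  refine ⟨?_, ?_, ?_, ?_⟩ <;> linarith [h1.1, h1.2, h2.1, h2.2]

end

/-! ### Independence of `log φ` and `log 3`, quantitatively -/

section

set_option exponentiation.threshold 3000

theorem golden_three_dist {q p D : ℕ}
    (h : ((q * lPhi : ℤ) - p * lThree).natAbs + 50 * q + 250 * p ≤ D) :
    |q * log goldenRatio - p * log 3| ≤ D / 2 ^ 1100 := by
  have h1 := lPhi_close
  have h2 := lThree_lTwo_lFive_close.1
  have hP : (0 : ℝ) < 2 ^ 1100 := by positivity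
  rw [le_div_iff₀ hP]
  have h' : |(q : ℝ) * lPhi - p * lThree| + 50 * q + 250 * p ≤ D := by
    have : ((((q * lPhi : ℤ) - p * lThree).natAbs + 50 * q + 250 * p : ℕ) : ℝ) ≤ D := by
      exact_mod_cast h
    rw [Nat.cast_add, Nat.cast_add, Nat.cast_natAbs] at this
    push_cast at this
    exact this
  rw [← abs_of_pos hP, ← abs_mul]
  generalize (2 : ℝ) ^ 1100 = P at *
  have e : (q * log goldenRatio - p * log 3) * P = (q * lPhi - p * lThree)
      - q * (lPhi - P * log goldenRatio) + p * (lThree - P * log 3) := by ring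
  rw [e]
  have b1 : |(q : ℝ) * (lPhi - P * log goldenRatio)| ≤ q * 50 := by
    rw [abs_mul, Nat.abs_cast]; gcongr
  have b2 : |(p : ℝ) * (lThree - P * log 3)| ≤ p * 250 := by
    rw [abs_mul, Nat.abs_cast]; gcongr
  have := abs_add_le ((q : ℝ) * lPhi - p * lThree - q * (lPhi - P * log goldenRatio))
    (p * (lThree - P * log 3))
  have := abs_sub ((q : ℝ) * lPhi - p * lThree) (q * (lPhi - P * log goldenRatio))
  linarith

/-- A good rational approximation `p / q` of `log φ / log 3` keeps small integer combinations of
`log φ` and `log 3` away from zero. -/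
theorem golden_three_lower {q p Q : ℕ} {δ : ℝ} (hcop : Nat.Coprime p q) (hQ : Q < q)
    (hδ : |q * log goldenRatio - p * log 3| ≤ δ) (ν1 ν2 : ℤ) (hν : ν1 ≠ 0 ∨ ν2 ≠ 0)
    (h1 : |ν1| ≤ Q) : log 3 - Q * δ ≤ q * |ν1 * log goldenRatio + ν2 * log 3| := by
  have hl3 : 0 < log 3 := log_pos (by norm_num)
  have hne : ν1 * p + ν2 * q ≠ 0 := by
    intro h0
    have hd : (q : ℤ) ∣ ν1 * p := ⟨-ν2, by linarith⟩
    have hd' : (q : ℤ) ∣ ν1 :=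
      IsCoprime.dvd_of_dvd_mul_right (Nat.isCoprime_iff_coprime.2 hcop.symm) hd
    have h10 : ν1 = 0 := Int.eq_zero_of_abs_lt_dvd hd' (by omega)
    have : ν2 = 0 := by
      rw [h10, zero_mul, zero_add] at h0
      rcases mul_eq_zero.1 h0 with h | h
      · exact h
      · omega
    omega
  have hge : (1 : ℝ) ≤ |(ν1 * p + ν2 * q : ℝ)| := by
    exact_mod_cast Int.one_le_abs hne
  have e : (q : ℝ) * (ν1 * log goldenRatio + ν2 * log 3) =
      (ν1 * p + ν2 * q) * log 3 + ν1 * (q * log goldenRatio - p * log 3) := by ring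
  rw [← Nat.abs_cast q, ← abs_mul, e]
  have b1 : |(ν1 : ℝ) * (q * log goldenRatio - p * log 3)| ≤ Q * δ := by
    rw [abs_mul]
    have : |(ν1 : ℝ)| ≤ Q := by exact_mod_cast h1
    gcongr
  have b2 : log 3 ≤ |(ν1 * p + ν2 * q : ℝ) * log 3| := by
    rw [abs_mul, abs_of_pos hl3]; nlinarith
  have := abs_sub_abs_le_abs_add ((ν1 * p + ν2 * q : ℝ) * log 3)
    (ν1 * (q * log goldenRatio - p * log 3))
  linarith

theorem golden_three_lower_small (ν1 ν2 : ℤ) (hν : ν1 ≠ 0 ∨ ν2 ≠ 0) (h1 : |ν1| < 20000) :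
    log 3 ≤ 60000 * |ν1 * log goldenRatio + ν2 * log 3| := by
  have hd := golden_three_dist (q := 42843) (p := 18766) (D := 2 ^ 1100 / 80000)
    (by decide +kernel)
  have hd' : |((42843 : ℕ) : ℝ) * log goldenRatio - (18766 : ℕ) * log 3| ≤ 1 / 80000 := by
    refine hd.trans ?_
    rw [div_le_iff₀ (by positivity)]
    have := Nat.cast_div_le (α := ℝ) (m := 2 ^ 1100) (n := 80000)
    refine this.trans (le_of_eq ?_)
    rw [Nat.cast_pow, Nat.cast_ofNat, Nat.cast_ofNat]
    generalize (2 : ℝ) ^ 1100 = P at *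
    ring
  have h := golden_three_lower (Q := 20000) (by norm_num) (by norm_num) hd' ν1 ν2 hν
    (by exact_mod_cast h1.le)
  have := log_bounds.2.2.1
  have := log_bounds.2.2.2
  push_cast at h
  linarith

end

/-! ### The logarithmic relation -/

section

open Polynomial

/-- The eight coefficient triples occurring in `2 * N = d * 3 ^ a - e₁ * 3 ^ b - e₂ * 3 ^ c - d₃`
for a base three concatenation of three repdigits with distinct neighbouring digits. -/
def Combo (d e1 e2 : ℤ) : Prop :=
  (d = 1 ∧ e1 = 1 ∧ e2 = -1) ∨ (d = 1 ∧ e1 = 1 ∧ e2 = -2) ∨ (d = 1 ∧ e1 = -1 ∧ e2 = 2) ∨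
  (d = 1 ∧ e1 = -1 ∧ e2 = 1) ∨ (d = 2 ∧ e1 = 2 ∧ e2 = -1) ∨ (d = 2 ∧ e1 = 2 ∧ e2 = -2) ∨
  (d = 2 ∧ e1 = 1 ∧ e2 = 1) ∨ (d = 2 ∧ e1 = 1 ∧ e2 = -1)

/-- The Fibonacci side factor `1 + φ ^ (-D2) + φ ^ (-D3)`. -/
noncomputable def uFac (D2 D3 : ℕ) : ℝ := 1 + goldenRatio⁻¹ ^ D2 + goldenRatio⁻¹ ^ D3

/-- The repdigit side factor `d - e₁ * 3 ^ (-g) - e₂ * 3 ^ (-h)`. -/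
noncomputable def vFac (d e1 e2 : ℤ) (g h : ℕ) : ℝ :=
  d - e1 * (1 / 3 : ℝ) ^ g - e2 * (1 / 3 : ℝ) ^ h

/-- The logarithmic relation satisfied by every solution: `φ ^ n * u` and `√5 / 2 * 3 ^ a * v`
agree up to a relative error `50 * 3 ^ (-a)`. -/
structure LRel (n a D2 D3 g h : ℕ) (d e1 e2 : ℤ) : Prop where
  combo : Combo d e1 e2
  hD2 : 2 ≤ D2
  hD : D2 ≤ D3
  hD' : D2 < D3 ∨ n ≤ D2
  hg : 1 ≤ g
  hgh : g < h
  ha : 9 ≤ a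
  main : |n * log goldenRatio + log (uFac D2 D3) - a * log 3
    - log (√5 * vFac d e1 e2 g h / 2)| ≤ 50 * (1 / 3 : ℝ) ^ a

theorem abs_log_sub_le {x y : ℝ} (hx : 2 / 3 ≤ x) (hy : 2 / 3 ≤ y) :
    |log x - log y| ≤ 3 / 2 * |x - y| := by
  wlog hxy : y ≤ x generalizing x y
  · rw [abs_sub_comm, abs_sub_comm x]
    exact this hy hx (le_of_not_ge hxy)
  have h1 : log y ≤ log x := log_le_log (by linarith) hxy
  rw [abs_of_nonneg (by linarith), abs_of_nonneg (by linarith),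
    ← log_div (by linarith) (by linarith)]
  have h2 := log_le_sub_one_of_pos (show 0 < x / y by positivity)
  have h3 : x / y - 1 = (x - y) / y := by field_simp
  rw [h3] at h2
  refine h2.trans ?_
  rw [div_le_iff₀ (by linarith)]
  nlinarith

theorem goldenInv_pos : (0 : ℝ) < goldenRatio⁻¹ := inv_pos.2 goldenRatio_pos

theorem goldenInv_lt : goldenRatio⁻¹ < (0.62 : ℝ) := by
  rw [inv_goldenRatio]
  have : √5 < 2.24 := by
    rw [Real.sqrt_lt' (by norm_num)]; norm_num
  unfold goldenConj; linarith

theorem uFac_bounds (D2 D3 : ℕ) : 1 ≤ uFac D2 D3 ∧ uFac D2 D3 ≤ 3 := by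
  have h1 := pow_nonneg goldenInv_pos.le D2
  have h2 := pow_nonneg goldenInv_pos.le D3
  have h3 := pow_le_one₀ (n := D2) goldenInv_pos.le (by linarith [goldenInv_lt])
  have h4 := pow_le_one₀ (n := D3) goldenInv_pos.le (by linarith [goldenInv_lt])
  unfold uFac
  constructor <;> linarith

/-- The kept part of the Fibonacci side is, up to a power of `φ`, an integer polynomial in `φ`. -/
theorem u_approx {D2 D3 G G' : ℕ} (hD : D2 ≤ D3) (h2 : D2 ≤ G ∨ G' < D2)
    (h3 : D3 ≤ G ∨ G' < D3) :
    ∃ m ≤ G, ∃ P : ℤ[X], goldenRatio ^ m ≤ aeval goldenRatio P ∧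
      aeval goldenRatio P ≤ 3 * goldenRatio ^ m ∧ |aeval goldenConj P| ≤ 3 ∧
      |log (uFac D2 D3) - (log (aeval goldenRatio P) - m * log goldenRatio)|
        ≤ 3 * goldenRatio⁻¹ ^ G' := by
  have hφ := goldenRatio_pos
  have hφ1 := one_lt_goldenRatio
  have hψ : |goldenConj| ≤ 1 := by
    rw [abs_le]; constructor <;> linarith [goldenConj_neg, neg_one_lt_goldenConj]
  have hψp : ∀ k : ℕ, |goldenConj ^ k| ≤ 1 := fun k => by
    rw [abs_pow]; exact pow_le_one₀ (abs_nonneg _) hψ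
  have hρ := goldenInv_pos
  have hsm : ∀ k, G' < k → goldenRatio⁻¹ ^ k ≤ goldenRatio⁻¹ ^ G' := fun k hk =>
    pow_le_pow_of_le_one hρ.le (by linarith [goldenInv_lt]) hk.le
  have hp := fun k : ℕ => pow_pos hρ k
  have hub := uFac_bounds D2 D3
  have eρ : ∀ k : ℕ, goldenRatio⁻¹ ^ k * goldenRatio ^ k = 1 := fun k => by
    rw [← mul_pow, inv_mul_cancel₀ hφ.ne', one_pow]
  rcases le_or_gt D3 G with h3' | h3'
  · refine ⟨D3, h3', X ^ D3 + X ^ (D3 - D2) + 1, ?_, ?_, ?_, ?_⟩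
    · simp only [map_add, map_pow, aeval_X, map_one]
      have := pow_pos hφ (D3 - D2)
      linarith
    · simp
      have := pow_le_pow_right₀ hφ1.le (show D3 - D2 ≤ D3 by omega)
      have := one_le_pow₀ hφ1.le (n := D3)
      linarith
    · simp
      have a1 := abs_le.1 (hψp D3)
      have a2 := abs_le.1 (hψp (D3 - D2))
      rw [abs_le]; constructor <;> linarith
    · have e : aeval goldenRatio (X ^ D3 + X ^ (D3 - D2) + 1 : ℤ[X])
          = uFac D2 D3 * goldenRatio ^ D3 := by
        simp only [map_add, map_pow, aeval_X, map_one, uFac]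
        have e : goldenRatio ^ D3 = goldenRatio ^ (D3 - D2) * goldenRatio ^ D2 := by
          rw [← pow_add]; congr 1; omega
        linear_combination (-goldenRatio ^ (D3 - D2)) * eρ D2 - eρ D3
          - goldenRatio⁻¹ ^ D2 * e
      rw [e, log_mul (by linarith) (by positivity), log_pow]
      have := (hp G').le
      rw [show log (uFac D2 D3) - (log (uFac D2 D3) + D3 * log goldenRatio
        - D3 * log goldenRatio) = 0 by ring, abs_zero]
      linarith
  have h3'' : G' < D3 := by omega
  rcases le_or_gt D2 G with h2' | h2'
  · refine ⟨D2, h2', X ^ D2 + 1, ?_, ?_, ?_, ?_⟩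
    · simp
    · simp
      have := one_le_pow₀ hφ1.le (n := D2)
      linarith
    · simp
      have a1 := abs_le.1 (hψp D2)
      rw [abs_le]; constructor <;> linarith
    · have e : aeval goldenRatio (X ^ D2 + 1 : ℤ[X])
          = (1 + goldenRatio⁻¹ ^ D2) * goldenRatio ^ D2 := by
        simp only [map_add, map_pow, aeval_X, map_one]
        linear_combination - eρ D2
      rw [e, log_mul (by have := hp D2; linarith) (by positivity), log_pow]
      have h := abs_log_sub_le (x := uFac D2 D3) (y := 1 + goldenRatio⁻¹ ^ D2) (by linarith)
        (by have := hp D2; linarith)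
      rw [add_sub_cancel_right]
      refine h.trans ?_
      rw [uFac, add_sub_cancel_left, abs_of_pos (hp D3)]
      have := hsm _ h3''
      have := hp G'
      linarith
  have h2'' : G' < D2 := by omega
  refine ⟨0, Nat.zero_le _, 1, by simp, by simp, by simp, ?_⟩
  have h := abs_log_sub_le (x := uFac D2 D3) (y := 1) (by linarith) (by norm_num)
  simp only [map_one, log_one, Nat.cast_zero, zero_mul, sub_zero] at h ⊢
  refine h.trans ?_
  rw [abs_of_nonneg (by linarith), uFac]
  have := hsm _ h3''
  have := hsm _ h2''
  linarith

theorem vFac_ge {d e1 e2 : ℤ} (hc : Combo d e1 e2) {x y : ℝ} (hx : 0 ≤ x) (hx' : x ≤ 1 / 3)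
    (hy : 0 ≤ y) (hy' : 3 * y ≤ x) : 2 / 3 ≤ (d : ℝ) - e1 * x - e2 * y ∧
      (d : ℝ) - e1 * x - e2 * y ≤ 3 := by
  rcases hc with ⟨rfl, rfl, rfl⟩ | ⟨rfl, rfl, rfl⟩ | ⟨rfl, rfl, rfl⟩ | ⟨rfl, rfl, rfl⟩ |
    ⟨rfl, rfl, rfl⟩ | ⟨rfl, rfl, rfl⟩ | ⟨rfl, rfl, rfl⟩ | ⟨rfl, rfl, rfl⟩ <;>
    constructor <;> push_cast <;> linarith

theorem third_pow_le {g h : ℕ} (hgh : g < h) : 3 * (1 / 3 : ℝ) ^ h ≤ (1 / 3) ^ g := by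
  have : (1 / 3 : ℝ) ^ h ≤ (1 / 3) ^ (g + 1) :=
    pow_le_pow_of_le_one (by norm_num) (by norm_num) hgh
  rw [pow_succ] at this
  linarith

theorem third_pow_le' {g : ℕ} (hg : 1 ≤ g) : (1 / 3 : ℝ) ^ g ≤ 1 / 3 := by
  have := third_pow_le (show 0 < g by omega)
  rw [pow_zero] at this
  linarith

theorem vFac_bounds {d e1 e2 : ℤ} (hc : Combo d e1 e2) {g h : ℕ} (hg : 1 ≤ g) (hgh : g < h) :
    2 / 3 ≤ vFac d e1 e2 g h ∧ vFac d e1 e2 g h ≤ 3 :=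
  vFac_ge hc (by positivity) (third_pow_le' hg) (by positivity) (third_pow_le hgh)

theorem combo_abs {d e1 e2 : ℤ} (hc : Combo d e1 e2) :
    |(e1 : ℝ)| ≤ 2 ∧ |(e2 : ℝ)| ≤ 2 := by
  rcases hc with ⟨rfl, rfl, rfl⟩ | ⟨rfl, rfl, rfl⟩ | ⟨rfl, rfl, rfl⟩ | ⟨rfl, rfl, rfl⟩ |
    ⟨rfl, rfl, rfl⟩ | ⟨rfl, rfl, rfl⟩ | ⟨rfl, rfl, rfl⟩ | ⟨rfl, rfl, rfl⟩ <;>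
    norm_num

/-- The kept part of the repdigit side is, up to a power of three, an integer. -/
theorem v_approx {d e1 e2 : ℤ} (hc : Combo d e1 e2) {g h G G' : ℕ} (hg : 1 ≤ g) (hgh : g < h)
    (h2 : g ≤ G ∨ G' < g) (h3 : h ≤ G ∨ G' < h) :
    ∃ m ≤ G, ∃ k : ℤ, 2 / 3 * (3 : ℝ) ^ m ≤ k ∧ (k : ℝ) ≤ 3 * 3 ^ m ∧
      |log (vFac d e1 e2 g h) - (log k - m * log 3)| ≤ 6 * (1 / 3 : ℝ) ^ G' := by
  have hsm : ∀ k, G' < k → (1 / 3 : ℝ) ^ k ≤ (1 / 3) ^ G' := fun k hk =>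
    pow_le_pow_of_le_one (by norm_num) (by norm_num) hk.le
  have hp := fun k : ℕ => pow_pos (show (0 : ℝ) < 1 / 3 by norm_num) k
  have hvb := vFac_bounds hc hg hgh
  obtain ⟨he1, he2⟩ := combo_abs hc
  have key : ∀ m : ℕ, ∀ k : ℤ, ∀ v0 : ℝ, (k : ℝ) = v0 * 3 ^ m → 2 / 3 ≤ v0 → v0 ≤ 3 →
      |vFac d e1 e2 g h - v0| ≤ 4 * (1 / 3 : ℝ) ^ G' →
      2 / 3 * (3 : ℝ) ^ m ≤ k ∧ (k : ℝ) ≤ 3 * 3 ^ m ∧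
      |log (vFac d e1 e2 g h) - (log k - m * log 3)| ≤ 6 * (1 / 3 : ℝ) ^ G' := by
    intro m k v0 hk h1 h2 h3
    have hm : (0 : ℝ) < 3 ^ m := by positivity
    refine ⟨by rw [hk]; gcongr, by rw [hk]; gcongr, ?_⟩
    rw [hk, log_mul (by linarith) (by positivity), log_pow, add_sub_cancel_right]
    have := abs_log_sub_le hvb.1 h1
    linarith
  have e3 : ∀ k : ℕ, (1 / 3 : ℝ) ^ k * 3 ^ k = 1 := fun k => by
    rw [← mul_pow]; norm_num
  rcases le_or_gt h G with h3' | h3'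
  · refine ⟨h, h3', d * 3 ^ h - e1 * 3 ^ (h - g) - e2, key _ _ (vFac d e1 e2 g h) ?_ hvb.1 hvb.2 ?_⟩
    · push_cast
      have e : (3 : ℝ) ^ h = 3 ^ (h - g) * 3 ^ g := by rw [← pow_add]; congr 1; omega
      have := e3 g
      have := e3 h
      rw [vFac, sub_mul, sub_mul, mul_assoc (e2 : ℝ), e3 h]
      rw [mul_assoc (e1 : ℝ), e]
      linear_combination (e1 * 3 ^ (h - g) : ℝ) * e3 g
    · rw [sub_self, abs_zero]; have := hp G'; linarith
  have h3'' : G' < h := by omega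
  have hh := hsm _ h3''
  have hph := hp h
  have b2 : |(e2 : ℝ) * (1 / 3) ^ h| ≤ 2 * (1 / 3) ^ G' := by
    rw [abs_mul, abs_of_pos hph]
    exact mul_le_mul he2 hh hph.le (by norm_num)
  rcases le_or_gt g G with h2' | h2'
  · have hb := vFac_ge hc (hp g).le (third_pow_le' hg) le_rfl (by linarith [hp g])
    refine ⟨g, h2', d * 3 ^ g - e1, key _ _ (d - e1 * (1 / 3) ^ g) ?_ (by linarith)
      (by linarith) ?_⟩
    · push_cast
      linear_combination (e1 : ℝ) * e3 g
    · rw [vFac, show (d : ℝ) - e1 * (1 / 3) ^ g - e2 * (1 / 3) ^ h - (d - e1 * (1 / 3) ^ g)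
        = -(e2 * (1 / 3) ^ h) by ring, abs_neg]
      have := hp G'
      linarith
  have h2'' : G' < g := by omega
  have hg' := hsm _ h2''
  have hpg := hp g
  have b1 : |(e1 : ℝ) * (1 / 3) ^ g| ≤ 2 * (1 / 3) ^ G' := by
    rw [abs_mul, abs_of_pos hpg]
    exact mul_le_mul he1 hg' hpg.le (by norm_num)
  have hb := vFac_ge hc le_rfl (by norm_num) le_rfl (by norm_num)
  refine ⟨0, Nat.zero_le _, d, key _ _ d (by simp) (by linarith) (by linarith) ?_⟩
  rw [vFac, show (d : ℝ) - e1 * (1 / 3) ^ g - e2 * (1 / 3) ^ h - d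
        = -(e1 * (1 / 3) ^ g + e2 * (1 / 3) ^ h) by ring, abs_neg]
  refine (abs_add_le _ _).trans ?_
  linarith

end

/-! ### The gap principle -/

section

open Polynomial

theorem sqrt_five_bounds : 2.236 < √5 ∧ √5 < 2.237 := by
  constructor
  · rw [Real.lt_sqrt (by norm_num)]; norm_num
  · rw [Real.sqrt_lt' (by norm_num)]; norm_num

theorem log_six_le : log 6 ≤ 2 := by
  rw [log_le_iff_le_exp (by norm_num)]
  have := Real.exp_one_gt_d9
  have e : exp 2 = exp 1 * exp 1 := by rw [← exp_add]; norm_num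
  rw [e]; nlinarith

theorem six_le_exp_two : 6 ≤ exp 2 := by
  rw [← log_le_iff_le_exp (by norm_num)]; exact log_six_le

theorem exp_neg_five_le : exp (-5) ≤ 1 / 90 := by
  rw [exp_neg, one_div]
  gcongr
  have e : exp 5 = exp 2 * exp 2 * exp 1 := by rw [← exp_add, ← exp_add]; norm_num
  have := Real.exp_one_gt_d9
  have := six_le_exp_two
  have h36 : 36 ≤ exp 2 * exp 2 := by nlinarith
  rw [e]; nlinarith

theorem exp_neg_seven_le : exp (-7) ≤ 1 / 500 := by
  rw [exp_neg, one_div]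
  gcongr
  have e : exp 7 = exp 2 * exp 2 * exp 2 * exp 1 := by
    rw [← exp_add, ← exp_add, ← exp_add]; norm_num
  have := Real.exp_one_gt_d9
  have := six_le_exp_two
  have h36 : 36 ≤ exp 2 * exp 2 := by nlinarith
  have h216 : 216 ≤ exp 2 * exp 2 * exp 2 := by nlinarith
  rw [e]; nlinarith

theorem exp_three_ge : 9 ≤ exp 3 := by
  have e : exp 3 = exp 1 * exp 2 := by rw [← exp_add]; norm_num
  have := Real.exp_one_gt_d9
  have := six_le_exp_two
  rw [e]; nlinarith

/-- Size comparison of the two exponents. -/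
theorem LRel.size {n a D2 D3 g h : ℕ} {d e1 e2 : ℤ} (H : LRel n a D2 D3 g h d e1 e2) :
    (0.43 : ℝ) * n ≤ a + 2 ∧ (a : ℝ) ≤ 0.45 * n + 3 := by
  have hm := H.main
  have hub := uFac_bounds D2 D3
  have hvb := vFac_bounds H.combo H.hg H.hgh
  obtain ⟨s1, s2⟩ := sqrt_five_bounds
  have hu0 : 0 ≤ log (uFac D2 D3) := log_nonneg hub.1
  have h6 := log_six_le
  have hu1 : log (uFac D2 D3) ≤ 2 :=
    (log_le_log (by linarith) (by linarith)).trans h6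
  have hv0 : -1 ≤ log (√5 * vFac d e1 e2 g h / 2) := by
    rw [le_log_iff_exp_le (by nlinarith)]
    have : exp (-1) ≤ 1 / 2 := by
      rw [exp_neg, one_div]
      gcongr
      have := Real.exp_one_gt_d9; linarith
    nlinarith
  have hv1 : log (√5 * vFac d e1 e2 g h / 2) ≤ 2 :=
    (log_le_log (by nlinarith) (by nlinarith)).trans h6
  have ht : 50 * (1 / 3 : ℝ) ^ a ≤ 0.1 := by
    have : (1 / 3 : ℝ) ^ a ≤ (1 / 3) ^ 9 := pow_le_pow_of_le_one (by norm_num) (by norm_num) H.ha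
    norm_num at this ⊢; linarith
  have hl := log_of_fixed (L := lPhi) (P := 2 ^ 1100) (A := 481) (B := 482) (C := 1000)
    (x := log goldenRatio)
    (by rw [Nat.cast_pow, Nat.cast_ofNat]; exact lPhi_close.trans (by norm_num)) (by norm_num)
    (by positivity) (by decide +kernel) (by decide +kernel)
  obtain ⟨-, -, l1, l2⟩ := log_bounds
  obtain ⟨m1, m2⟩ := abs_le.1 hm
  norm_num at hl
  have hn : (0 : ℝ) ≤ n := Nat.cast_nonneg n
  have ha : (0 : ℝ) ≤ a := Nat.cast_nonneg a
  have hnl := mul_le_mul_of_nonneg_left hl.1 hn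
  have hnl' := mul_le_mul_of_nonneg_left hl.2 hn
  have hal := mul_le_mul_of_nonneg_left l1 ha
  have hal' := mul_le_mul_of_nonneg_left l2 ha
  constructor <;> linarith

set_option maxHeartbeats 1600000 in
/-- The gap principle: the lower bound for linear forms in logarithms forces one of the four gaps
into the window `(G, G']`. -/
theorem gap_step {n a D2 D3 g h : ℕ} {d e1 e2 : ℤ} (H : LRel n a D2 D3 g h d e1 e2)
    (W G G' t : ℕ) (hW : 1 ≤ W) (ht : 11 * G + 30 ≤ 10 * t)
    (hn : 3 * 10 ^ 22 * W ^ 2 * t + G ≤ n)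
    (hn' : 3 * (4536000000000000000 * W ^ 3 * t) + 30 ≤ n)
    (hG : 100 * (4536000000000000000 * W ^ 3 * t + 5) ≤ 48 * G')
    (hWn : ((10 ^ 14 * W ^ 2 * (5 * n) : ℕ) : ℝ) ≤ exp W) :
    (G < D2 ∧ D2 ≤ G') ∨ (G < D3 ∧ D3 ≤ G') ∨ (G < g ∧ g ≤ G') ∨ (G < h ∧ h ≤ G') := by
  by_contra hcon
  push Not at hcon
  obtain ⟨c1, c2, c3, c4⟩ := hcon
  obtain ⟨l1, l2, l3, l4⟩ := log_bounds
  obtain ⟨m, hm, P, hP1, hP2, hP3, hP4⟩ := u_approx (G := G) (G' := G') H.hD (by omega) (by omega)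
  obtain ⟨m', hm', k, hk1, hk2, hk3⟩ := v_approx H.combo (G := G) (G' := G') H.hg H.hgh
    (by omega) (by omega)
  have hsz := H.size
  obtain ⟨s1, s2⟩ := sqrt_five_bounds
  have hvb := vFac_bounds H.combo H.hg H.hgh
  have h6 := log_six_le
  have hφ := goldenRatio_pos
  have htG : (11 : ℝ) * G + 30 ≤ 10 * t := by exact_mod_cast ht
  have hmG : (m : ℝ) ≤ G := by exact_mod_cast hm
  have hmG' : (m' : ℝ) ≤ G := by exact_mod_cast hm'
  have hG0 : (0 : ℝ) ≤ G := Nat.cast_nonneg G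
  have hm0 : (0 : ℝ) ≤ m := Nat.cast_nonneg m
  have hm0' : (0 : ℝ) ≤ m' := Nat.cast_nonneg m'
  have hexp6 := six_le_exp_two
  have ht3 : 3 ≤ t := by omega
  have ht3' : (3 : ℝ) ≤ t := by exact_mod_cast ht3
  have hpφ : goldenRatio ^ m = exp (m * log goldenRatio) := by
    rw [mul_comm, exp_mul, exp_log hφ, rpow_natCast]
  have hp3 : (3 : ℝ) ^ m' = exp (m' * log 3) := by
    rw [mul_comm, exp_mul, exp_log (by norm_num), rpow_natCast]
  have hpφ1 : 1 ≤ goldenRatio ^ m := one_le_pow₀ one_lt_goldenRatio.le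
  have hp31 : (1 : ℝ) ≤ 3 ^ m' := one_le_pow₀ (by norm_num)
  set η : ℤ[X] := (2 * X - 1) * C k with hη
  set δ : ℤ[X] := 2 * P with hδ
  have eη : aeval goldenRatio η = √5 * k := by
    rw [hη]
    simp only [map_mul, map_sub, map_one, aeval_X, map_ofNat, eq_intCast, map_intCast]
    rw [goldenRatio]; ring
  have eη' : aeval goldenConj η = -(√5 * k) := by
    rw [hη]
    simp only [map_mul, map_sub, map_one, aeval_X, map_ofNat, eq_intCast, map_intCast]
    rw [goldenConj]; ring
  have eδ : aeval goldenRatio δ = 2 * aeval goldenRatio P := by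
    rw [hδ, map_mul, map_ofNat]
  have eδ' : aeval goldenConj δ = 2 * aeval goldenConj P := by
    rw [hδ, map_mul, map_ofNat]
  set A := aeval goldenRatio P with hA
  have hApos : 0 < A := by linarith
  have hkpos : (0 : ℝ) < k := by linarith
  have h2A : 2 * A ≤ exp t := by
    calc 2 * A ≤ 6 * goldenRatio ^ m := by linarith
      _ ≤ exp 2 * exp (m * log goldenRatio) := by rw [hpφ]; gcongr
      _ = exp (2 + m * log goldenRatio) := (exp_add _ _).symm
      _ ≤ exp t := by
        gcongr
        have := mul_le_mul hmG l2 (by linarith) hG0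
        linarith
  have h5k : √5 * k ≤ exp t := by
    calc √5 * k ≤ 3 * (3 * 3 ^ m') := mul_le_mul (by linarith) hk2 hkpos.le (by norm_num)
      _ = 9 * 3 ^ m' := by ring
      _ ≤ exp 3 * exp (m' * log 3) := by
        rw [hp3]; gcongr; exact exp_three_ge
      _ = exp (3 + m' * log 3) := (exp_add _ _).symm
      _ ≤ exp t := by
        gcongr
        have := mul_le_mul hmG' l4 (by linarith) hG0
        linarith
  have hlγ : log (√5 * k / (2 * A)) = log (√5 * k) - log (2 * A) :=
    log_div (by positivity) (by positivity)
  have hW3 : 1 ≤ W ^ 3 := Nat.one_le_pow _ _ hW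
  have hW2 : 1 ≤ W ^ 2 := Nat.one_le_pow _ _ hW
  have hbig : 10000 * (t + G) ≤ n := by
    have : t ≤ W ^ 2 * t := Nat.le_mul_of_pos_left _ hW2
    have h1 : 3 * 10 ^ 22 * W ^ 2 * t = 3 * 10 ^ 22 * (W ^ 2 * t) := by ring
    omega
  have hma : m' ≤ a := by
    have : (m' : ℝ) ≤ a := by
      have : (10000 : ℝ) * (t + G) ≤ n := by exact_mod_cast hbig
      linarith
    exact_mod_cast this
  have han : (a : ℝ) ≤ n := by
    have : (10000 : ℝ) * (t + G) ≤ n := by exact_mod_cast hbig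
    linarith
  have han' : a ≤ n := by exact_mod_cast han
  have hlow := linear_form_lower W t (n - m) (a - m') hW (by omega) η δ
    (by rw [eδ, abs_of_pos (by positivity)]; exact h2A)
    (by
      rw [eδ', abs_mul, abs_of_pos (by norm_num : (0 : ℝ) < 2)]
      have : exp 2 ≤ exp (t : ℝ) := exp_le_exp.2 (by linarith)
      linarith)
    (by rw [eη', abs_neg, abs_of_pos (by positivity)]; exact h5k)
    (by rw [eη, eδ]; positivity)
    (by
      rw [eη, eδ, hlγ]
      have a1 : 0 ≤ log (√5 * k) := log_nonneg (by
        have h23 : (2 : ℝ) / 3 ≤ k := by linarith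
        have := mul_le_mul s1.le h23 (by norm_num) (by linarith)
        linarith)
      have a2 : log (√5 * k) ≤ t := by rw [log_le_iff_le_exp (by positivity)]; exact h5k
      have a3 : 0 ≤ log (2 * A) := log_nonneg (by linarith)
      have a4 : log (2 * A) ≤ t := by rw [log_le_iff_le_exp (by positivity)]; exact h2A
      rw [abs_le]; constructor <;> linarith)
    l1 l2 l3 l4 golden_three_lower_small (by omega)
    (by
      refine le_trans ?_ hWn
      have : 10 ^ 14 * W ^ 2 * (3 * t + 2 * (n - m + (a - m'))) ≤ 10 ^ 14 * W ^ 2 * (5 * n) := by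
        gcongr; omega
      exact_mod_cast this)
  rw [eη, eδ, hlγ] at hlow
  have eL : ((n - m : ℕ) : ℝ) * log goldenRatio - ((a - m' : ℕ) : ℝ) * log 3
      - (log (√5 * k) - log (2 * A)) =
      (n * log goldenRatio + log (uFac D2 D3) - a * log 3 - log (√5 * vFac d e1 e2 g h / 2))
      - (log (uFac D2 D3) - (log A - m * log goldenRatio))
      + (log (vFac d e1 e2 g h) - (log k - m' * log 3)) := by
    rw [Nat.cast_sub (by omega), Nat.cast_sub hma, log_mul (by positivity) (by positivity),
      log_mul (by norm_num) (by positivity), log_div (x := √5 * vFac d e1 e2 g h) (mul_ne_zero (by linarith) (by linarith)) (by norm_num),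
      log_mul (x := √5) (y := vFac d e1 e2 g h) (by positivity) (by linarith)]
    ring
  rw [eL] at hlow
  have hZr : (4536000000000000000 * (W : ℝ) ^ 3 * t) = (4536000000000000000 * W ^ 3 * t : ℕ) := by
    push_cast; ring
  rw [hZr] at hlow
  generalize 4536000000000000000 * W ^ 3 * t = Z at hn' hG hlow
  have hG' : 100 * ((Z : ℝ) + 5) ≤ 48 * G' := by exact_mod_cast hG
  have hn'' : 3 * (Z : ℝ) + 30 ≤ n := by exact_mod_cast hn'
  have hZ0 : (0 : ℝ) ≤ Z := Nat.cast_nonneg _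
  have haZ : (Z : ℝ) + 7 ≤ 1.09 * a := by linarith [hsz.1]
  have pinv : ∀ x : ℝ, 0 < x → ∀ j : ℕ, x⁻¹ ^ j = exp (-(j * log x)) := by
    intro x hx j
    rw [exp_neg, mul_comm, exp_mul, exp_log hx, rpow_natCast, inv_pow]
  have t1 : goldenRatio⁻¹ ^ G' ≤ exp (-(Z : ℝ)) * exp (-5) := by
    rw [pinv _ hφ, ← exp_add]
    have := mul_le_mul_of_nonneg_left l1 (Nat.cast_nonneg (α := ℝ) G')
    refine exp_le_exp.2 ?_
    linarith
  have t2 : (1 / 3 : ℝ) ^ G' ≤ exp (-(Z : ℝ)) * exp (-5) := by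
    rw [one_div, pinv _ (by norm_num), ← exp_add]
    have := mul_le_mul_of_nonneg_left l3 (Nat.cast_nonneg (α := ℝ) G')
    refine exp_le_exp.2 ?_
    linarith
  have t3 : (1 / 3 : ℝ) ^ a ≤ exp (-(Z : ℝ)) * exp (-7) := by
    rw [one_div, pinv _ (by norm_num), ← exp_add]
    have := mul_le_mul_of_nonneg_left l3 (Nat.cast_nonneg (α := ℝ) a)
    refine exp_le_exp.2 ?_
    linarith
  have e5 := exp_neg_five_le
  have e7 := exp_neg_seven_le
  have hE := exp_pos (-(Z : ℝ))
  have f1 : exp (-(Z : ℝ)) * exp (-5) ≤ exp (-(Z : ℝ)) * (1 / 90) := by gcongr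
  have f2 : exp (-(Z : ℝ)) * exp (-7) ≤ exp (-(Z : ℝ)) * (1 / 500) := by gcongr
  have g1 := abs_add_le
    ((n * log goldenRatio + log (uFac D2 D3) - a * log 3 - log (√5 * vFac d e1 e2 g h / 2))
      - (log (uFac D2 D3) - (log A - m * log goldenRatio)))
    (log (vFac d e1 e2 g h) - (log k - m' * log 3))
  have g2 := abs_sub
    (n * log goldenRatio + log (uFac D2 D3) - a * log 3 - log (√5 * vFac d e1 e2 g h / 2))
    (log (uFac D2 D3) - (log A - m * log goldenRatio))
  have g3 := H.main
  linarith

end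

/-! ### The first absolute bound -/

section

theorem exp_ge_of_nat {W A : ℕ} (h : A * 10 ^ W ≤ 27 ^ W) : (A : ℝ) ≤ exp W := by
  have h' : (A : ℝ) * 10 ^ W ≤ 27 ^ W := by exact_mod_cast h
  have h1 : (27 / 10 : ℝ) ^ W ≤ exp W := by
    rw [← mul_one (W : ℝ), exp_nat_mul]
    have := Real.exp_one_gt_d9
    gcongr
    linarith
  refine le_trans ?_ h1
  rw [div_pow, le_div_iff₀ (by positivity)]
  exact h'

/-- The numerical conditions under which `gap_step` applies to all `n` in `[B, X]`. -/
def StepOK (W X B G G' : ℕ) : Prop :=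
  1 ≤ W ∧ 3 * 10 ^ 22 * W ^ 2 * ((11 * G + 39) / 10) + G ≤ B ∧
  3 * (4536000000000000000 * W ^ 3 * ((11 * G + 39) / 10)) + 30 ≤ B ∧
  100 * (4536000000000000000 * W ^ 3 * ((11 * G + 39) / 10) + 5) ≤ 48 * G' ∧
  10 ^ 14 * W ^ 2 * (5 * X) * 10 ^ W ≤ 27 ^ W

instance (W X B G G' : ℕ) : Decidable (StepOK W X B G G') := by
  unfold StepOK; infer_instance

theorem gap_step_num {n a D2 D3 g h : ℕ} {d e1 e2 : ℤ} (H : LRel n a D2 D3 g h d e1 e2)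
    {W X B G G' : ℕ} (hs : StepOK W X B G G') (hB : B ≤ n) (hX : n ≤ X) :
    (G < D2 ∧ D2 ≤ G') ∨ (G < D3 ∧ D3 ≤ G') ∨ (G < g ∧ g ≤ G') ∨ (G < h ∧ h ≤ G') := by
  obtain ⟨h1, h2, h3, h4, h5⟩ := hs
  refine gap_step H W G G' ((11 * G + 39) / 10) h1 (by omega) (h2.trans hB) (h3.trans hB) h4 ?_
  refine exp_ge_of_nat (le_trans ?_ h5)
  gcongr

theorem pow_growth {C k W : ℕ} (hC : C * 455 ^ k ≤ 2 ^ 455) (hk : 456 ^ k ≤ 2 * 455 ^ k)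
    (hW : 455 ≤ W) : C * W ^ k ≤ 2 ^ W := by
  induction W, hW using Nat.le_induction with
  | base => exact hC
  | succ W hW ih =>
    have h1 : ((W + 1) * 455) ^ k ≤ (456 * W) ^ k := by
      gcongr 1; omega
    rw [mul_pow, mul_pow] at h1
    have h2 : (W + 1) ^ k * 455 ^ k ≤ (2 * W ^ k) * 455 ^ k :=
      h1.trans (by nlinarith [Nat.zero_le (W ^ k)])
    have h3 := Nat.le_of_mul_le_mul_right h2 (by positivity)
    calc C * (W + 1) ^ k ≤ C * (2 * W ^ k) := by gcongr
      _ = 2 * (C * W ^ k) := by ring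
      _ ≤ 2 * 2 ^ W := by gcongr
      _ = 2 ^ (W + 1) := by ring

theorem exp_growth {W : ℕ} (hW : 455 ≤ W) : 10 ^ 15 * W ^ 2 * 20 ^ W ≤ 27 ^ W := by
  induction W, hW using Nat.le_induction with
  | base => decide +kernel
  | succ W hW ih =>
    have h1 : 20 * (W + 1) ^ 2 ≤ 27 * W ^ 2 := by nlinarith
    calc 10 ^ 15 * (W + 1) ^ 2 * 20 ^ (W + 1) = 10 ^ 15 * (20 * (W + 1) ^ 2) * 20 ^ W := by ring
      _ ≤ 10 ^ 15 * (27 * W ^ 2) * 20 ^ W := by gcongr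
      _ = 27 * (10 ^ 15 * W ^ 2 * 20 ^ W) := by ring
      _ ≤ 27 * 27 ^ W := by gcongr
      _ = 27 ^ (W + 1) := by ring

set_option exponentiation.threshold 3000 in
/-- The absolute upper bound delivered by the gap principle applied five times to the four gaps. -/
theorem LRel.initial {n a D2 D3 g h : ℕ} {d e1 e2 : ℤ} (H : LRel n a D2 D3 g h d e1 e2) :
    n < 2 ^ 455 := by
  by_contra hcon
  push Not at hcon
  have hn0 : n ≠ 0 := by have : 0 < 2 ^ 455 := by positivity
                         omega
  obtain ⟨W, hW⟩ : ∃ W, W = Nat.log 2 n := ⟨_, rfl⟩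
  have hW455 : 455 ≤ W := by rw [hW]; exact (Nat.le_log_iff_pow_le (by norm_num) hn0).2 hcon
  have hWn : 2 ^ W ≤ n := by rw [hW]; exact Nat.pow_log_le_self 2 hn0
  have hnW : n < 2 ^ (W + 1) := by rw [hW]; exact Nat.lt_pow_succ_log_self (by norm_num) n
  have hexp : ((10 ^ 14 * W ^ 2 * (5 * n) : ℕ) : ℝ) ≤ exp W := by
    refine exp_ge_of_nat (le_trans ?_ (exp_growth hW455))
    calc 10 ^ 14 * W ^ 2 * (5 * n) * 10 ^ W ≤ 10 ^ 14 * W ^ 2 * (5 * 2 ^ (W + 1)) * 10 ^ W := by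
          gcongr
      _ = 10 ^ 15 * W ^ 2 * 20 ^ W := by
          rw [show (20 : ℕ) = 2 * 10 by norm_num, mul_pow, pow_succ]; ring
  have p1 := pow_growth (C := 2 * 10 ^ 99) (k := 14) (W := W) (by decide +kernel)
    (by decide +kernel) hW455
  have p2 := pow_growth (C := 10 ^ 96) (k := 15) (W := W) (by decide +kernel)
    (by decide +kernel) hW455
  have hpos : ∀ k, 1 ≤ W ^ k := fun k => Nat.one_le_pow _ _ (by omega)
  have hmono : ∀ {i j : ℕ}, i ≤ j → W ^ i ≤ W ^ j := fun hij => Nat.pow_le_pow_right (by omega) hij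
  have key : ∀ c i j t0 : ℕ, 25 ≤ t0 → c * 12 = 10 * t0 → t0 ≤ 62208 * 10 ^ 72 → i + 2 ≤ 14 →
      j = i + 3 → 11 * (c * W ^ i) + 30 ≤ 10 * (t0 * W ^ i) →
      ((c * W ^ i < D2 ∧ D2 ≤ (10 ^ 19 * t0) * W ^ j) ∨
      (c * W ^ i < D3 ∧ D3 ≤ (10 ^ 19 * t0) * W ^ j) ∨
      (c * W ^ i < g ∧ g ≤ (10 ^ 19 * t0) * W ^ j) ∨
      (c * W ^ i < h ∧ h ≤ (10 ^ 19 * t0) * W ^ j)) := by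
    intro c i j t0 ht0 hc ht1 hi hj hct
    have q1 : W ^ 2 * W ^ i ≤ W ^ 14 := by rw [← pow_add]; exact hmono (by omega)
    have q2 : W ^ 3 * W ^ i ≤ W ^ 15 := by rw [← pow_add]; exact hmono (by omega)
    have q3 : W ^ 3 * W ^ i = W ^ j := by rw [← pow_add, hj, add_comm]
    have q4 : W ^ i ≤ W ^ 14 := hmono (by omega)
    refine gap_step H W (c * W ^ i) _ (t0 * W ^ i) (by omega) hct ?_ ?_ ?_ hexp
    · calc 3 * 10 ^ 22 * W ^ 2 * (t0 * W ^ i) + c * W ^ i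
          = (3 * 10 ^ 22 * t0) * (W ^ 2 * W ^ i) + c * W ^ i := by ring
        _ ≤ (3 * 10 ^ 22 * t0) * W ^ 14 + c * W ^ 14 := by gcongr
        _ = (3 * 10 ^ 22 * t0 + c) * W ^ 14 := by ring
        _ ≤ (2 * 10 ^ 99) * W ^ 14 := by gcongr; omega
        _ ≤ n := p1.trans hWn
    · calc 3 * (4536000000000000000 * W ^ 3 * (t0 * W ^ i)) + 30
          = (3 * 4536000000000000000 * t0) * (W ^ 3 * W ^ i) + 30 * 1 := by ring
        _ ≤ (3 * 4536000000000000000 * t0) * W ^ 15 + 30 * W ^ 15 := by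
          gcongr; exact hpos 15
        _ = (3 * 4536000000000000000 * t0 + 30) * W ^ 15 := by ring
        _ ≤ 10 ^ 96 * W ^ 15 := by gcongr; omega
        _ ≤ n := p2.trans hWn
    · calc 100 * (4536000000000000000 * W ^ 3 * (t0 * W ^ i) + 5)
          = (100 * 4536000000000000000 * t0) * (W ^ 3 * W ^ i) + 500 * 1 := by ring
        _ ≤ (100 * 4536000000000000000 * t0) * W ^ j + 500 * W ^ j := by
          rw [q3]; gcongr; exact hpos j
        _ = (100 * 4536000000000000000 * t0 + 500) * W ^ j := by ring
        _ ≤ (48 * (10 ^ 19 * t0)) * W ^ j := by gcongr; omega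
        _ = _ := by ring
  have s0 := gap_step H W 0 ((3 * 10 ^ 19) * W ^ 3) 3 (by omega) (by norm_num)
    (by
      calc 3 * 10 ^ 22 * W ^ 2 * 3 + 0 = (9 * 10 ^ 22) * W ^ 2 := by ring
        _ ≤ (2 * 10 ^ 99) * W ^ 14 := Nat.mul_le_mul (by norm_num) (hmono (by norm_num))
        _ ≤ n := p1.trans hWn)
    (by
      calc 3 * (4536000000000000000 * W ^ 3 * 3) + 30
          = (3 * 4536000000000000000 * 3) * W ^ 3 + 30 * 1 := by ring
        _ ≤ (3 * 4536000000000000000 * 3) * W ^ 15 + 30 * W ^ 15 :=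
          Nat.add_le_add (Nat.mul_le_mul_left _ (hmono (by norm_num)))
            (Nat.mul_le_mul_left _ (hpos 15))
        _ = (3 * 4536000000000000000 * 3 + 30) * W ^ 15 := by ring
        _ ≤ 10 ^ 96 * W ^ 15 := Nat.mul_le_mul_right _ (by norm_num)
        _ ≤ n := p2.trans hWn)
    (by
      have := hpos 3
      omega) hexp
  have w3 := hpos 3
  have w6 := hpos 6
  have w9 := hpos 9
  have w12 := hpos 12
  have m1 : W ^ 3 ≤ W ^ 6 := hmono (by norm_num)
  have m2 : W ^ 6 ≤ W ^ 9 := hmono (by norm_num)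
  have m3 : W ^ 9 ≤ W ^ 12 := hmono (by norm_num)
  have s1 := key (3 * 10 ^ 19) 3 6 (36 * 10 ^ 18) (by norm_num) (by norm_num) (by norm_num)
    (by norm_num) (by norm_num) (by omega)
  have s2 := key (36 * 10 ^ 37) 6 9 (432 * 10 ^ 36) (by norm_num) (by norm_num) (by norm_num)
    (by norm_num) (by norm_num) (by omega)
  have s3 := key (432 * 10 ^ 55) 9 12 (5184 * 10 ^ 54) (by norm_num) (by norm_num) (by norm_num)
    (by norm_num) (by norm_num) (by omega)
  have s4 := key (5184 * 10 ^ 73) 12 15 (62208 * 10 ^ 72) (by norm_num) (by norm_num) (by norm_num)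
    (by norm_num) (by norm_num) (by omega)
  have e1' : 10 ^ 19 * (36 * 10 ^ 18) = 36 * 10 ^ 37 := by norm_num
  have e2' : 10 ^ 19 * (432 * 10 ^ 36) = 432 * 10 ^ 55 := by norm_num
  have e3' : 10 ^ 19 * (5184 * 10 ^ 54) = 5184 * 10 ^ 73 := by norm_num
  rw [e1'] at s1
  rw [e2'] at s2
  rw [e3'] at s3
  have o1 : (3 * 10 ^ 19) * W ^ 3 ≤ (36 * 10 ^ 37) * W ^ 6 := by omega
  have o2 : (36 * 10 ^ 37) * W ^ 6 ≤ (432 * 10 ^ 55) * W ^ 9 := by omega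
  have o3 : (432 * 10 ^ 55) * W ^ 9 ≤ (5184 * 10 ^ 73) * W ^ 12 := by omega
  clear key hexp hW hWn hnW p1 p2 hpos hmono hcon w3 w6 w9 w12 m1 m2 m3
  generalize (3 * 10 ^ 19) * W ^ 3 = A at *
  generalize (36 * 10 ^ 37) * W ^ 6 = B at *
  generalize (432 * 10 ^ 55) * W ^ 9 = C at *
  generalize (5184 * 10 ^ 73) * W ^ 12 = E at *
  generalize (10 ^ 19 * (62208 * 10 ^ 72)) * W ^ 15 = F at *
  omega

end

/-! ### From solutions to logarithmic relations -/

section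

theorem repunit_three (l : ℕ) : 2 * (((3 ^ l - 1) / (3 - 1) : ℕ) : ℝ) = 3 ^ l - 1 := by
  have h : 2 * ((3 ^ l - 1) / (3 - 1)) + 1 = 3 ^ l := by
    have h1 : 3 ^ l % 2 = 1 := by simp [Nat.pow_mod]
    generalize 3 ^ l = T at *
    omega
  have h' : (2 * (((3 ^ l - 1) / (3 - 1) : ℕ) : ℝ) + 1) = 3 ^ l := by exact_mod_cast h
  linarith

/-- The integer identity behind the repdigit side, in `ℝ`. -/
theorem concat_value {N d1 d2 d3 l1 l2 l3 : ℕ}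
    (hN : N = d1 * ((3 ^ l1 - 1) / (3 - 1)) * 3 ^ (l2 + l3) +
        d2 * ((3 ^ l2 - 1) / (3 - 1)) * 3 ^ l3 + d3 * ((3 ^ l3 - 1) / (3 - 1))) :
    2 * (N : ℝ) = d1 * 3 ^ (l1 + l2 + l3) - (d1 - d2) * 3 ^ (l2 + l3) - (d2 - d3) * 3 ^ l3 - d3 := by
  have h1 := repunit_three l1
  have h2 := repunit_three l2
  have h3 := repunit_three l3
  rw [hN]
  push_cast [Nat.cast_add, Nat.cast_mul, Nat.cast_pow] at *
  generalize (((3 ^ l1 - 1) / (3 - 1) : ℕ) : ℝ) = A at *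
  generalize (((3 ^ l2 - 1) / (3 - 1) : ℕ) : ℝ) = B at *
  generalize (((3 ^ l3 - 1) / (3 - 1) : ℕ) : ℝ) = C at *
  have e1 : A = (3 ^ l1 - 1) / 2 := by linarith
  have e2 : B = (3 ^ l2 - 1) / 2 := by linarith
  have e3 : C = (3 ^ l3 - 1) / 2 := by linarith
  rw [e1, e2, e3, pow_add, pow_add, pow_add]
  ring

/-- Every large concatenation is `3 ^ a * v / 2` up to a bounded error. When neighbouring digits
coincide the missing terms are replaced by terms of bounded size, so that always `g < h`. -/
theorem concat_approx {N : ℕ} (hbig : 196829 < N) (hN : IsConcatThreeRepdigits 3 N) :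
    ∃ (a g h : ℕ) (d e1 e2 : ℤ), Combo d e1 e2 ∧ 1 ≤ g ∧ g < h ∧ 9 ≤ a ∧
      |2 * (N : ℝ) - 3 ^ a * vFac d e1 e2 g h| ≤ 6 := by
  obtain ⟨d1, d2, d3, l1, l2, l3, hd1, hd1', hd2, hd3, hl1, hl2, hl3, hNe⟩ := hN
  have key := concat_value hNe
  have c1 : (1 : ℝ) ≤ d1 := by exact_mod_cast hd1
  have c1' : (d1 : ℝ) ≤ 2 := by exact_mod_cast (by omega : d1 ≤ 2)
  have c2 : (d2 : ℝ) ≤ 2 := by exact_mod_cast (by omega : d2 ≤ 2)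
  have c3 : (d3 : ℝ) ≤ 2 := by exact_mod_cast (by omega : d3 ≤ 2)
  have c2' : (0 : ℝ) ≤ d2 := by positivity
  have c3' : (0 : ℝ) ≤ d3 := by positivity
  have t1 : (3 : ℝ) ^ (l1 + l2 + l3) * (1 / 3) ^ l1 = 3 ^ (l2 + l3) := by
    rw [add_assoc, pow_add, mul_right_comm, ← mul_pow]; norm_num
  have t2 : (3 : ℝ) ^ (l1 + l2 + l3) * (1 / 3) ^ (l1 + l2) = 3 ^ l3 := by
    rw [pow_add, mul_right_comm, ← mul_pow]; norm_num
  have t3 : (3 : ℝ) ^ (l1 + l2 + l3) * (1 / 3) ^ (l1 + l2 + l3) = 1 := by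
    rw [← mul_pow]; norm_num
  have t4 : (3 : ℝ) ^ (l1 + l2 + l3) * (1 / 3) ^ (l1 + l2 + l3 + 1) = 1 / 3 := by
    rw [pow_succ, ← mul_assoc, t3]; norm_num
  have ha : 9 ≤ l1 + l2 + l3 := by
    by_contra hc
    push Not at hc
    have hle : (3 : ℝ) ^ (l1 + l2 + l3) ≤ 3 ^ 8 := pow_le_pow_right₀ (by norm_num) (by omega)
    have hx : (3 : ℝ) ^ (l2 + l3) ≤ 3 ^ 8 := pow_le_pow_right₀ (by norm_num) (by omega)
    have hy : (3 : ℝ) ^ l3 ≤ 3 ^ 8 := pow_le_pow_right₀ (by norm_num) (by omega)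
    have hx0 : (0 : ℝ) < 3 ^ (l2 + l3) := by positivity
    have hy0 : (0 : ℝ) < 3 ^ l3 := by positivity
    have hz0 : (0 : ℝ) < 3 ^ (l1 + l2 + l3) := by positivity
    have hb : (196829 : ℝ) < N := by exact_mod_cast hbig
    norm_num at hle hx hy
    nlinarith
  have fin : ∀ (g h : ℕ) (d e1 e2 : ℤ), Combo d e1 e2 → 1 ≤ g → g < h →
      |2 * (N : ℝ) - 3 ^ (l1 + l2 + l3) * vFac d e1 e2 g h| ≤ 6 →
      ∃ (a g h : ℕ) (d e1 e2 : ℤ), Combo d e1 e2 ∧ 1 ≤ g ∧ g < h ∧ 9 ≤ a ∧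
      |2 * (N : ℝ) - 3 ^ a * vFac d e1 e2 g h| ≤ 6 := fun g h d e1 e2 x1 x2 x3 x4 =>
    ⟨_, g, h, d, e1, e2, x1, x2, x3, ha, x4⟩
  have hv : ∀ (g h : ℕ) (d e1 e2 : ℤ), (3 : ℝ) ^ (l1 + l2 + l3) * vFac d e1 e2 g h =
      d * 3 ^ (l1 + l2 + l3) - e1 * (3 ^ (l1 + l2 + l3) * (1 / 3) ^ g)
        - e2 * (3 ^ (l1 + l2 + l3) * (1 / 3) ^ h) := fun g h d e1 e2 => by
    unfold vFac; ring
  have f1 : ∀ d e1 e2 : ℤ, Combo d e1 e2 → (d : ℝ) = d1 → (e1 : ℝ) = d1 - d2 →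
      (e2 : ℝ) = d2 - d3 → ∃ (a g h : ℕ) (d e1 e2 : ℤ), Combo d e1 e2 ∧ 1 ≤ g ∧ g < h ∧ 9 ≤ a ∧
      |2 * (N : ℝ) - 3 ^ a * vFac d e1 e2 g h| ≤ 6 := by
    intro d e1 e2 hc k1 k2 k3
    refine fin l1 (l1 + l2) d e1 e2 hc hl1 (by omega) ?_
    rw [hv, t1, t2, key, k1, k2, k3, abs_le]; constructor <;> linarith
  have f2 : ∀ d e1 e2 : ℤ, Combo d e1 e2 → (d : ℝ) = d1 → (e1 : ℝ) = d1 - d2 → |(e2 : ℝ)| ≤ 2 →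
      (d2 : ℝ) = d3 → ∃ (a g h : ℕ) (d e1 e2 : ℤ), Combo d e1 e2 ∧ 1 ≤ g ∧ g < h ∧ 9 ≤ a ∧
      |2 * (N : ℝ) - 3 ^ a * vFac d e1 e2 g h| ≤ 6 := by
    intro d e1 e2 hc k1 k2 k3 k4
    refine fin l1 (l1 + l2 + l3) d e1 e2 hc hl1 (by omega) ?_
    rw [abs_le] at k3
    rw [hv, t1, t3, key, k1, k2, k4, abs_le]; constructor <;> linarith
  have f3 : ∀ d e1 e2 : ℤ, Combo d e1 e2 → (d : ℝ) = d1 → (e1 : ℝ) = d2 - d3 → |(e2 : ℝ)| ≤ 2 →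
      (d1 : ℝ) = d2 → ∃ (a g h : ℕ) (d e1 e2 : ℤ), Combo d e1 e2 ∧ 1 ≤ g ∧ g < h ∧ 9 ≤ a ∧
      |2 * (N : ℝ) - 3 ^ a * vFac d e1 e2 g h| ≤ 6 := by
    intro d e1 e2 hc k1 k2 k3 k4
    refine fin (l1 + l2) (l1 + l2 + l3) d e1 e2 hc (by omega) (by omega) ?_
    rw [abs_le] at k3
    rw [hv, t2, t3, key, k1, k2, k4, abs_le]; constructor <;> linarith
  have f4 : ∀ d e1 e2 : ℤ, Combo d e1 e2 → (d : ℝ) = d1 → |(e1 : ℝ)| ≤ 1 → |(e2 : ℝ)| ≤ 1 →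
      (d1 : ℝ) = d2 → (d2 : ℝ) = d3 → ∃ (a g h : ℕ) (d e1 e2 : ℤ), Combo d e1 e2 ∧ 1 ≤ g ∧ g < h ∧
      9 ≤ a ∧ |2 * (N : ℝ) - 3 ^ a * vFac d e1 e2 g h| ≤ 6 := by
    intro d e1 e2 hc k1 k2 k3 k4 k5
    refine fin (l1 + l2 + l3) (l1 + l2 + l3 + 1) d e1 e2 hc (by omega) (by omega) ?_
    rw [abs_le] at k2 k3
    rw [hv, t3, t4, key, k1, k4, k5, abs_le]; constructor <;> linarith
  clear key hNe t1 t2 t3 t4 hv fin c1 c1' c2 c3 c2' c3'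
  have hcases : (d1 = 1 ∨ d1 = 2) ∧ (d2 = 0 ∨ d2 = 1 ∨ d2 = 2) ∧ (d3 = 0 ∨ d3 = 1 ∨ d3 = 2) := by
    omega
  obtain ⟨rfl | rfl, rfl | rfl | rfl, rfl | rfl | rfl⟩ := hcases
  · exact f2 1 1 (-1) (by norm_num [Combo]) (by norm_num) (by norm_num) (by norm_num) (by norm_num)
  · exact f1 1 1 (-1) (by norm_num [Combo]) (by norm_num) (by norm_num) (by norm_num)
  · exact f1 1 1 (-2) (by norm_num [Combo]) (by norm_num) (by norm_num) (by norm_num)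
  · exact f3 1 1 (-1) (by norm_num [Combo]) (by norm_num) (by norm_num) (by norm_num) (by norm_num)
  · exact f4 1 1 (-1) (by norm_num [Combo]) (by norm_num) (by norm_num) (by norm_num) (by norm_num)
      (by norm_num)
  · exact f3 1 (-1) 1 (by norm_num [Combo]) (by norm_num) (by norm_num) (by norm_num) (by norm_num)
  · exact f1 1 (-1) 2 (by norm_num [Combo]) (by norm_num) (by norm_num) (by norm_num)
  · exact f1 1 (-1) 1 (by norm_num [Combo]) (by norm_num) (by norm_num) (by norm_num)
  · exact f2 1 (-1) 1 (by norm_num [Combo]) (by norm_num) (by norm_num) (by norm_num) (by norm_num)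
  · exact f2 2 2 (-1) (by norm_num [Combo]) (by norm_num) (by norm_num) (by norm_num) (by norm_num)
  · exact f1 2 2 (-1) (by norm_num [Combo]) (by norm_num) (by norm_num) (by norm_num)
  · exact f1 2 2 (-2) (by norm_num [Combo]) (by norm_num) (by norm_num) (by norm_num)
  · exact f1 2 1 1 (by norm_num [Combo]) (by norm_num) (by norm_num) (by norm_num)
  · exact f2 2 1 (-1) (by norm_num [Combo]) (by norm_num) (by norm_num) (by norm_num) (by norm_num)
  · exact f1 2 1 (-1) (by norm_num [Combo]) (by norm_num) (by norm_num) (by norm_num)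
  · exact f3 2 2 (-1) (by norm_num [Combo]) (by norm_num) (by norm_num) (by norm_num) (by norm_num)
  · exact f3 2 1 (-1) (by norm_num [Combo]) (by norm_num) (by norm_num) (by norm_num) (by norm_num)
  · exact f4 2 1 1 (by norm_num [Combo]) (by norm_num) (by norm_num) (by norm_num) (by norm_num)
      (by norm_num)

theorem exists_max_nat {P : ℕ → Prop} {B : ℕ} (hB : ∀ m, P m → m ≤ B) (h : ∃ m, P m) :
    ∃ m, P m ∧ ∀ k, P k → k ≤ m := by
  have hb : BddAbove {m | P m} := ⟨B, fun m hm => hB m hm⟩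
  exact ⟨sSup {m | P m}, Nat.sSup_mem h hb, fun k hk => le_csSup hb hk⟩

/-- A sum of three Fibonacci numbers can be rewritten with well separated indices: take the largest
possible first index, and then the largest possible second one. -/
theorem fib_normal {N n1 n2 n3 : ℕ} (hbig : 196829 < N) (h32 : n3 ≤ n2) (h21 : n2 ≤ n1)
    (hN : N = Nat.fib n1 + Nat.fib n2 + Nat.fib n3) :
    ∃ m1 m2 m3, m3 ≤ m2 ∧ m2 + 2 ≤ m1 ∧ (m3 < m2 ∨ m2 = 0) ∧
      N = Nat.fib m1 + Nat.fib m2 + Nat.fib m3 := by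
  obtain ⟨m1, ⟨x2, x3, hx32, hx21, hx⟩, hmax1⟩ := exists_max_nat
    (P := fun m1 => ∃ m2 m3, m3 ≤ m2 ∧ m2 ≤ m1 ∧ N = Nat.fib m1 + Nat.fib m2 + Nat.fib m3)
    (B := N + 1) (by
      rintro m ⟨_, _, _, _, h⟩
      have := Nat.le_fib_add_one m
      omega) ⟨n1, n2, n3, h32, h21, hN⟩
  obtain ⟨m2, ⟨m3, h32', h21', hN'⟩, hmax2⟩ := exists_max_nat
    (P := fun m2 => ∃ m3, m3 ≤ m2 ∧ m2 ≤ m1 ∧ N = Nat.fib m1 + Nat.fib m2 + Nat.fib m3)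
    (B := m1) (by rintro m ⟨_, _, h, _⟩; exact h) ⟨x2, x3, hx32, hx21, hx⟩
  have hm1 : 20 ≤ m1 := by
    by_contra hc
    push Not at hc
    have f1 : Nat.fib m1 ≤ Nat.fib 19 := Nat.fib_mono (by omega)
    have f2 : Nat.fib m2 ≤ Nat.fib 19 := Nat.fib_mono (by omega)
    have f3 : Nat.fib m3 ≤ Nat.fib 19 := Nat.fib_mono (by omega)
    have : Nat.fib 19 = 4181 := by decide +kernel
    omega
  have hord : ∀ k x y : ℕ, N = Nat.fib k + Nat.fib x + Nat.fib y → x ≤ k → y ≤ k → k ≤ m1 := by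
    intro k x y hk hxk hyk
    rcases le_total x y with hxy | hxy
    · exact hmax1 k ⟨y, x, hxy, hyk, by omega⟩
    · exact hmax1 k ⟨x, y, hxy, hxk, by omega⟩
  have h2 : m2 + 2 ≤ m1 := by
    by_contra hc
    rcases (by omega : m2 = m1 ∨ m2 + 1 = m1) with he | he
    · obtain ⟨k, rfl⟩ : ∃ k, m1 = k + 2 := ⟨m1 - 2, by omega⟩
      have e1 := Nat.fib_add_two (n := k)
      have e2 : Nat.fib (k + 3) = Nat.fib (k + 1) + Nat.fib (k + 2) :=
        Nat.fib_add_two (n := k + 1)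
      have := hord (k + 3) k m3 (by
        rw [he] at hN'
        omega) (by omega) (by omega)
      omega
    · have e1 := Nat.fib_add_two (n := m2)
      have := hord (m2 + 2) m3 0 (by
        rw [← he] at hN'
        have e0 : Nat.fib 0 = 0 := rfl
        omega) (by omega) (by omega)
      omega
  refine ⟨m1, m2, m3, h32', h2, ?_, hN'⟩
  by_contra hc
  push Not at hc
  have he : m3 = m2 := by omega
  rw [he] at hN'
  rcases (by omega : m2 = 1 ∨ 2 ≤ m2) with h1 | h1
  · have := hmax2 3 ⟨0, by omega, by omega, by rw [h1] at hN'; simpa [Nat.fib] using hN'⟩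
    omega
  · obtain ⟨k, rfl⟩ : ∃ k, m2 = k + 2 := ⟨m2 - 2, by omega⟩
    have e1 := Nat.fib_add_two (n := k)
    have e2 : Nat.fib (k + 3) = Nat.fib (k + 1) + Nat.fib (k + 2) :=
        Nat.fib_add_two (n := k + 1)
    have := hmax2 (k + 3) ⟨k, by omega, by omega, by
      omega⟩
    omega

theorem fib_approx (m : ℕ) : |√5 * Nat.fib m - goldenRatio ^ m| ≤ 1 := by
  rw [coe_fib_eq, mul_div_cancel₀ _ (by positivity), sub_sub_cancel_left, abs_neg, abs_pow]
  refine pow_le_one₀ (abs_nonneg _) ?_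
  rw [abs_le]; constructor <;> linarith [goldenConj_neg, neg_one_lt_goldenConj]

/-- Every solution exceeding `196829` produces a logarithmic relation. -/
theorem exists_LRel {N n1 n2 n3 : ℕ} (hbig : 196829 < N) (h32 : n3 ≤ n2) (h21 : n2 ≤ n1)
    (hN : N = Nat.fib n1 + Nat.fib n2 + Nat.fib n3) (hC : IsConcatThreeRepdigits 3 N) :
    ∃ m1 m2 m3, m3 ≤ m2 ∧ m2 ≤ m1 ∧ N = Nat.fib m1 + Nat.fib m2 + Nat.fib m3 ∧
      ∃ (a D2 D3 g h : ℕ) (d e1 e2 : ℤ), LRel m1 a D2 D3 g h d e1 e2 := by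
  obtain ⟨m1, m2, m3, k1, k2, k3, hNm⟩ := fib_normal hbig h32 h21 hN
  obtain ⟨a, g, h, d, e1, e2, hcombo, hg, hgh, ha, hv⟩ := concat_approx hbig hC
  refine ⟨m1, m2, m3, k1, by omega, hNm, a, m1 - m2, m1 - m3, g, h, d, e1, e2,
    hcombo, by omega, by omega, by omega, hg, hgh, ha, ?_⟩
  have hφ := goldenRatio_pos
  have hu : |√5 * (N : ℝ) - goldenRatio ^ m1 * uFac (m1 - m2) (m1 - m3)| ≤ 3 := by
    have q : ∀ k, k ≤ m1 → goldenRatio ^ m1 * goldenRatio⁻¹ ^ (m1 - k) = goldenRatio ^ k := by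
      intro k hk
      obtain ⟨j, rfl⟩ := Nat.exists_eq_add_of_le hk
      rw [Nat.add_sub_cancel_left, pow_add, mul_assoc, ← mul_pow,
        mul_inv_cancel₀ hφ.ne', one_pow, mul_one]
    have e : goldenRatio ^ m1 * uFac (m1 - m2) (m1 - m3)
        = goldenRatio ^ m1 + goldenRatio ^ m2 + goldenRatio ^ m3 := by
      unfold uFac
      rw [mul_add, mul_add, q m2 (by omega), q m3 (by omega), mul_one]
    have a1 := abs_le.1 (fib_approx m1)
    have a2 := abs_le.1 (fib_approx m2)
    have a3 := abs_le.1 (fib_approx m3)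
    rw [e, hNm]
    push_cast
    rw [abs_le]
    constructor <;> linarith
  have hub := uFac_bounds (m1 - m2) (m1 - m3)
  have hvb := vFac_bounds hcombo hg hgh
  have hs := sqrt_five_bounds
  generalize uFac (m1 - m2) (m1 - m3) = u at *
  generalize vFac d e1 e2 g h = v at *
  have hT : (3 : ℝ) ^ 9 ≤ 3 ^ a := pow_le_pow_right₀ (by norm_num) ha
  have hT0 : (0 : ℝ) < 3 ^ a := by positivity
  have hinv : (1 / 3 : ℝ) ^ a = 1 / 3 ^ a := by rw [div_pow, one_pow]
  have hlog : (m1 : ℝ) * log goldenRatio + log u - a * log 3 - log (√5 * v / 2)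
      = log (2 * (goldenRatio ^ m1 * u) / (3 ^ a * (√5 * v))) - log 1 := by
    have hu0 : u ≠ 0 := by linarith
    have hsv : √5 * v ≠ 0 := by
      have : 0 < √5 * v := mul_pos (by linarith) (by linarith)
      exact this.ne'
    have hφm : goldenRatio ^ m1 ≠ 0 := (pow_pos hφ _).ne'
    rw [log_div hsv two_ne_zero]
    conv_rhs => rw [log_one, sub_zero,
      log_div (mul_ne_zero two_ne_zero (mul_ne_zero hφm hu0)) (mul_ne_zero hT0.ne' hsv),
      log_mul two_ne_zero (mul_ne_zero hφm hu0), log_mul hφm hu0, log_mul hT0.ne' hsv, log_pow,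
      log_pow]
    ring
  have hY : 1.4 * 3 ^ a ≤ 3 ^ a * (√5 * v) := by
    have : 1.4 ≤ √5 * v := by nlinarith
    nlinarith
  have hdiff : |2 * (goldenRatio ^ m1 * u) - 3 ^ a * (√5 * v)| ≤ 20 := by
    have b1 := abs_le.1 hu
    have b2 := abs_le.1 hv
    have b3 : √5 * (3 ^ a * v - 2 * N) ≤ 2.237 * 6 := by
      nlinarith [mul_le_mul_of_nonneg_left (show 3 ^ a * v - 2 * N ≤ 6 by linarith) (show 0 ≤ √5 by positivity)]
    have b4 : -(2.237 * 6) ≤ √5 * (3 ^ a * v - 2 * N) := by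
      nlinarith [mul_le_mul_of_nonneg_left (show -6 ≤ 3 ^ a * v - 2 * N by linarith) (show 0 ≤ √5 by positivity)]
    rw [abs_le]
    constructor <;> linarith
  generalize (3 : ℝ) ^ a * (√5 * v) = Y at *
  generalize 2 * (goldenRatio ^ m1 * u) = Z at *
  have hYp : 0 < Y := by linarith
  have hr : |Z / Y - 1| ≤ 15 * (1 / 3) ^ a := by
    have : Z / Y - 1 = (Z - Y) / Y := by field_simp
    rw [this, abs_div, abs_of_pos hYp, div_le_iff₀ hYp, hinv]
    calc |Z - Y| ≤ 20 := hdiff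
      _ ≤ 15 * (1 / 3 ^ a) * (1.4 * 3 ^ a) := by
        rw [show (15 : ℝ) * (1 / 3 ^ a) * (1.4 * 3 ^ a) = 21 * (3 ^ a / 3 ^ a) by ring,
          div_self hT0.ne']
        norm_num
      _ ≤ _ := by gcongr
  have hsm : (1 / 3 : ℝ) ^ a ≤ 1 / 3 ^ 9 := by
    rw [hinv]; gcongr
  rw [hlog]
  have hr' := abs_le.1 hr
  have := abs_log_sub_le (x := Z / Y) (y := 1) (by norm_num at hsm; linarith) (by norm_num)
  have hp : (0 : ℝ) < (1 / 3) ^ a := by positivity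
  linarith

end

/-! ### Data of a reduction step -/

section

/-- The numerical data of one reduction step: a precision `p`, a number `M` of buckets, a bound `X`
for `n`, three convergents `mᵢ / qᵢ` of `log φ / log 3` with multipliers `cᵢ`, a tolerance `T`,
fixed-point values of `2 ^ p / φ`, `2 ^ p * log φ`, `2 ^ p * log 3` and of
`2 ^ p * log (27 * √5 * d / 2)` for `d = 1, 2`, truncation bounds `NX`, `NH` for the exponents of
`φ` and `3`, and the resulting bound `NA` for `n`. -/
structure Stage where
  (p M X q1 m1 c1 q2 m2 c2 q3 m3 c3 T r l1 l3 b1 b2 kn kn3 NX NH NA : ℕ)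

namespace Stage

/-- Folds over lists of natural numbers. -/
abbrev Fold := (ℕ → ℕ → ℕ) → ℕ → ℕ

/-- The fold over the concatenation of two lists. -/
def seqF (F G : Fold) : Fold := fun f acc => G f (F f acc)

/-- Fibonacci side, both gaps beyond `NX`: the single value `0`. -/
def uF0 : Fold := fun f acc => f acc 0

/-- Fibonacci side, second gap beyond `NX`: the values `2 ^ p * log (1 + φ⁻¹ ^ x)`. -/
def uF1 (S : Stage) : Fold :=
  fun f acc => rowF false S.p (2 ^ S.p) S.r S.kn 0 f (S.NX - 1) S.r 2 acc

/-- Fibonacci side, both gaps at most `NX`: the values `2 ^ p * log (1 + φ⁻¹ ^ x + φ⁻¹ ^ y)`. -/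
def uF2 (S : Stage) : Fold := fun f acc =>
  famF false false S.p (2 ^ S.p) S.r S.kn S.NX 0 f (S.NX - 2) (2 ^ S.p - S.r - 1)
    (2 ^ S.p - S.r - 1) 2 acc

/-- Fixed-point value of `3 * log 3 + log (√5 * d / 2)` for a leading coefficient `d = 1, 2`. -/
def base (S : Stage) (d : ℕ) : ℕ := if d = 1 then S.b1 else S.b2

/-- Repdigit side, both gaps beyond `NH`. -/
def vF0 (S : Stage) : Fold := fun f acc => f (f acc S.b1) S.b2

/-- Repdigit side, second gap beyond `NH`: the values with factor `d ± a * 3 ^ (-x)`. -/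
def vRow (S : Stage) (d : ℕ) (s : Bool) (a : ℕ) : Fold := fun f acc =>
  rowF s S.p (2 ^ S.p) (2 ^ S.p / 3) S.kn3 (S.base d) f S.NH (2 ^ S.p * a / d) 1 acc

/-- Repdigit side, both gaps at most `NH`: the values with factor `d ± a₁ * 3 ^ (-x) ± a₂ * 3 ^ (-y)`. -/
def vFam (S : Stage) (d : ℕ) (s1 : Bool) (a1 : ℕ) (s2 : Bool) (a2 : ℕ) : Fold := fun f acc =>
  famF s1 s2 S.p (2 ^ S.p) (2 ^ S.p / 3) S.kn3 S.NH (S.base d) f (S.NH - 1)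
    (2 ^ S.p * a1 / (3 * d)) (2 ^ S.p * a2 / (3 * d)) 1 acc

/-- The four rows that occur, one for each possible pair of leading coefficients. -/
def vF1 (S : Stage) : Fold :=
  seqF (S.vRow 1 true 1) (seqF (S.vRow 1 false 1) (seqF (S.vRow 2 true 2) (S.vRow 2 true 1)))

/-- The eight families that occur, one for each coefficient triple in `Combo`. -/
def vF2 (S : Stage) : Fold :=
  seqF (S.vFam 1 true 1 false 1) (seqF (S.vFam 1 true 1 false 2)
  (seqF (S.vFam 1 false 1 true 2) (seqF (S.vFam 1 false 1 true 1)
  (seqF (S.vFam 2 true 2 false 1) (seqF (S.vFam 2 true 2 false 2)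
  (seqF (S.vFam 2 true 1 true 1) (S.vFam 2 true 1 false 1)))))))

/-- Pairs of a Fibonacci side value and a repdigit side value, looked up by the former. -/
def check (S : Stage) (FA FB : Fold) : Bool :=
  Nat.beq (pairCheck S.c1 S.c2 S.c3 (S.p + 8) S.M S.T S.l1 S.l3 (2 ^ 20) 60 FA FB) 0

/-- Pairs of a Fibonacci side value and a repdigit side value, looked up by the latter. -/
def checkFlip (S : Stage) (FA FB : Fold) : Bool :=
  Nat.beq (pairCheck S.c1 S.c2 S.c3 (S.p + 8) S.M S.T (S.l3 - S.l1) S.l3 (2 ^ 20) 60 FA FB) 0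

end Stage

end

/-! ### Soundness of the comparison -/

section

namespace Stage

/-- Conditions on a convergent `m / q` and its multiplier `c`. -/
def ConvOK (S : Stage) (q m c : ℕ) : Prop :=
  ((c * S.l3 : ℤ) - q * (S.M * 2 ^ (S.p + 8))).natAbs + 2 * c ≤ 2 * 2 ^ S.p ∧
  S.X * (((q * lPhi : ℤ) - m * lThree).natAbs + 50 * q + 250 * m) * (S.M * 2 ^ (S.p + 8)) +
    (10 * 2 ^ S.p + 500 * c) * 2 ^ 1100 ≤ S.T * 2 ^ 1100

instance (S : Stage) (q m c : ℕ) : Decidable (S.ConvOK q m c) := by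
  unfold ConvOK; infer_instance

/-- The arithmetic conditions on the data of a reduction step. -/
structure OK (S : Stage) : Prop where
  hp : 20 ≤ S.p
  hp' : S.p ≤ 1000
  hM : 0 < S.M
  hT : 2 * S.T < 2 ^ (S.p + 8)
  conv1 : S.ConvOK S.q1 S.m1 S.c1
  conv2 : S.ConvOK S.q2 S.m2 S.c2
  conv3 : S.ConvOK S.q3 S.m3 S.c3
  hcop : Nat.Coprime S.m1 S.q1
  hXq : S.X < S.q1
  hX2 : S.X * (((S.q1 * lPhi : ℤ) - S.m1 * lThree).natAbs + 50 * S.q1 + 250 * S.m1) * 2 ≤ 2 ^ 1100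
  hq1 : S.q1 * 2 ^ 22 ≤ 2 ^ S.p
  hr : (2 * S.r + 2 ^ S.p) ^ 2 ≤ 5 * (2 ^ S.p) ^ 2
  hr' : 5 * (2 ^ S.p) ^ 2 < (2 * S.r + 2 + 2 ^ S.p) ^ 2
  hl1 : S.l1 = lPhi / 2 ^ (1100 - S.p)
  hl3 : S.l3 = lThree / 2 ^ (1100 - S.p)
  hb1 : S.b1 = (6 * lThree + lFive - 2 * lTwo) / 2 / 2 ^ (1100 - S.p)
  hb2 : S.b2 = (6 * lThree + lFive) / 2 / 2 ^ (1100 - S.p)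
  hkn : 61804 ^ S.kn * 2 ^ S.p ≤ 100000 ^ S.kn
  hkn3 : 2 ^ S.p ≤ 3 ^ S.kn3
  hNA : 100 * (S.kn3 + 2) ≤ 43 * S.NA
  hNXA : S.NX ≤ S.NA
  h60 : 60 ≤ S.NA

/-- The truncation bounds `NX` and `NH` are large enough for powers of `1 / φ` and `1 / 3` beyond them
to be negligible at precision `p`. -/
structure OKT (S : Stage) : Prop extends S.OK where
  hNX : 61804 ^ S.NX * (3 * 2 ^ S.p) ≤ 100 * 100000 ^ S.NX
  hNH : 2 * 2 ^ S.p ≤ 100 * 3 ^ S.NH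

theorem shift_close {L p : ℕ} {x e : ℝ} (hp : p ≤ 1000) (h : |(L : ℝ) - 2 ^ 1100 * x| ≤ e)
    (he : e ≤ 2 ^ 12) : |((L / 2 ^ (1100 - p) : ℕ) : ℝ) - 2 ^ p * x| ≤ 2 := by
  have h12 : (2 : ℝ) ^ 12 ≤ 2 ^ (1100 - p) := pow_le_pow_right₀ (by norm_num) (by omega)
  have e1 : (2 : ℝ) ^ 1100 = 2 ^ p * 2 ^ (1100 - p) := by rw [← pow_add]; congr 1; omega
  rw [e1] at h
  have hd := Nat.div_add_mod L (2 ^ (1100 - p))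
  have hm := Nat.mod_lt L (show 0 < 2 ^ (1100 - p) by positivity)
  have hd' : (2 : ℝ) ^ (1100 - p) * (L / 2 ^ (1100 - p) : ℕ) + (L % 2 ^ (1100 - p) : ℕ) = L := by
    exact_mod_cast hd
  have hm' : ((L % 2 ^ (1100 - p) : ℕ) : ℝ) < 2 ^ (1100 - p) := by exact_mod_cast hm
  have hm0 : (0 : ℝ) ≤ ((L % 2 ^ (1100 - p) : ℕ) : ℝ) := Nat.cast_nonneg _
  generalize ((L % 2 ^ (1100 - p) : ℕ) : ℝ) = b at *
  generalize ((L / 2 ^ (1100 - p) : ℕ) : ℝ) = a at *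
  generalize (2 : ℝ) ^ (1100 - p) = Q at *
  have hQ : 0 < Q := by linarith [show (0 : ℝ) < 2 ^ 12 by norm_num]
  rw [abs_le] at h ⊢
  constructor
  · by_contra hc
    have : (a - 2 ^ p * x) * Q < -2 * Q := by
      apply mul_lt_mul_of_pos_right _ hQ; linarith
    linarith [h.1]
  · by_contra hc
    have : 2 * Q < (a - 2 ^ p * x) * Q := by
      apply mul_lt_mul_of_pos_right _ hQ; linarith
    linarith [h.2]

variable {S : Stage}

theorem OK.l1_close (hS : S.OK) : |(S.l1 : ℝ) - 2 ^ S.p * log goldenRatio| ≤ 2 := by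
  rw [hS.hl1]; exact shift_close hS.hp' lPhi_close (by norm_num)

theorem OK.l3_close (hS : S.OK) : |(S.l3 : ℝ) - 2 ^ S.p * log 3| ≤ 2 := by
  rw [hS.hl3]; exact shift_close hS.hp' lThree_lTwo_lFive_close.1 (by norm_num)

theorem half_close {A : ℕ} {y e : ℝ} (h : |(A : ℝ) - 2 * y| ≤ e) :
    |((A / 2 : ℕ) : ℝ) - y| ≤ e / 2 + 1 := by
  have hd : 2 * ((A / 2 : ℕ) : ℝ) + (A % 2 : ℕ) = A := by exact_mod_cast Nat.div_add_mod A 2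
  have hm : ((A % 2 : ℕ) : ℝ) ≤ 1 := by exact_mod_cast Nat.le_of_lt_succ (Nat.mod_lt A (by norm_num))
  have hm0 : (0 : ℝ) ≤ ((A % 2 : ℕ) : ℝ) := Nat.cast_nonneg _
  rw [abs_le] at h ⊢
  constructor <;> linarith

theorem OK.b1_close (hS : S.OK) :
    |(S.b1 : ℝ) - 2 ^ S.p * (3 * log 3 + log 5 / 2 - log 2)| ≤ 2 := by
  rw [hS.hb1]
  obtain ⟨h1, h2, h3⟩ := lThree_lTwo_lFive_close
  have hle : 2 * lTwo ≤ 6 * lThree + lFive := by decide +kernel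
  refine shift_close hS.hp' (half_close (e := 2150) ?_) (by norm_num)
  rw [Nat.cast_sub hle]
  push_cast
  generalize (2 : ℝ) ^ 1100 = P at *
  rw [abs_le] at *
  constructor <;> linarith

theorem OK.b2_close (hS : S.OK) :
    |(S.b2 : ℝ) - 2 ^ S.p * (3 * log 3 + log 5 / 2)| ≤ 2 := by
  rw [hS.hb2]
  obtain ⟨h1, h2, h3⟩ := lThree_lTwo_lFive_close
  refine shift_close hS.hp' (half_close (e := 2150) ?_) (by norm_num)
  push_cast
  generalize (2 : ℝ) ^ 1100 = P at *
  rw [abs_le] at *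
  constructor <;> linarith

/-- The convergents turn a small linear form into a near coincidence modulo `C`. -/
theorem near_of_rel {P L1 L3 C δ E' : ℝ} {q m c n zu zv X : ℕ} {a : ℤ} (hL3 : 1 ≤ L3)
    (hC : 0 ≤ C) (hδ : |q * L1 - m * L3| ≤ δ) (hB : |c * (P * L3) - q * C| ≤ 2 * P)
    (hR : |(zu : ℝ) + n * (P * L1) - a * (P * L3) - zv| ≤ 500) (hn : (n : ℝ) ≤ X)
    (hna : |n * L1 - a * L3| ≤ 5 * L3) (hE : X * δ * C + 10 * P + 500 * c ≤ E') :
    |(c : ℝ) * zu - c * zv - ((a * q - n * m : ℤ) : ℝ) * C| ≤ E' := by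
  have hL3' : 0 < L3 := by linarith
  have hδ0 : 0 ≤ δ := (abs_nonneg _).trans hδ
  have e : (c : ℝ) * zu - c * zv - ((a * q - n * m : ℤ) : ℝ) * C =
      c * ((zu : ℝ) + n * (P * L1) - a * (P * L3) - zv)
      - (c * (P * L3) - q * C) * ((n * L1 - a * L3) / L3)
      - n * C * ((q * L1 - m * L3) / L3) := by
    push_cast; field_simp; ring
  rw [e]
  have b1 : |(c : ℝ) * ((zu : ℝ) + n * (P * L1) - a * (P * L3) - zv)| ≤ c * 500 := by
    rw [abs_mul, Nat.abs_cast]; gcongr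
  have b2 : |(c * (P * L3) - q * C) * ((n * L1 - a * L3) / L3)| ≤ 2 * P * 5 := by
    rw [abs_mul, abs_div, abs_of_pos hL3']
    have : |n * L1 - a * L3| / L3 ≤ 5 := by rw [div_le_iff₀ hL3']; exact hna
    have h0 := (abs_nonneg _).trans hB
    gcongr
  have b3 : |n * C * ((q * L1 - m * L3) / L3)| ≤ X * C * δ := by
    rw [abs_mul, abs_of_nonneg (by positivity), abs_div, abs_of_pos hL3']
    have : |q * L1 - m * L3| / L3 ≤ δ := by
      rw [div_le_iff₀ hL3']; nlinarith
    gcongr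
  rw [abs_le] at *
  constructor <;> linarith

/-- `zu`, `zv` are fixed-point values of both sides of the logarithmic relation. -/
structure Vals (S : Stage) (n a zu zv : ℕ) : Prop where
  rel : |(zu : ℝ) + n * (2 ^ S.p * log goldenRatio) - ((a - 3 : ℤ) : ℝ) * (2 ^ S.p * log 3) - zv|
    ≤ 500
  hu : (zu : ℝ) ≤ 1.101 * 2 ^ S.p
  hv : (zv : ℝ) ≤ 4.54 * 2 ^ S.p

theorem OK.pow_ge (hS : S.OK) : (2 : ℝ) ^ 20 ≤ 2 ^ S.p :=
  pow_le_pow_right₀ (by norm_num) hS.hp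

theorem OK.near (hS : S.OK) {n a zu zv : ℕ} (hv : S.Vals n a zu zv) (hn : n ≤ S.X) {q m c : ℕ}
    (hc : S.ConvOK q m c) : NearMod c (S.M * 2 ^ (S.p + 8)) S.T zu zv := by
  obtain ⟨c1, c2⟩ := hc
  obtain ⟨l1, l1', l3, l3'⟩ := log_bounds
  have hδ := golden_three_dist (q := q) (p := m) le_rfl
  generalize ((q * lPhi : ℤ) - m * lThree).natAbs + 50 * q + 250 * m = D at *
  have hE : (S.X * D * (S.M * 2 ^ (S.p + 8) : ℕ) + (10 * 2 ^ S.p + 500 * c) * 2 ^ 1100 : ℝ)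
      ≤ S.T * 2 ^ 1100 := by exact_mod_cast c2
  clear c2
  have hQ : (0 : ℝ) < 2 ^ 1100 := by positivity
  generalize (2 : ℝ) ^ 1100 = Q at *
  have hP20 := hS.pow_ge
  have hP0 : (0 : ℝ) < 2 ^ S.p := by positivity
  refine ⟨((a - 3 : ℤ) * q - n * m : ℤ), ?_⟩
  have key := near_of_rel (P := 2 ^ S.p) (L1 := log goldenRatio) (L3 := log 3)
    (C := ((S.M * 2 ^ (S.p + 8) : ℕ) : ℝ)) (δ := D / Q) (E' := S.T) (c := c) (q := q) (m := m)
    (n := n) (zu := zu) (zv := zv) (X := S.X) (a := (a : ℤ) - 3) (by linarith) (by positivity) hδ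
    ?_ hv.rel (by exact_mod_cast hn) ?_ ?_
  · exact_mod_cast key
  · have h1 : |(c : ℝ) * S.l3 - q * ((S.M * 2 ^ (S.p + 8) : ℕ) : ℝ)| + 2 * c ≤ 2 * 2 ^ S.p := by
      have : ((((c * S.l3 : ℤ) - q * (S.M * 2 ^ (S.p + 8))).natAbs + 2 * c : ℕ) : ℝ)
        ≤ ((2 * 2 ^ S.p : ℕ) : ℝ) := by exact_mod_cast c1
      rw [Nat.cast_add, Nat.cast_natAbs] at this
      push_cast at this ⊢
      exact this
    have h2 : |(c : ℝ) * (S.l3 - 2 ^ S.p * log 3)| ≤ c * 2 := by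
      rw [abs_mul, Nat.abs_cast]
      exact mul_le_mul_of_nonneg_left hS.l3_close (Nat.cast_nonneg _)
    have e : (c : ℝ) * (2 ^ S.p * log 3) - q * ((S.M * 2 ^ (S.p + 8) : ℕ) : ℝ) =
      (c * S.l3 - q * ((S.M * 2 ^ (S.p + 8) : ℕ) : ℝ)) - c * (S.l3 - 2 ^ S.p * log 3) := by ring
    rw [e]
    have := abs_sub (c * S.l3 - q * ((S.M * 2 ^ (S.p + 8) : ℕ) : ℝ)) ((c : ℝ) * (S.l3 - 2 ^ S.p * log 3))
    linarith
  · have h1 := abs_le.1 hv.rel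
    have h2 := hv.hu
    have h3 := hv.hv
    have h4 : (0 : ℝ) ≤ zu := Nat.cast_nonneg _
    have h5 : (0 : ℝ) ≤ zv := Nat.cast_nonneg _
    generalize (2 : ℝ) ^ S.p = P at *
    have h6 : (500 : ℝ) ≤ 0.001 * P := by linarith
    have hPx : ((n : ℝ) * log goldenRatio - ((a : ℤ) - 3 : ℤ) * log 3) * P ≤ (5 * 1.09) * P := by
      linarith [h1.2]
    have hPy : (-(5 * 1.09)) * P ≤ ((n : ℝ) * log goldenRatio - ((a : ℤ) - 3 : ℤ) * log 3) * P := by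
      linarith [h1.1]
    have := le_of_mul_le_mul_right hPx hP0
    have := le_of_mul_le_mul_right hPy hP0
    rw [abs_le]; constructor <;> linarith
  · refine le_of_mul_le_mul_right (le_trans (le_of_eq ?_) hE) hQ
    field_simp
    ring

/-- A near coincidence which comes from a multiplicative relation bounds `n` by `NA`. -/
theorem OK.exact (hS : S.OK) {n a zu zv : ℕ} (hv : S.Vals n a zu zv) (hn : n ≤ S.X)
    (hnA : S.NA < n) {i : ℕ} {j : ℤ} (hi : i < 60)
    (hij : |(zu : ℤ) + i * S.l1 - zv - j * S.l3| ≤ 2 ^ 20) : False := by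
  obtain ⟨l1, l1', l3, l3'⟩ := log_bounds
  have h60 := hS.h60
  have hP20 := hS.pow_ge
  have hP0 : (0 : ℝ) < 2 ^ S.p := by positivity
  have hδ := golden_three_dist (q := S.q1) (p := S.m1) le_rfl
  have hX2 := hS.hX2
  generalize ((S.q1 * lPhi : ℤ) - S.m1 * lThree).natAbs + 50 * S.q1 + 250 * S.m1 = D at *
  have hXδ : (S.X : ℝ) * (D / 2 ^ 1100) ≤ 1 / 2 := by
    have h : ((S.X * D * 2 : ℕ) : ℝ) ≤ ((2 ^ 1100 : ℕ) : ℝ) := by exact_mod_cast hX2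
    rw [Nat.cast_pow] at h
    push_cast at h
    have hQ : (0 : ℝ) < 2 ^ 1100 := by positivity
    generalize (2 : ℝ) ^ 1100 = Q at *
    rw [← mul_div_assoc, div_le_iff₀ hQ]
    linarith
  clear hX2
  generalize (D : ℝ) / 2 ^ 1100 = δ at *
  have hlow := golden_three_lower hS.hcop hS.hXq hδ ((n : ℤ) - i) (-((a : ℤ) - 3 - j))
    (Or.inl (by omega)) (by rw [abs_le]; constructor <;> omega)
  have hq : (S.q1 : ℝ) * 2 ^ 22 ≤ 2 ^ S.p := by exact_mod_cast hS.hq1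
  have hij' : |(zu : ℝ) + i * S.l1 - zv - j * S.l3| ≤ 2 ^ 20 := by exact_mod_cast hij
  have c1 := abs_le.1 hS.l1_close
  have c3 := abs_le.1 hS.l3_close
  have hu := hv.hu
  have hv' := hv.hv
  have hrel := abs_le.1 hv.rel
  have hu0 : (0 : ℝ) ≤ zu := Nat.cast_nonneg _
  have hv0 : (0 : ℝ) ≤ zv := Nat.cast_nonneg _
  have hi' : (i : ℝ) ≤ 60 := by exact_mod_cast hi.le
  have hi0 : (0 : ℝ) ≤ i := Nat.cast_nonneg _
  rw [abs_le] at hij'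
  generalize (2 : ℝ) ^ S.p = P at *
  -- the integer `j` is small, so rounding of `log 3` does not matter
  have hj : |(j : ℝ)| ≤ 60 := by
    have hl3 : P ≤ S.l3 := by nlinarith
    have hl1 : (S.l1 : ℝ) ≤ 0.5 * P := by nlinarith
    have h1 : (i : ℝ) * S.l1 ≤ 30 * P := by nlinarith [Nat.cast_nonneg (α := ℝ) S.l1]
    have h2 : 0 ≤ (i : ℝ) * S.l1 := by positivity
    have hl0 : (0 : ℝ) < S.l3 := by linarith
    have h3 : (j : ℝ) * S.l3 ≤ 60 * S.l3 := by linarith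
    have h4 : (-60 : ℝ) * S.l3 ≤ j * S.l3 := by linarith
    rw [abs_le]
    exact ⟨le_of_mul_le_mul_right h4 hl0, le_of_mul_le_mul_right h3 hl0⟩
  have e1 : |(i : ℝ) * (S.l1 - P * log goldenRatio)| ≤ 60 * 2 := by
    rw [abs_mul, Nat.abs_cast]
    exact mul_le_mul hi' (abs_le.2 c1) (abs_nonneg _) (by norm_num)
  have e3 : |(j : ℝ) * (S.l3 - P * log 3)| ≤ 60 * 2 := by
    rw [abs_mul]
    exact mul_le_mul hj (abs_le.2 c3) (abs_nonneg _) (by norm_num)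
  rw [abs_le] at e1 e3
  have hfin : |(((n : ℤ) - i : ℤ) : ℝ) * log goldenRatio + ((-((a : ℤ) - 3 - j) : ℤ) : ℝ) * log 3| * P
      ≤ 2 ^ 21 := by
    rw [← abs_of_pos hP0, ← abs_mul]
    push_cast at hrel ⊢
    rw [abs_le]
    constructor <;> linarith [hrel.1, hrel.2, hij'.1, hij'.2]
  generalize |(((n : ℤ) - i : ℤ) : ℝ) * log goldenRatio + ((-((a : ℤ) - 3 - j) : ℤ) : ℝ) * log 3| = Y
    at *
  have h1 : (1 / 2 : ℝ) < S.q1 * Y := by linarith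
  have h2 : (S.q1 : ℝ) * Y * P ≤ S.q1 * 2 ^ 21 := by
    rw [mul_assoc]; gcongr
  have h3 : 1 / 2 * P < S.q1 * Y * P := mul_lt_mul_of_pos_right h1 hP0
  linarith

/-- `F` is the fold over the list `L`. -/
def IsFold (F : Fold) (L : List ℕ) : Prop := ∀ f acc, F f acc = L.foldl f acc

/-- A successful comparison rules out every relation with `NA < n ≤ X`. -/
theorem OK.no_rel (hS : S.OK) {FA FB : Fold} {LA LB : List ℕ} (hA : IsFold FA LA)
    (hB : IsFold FB LB) (hc : S.check FA FB = true) {n a zu zv : ℕ} (hv : S.Vals n a zu zv)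
    (hn : n ≤ S.X) (hnA : S.NA < n) (hu : zu ∈ LA) (hz : zv ∈ LB) : False := by
  have h16 : zv ≤ 16 * S.l3 := by
    have h1 := hv.hv
    have h2 := abs_le.1 hS.l3_close
    have h3 := log_bounds.2.2.1
    have hP20 := hS.pow_ge
    have : (zv : ℝ) ≤ 16 * S.l3 := by
      generalize (2 : ℝ) ^ S.p = P at *
      nlinarith
    exact_mod_cast this
  obtain ⟨i, hi, j, hij⟩ := pairCheck_sound hA hB hS.hM hS.hT (Nat.eq_of_beq_eq_true hc) zu zv hu hz
    h16 (hS.near hv hn hS.conv1) (hS.near hv hn hS.conv2) (hS.near hv hn hS.conv3)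
  exact hS.exact hv hn hnA hi (by exact_mod_cast hij)

theorem nearMod_symm {c C T a b : ℕ} (h : NearMod c C T a b) : NearMod c C T b a := by
  obtain ⟨k, hk⟩ := h
  refine ⟨-k, ?_⟩
  rw [← abs_neg]
  convert hk using 2
  ring

theorem OK.no_rel_flip (hS : S.OK) {FA FB : Fold} {LA LB : List ℕ} (hA : IsFold FA LA)
    (hB : IsFold FB LB) (hc : S.checkFlip FA FB = true) {n a zu zv : ℕ} (hv : S.Vals n a zu zv)
    (hn : n ≤ S.X) (hnA : S.NA < n) (hu : zu ∈ LB) (hz : zv ∈ LA) : False := by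
  have h2 := abs_le.1 hS.l3_close
  have h2' := abs_le.1 hS.l1_close
  obtain ⟨h4, h4', h3, _⟩ := log_bounds
  have hP20 := hS.pow_ge
  have h16 : zu ≤ 16 * S.l3 := by
    have h1 := hv.hu
    have : (zu : ℝ) ≤ 16 * S.l3 := by
      generalize (2 : ℝ) ^ S.p = P at *
      nlinarith
    exact_mod_cast this
  have hl : S.l1 ≤ S.l3 := by
    have : (S.l1 : ℝ) ≤ S.l3 := by
      generalize (2 : ℝ) ^ S.p = P at *
      nlinarith
    exact_mod_cast this
  obtain ⟨i, hi, j, hij⟩ := pairCheck_sound hA hB hS.hM hS.hT (Nat.eq_of_beq_eq_true hc) zv zu hz hu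
    h16 (nearMod_symm (hS.near hv hn hS.conv1)) (nearMod_symm (hS.near hv hn hS.conv2))
    (nearMod_symm (hS.near hv hn hS.conv3))
  refine hS.exact hv hn hnA (j := i - j) hi ?_
  rw [← abs_neg]
  rw [Nat.cast_sub hl] at hij
  have e : -((zu : ℤ) + i * S.l1 - zv - (i - j) * S.l3) = zv + i * ((S.l3 : ℤ) - S.l1) - zu - j * S.l3 := by
    ring
  rw [e]
  exact_mod_cast hij

end Stage

end

/-! ### Fixed-point values of both sides -/

section

namespace Stage

/-- The list behind `uF1`. -/
def uL1 (S : Stage) : List ℕ := rowL false S.p (2 ^ S.p) S.r S.kn 0 (S.NX - 1) S.r 2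

/-- The list behind `uF2`. -/
def uL2 (S : Stage) : List ℕ :=
  famL false false S.p (2 ^ S.p) S.r S.kn S.NX 0 (S.NX - 2) (2 ^ S.p - S.r - 1)
    (2 ^ S.p - S.r - 1) 2

/-- The list behind `vRow`. -/
def vRowL (S : Stage) (d : ℕ) (s : Bool) (a : ℕ) : List ℕ :=
  rowL s S.p (2 ^ S.p) (2 ^ S.p / 3) S.kn3 (S.base d) S.NH (2 ^ S.p * a / d) 1

/-- The list behind `vFam`. -/
def vFamL (S : Stage) (d : ℕ) (s1 : Bool) (a1 : ℕ) (s2 : Bool) (a2 : ℕ) : List ℕ :=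
  famL s1 s2 S.p (2 ^ S.p) (2 ^ S.p / 3) S.kn3 S.NH (S.base d) (S.NH - 1)
    (2 ^ S.p * a1 / (3 * d)) (2 ^ S.p * a2 / (3 * d)) 1

/-- The list behind `vF1`. -/
def vL1 (S : Stage) : List ℕ :=
  S.vRowL 1 true 1 ++ (S.vRowL 1 false 1 ++ (S.vRowL 2 true 2 ++ S.vRowL 2 true 1))

/-- The list behind `vF2`. -/
def vL2 (S : Stage) : List ℕ :=
  S.vFamL 1 true 1 false 1 ++ (S.vFamL 1 true 1 false 2 ++ (S.vFamL 1 false 1 true 2 ++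
  (S.vFamL 1 false 1 true 1 ++ (S.vFamL 2 true 2 false 1 ++ (S.vFamL 2 true 2 false 2 ++
  (S.vFamL 2 true 1 true 1 ++ S.vFamL 2 true 1 false 1))))))

theorem IsFold.seq {F G : Fold} {L K : List ℕ} (h1 : IsFold F L) (h2 : IsFold G K) :
    IsFold (seqF F G) (L ++ K) := fun f acc => by
  rw [seqF, h2, h1, List.foldl_append]

theorem uF0_fold : IsFold uF0 [0] := fun _ _ => rfl
theorem uF1_fold (S : Stage) : IsFold S.uF1 S.uL1 := fun _ _ => rowF_eq ..
theorem uF2_fold (S : Stage) : IsFold S.uF2 S.uL2 := fun _ _ => famF_eq ..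
theorem vF0_fold (S : Stage) : IsFold S.vF0 [S.b1, S.b2] := fun _ _ => rfl
theorem vRow_fold (S : Stage) (d : ℕ) (s : Bool) (a : ℕ) : IsFold (S.vRow d s a) (S.vRowL d s a) :=
  fun _ _ => rowF_eq ..
theorem vFam_fold (S : Stage) (d : ℕ) (s1 : Bool) (a1 : ℕ) (s2 : Bool) (a2 : ℕ) :
    IsFold (S.vFam d s1 a1 s2 a2) (S.vFamL d s1 a1 s2 a2) := fun _ _ => famF_eq ..
theorem vF1_fold (S : Stage) : IsFold S.vF1 S.vL1 :=
  .seq (vRow_fold S 1 true 1) (.seq (vRow_fold S 1 false 1)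
    (.seq (vRow_fold S 2 true 2) (vRow_fold S 2 true 1)))
theorem vF2_fold (S : Stage) : IsFold S.vF2 S.vL2 :=
  .seq (vFam_fold S 1 true 1 false 1) (.seq (vFam_fold S 1 true 1 false 2)
  (.seq (vFam_fold S 1 false 1 true 2) (.seq (vFam_fold S 1 false 1 true 1)
  (.seq (vFam_fold S 2 true 2 false 1) (.seq (vFam_fold S 2 true 2 false 2)
  (.seq (vFam_fold S 2 true 1 true 1) (vFam_fold S 2 true 1 false 1)))))))

variable {S : Stage}

theorem goldenInv_le : goldenRatio⁻¹ ≤ (61804 / 100000 : ℝ) := by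
  rw [inv_goldenRatio]
  have h1 : √5 < 2.23607 := by
    rw [Real.sqrt_lt' (by norm_num)]; norm_num
  unfold goldenConj
  linarith

theorem goldenInv_pow_le {k A B : ℕ} (h : 61804 ^ k * A ≤ B * 100000 ^ k) :
    goldenRatio⁻¹ ^ k * A ≤ B := by
  have h' : (61804 ^ k * A : ℝ) ≤ B * 100000 ^ k := by exact_mod_cast h
  calc goldenRatio⁻¹ ^ k * A ≤ (61804 / 100000 : ℝ) ^ k * A := by
        gcongr
        exact goldenInv_le
    _ ≤ B := by
        rw [div_pow, div_mul_eq_mul_div, div_le_iff₀ (by positivity)]; exact h'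

theorem OK.r_close (hS : S.OK) : (S.r : ℝ) ≤ 2 ^ S.p * goldenRatio⁻¹ ∧
    2 ^ S.p * goldenRatio⁻¹ - 1 ≤ S.r := by
  have := goldenInv_floor (by positivity) hS.hr hS.hr'
  push_cast at this
  exact this

theorem OK.kn_ok (hS : S.OK) : goldenRatio⁻¹ ^ S.kn * 2 ^ S.p ≤ 1 := by
  have := goldenInv_pow_le (k := S.kn) (A := 2 ^ S.p) (B := 1) (by rw [one_mul]; exact hS.hkn)
  push_cast at this
  exact this

theorem OKT.NX_ok (hS : S.OKT) : goldenRatio⁻¹ ^ S.NX * (3 * 2 ^ S.p) ≤ 100 := by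
  have := goldenInv_pow_le hS.hNX
  push_cast at this
  exact this

/-- Some member of `L` is close to the Fibonacci side of the logarithmic relation. -/
def UClose (S : Stage) (D2 D3 : ℕ) (L : List ℕ) : Prop :=
  ∃ z ∈ L, |(z : ℝ) - 2 ^ S.p * log (uFac D2 D3)| ≤ 200

/-- Some member of `L` is close to the repdigit side of the logarithmic relation. -/
def VClose (S : Stage) (d e1 e2 : ℤ) (g h : ℕ) (L : List ℕ) : Prop :=
  ∃ z ∈ L, |(z : ℝ) - 2 ^ S.p * (3 * log 3 + log (√5 * vFac d e1 e2 g h / 2))| ≤ 205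

theorem UClose.left {D2 D3 : ℕ} {L K : List ℕ} (h : S.UClose D2 D3 L) : S.UClose D2 D3 (L ++ K) := by
  obtain ⟨z, hz, h⟩ := h
  exact ⟨z, List.mem_append_left _ hz, h⟩

theorem UClose.right {D2 D3 : ℕ} {L K : List ℕ} (h : S.UClose D2 D3 K) : S.UClose D2 D3 (L ++ K) := by
  obtain ⟨z, hz, h⟩ := h
  exact ⟨z, List.mem_append_right _ hz, h⟩

theorem VClose.left {d e1 e2 : ℤ} {g h : ℕ} {L K : List ℕ} (hh : S.VClose d e1 e2 g h L) :
    S.VClose d e1 e2 g h (L ++ K) := by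
  obtain ⟨z, hz, hh⟩ := hh
  exact ⟨z, List.mem_append_left _ hz, hh⟩

theorem VClose.right {d e1 e2 : ℤ} {g h : ℕ} {L K : List ℕ} (hh : S.VClose d e1 e2 g h K) :
    S.VClose d e1 e2 g h (L ++ K) := by
  obtain ⟨z, hz, hh⟩ := hh
  exact ⟨z, List.mem_append_right _ hz, hh⟩

theorem log_trunc {P x y t : ℝ} (hP : 0 < P) (hx : 2 / 3 ≤ x) (hy : 2 / 3 ≤ y)
    (h : |x - y| * (3 / 2 * P) ≤ t) : |P * log x - P * log y| ≤ t := by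
  rw [← mul_sub, abs_mul, abs_of_pos hP]
  have := mul_le_mul_of_nonneg_left (abs_log_sub_le hx hy) hP.le
  linarith

theorem OKT.u_zero (hS : S.OKT) {D2 D3 : ℕ} (hD : D2 ≤ D3) (h : S.NX < D2) : S.UClose D2 D3 [0] := by
  refine ⟨0, by simp, ?_⟩
  have hb := uFac_bounds D2 D3
  have hρ := goldenInv_pos
  have hlt := goldenInv_lt
  have h2 : goldenRatio⁻¹ ^ D2 ≤ goldenRatio⁻¹ ^ S.NX := pow_le_pow_of_le_one hρ.le (by linarith) h.le
  have h3 : goldenRatio⁻¹ ^ D3 ≤ goldenRatio⁻¹ ^ S.NX :=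
    pow_le_pow_of_le_one hρ.le (by linarith) (h.le.trans hD)
  have hP : (0 : ℝ) < 2 ^ S.p := by positivity
  have h0 := hS.NX_ok
  have := log_trunc (x := 1) (y := uFac D2 D3) (t := 100) hP (by norm_num) (by linarith) (by
    rw [abs_sub_comm, abs_of_nonneg (by linarith)]
    unfold uFac
    nlinarith)
  rw [log_one, mul_zero] at this
  push_cast
  linarith

theorem OKT.u_one (hS : S.OKT) {D2 D3 : ℕ} (h2 : 2 ≤ D2) (hD : D2 ≤ S.NX) (h : S.NX < D3) :
    S.UClose D2 D3 S.uL1 := by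
  have hρ := goldenInv_pos
  have hlt := goldenInv_lt
  obtain ⟨r1, r2⟩ := hS.r_close
  have hρ2 : goldenRatio⁻¹ ^ 2 ≤ 3 / 5 := by nlinarith
  obtain ⟨z, hz, hc⟩ := rowL_close false S.p S.r S.kn 0 goldenRatio⁻¹ hρ hlt.le r1 r2 hS.kn_ok
    (by linarith [hS.hp]) (by simp) (S.NX - 1) S.r 2 goldenRatio⁻¹ hρ.le (by linarith)
    (by rw [← sq]; exact hρ2) (by norm_num) hρ2
    (by rw [abs_le]; constructor <;> linarith) (by simpa using r1) (D2 - 2) (by omega)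
  refine ⟨z, hz, ?_⟩
  rw [← pow_succ', show D2 - 2 + 1 + 1 = D2 by omega] at hc
  have e : (1 : ℝ) + sgnR false * goldenRatio⁻¹ ^ D2 = 1 + goldenRatio⁻¹ ^ D2 := by simp [sgnR]
  rw [e] at hc
  have h3 : goldenRatio⁻¹ ^ D3 ≤ goldenRatio⁻¹ ^ S.NX := pow_le_pow_of_le_one hρ.le (by linarith) h.le
  have hP : (0 : ℝ) < 2 ^ S.p := by positivity
  have h0 := hS.NX_ok
  have hb := uFac_bounds D2 D3
  have p2 := pow_pos hρ D2
  have p3 := pow_pos hρ D3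
  have := log_trunc (x := 1 + goldenRatio⁻¹ ^ D2) (y := uFac D2 D3) (t := 100) hP (by linarith)
    (by linarith) (by
    unfold uFac
    rw [show 1 + goldenRatio⁻¹ ^ D2 - (1 + goldenRatio⁻¹ ^ D2 + goldenRatio⁻¹ ^ D3)
      = -goldenRatio⁻¹ ^ D3 by ring, abs_neg, abs_of_pos p3]
    nlinarith)
  push_cast at hc
  rw [abs_le] at *
  constructor <;> linarith

theorem OK.u_two (hS : S.OK) {D2 D3 : ℕ} (h2 : 2 ≤ D2) (hD : D2 < D3) (h : D3 ≤ S.NX) :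
    S.UClose D2 D3 S.uL2 := by
  have hρ := goldenInv_pos
  have hlt := goldenInv_lt
  obtain ⟨r1, r2⟩ := hS.r_close
  have hρ2 : goldenRatio⁻¹ ^ 2 ≤ 3 / 5 := by nlinarith
  have hP := hS.pow_ge
  have hrl : S.r + 1 ≤ 2 ^ S.p := by
    have : (S.r : ℝ) + 1 ≤ 2 ^ S.p := by nlinarith
    exact_mod_cast this
  have hw : ((2 ^ S.p - S.r - 1 : ℕ) : ℝ) = 2 ^ S.p - S.r - 1 := by
    rw [Nat.sub_sub, Nat.cast_sub hrl]; push_cast; ring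
  have e2 : (2 : ℝ) ^ S.p * (1 * goldenRatio⁻¹ ^ 2) = 2 ^ S.p - 2 ^ S.p * goldenRatio⁻¹ := by
    linear_combination (-(2 : ℝ) ^ S.p) * goldenInv_sq
  have w1 : |((2 ^ S.p - S.r - 1 : ℕ) : ℝ) - 2 ^ S.p * (1 * goldenRatio⁻¹ ^ 2)| ≤ 5 := by
    rw [hw, e2, abs_le]; constructor <;> linarith
  have w2 : ((2 ^ S.p - S.r - 1 : ℕ) : ℝ) ≤ 2 ^ S.p * (1 * goldenRatio⁻¹ ^ 2) := by
    rw [hw, e2]; linarith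
  obtain ⟨z, hz, hc⟩ := famL_close false false S.p S.r S.kn S.NX 0 goldenRatio⁻¹ 1 1 hρ hlt.le r1 r2
    hS.kn_ok (by linarith [hS.hp]) (by simp) (by norm_num) le_rfl (by norm_num) (by linarith)
    (S.NX - 2) _ _ 2 (by norm_num) (by simp) hρ2 w1 w2 w1 w2 (D2 - 2) D3 (by omega) (by omega) h
  refine ⟨z, hz, ?_⟩
  rw [show 2 + (D2 - 2) = D2 by omega] at hc
  have e : (1 : ℝ) + sgnR false * (1 * goldenRatio⁻¹ ^ D2) + sgnR false * (1 * goldenRatio⁻¹ ^ D3)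
    = uFac D2 D3 := by simp [sgnR, uFac]
  rw [e] at hc
  push_cast at hc
  rw [zero_add] at hc
  linarith

/-- `d * (1 - ...)` splits off the fixed-point base value. -/
theorem OK.base_close (hS : S.OK) {d : ℕ} (hd : d = 1 ∨ d = 2) {t : ℝ} (ht : 0 < t) :
    |(S.base d : ℝ) + 2 ^ S.p * log t - 2 ^ S.p * (3 * log 3 + log (√5 * (d * t) / 2))| ≤ 2 := by
  have hd0 : (d : ℝ) ≠ 0 := by rcases hd with rfl | rfl <;> norm_num
  rw [log_div (by positivity) (by norm_num), log_mul (by positivity) (by positivity),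
    log_mul hd0 ht.ne', log_sqrt (by norm_num)]
  rcases hd with rfl | rfl
  · have := hS.b1_close
    simp only [base, if_true, Nat.cast_one, log_one]
    convert this using 2; ring
  · have := hS.b2_close
    simp only [base, Nat.cast_ofNat]
    rw [if_neg (by norm_num)]
    convert this using 2; ring

theorem OK.base_ge (hS : S.OK) {d : ℕ} (hd : d = 1 ∨ d = 2) : 3 * 2 ^ S.p ≤ S.base d := by
  have h := hS.base_close hd one_pos
  have hd1 : (1 : ℝ) ≤ d := by rcases hd with rfl | rfl <;> norm_num
  have h3 := log_bounds.2.2.1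
  have h1 : 0 ≤ log (√5 * (d * 1) / 2) := by
    apply log_nonneg
    have := sqrt_five_bounds.1
    nlinarith
  have hP := hS.pow_ge
  rw [log_one, mul_zero, add_zero, abs_le] at h
  have : (3 : ℝ) * 2 ^ S.p ≤ S.base d := by
    generalize (2 : ℝ) ^ S.p = P at *
    nlinarith
  exact_mod_cast this

theorem nat_div_close (p a d : ℕ) (hd : 0 < d) :
    ((2 ^ p * a / d : ℕ) : ℝ) ≤ 2 ^ p * (a / d) ∧ 2 ^ p * ((a : ℝ) / d) - 1 ≤ (2 ^ p * a / d : ℕ) := by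
  have hd0 : (0 : ℝ) < d := by exact_mod_cast hd
  constructor
  · refine Nat.cast_div_le.trans (le_of_eq ?_)
    push_cast; ring
  · have h := Nat.lt_div_mul_add hd (a := 2 ^ p * a)
    have h' : (2 : ℝ) ^ p * a < (2 ^ p * a / d : ℕ) * d + d := by exact_mod_cast h
    rw [← mul_div_assoc, sub_le_iff_le_add, div_le_iff₀ hd0]
    linarith

theorem OK.third_close (hS : S.OK) : ((2 ^ S.p / 3 : ℕ) : ℝ) ≤ 2 ^ S.p * (1 / 3) ∧
    2 ^ S.p * (1 / 3 : ℝ) - 1 ≤ (2 ^ S.p / 3 : ℕ) ∧ (1 / 3 : ℝ) ^ S.kn3 * 2 ^ S.p ≤ 1 := by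
  have h := nat_div_close S.p 1 3 (by norm_num)
  rw [mul_one, Nat.cast_one, Nat.cast_ofNat] at h
  refine ⟨h.1, h.2, ?_⟩
  have h3 : (2 : ℝ) ^ S.p ≤ 3 ^ S.kn3 := by exact_mod_cast hS.hkn3
  rw [div_pow, one_pow, div_mul_eq_mul_div, one_mul, div_le_one (by positivity)]
  exact h3

theorem OK.row_close (hS : S.OK) {d a : ℕ} {s : Bool} (hd : d = 1 ∨ d = 2) (ha : a ≤ d) {g : ℕ}
    (hg : 1 ≤ g) (hgN : g ≤ S.NH) (hpos : 0 < 1 + sgnR s * (a / d * (1 / 3 : ℝ) ^ g)) :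
    ∃ z ∈ S.vRowL d s a, |(z : ℝ) - 2 ^ S.p * (3 * log 3
      + log (√5 * (d * (1 + sgnR s * (a / d * (1 / 3 : ℝ) ^ g))) / 2))| ≤ 52 := by
  obtain ⟨r1, r2, r3⟩ := hS.third_close
  have hd0 : 0 < d := by omega
  have hd0' : (0 : ℝ) < d := by exact_mod_cast hd0
  obtain ⟨w1, w2⟩ := nat_div_close S.p a d hd0
  have had : (a : ℝ) / d ≤ 1 := by rw [div_le_one hd0']; exact_mod_cast ha
  have hP := hS.pow_ge
  obtain ⟨z, hz, hc⟩ := rowL_close s S.p (2 ^ S.p / 3) S.kn3 (S.base d) (1 / 3) (by norm_num)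
    (by norm_num) r1 r2 r3 (by linarith [hS.hp]) (fun _ => by linarith [hS.base_ge hd])
    S.NH (2 ^ S.p * a / d) 1 (a / d) (by positivity) had (by linarith) le_rfl (by norm_num)
    (by rw [abs_le]; constructor <;> linarith)
    (by rw [Nat.sub_self, pow_zero]; exact w1.trans (by gcongr)) (g - 1) (by omega)
  refine ⟨z, hz, ?_⟩
  rw [Nat.sub_add_cancel hg] at hc
  have := hS.base_close hd hpos
  rw [abs_le] at *
  constructor <;> linarith

theorem OK.fam_close (hS : S.OK) {d a1 a2 : ℕ} {s1 s2 : Bool} (hd : d = 1 ∨ d = 2) (ha1 : a1 ≤ d)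
    (ha2 : a2 ≤ 2 * d) {g h : ℕ} (hg : 1 ≤ g) (hgh : g < h) (hN : h ≤ S.NH)
    (hpos : 0 < 1 + sgnR s1 * (a1 / d * (1 / 3 : ℝ) ^ g) + sgnR s2 * (a2 / d * (1 / 3 : ℝ) ^ h)) :
    ∃ z ∈ S.vFamL d s1 a1 s2 a2, |(z : ℝ) - 2 ^ S.p * (3 * log 3
      + log (√5 * (d * (1 + sgnR s1 * (a1 / d * (1 / 3 : ℝ) ^ g)
        + sgnR s2 * (a2 / d * (1 / 3 : ℝ) ^ h))) / 2))| ≤ 102 := by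
  obtain ⟨r1, r2, r3⟩ := hS.third_close
  have hd0 : 0 < d := by omega
  have hd0' : (0 : ℝ) < d := by exact_mod_cast hd0
  obtain ⟨w1, w2⟩ := nat_div_close S.p a1 (3 * d) (by omega)
  obtain ⟨v1, v2⟩ := nat_div_close S.p a2 (3 * d) (by omega)
  have ew : ∀ a : ℕ, (2 : ℝ) ^ S.p * ((a : ℝ) / (3 * d : ℕ)) = 2 ^ S.p * (a / d * (1 / 3) ^ 1) := by
    intro a; push_cast; field_simp
  rw [ew] at w1 w2 v1 v2
  have had : (a1 : ℝ) / d ≤ 1 := by rw [div_le_one hd0']; exact_mod_cast ha1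
  have had2 : (a2 : ℝ) / d ≤ 2 := by rw [div_le_iff₀ hd0']; exact_mod_cast ha2
  obtain ⟨z, hz, hc⟩ := famL_close s1 s2 S.p (2 ^ S.p / 3) S.kn3 S.NH (S.base d) (1 / 3) (a1 / d)
    (a2 / d) (by norm_num)
    (by norm_num) r1 r2 r3 (by linarith [hS.hp]) (fun _ => hS.base_ge hd) (by positivity) had
    (by positivity) (by linarith) (S.NH - 1) (2 ^ S.p * a1 / (3 * d)) (2 ^ S.p * a2 / (3 * d)) 1
    le_rfl (fun _ => by linarith) (by norm_num) (by rw [abs_le]; constructor <;> linarith) w1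
    (by rw [abs_le]; constructor <;> linarith) v1 (g - 1) h (by omega) (by omega) hN
  refine ⟨z, hz, ?_⟩
  rw [Nat.add_sub_cancel' hg] at hc
  have := hS.base_close hd hpos
  rw [abs_le] at *
  constructor <;> linarith

theorem OKT.NH_ok (hS : S.OKT) : (1 / 3 : ℝ) ^ S.NH * (2 * 2 ^ S.p) ≤ 100 := by
  have h3 : (2 * 2 ^ S.p : ℝ) ≤ 100 * 3 ^ S.NH := by exact_mod_cast hS.hNH
  rw [div_pow, one_pow, div_mul_eq_mul_div, one_mul, div_le_iff₀ (by positivity)]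
  exact h3

theorem VClose.of_trunc {d e1 e2 : ℤ} {g h z : ℕ} {L : List ℕ} {t : ℝ} (hz : z ∈ L)
    (hc : |(z : ℝ) - 2 ^ S.p * (3 * log 3 + log (√5 * t / 2))| ≤ 102) (ht : 2 / 3 ≤ t)
    (hv : 2 / 3 ≤ vFac d e1 e2 g h) (htv : |t - vFac d e1 e2 g h| * (3 / 2 * 2 ^ S.p) ≤ 100) :
    S.VClose d e1 e2 g h L := by
  refine ⟨z, hz, ?_⟩
  have h1 := log_trunc (by positivity) ht hv htv
  have h5 : (0 : ℝ) < √5 := by positivity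
  have e : ∀ x : ℝ, 2 / 3 ≤ x → log (√5 * x / 2) = log √5 + log x - log 2 := fun x hx => by
    rw [log_div (by positivity) (by norm_num), log_mul h5.ne' (by linarith)]
  rw [e _ ht] at hc
  rw [e _ hv]
  rw [abs_le] at *
  constructor <;> linarith

theorem OKT.v_zero (hS : S.OKT) {d e1 e2 : ℤ} (hc : Combo d e1 e2) {g h : ℕ} (hg : 1 ≤ g)
    (hgh : g < h) (hN : S.NH < g) : S.VClose d e1 e2 g h [S.b1, S.b2] := by
  have hv := vFac_bounds hc hg hgh
  obtain ⟨a1, a2⟩ := combo_abs hc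
  have hx : (1 / 3 : ℝ) ^ g ≤ 1 / 3 * (1 / 3) ^ S.NH := by
    rw [← pow_succ']; exact pow_le_pow_of_le_one (by norm_num) (by norm_num) hN
  have hy : 3 * (1 / 3 : ℝ) ^ h ≤ (1 / 3) ^ g := third_pow_le hgh
  have hx0 : (0 : ℝ) < (1 / 3) ^ g := by positivity
  have hy0 : (0 : ℝ) < (1 / 3) ^ h := by positivity
  have hn := hS.NH_ok
  have hP := hS.pow_ge
  have htv : |(d : ℝ) - vFac d e1 e2 g h| * (3 / 2 * 2 ^ S.p) ≤ 100 := by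
    have e : (d : ℝ) - vFac d e1 e2 g h = e1 * (1 / 3 : ℝ) ^ g + e2 * (1 / 3 : ℝ) ^ h := by
      unfold vFac; ring
    have b : |(d : ℝ) - vFac d e1 e2 g h| ≤ 4 / 3 * (1 / 3 : ℝ) ^ S.NH := by
      rw [e]
      refine (abs_add_le _ _).trans ?_
      rw [abs_mul, abs_mul, abs_of_pos hx0, abs_of_pos hy0]
      nlinarith
    have h0 : (0 : ℝ) ≤ 3 / 2 * 2 ^ S.p := by positivity
    have := mul_le_mul_of_nonneg_right b h0
    linarith
  have key : ∀ k : ℕ, (k = 1 ∨ k = 2) → d = k → S.base k ∈ [S.b1, S.b2] →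
      S.VClose d e1 e2 g h [S.b1, S.b2] := by
    intro k hk hdk hm
    have hdk' : (d : ℝ) = k := by rw [hdk]; rfl
    have hb := hS.base_close hk one_pos
    rw [log_one, mul_zero, add_zero, mul_one, ← hdk'] at hb
    refine VClose.of_trunc hm (hb.trans (by norm_num)) ?_ hv.1 htv
    rw [hdk']; rcases hk with rfl | rfl <;> norm_num
  have hd : d = 1 ∨ d = 2 := by
    rcases hc with h | h | h | h | h | h | h | h <;> simp [h.1]
  rcases hd with rfl | rfl
  · exact key 1 (Or.inl rfl) rfl (by simp [base])
  · exact key 2 (Or.inr rfl) rfl (by simp [base])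

theorem OKT.v_row (hS : S.OKT) {d e1 e2 : ℤ} (hc : Combo d e1 e2) {k a : ℕ} {s : Bool}
    (hk : k = 1 ∨ k = 2) (ha : a ≤ k) (hdk : d = k) (he : (e1 : ℝ) = -(sgnR s * a)) {g h : ℕ}
    (hg : 1 ≤ g) (hgN : g ≤ S.NH) (hgh : g < h) (hN : S.NH < h) :
    S.VClose d e1 e2 g h (S.vRowL k s a) := by
  have hv := vFac_bounds hc hg hgh
  obtain ⟨_, a2⟩ := combo_abs hc
  have hy : (1 / 3 : ℝ) ^ h ≤ 1 / 3 * (1 / 3) ^ S.NH := by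
    rw [← pow_succ']; exact pow_le_pow_of_le_one (by norm_num) (by norm_num) hN
  have hy0 : (0 : ℝ) < (1 / 3) ^ h := by positivity
  have hn := hS.NH_ok
  have ht : (2 : ℝ) / 3 ≤ d - e1 * (1 / 3 : ℝ) ^ g := by
    have := (vFac_ge hc (x := (1 / 3 : ℝ) ^ g) (y := 0) (by positivity) (third_pow_le' hg) le_rfl
      (by rw [mul_zero]; positivity)).1
    linarith
  have hk0 : (0 : ℝ) < k := by rcases hk with rfl | rfl <;> norm_num
  have e : (k : ℝ) * (1 + sgnR s * (a / k * (1 / 3 : ℝ) ^ g)) = d - e1 * (1 / 3 : ℝ) ^ g := by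
    rw [he, hdk]; push_cast; field_simp; ring
  obtain ⟨z, hz, hcl⟩ := hS.row_close (s := s) hk ha hg hgN
    (by refine pos_of_mul_pos_right (a := (k : ℝ)) ?_ hk0.le; rw [e]; linarith)
  rw [e] at hcl
  refine VClose.of_trunc hz (hcl.trans (by norm_num)) ht hv.1 ?_
  have e' : (d : ℝ) - e1 * (1 / 3 : ℝ) ^ g - vFac d e1 e2 g h = e2 * (1 / 3 : ℝ) ^ h := by
    unfold vFac; ring
  rw [e', abs_mul, abs_of_pos hy0]
  have hP0 : (0 : ℝ) < 2 ^ S.p := by positivity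
  have b : |(e2 : ℝ)| * (1 / 3 : ℝ) ^ h ≤ 2 * (1 / 3 * (1 / 3) ^ S.NH) := by gcongr
  have := mul_le_mul_of_nonneg_right b (show (0 : ℝ) ≤ 3 / 2 * 2 ^ S.p by positivity)
  linarith

theorem OKT.v_one (hS : S.OKT) {d e1 e2 : ℤ} (hc : Combo d e1 e2) {g h : ℕ} (hg : 1 ≤ g)
    (hgN : g ≤ S.NH) (hgh : g < h) (hN : S.NH < h) : S.VClose d e1 e2 g h S.vL1 := by
  have hrow : ∀ (k a : ℕ) (s : Bool), (k = 1 ∨ k = 2) → a ≤ k → d = k →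
      (e1 : ℝ) = -(sgnR s * a) → S.VClose d e1 e2 g h (S.vRowL k s a) := fun k a s hk ha hd he =>
    hS.v_row hc hk ha hd he hg hgN hgh hN
  unfold vL1
  rcases hc with ⟨h1, h2, _⟩ | ⟨h1, h2, _⟩ | ⟨h1, h2, _⟩ | ⟨h1, h2, _⟩ | ⟨h1, h2, _⟩ |
    ⟨h1, h2, _⟩ | ⟨h1, h2, _⟩ | ⟨h1, h2, _⟩
  iterate 2
    exact (hrow 1 1 true (by norm_num) (by norm_num) (by simp [h1]) (by simp [h2, sgnR])).left
  iterate 2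
    exact (hrow 1 1 false (by norm_num) (by norm_num) (by simp [h1])
      (by simp [h2, sgnR])).left.right
  iterate 2
    exact (hrow 2 2 true (by norm_num) (by norm_num) (by simp [h1])
      (by simp [h2, sgnR])).left.right.right
  iterate 2
    exact (hrow 2 1 true (by norm_num) (by norm_num) (by simp [h1])
      (by simp [h2, sgnR])).right.right.right

/-- The members of a family of repdigit side values belonging to one coefficient triple. -/
theorem OK.v_fam (hS : S.OK) {d e1 e2 : ℤ} (hc : Combo d e1 e2) {k a1 a2 : ℕ} {s1 s2 : Bool}
    (hk : k = 1 ∨ k = 2) (ha1 : a1 ≤ k) (ha2 : a2 ≤ 2 * k) (hdk : d = k)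
    (he1 : (e1 : ℝ) = -(sgnR s1 * a1)) (he2 : (e2 : ℝ) = -(sgnR s2 * a2)) {g h : ℕ}
    (hg : 1 ≤ g) (hgh : g < h) (hN : h ≤ S.NH) :
    S.VClose d e1 e2 g h (S.vFamL k s1 a1 s2 a2) := by
  have hv := vFac_bounds hc hg hgh
  have hk0 : (0 : ℝ) < k := by rcases hk with rfl | rfl <;> norm_num
  have e : (k : ℝ) * (1 + sgnR s1 * (a1 / k * (1 / 3 : ℝ) ^ g) + sgnR s2 * (a2 / k * (1 / 3 : ℝ) ^ h))
      = vFac d e1 e2 g h := by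
    unfold vFac
    rw [he1, he2, hdk]; push_cast; field_simp; ring
  obtain ⟨z, hz, hcl⟩ := hS.fam_close (s1 := s1) (s2 := s2) hk ha1 ha2 hg hgh hN
    (by refine pos_of_mul_pos_right (a := (k : ℝ)) ?_ hk0.le; rw [e]; linarith [hv.1])
  rw [e] at hcl
  exact ⟨z, hz, hcl.trans (by norm_num)⟩

theorem OK.v_two (hS : S.OK) {d e1 e2 : ℤ} (hc : Combo d e1 e2) {g h : ℕ} (hg : 1 ≤ g)
    (hgh : g < h) (hN : h ≤ S.NH) : S.VClose d e1 e2 g h S.vL2 := by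
  have hfam : ∀ (k : ℕ) (s1 : Bool) (a1 : ℕ) (s2 : Bool) (a2 : ℕ), (k = 1 ∨ k = 2) → a1 ≤ k →
      a2 ≤ 2 * k → d = k → (e1 : ℝ) = -(sgnR s1 * a1) → (e2 : ℝ) = -(sgnR s2 * a2) →
      S.VClose d e1 e2 g h (S.vFamL k s1 a1 s2 a2) := fun k s1 a1 s2 a2 hk ha1 ha2 hd he1 he2 =>
    hS.v_fam hc hk ha1 ha2 hd he1 he2 hg hgh hN
  unfold vL2
  rcases hc with ⟨h1, h2, h3⟩ | ⟨h1, h2, h3⟩ | ⟨h1, h2, h3⟩ | ⟨h1, h2, h3⟩ | ⟨h1, h2, h3⟩ |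
    ⟨h1, h2, h3⟩ | ⟨h1, h2, h3⟩ | ⟨h1, h2, h3⟩
  · exact (hfam 1 true 1 false 1 (by simp) (by simp) (by simp) (by simp [h1])
      (by simp [h2, sgnR]) (by simp [h3, sgnR])).left
  · exact (hfam 1 true 1 false 2 (by simp) (by simp) (by simp) (by simp [h1])
      (by simp [h2, sgnR]) (by simp [h3, sgnR])).left.right
  · exact (hfam 1 false 1 true 2 (by simp) (by simp) (by simp) (by simp [h1])
      (by simp [h2, sgnR]) (by simp [h3, sgnR])).left.right.right
  · exact (hfam 1 false 1 true 1 (by simp) (by simp) (by simp) (by simp [h1])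
      (by simp [h2, sgnR]) (by simp [h3, sgnR])).left.right.right.right
  · exact (hfam 2 true 2 false 1 (by simp) (by simp) (by simp) (by simp [h1])
      (by simp [h2, sgnR]) (by simp [h3, sgnR])).left.right.right.right.right
  · exact (hfam 2 true 2 false 2 (by simp) (by simp) (by simp) (by simp [h1])
      (by simp [h2, sgnR]) (by simp [h3, sgnR])).left.right.right.right.right.right
  · exact (hfam 2 true 1 true 1 (by simp) (by simp) (by simp) (by simp [h1])
      (by simp [h2, sgnR]) (by simp [h3, sgnR])).left.right.right.right.right.right.right
  · exact (hfam 2 true 1 false 1 (by simp) (by simp) (by simp) (by simp [h1])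
      (by simp [h2, sgnR]) (by simp [h3, sgnR])).right.right.right.right.right.right.right

section
variable {n a D2 D3 g h : ℕ} {d e1 e2 : ℤ}

/-- Fixed-point values of both sides of a logarithmic relation inherit the relation. -/
theorem OK.vals (hS : S.OK) (H : LRel n a D2 D3 g h d e1 e2) (hn : S.NA < n) {zu zv : ℕ}
    (hu : |(zu : ℝ) - 2 ^ S.p * log (uFac D2 D3)| ≤ 200)
    (hv : |(zv : ℝ) - 2 ^ S.p * (3 * log 3 + log (√5 * vFac d e1 e2 g h / 2))| ≤ 205) :
    S.Vals n a zu zv := by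
  have hP := hS.pow_ge
  have hP0 : (0 : ℝ) < 2 ^ S.p := by positivity
  obtain ⟨u1, u2⟩ := uFac_bounds D2 D3
  obtain ⟨v1, v2⟩ := vFac_bounds H.combo H.hg H.hgh
  have hl3 := log_bounds.2.2.2
  have hu3 : log (uFac D2 D3) ≤ log 3 := log_le_log (by linarith) u2
  have h5 := sqrt_five_bounds
  have hvl : log (√5 * vFac d e1 e2 g h / 2) ≤ log 3 + 0.12 := by
    have hpos : 0 < √5 * vFac d e1 e2 g h / 2 := by positivity
    have := log_le_sub_one_of_pos (show 0 < (√5 * vFac d e1 e2 g h / 2) / 3 by positivity)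
    rw [log_div hpos.ne' (by norm_num)] at this
    nlinarith
  have ha : S.kn3 ≤ a := by
    have h1 := H.size.1
    have h2 : (100 * (S.kn3 + 2) : ℝ) ≤ 43 * S.NA := by exact_mod_cast hS.hNA
    have h3 : (S.NA : ℝ) + 1 ≤ n := by exact_mod_cast hn
    have : (S.kn3 : ℝ) ≤ a := by norm_num at h1; linarith
    exact_mod_cast this
  have hsmall : (1 / 3 : ℝ) ^ a * 2 ^ S.p ≤ 1 := by
    refine le_trans ?_ hS.third_close.2.2
    gcongr ?_ * _
    exact pow_le_pow_of_le_one (by norm_num) (by norm_num) ha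
  have hm : |n * log goldenRatio + log (uFac D2 D3) - a * log 3
      - log (√5 * vFac d e1 e2 g h / 2)| * 2 ^ S.p ≤ 50 := by
    refine (mul_le_mul_of_nonneg_right H.main hP0.le).trans ?_
    linarith
  rw [← abs_of_pos hP0, ← abs_mul] at hm
  refine ⟨?_, ?_, ?_⟩
  · push_cast
    rw [abs_le] at *
    constructor <;> linarith [hm.1, hm.2]
  · have := (abs_le.1 hu).2
    nlinarith
  · have := (abs_le.1 hv).2
    nlinarith

/-- A successful comparison of lists containing both sides contradicts `NA < n ≤ X`. -/
theorem OK.absurd (hS : S.OK) (H : LRel n a D2 D3 g h d e1 e2) (hX : n ≤ S.X) (hn : S.NA < n)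
    {FA FB : Fold} {LA LB : List ℕ} (hA : IsFold FA LA) (hB : IsFold FB LB)
    (hc : S.check FA FB = true) (hu : S.UClose D2 D3 LA) (hv : S.VClose d e1 e2 g h LB) : False := by
  obtain ⟨zu, hzu, hu⟩ := hu
  obtain ⟨zv, hzv, hv⟩ := hv
  exact hS.no_rel hA hB hc (hS.vals H hn hu hv) hX hn hzu hzv

theorem OK.absurd_flip (hS : S.OK) (H : LRel n a D2 D3 g h d e1 e2) (hX : n ≤ S.X) (hn : S.NA < n)
    {FA FB : Fold} {LA LB : List ℕ} (hA : IsFold FA LA) (hB : IsFold FB LB)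
    (hc : S.checkFlip FA FB = true) (hu : S.UClose D2 D3 LB) (hv : S.VClose d e1 e2 g h LA) :
    False := by
  obtain ⟨zu, hzu, hu⟩ := hu
  obtain ⟨zv, hzv, hv⟩ := hv
  exact hS.no_rel_flip hA hB hc (hS.vals H hn hu hv) hX hn hzu hzv

theorem OKT.u_le_one (hS : S.OKT) (H : LRel n a D2 D3 g h d e1 e2) (h3 : S.NX < D3) :
    S.UClose D2 D3 ([0] ++ S.uL1) := by
  rcases le_or_gt D2 S.NX with h2 | h2
  · exact (hS.u_one H.hD2 h2 h3).right
  · exact (hS.u_zero H.hD h2).left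

theorem OK.lt_of_le (hS : S.OK) (H : LRel n a D2 D3 g h d e1 e2) (hn : S.NA < n) (h3 : D3 ≤ S.NX) :
    D2 < D3 := by
  have := H.hD'
  have := H.hD
  have := hS.hNXA
  omega

theorem OKT.u_le_two (hS : S.OKT) (H : LRel n a D2 D3 g h d e1 e2) (hn : S.NA < n) :
    S.UClose D2 D3 ([0] ++ (S.uL1 ++ S.uL2)) := by
  rcases le_or_gt D3 S.NX with h3 | h3
  · exact (hS.u_two H.hD2 (hS.lt_of_le H hn h3) h3).right.right
  · rcases le_or_gt D2 S.NX with h2 | h2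
    · exact (hS.u_one H.hD2 h2 h3).left.right
    · exact (hS.u_zero H.hD h2).left

theorem OKT.v_le_one (hS : S.OKT) (H : LRel n a D2 D3 g h d e1 e2) (h3 : S.NH < h) :
    S.VClose d e1 e2 g h ([S.b1, S.b2] ++ S.vL1) := by
  rcases le_or_gt g S.NH with h2 | h2
  · exact (hS.v_one H.combo H.hg h2 H.hgh h3).right
  · exact (hS.v_zero H.combo H.hg H.hgh h2).left

theorem OKT.v_le_two (hS : S.OKT) (H : LRel n a D2 D3 g h d e1 e2) :
    S.VClose d e1 e2 g h ([S.b1, S.b2] ++ (S.vL1 ++ S.vL2)) := by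
  rcases le_or_gt h S.NH with h3 | h3
  · exact (hS.v_two H.combo H.hg H.hgh h3).right.right
  · rcases le_or_gt g S.NH with h2 | h2
    · exact (hS.v_one H.combo H.hg h2 H.hgh h3).left.right
    · exact (hS.v_zero H.combo H.hg H.hgh h2).left

end

end Stage

end

/-! ### Consequences of the comparisons for the gaps -/

section

namespace Stage

/-- The checks for all eight families with both repdigit gaps at most `NH`, one at a time. -/
def famCheck (S : Stage) (FA : Fold) : Bool :=
  S.check FA (S.vFam 1 true 1 false 1) && (S.check FA (S.vFam 1 true 1 false 2) &&
  (S.check FA (S.vFam 1 false 1 true 2) && (S.check FA (S.vFam 1 false 1 true 1) &&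
  (S.check FA (S.vFam 2 true 2 false 1) && (S.check FA (S.vFam 2 true 2 false 2) &&
  (S.check FA (S.vFam 2 true 1 true 1) && S.check FA (S.vFam 2 true 1 false 1)))))))

variable {S : Stage} {n a D2 D3 g h : ℕ} {d e1 e2 : ℤ}

theorem VClose.or {L L' : List ℕ} (hv : S.VClose d e1 e2 g h (L ++ L')) :
    S.VClose d e1 e2 g h L ∨ S.VClose d e1 e2 g h L' := by
  obtain ⟨z, hz, hc⟩ := hv
  rcases List.mem_append.1 hz with hz | hz
  · exact .inl ⟨z, hz, hc⟩
  · exact .inr ⟨z, hz, hc⟩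

theorem OK.absurd_fams (hS : S.OK) (H : LRel n a D2 D3 g h d e1 e2) (hX : n ≤ S.X) (hn : S.NA < n)
    {FA : Fold} {LA : List ℕ} (hA : IsFold FA LA) (hc : S.famCheck FA = true)
    (hu : S.UClose D2 D3 LA) (hh : h ≤ S.NH) : False := by
  have hv := hS.v_two H.combo H.hg H.hgh hh
  simp only [famCheck, Bool.and_eq_true] at hc
  obtain ⟨c1, c2, c3, c4, c5, c6, c7, c8⟩ := hc
  unfold vL2 at hv
  rcases hv.or with hv | hv
  · exact hS.absurd H hX hn hA (vFam_fold S _ _ _ _ _) c1 hu hv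
  rcases hv.or with hv | hv
  · exact hS.absurd H hX hn hA (vFam_fold S _ _ _ _ _) c2 hu hv
  rcases hv.or with hv | hv
  · exact hS.absurd H hX hn hA (vFam_fold S _ _ _ _ _) c3 hu hv
  rcases hv.or with hv | hv
  · exact hS.absurd H hX hn hA (vFam_fold S _ _ _ _ _) c4 hu hv
  rcases hv.or with hv | hv
  · exact hS.absurd H hX hn hA (vFam_fold S _ _ _ _ _) c5 hu hv
  rcases hv.or with hv | hv
  · exact hS.absurd H hX hn hA (vFam_fold S _ _ _ _ _) c6 hu hv
  rcases hv.or with hv | hv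
  · exact hS.absurd H hX hn hA (vFam_fold S _ _ _ _ _) c7 hu hv
  · exact hS.absurd H hX hn hA (vFam_fold S _ _ _ _ _) c8 hu hv

theorem u01_fold (S : Stage) : IsFold (seqF uF0 S.uF1) ([0] ++ S.uL1) := .seq uF0_fold S.uF1_fold
theorem u012_fold (S : Stage) :
    IsFold (seqF uF0 (seqF S.uF1 S.uF2)) ([0] ++ (S.uL1 ++ S.uL2)) :=
  .seq uF0_fold (.seq S.uF1_fold S.uF2_fold)
theorem v01_fold (S : Stage) : IsFold (seqF S.vF0 S.vF1) ([S.b1, S.b2] ++ S.vL1) :=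
  .seq S.vF0_fold S.vF1_fold
theorem v012_fold (S : Stage) :
    IsFold (seqF S.vF0 (seqF S.vF1 S.vF2)) ([S.b1, S.b2] ++ (S.vL1 ++ S.vL2)) :=
  .seq S.vF0_fold (.seq S.vF1_fold S.vF2_fold)

section
variable (hS : S.OKT) (H : LRel n a D2 D3 g h d e1 e2) (hX : n ≤ S.X) (hn : S.NA < n)
include hS H hX hn

theorem OKT.gaps_10 (hc : S.check (seqF uF0 S.uF1) S.vF0 = true) : D3 ≤ S.NX ∨ g ≤ S.NH := by
  by_contra! hcon
  exact hS.absurd H hX hn (u01_fold S) (vF0_fold S) hc (hS.u_le_one H hcon.1)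
    (hS.v_zero H.combo H.hg H.hgh hcon.2)

theorem OKT.gaps_01 (hc : S.check uF0 (seqF S.vF0 S.vF1) = true) : D2 ≤ S.NX ∨ h ≤ S.NH := by
  by_contra! hcon
  exact hS.absurd H hX hn uF0_fold (v01_fold S) hc (hS.u_zero H.hD hcon.1)
    (hS.v_le_one H hcon.2)

theorem OKT.gaps_11 (hc : S.check (seqF uF0 S.uF1) (seqF S.vF0 S.vF1) = true) :
    D3 ≤ S.NX ∨ h ≤ S.NH := by
  by_contra! hcon
  exact hS.absurd H hX hn (u01_fold S) (v01_fold S) hc (hS.u_le_one H hcon.1)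
    (hS.v_le_one H hcon.2)

theorem OKT.gaps_20 (hc : S.check (seqF uF0 (seqF S.uF1 S.uF2)) S.vF0 = true) : g ≤ S.NH := by
  by_contra! hcon
  exact hS.absurd H hX hn (u012_fold S) (vF0_fold S) hc (hS.u_le_two H hn)
    (hS.v_zero H.combo H.hg H.hgh hcon)

theorem OKT.gaps_21 (hc : S.check (seqF uF0 (seqF S.uF1 S.uF2)) (seqF S.vF0 S.vF1) = true) :
    h ≤ S.NH := by
  by_contra! hcon
  exact hS.absurd H hX hn (u012_fold S) (v01_fold S) hc (hS.u_le_two H hn) (hS.v_le_one H hcon)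

theorem OKT.gaps_02 (hc : S.checkFlip (seqF S.vF0 (seqF S.vF1 S.vF2)) uF0 = true) :
    D2 ≤ S.NX := by
  by_contra! hcon
  exact hS.absurd_flip H hX hn (v012_fold S) uF0_fold hc (hS.u_zero H.hD hcon) (hS.v_le_two H)

theorem OKT.gaps_12 (hc : S.checkFlip (seqF S.vF0 (seqF S.vF1 S.vF2)) (seqF uF0 S.uF1) = true) :
    D3 ≤ S.NX := by
  by_contra! hcon
  exact hS.absurd_flip H hX hn (v012_fold S) (u01_fold S) hc (hS.u_le_one H hcon) (hS.v_le_two H)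

end

end Stage

section
variable {n a D2 D3 g h : ℕ} {d e1 e2 : ℤ} (H : LRel n a D2 D3 g h d e1 e2) {W X B G G1 G2 G3 : ℕ}
include H

/-- With two gaps at most `G`, three more distinct gaps cannot exist. -/
theorem LRel.chain_three (h1 : D3 ≤ G ∨ g ≤ G) (h2 : D2 ≤ G ∨ h ≤ G) (s1 : StepOK W X B G G1)
    (s2 : StepOK W X B G1 G2) (s3 : StepOK W X B G2 G3) (hX : n ≤ X) : n < B := by
  by_contra! hB
  have := gap_step_num H s1 hB hX
  have := gap_step_num H s2 hB hX
  have := gap_step_num H s3 hB hX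
  have := H.hD
  have := H.hgh
  clear s1 s2 s3
  omega

/-- With three gaps at most `G`, two more distinct gaps cannot exist. -/
theorem LRel.chain_two (h1 : D3 ≤ G ∨ h ≤ G) (h2 : D2 ≤ G) (h3 : g ≤ G)
    (s1 : StepOK W X B G G1) (s2 : StepOK W X B G1 G2) (hX : n ≤ X) : n < B := by
  by_contra! hB
  have := gap_step_num H s1 hB hX
  have := gap_step_num H s2 hB hX
  clear s1 s2
  omega

/-- With all four gaps at most `G`, no larger gap exists. -/
theorem LRel.chain_one (h1 : D3 ≤ G) (h2 : h ≤ G) (s1 : StepOK W X B G G1) (hX : n ≤ X) :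
    n < B := by
  by_contra! hB
  have := gap_step_num H s1 hB hX
  have := H.hD
  have := H.hgh
  clear s1
  omega

end

end

/-! ### Reduction from `2 ^ 455` to `3 * 10 ^ 82` -/

section

set_option maxRecDepth 100000
set_option exponentiation.threshold 3000

open Stage

section
variable {n a D2 D3 g h : ℕ} {d e1 e2 : ℤ}

/-- Reduction data for `n ≤ 2 ^ 455`. -/
def stageTwo : Stage where
  p := 498
  M := 8192
  X := 2 ^ 455
  q1 := 1049193468201294132167007595531414733637890982337775278967978364276541495358266046887843168031382647840415986949991016554159926077278511750839
  m1 := 459565498112032405538934061737956147144602778715191528916321886677603795057653503645722052045954227681228604574313456040888413138000961441597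
  c1 := 2002815918701229442736163293649655416532980383267259371857806553602843938294999182048963156274297045280298302436336057620251211975076813015428321320
  q2 := 11722972590014715864016758401051055812349575296217326432595393567651309901053960218391225571075842837274123231922372933537126778812837153919411
  m2 := 5134871595150071999082391333454387058926664926495628636399119393799998333504450072599699326778494719128879951262243995017748601726168836819594
  c2 := 22378099777947792321614527056467872374657060112467417328863553641786633300139265507679580290272802789907598410776304343967300575589546204934346847253
  q3 := 12772166058216009996183765996582470545987466278555101711563371931927851396412226265279068739107225485114539218872363950091286704890115665670250
  m3 := 5594437093262104404621325395192343206071267705210820165315441280477602128562103576245421378824448946810108555836557451058637014864169798261191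
  c3 := 24380915696649021764350690350117527791190040495734676700721360195389477238434264689728543446547099835187896713212640401587551787564623017949775168572
  T := 31328564329983092280156262014010440525613866559680059744262915153775811434133278011862056433298032614229889136959182444217362064641884874443238290677792
  r := 505766663533623900690156692610633036160722709832579963705489978090387702891963790012959900240050531119183036541602849634638352596494055484714581507277
  l1 := 393798567139666801241338653433833536123098447846173249665354579048735695083633115713031571681741891531911138574654835425815834987569311928199525044517
  l3 := 899046786861368818761343618558587603618541643192826113863630313533549320721393820062296199094201218642000837499387519943119734740588847981610494345363
  b1 := 2788444861219672081222687670639006334520880604738141441386282467544860107685957219651096086872652449515066519795867730559193097353118199727097873068135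
  b2 := 3355680228903326127938046597680820367579390944397264954635550642018637242307116621821971570153140302721294732722927828011809898854496130937411623106062
  kn := 718
  kn3 := 315
  NX := 711
  NH := 311
  NA := 738

theorem stageTwo_ok : stageTwo.OK :=
  ⟨by decide +kernel, by decide +kernel, by decide +kernel, by decide +kernel, by decide +kernel, by decide +kernel,
    by decide +kernel, by decide +kernel, by decide +kernel, by decide +kernel, by decide +kernel, by decide +kernel,
    by decide +kernel, by decide +kernel, by decide +kernel, by decide +kernel, by decide +kernel, by decide +kernel,
    by decide +kernel, by decide +kernel, by decide +kernel, by decide +kernel⟩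

theorem stageTwo_okt : stageTwo.OKT := ⟨stageTwo_ok, by decide +kernel, by decide +kernel⟩

theorem stageTwo_check10 : stageTwo.check
    (seqF uF0 stageTwo.uF1) stageTwo.vF0 = true := by
  decide +kernel

theorem stageTwo_check01 : stageTwo.check
    uF0 (seqF stageTwo.vF0 stageTwo.vF1) = true := by
  decide +kernel

theorem LRel.bound_two (H : LRel n a D2 D3 g h d e1 e2) : n < 3 * 10 ^ 82 := by
  by_contra! hcon
  have hX : n ≤ 2 ^ 455 := H.initial.le
  have hn : stageTwo.NA < n := lt_of_lt_of_le (by decide +kernel) hcon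
  have h1 : D3 ≤ 711 ∨ g ≤ 711 :=
    (stageTwo_okt.gaps_10 H hX hn stageTwo_check10).imp id fun hg => hg.trans (by decide +kernel)
  have h2 : D2 ≤ 711 ∨ h ≤ 711 :=
    (stageTwo_okt.gaps_01 H hX hn stageTwo_check01).imp id fun hg => hg.trans (by decide +kernel)
  have hX' : n < 10 ^ 84 := H.chain_three h1 h2
      (show StepOK 364 (2 ^ 455) (10 ^ 84) (711) (3583 * 10 ^ 26) by decide +kernel)
      (show StepOK 364 (2 ^ 455) (10 ^ 84) (3583 * 10 ^ 26) (1797 * 10 ^ 53) by decide +kernel)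
      (show StepOK 364 (2 ^ 455) (10 ^ 84) (1797 * 10 ^ 53) (9010 * 10 ^ 79) by decide +kernel) hX
  exact absurd hcon (not_le.2 (H.chain_three h1 h2
      (show StepOK 240 (10 ^ 84) (3 * 10 ^ 82) (711) (1027 * 10 ^ 26) by decide +kernel)
      (show StepOK 240 (10 ^ 84) (3 * 10 ^ 82) (1027 * 10 ^ 26) (1476 * 10 ^ 52) by decide +kernel)
      (show StepOK 240 (10 ^ 84) (3 * 10 ^ 82) (1476 * 10 ^ 52) (2122 * 10 ^ 78) by decide +kernel) hX'.le))

end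

end

/-! ### Reduction to `3 * 10 ^ 55` -/

section

set_option maxRecDepth 100000
set_option exponentiation.threshold 3000

open Stage

section
variable {n a D2 D3 g h : ℕ} {d e1 e2 : ℤ}

/-- Reduction data for `n ≤ 3 * 10 ^ 82`. -/
def stageThree : Stage where
  p := 313
  M := 2048
  X := 3 * 10 ^ 82
  q1 := 346427281005071804616066537382399363234947110465762482913432553124054806708522658494841
  m1 := 151741343021922248654332774892804355571666088282474996971480882711579903691949657492651
  c1 := 165324626510214403409963286493847876784066962878732423373485263849104159002618405083159120586
  q2 := 710455749068241030910620119538124623108197954915108827935774548527837361869016729024397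
  m2 := 311192320675467743022726737770515279490590414991979194276008675515851949150601573061406
  c2 := 339049023581436597859366352587798339269484942761063043682833613611110456047220438940878469284
  q3 := 1767338779141553866437306776458648609451343020295980138784981650179729530446556116543635
  m3 := 774125984372857734699786250433834914552846918266433385523498233743283801993152803615463
  c3 := 843422673673087599128695991669444555323036848400858510739152491071325071097059282964916059154
  T := 600703246403198972993771627350617690487246527541629926646125544575201086424789843864523271443981
  r := 10313379591627070194381875692147783775870625612073919976533847367194233441751714508103892837622
  l1 := 8030173592649639746575112597787428505333925443655966098100110500502685316980942406283026693206
  l3 := 18332981297644397281684587141315010819437420172989553787906775131796662997649128275425132907824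
  b1 := 56860786599013287141202235889549608854434000201201530058396479186613099928306807266176697730253
  b2 := 68427609971366204706714794012382056127267443957028693923987150894496678700643828461028851932198
  kn := 451
  kn3 := 198
  NX := 444
  NH := 194
  NA := 466

theorem stageThree_ok : stageThree.OK :=
  ⟨by decide +kernel, by decide +kernel, by decide +kernel, by decide +kernel, by decide +kernel, by decide +kernel,
    by decide +kernel, by decide +kernel, by decide +kernel, by decide +kernel, by decide +kernel, by decide +kernel,
    by decide +kernel, by decide +kernel, by decide +kernel, by decide +kernel, by decide +kernel, by decide +kernel,
    by decide +kernel, by decide +kernel, by decide +kernel, by decide +kernel⟩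

theorem stageThree_okt : stageThree.OKT := ⟨stageThree_ok, by decide +kernel, by decide +kernel⟩

theorem stageThree_check20 : stageThree.check
    (seqF uF0 (seqF stageThree.uF1 stageThree.uF2)) stageThree.vF0 = true := by
  decide +kernel

theorem stageThree_check11 : stageThree.check
    (seqF uF0 stageThree.uF1) (seqF stageThree.vF0 stageThree.vF1) = true := by
  decide +kernel

theorem stageThree_check02 : stageThree.checkFlip
    (seqF stageThree.vF0 (seqF stageThree.vF1 stageThree.vF2)) uF0 = true := by
  decide +kernel

theorem LRel.bound_three (H : LRel n a D2 D3 g h d e1 e2) : n < 3 * 10 ^ 55 := by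
  by_contra! hcon
  have hX : n ≤ 3 * 10 ^ 82 := H.bound_two.le
  have hn : stageThree.NA < n := lt_of_lt_of_le (by decide +kernel) hcon
  have h1 : D3 ≤ 444 ∨ h ≤ 444 :=
    (stageThree_okt.gaps_11 H hX hn stageThree_check11).imp id fun hg => hg.trans (by decide +kernel)
  have h2 : D2 ≤ 444 := stageThree_okt.gaps_02 H hX hn stageThree_check02
  have h3 : g ≤ 444 :=
    (stageThree_okt.gaps_20 H hX hn stageThree_check20).trans (by decide +kernel)
  have hX' : n < 12 * 10 ^ 55 := H.chain_two h1 h2 h3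
      (show StepOK 237 (3 * 10 ^ 82) (12 * 10 ^ 55) (444) (6190 * 10 ^ 25) by decide +kernel)
      (show StepOK 237 (3 * 10 ^ 82) (12 * 10 ^ 55) (6190 * 10 ^ 25) (8566 * 10 ^ 51) by decide +kernel) hX
  exact absurd hcon (not_le.2 (H.chain_two h1 h2 h3
      (show StepOK 175 (12 * 10 ^ 55) (3 * 10 ^ 55) (444) (2492 * 10 ^ 25) by decide +kernel)
      (show StepOK 175 (12 * 10 ^ 55) (3 * 10 ^ 55) (2492 * 10 ^ 25) (1389 * 10 ^ 51) by decide +kernel) hX'.le))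

end

end

/-! ### Reduction to `15 * 10 ^ 28` -/

section

set_option maxRecDepth 100000
set_option exponentiation.threshold 3000

open Stage

section
variable {n a D2 D3 g h : ℕ} {d e1 e2 : ℤ}

/-- Reduction data for `n ≤ 3 * 10 ^ 55`. -/
def stageFour : Stage where
  p := 228
  M := 8192
  X := 3 * 10 ^ 55
  q1 := 641283052569398535680497033354710861674240770300327584172313
  m1 := 280893442836720080317883079728271658358456662244189046126813
  c1 := 1224151641242293935317837762766417248951577582105847985344731479091
  q2 := 9358621668122119007239065033056038531887138849816961693615138
  m2 := 4099243617982043668006098803737336795692509570944223043258515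
  c2 := 17864766625120812778959083271670840166691139933985159132712664283699
  q3 := 9999904720691517542919562066410749393561379620117289277787451
  m3 := 4380137060818763748323981883465608454050966233188412089385328
  c3 := 19088918266363106714276921034437257415642717516091007118057395762789
  T := 16144580168218271759034174917532906711852539982350893653341498575504188
  r := 266594614002936697961859875704164275499065616185460052949687417086237
  l1 := 207575122227346123059635730501833630881114665363521097461860926099057
  l3 := 473896459365896647572884223270800805160425160842028035460433398656677
  b1 := 1469816884038087439306345889437332245592731069461942594869559252380570
  b2 := 1768812260364198803902809272450007257249874705552958628929243482415443
  kn := 329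
  kn3 := 144
  NX := 322
  NH := 141
  NA := 340

theorem stageFour_ok : stageFour.OK :=
  ⟨by decide +kernel, by decide +kernel, by decide +kernel, by decide +kernel, by decide +kernel, by decide +kernel,
    by decide +kernel, by decide +kernel, by decide +kernel, by decide +kernel, by decide +kernel, by decide +kernel,
    by decide +kernel, by decide +kernel, by decide +kernel, by decide +kernel, by decide +kernel, by decide +kernel,
    by decide +kernel, by decide +kernel, by decide +kernel, by decide +kernel⟩

theorem stageFour_okt : stageFour.OKT := ⟨stageFour_ok, by decide +kernel, by decide +kernel⟩

theorem stageFour_check21 : stageFour.check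
    (seqF uF0 (seqF stageFour.uF1 stageFour.uF2)) (seqF stageFour.vF0 stageFour.vF1) = true := by
  decide +kernel

theorem stageFour_check12 : stageFour.checkFlip
    (seqF stageFour.vF0 (seqF stageFour.vF1 stageFour.vF2)) (seqF uF0 stageFour.uF1) = true := by
  decide +kernel

theorem LRel.bound_four (H : LRel n a D2 D3 g h d e1 e2) : n < 15 * 10 ^ 28 := by
  by_contra! hcon
  have hX : n ≤ 3 * 10 ^ 55 := H.bound_three.le
  have hn : stageFour.NA < n := lt_of_lt_of_le (by decide +kernel) hcon
  have h1 : D3 ≤ 322 := stageFour_okt.gaps_12 H hX hn stageFour_check12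
  have h2 : h ≤ 322 :=
    (stageFour_okt.gaps_21 H hX hn stageFour_check21).trans (by decide +kernel)
  have hX' : n < 4 * 10 ^ 29 := H.chain_one h1 h2
      (show StepOK 174 (3 * 10 ^ 55) (4 * 10 ^ 29) (322) (1783 * 10 ^ 25) by decide +kernel) hX
  exact absurd hcon (not_le.2 (H.chain_one h1 h2
      (show StepOK 113 (4 * 10 ^ 29) (15 * 10 ^ 28) (322) (4882 * 10 ^ 24) by decide +kernel) hX'.le))

end

end

/-! ### Reduction to `260` -/

section

set_option maxRecDepth 100000
set_option exponentiation.threshold 3000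

open Stage

section
variable {n a D2 D3 g h : ℕ} {d e1 e2 : ℤ}

/-- Reduction data for `n ≤ 15 * 10 ^ 28`, used to bound the gaps. -/
def stageFive : Stage where
  p := 139
  M := 8192
  X := 15 * 10 ^ 28
  q1 := 101142191489035988399613431000209
  m1 := 44302088242588675892146038625710
  c1 := 193071342231902986204723411204314460769
  q2 := 10824616111161716431853991038324867
  m2 := 4741375395260423320746180710658041
  c2 := 20663218098785474053684762659120140338903
  q3 := 10925758302650752420253604469325076
  m3 := 4785677483503011996638326749283751
  c3 := 20856289441017377039889486070324454799672
  T := 32361117339437373614497852111580506761956352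
  r := 430706828348217084243428085522457258205316
  l1 := 335355696786690930497723608297961486031460
  l3 := 765621022548815191251956090184644247793136
  b1 := 2374617247030092994572770470270780274073839
  b2 := 2857670330115944220967280074651768658123511
  kn := 201
  kn3 := 88
  NX := 193
  NH := 85
  NA := 210

theorem stageFive_ok : stageFive.OK :=
  ⟨by decide +kernel, by decide +kernel, by decide +kernel, by decide +kernel, by decide +kernel, by decide +kernel,
    by decide +kernel, by decide +kernel, by decide +kernel, by decide +kernel, by decide +kernel, by decide +kernel,
    by decide +kernel, by decide +kernel, by decide +kernel, by decide +kernel, by decide +kernel, by decide +kernel,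
    by decide +kernel, by decide +kernel, by decide +kernel, by decide +kernel⟩

theorem stageFive_okt : stageFive.OKT := ⟨stageFive_ok, by decide +kernel, by decide +kernel⟩

theorem stageFive_check21 : stageFive.check
    (seqF uF0 (seqF stageFive.uF1 stageFive.uF2)) (seqF stageFive.vF0 stageFive.vF1) = true := by
  decide +kernel

theorem stageFive_check12 : stageFive.checkFlip
    (seqF stageFive.vF0 (seqF stageFive.vF1 stageFive.vF2)) (seqF uF0 stageFive.uF1) = true := by
  decide +kernel

/-- Reduction data for `n ≤ 15 * 10 ^ 28` at a higher precision, used once the gaps are bounded. -/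
def stageSix : Stage where
  p := 164
  M := 65536
  X := 15 * 10 ^ 28
  q1 := 32676132716463221272361199976975019
  m1 := 14312730362266447314022834209225543
  c1 := 499006375846561825067709878398152399505975
  q2 := 45480420656694984453998913182770914121
  m2 := 19921237414174189558352567800848840415
  c2 := 694544243677895090135200939866333249930774780
  q3 := 59906799183468769169862145870664064955147
  m3 := 26240249145133176631767740847380551036029
  c3 := 914853511231122032158115136803603052140081280066
  T := 691267089577532162729533166539045358886724768232199
  r := 14452122983745922474484379142553476543356720019135
  l1 := 11252669923641639332402592969428584421661606617907
  l3 := 25689978538884686015430755495086512856765953224091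
  b1 := 79678932941498457340068395796308918293352010210419
  b2 := 95887504770293002478239573489857695118736600600282
  kn := 237
  kn3 := 104
  NX := 193
  NH := 85
  NA := 247

theorem stageSix_ok : stageSix.OK :=
  ⟨by decide +kernel, by decide +kernel, by decide +kernel, by decide +kernel, by decide +kernel, by decide +kernel,
    by decide +kernel, by decide +kernel, by decide +kernel, by decide +kernel, by decide +kernel, by decide +kernel,
    by decide +kernel, by decide +kernel, by decide +kernel, by decide +kernel, by decide +kernel, by decide +kernel,
    by decide +kernel, by decide +kernel, by decide +kernel, by decide +kernel⟩

theorem stageSix_fam1 : stageSix.check stageSix.uF2 (stageSix.vFam 1 true 1 false 1) = true := by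
  decide +kernel

theorem stageSix_fam2 : stageSix.check stageSix.uF2 (stageSix.vFam 1 true 1 false 2) = true := by
  decide +kernel

theorem stageSix_fam3 : stageSix.check stageSix.uF2 (stageSix.vFam 1 false 1 true 2) = true := by
  decide +kernel

theorem stageSix_fam4 : stageSix.check stageSix.uF2 (stageSix.vFam 1 false 1 true 1) = true := by
  decide +kernel

theorem stageSix_fam5 : stageSix.check stageSix.uF2 (stageSix.vFam 2 true 2 false 1) = true := by
  decide +kernel

theorem stageSix_fam6 : stageSix.check stageSix.uF2 (stageSix.vFam 2 true 2 false 2) = true := by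
  decide +kernel

theorem stageSix_fam7 : stageSix.check stageSix.uF2 (stageSix.vFam 2 true 1 true 1) = true := by
  decide +kernel

theorem stageSix_fam8 : stageSix.check stageSix.uF2 (stageSix.vFam 2 true 1 false 1) = true := by
  decide +kernel

theorem stageSix_check : stageSix.famCheck stageSix.uF2 = true := by
  unfold famCheck
  rw [stageSix_fam1, stageSix_fam2, stageSix_fam3, stageSix_fam4, stageSix_fam5, stageSix_fam6,
    stageSix_fam7, stageSix_fam8]
  rfl

theorem LRel.bound_six (H : LRel n a D2 D3 g h d e1 e2) : n ≤ 260 := by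
  by_contra! hcon
  have hX : n ≤ 15 * 10 ^ 28 := H.bound_four.le
  have hn : stageFive.NA < n := lt_of_le_of_lt (by decide +kernel) hcon
  have hn' : stageSix.NA < n := lt_of_le_of_lt (by decide +kernel) hcon
  have h1 : D3 ≤ stageSix.NX := stageFive_okt.gaps_12 H hX hn stageFive_check12
  have h2 : h ≤ stageSix.NH := stageFive_okt.gaps_21 H hX hn stageFive_check21
  exact stageSix_ok.absurd_fams H hX hn' stageSix.uF2_fold stageSix_check
    (stageSix_ok.u_two H.hD2 (stageSix_ok.lt_of_le H hn' h1) h1) h2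

end

end

/-! ### Reduction to `82` -/

section

set_option maxRecDepth 100000
set_option exponentiation.threshold 3000

open Stage

section
variable {n a D2 D3 g h : ℕ} {d e1 e2 : ℤ}

/-- Reduction data for `n ≤ 260`. -/
def stageSeven : Stage where
  p := 52
  M := 8192
  X := 260
  q1 := 3420680
  m1 := 1498319
  c1 := 6529770308738
  q2 := 36611679
  m2 := 16036570
  c2 := 69888400694381
  q3 := 113255717
  m3 := 49608029
  c3 := 216194972391882
  T := 155009303877772437
  r := 2783377641436327
  l1 := 2167185396024706
  l3 := 4947709893870346
  b1 := 15345604288885441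
  b2 := 18467261672968121
  kn := 75
  kn3 := 33
  NX := 68
  NH := 30
  NA := 82

theorem stageSeven_ok : stageSeven.OK :=
  ⟨by decide +kernel, by decide +kernel, by decide +kernel, by decide +kernel, by decide +kernel, by decide +kernel,
    by decide +kernel, by decide +kernel, by decide +kernel, by decide +kernel, by decide +kernel, by decide +kernel,
    by decide +kernel, by decide +kernel, by decide +kernel, by decide +kernel, by decide +kernel, by decide +kernel,
    by decide +kernel, by decide +kernel, by decide +kernel, by decide +kernel⟩

theorem stageSeven_okt : stageSeven.OKT := ⟨stageSeven_ok, by decide +kernel, by decide +kernel⟩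

theorem stageSeven_check21 : stageSeven.check
    (seqF uF0 (seqF stageSeven.uF1 stageSeven.uF2)) (seqF stageSeven.vF0 stageSeven.vF1) = true := by
  decide +kernel

theorem stageSeven_check22 :
    stageSeven.famCheck (seqF uF0 (seqF stageSeven.uF1 stageSeven.uF2)) = true := by
  decide +kernel

theorem LRel.bound_seven (H : LRel n a D2 D3 g h d e1 e2) : n ≤ 82 := by
  by_contra! hn
  have h2 : h ≤ stageSeven.NH := stageSeven_okt.gaps_21 H H.bound_six hn stageSeven_check21
  exact stageSeven_ok.absurd_fams H H.bound_six hn stageSeven.u012_fold stageSeven_check22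
    (stageSeven_okt.u_le_two H hn) h2

end

end

/-! ### Enumeration of the small indices -/

/-- Reads base-`3` digits of `N` from the right, `p` being the digit read last, and fails as soon as
the digit has changed more than `c` times. When the fuel `f` runs out the answer is `true`. -/
def runOk (f : ℕ) : ℕ → ℕ → ℕ → Bool :=
  Nat.rec (fun _ _ _ => true) (fun _ ih c p N =>
    Bool.rec
      (Nat.rec (Nat.beq N 0) (fun c' _ => ih c' (Nat.mod N 3) (Nat.div N 3)) c)
      (ih c p (Nat.div N 3))
      (Nat.beq (Nat.mod N 3) p)) f

theorem runOk_of_beq {f c p N : ℕ} (h : (N % 3).beq p = true) :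
    runOk (f + 1) c p N = runOk f c p (N / 3) := by
  change (N.mod 3).beq p = true at h
  simp only [runOk, h]
  rfl

theorem runOk_zero_of_beq {f p N : ℕ} (h : (N % 3).beq p = false) :
    runOk (f + 1) 0 p N = N.beq 0 := by
  change (N.mod 3).beq p = false at h
  simp only [runOk, h]
  rfl

theorem runOk_succ_of_beq {f c p N : ℕ} (h : (N % 3).beq p = false) :
    runOk (f + 1) (c + 1) p N = runOk f c (N % 3) (N / 3) := by
  change (N.mod 3).beq p = false at h
  simp only [runOk, h]
  rfl

theorem runOk_null (f : ℕ) : ∀ c p, runOk f c p 0 = true := by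
  induction f with
  | zero => intros; rfl
  | succ f ih =>
    intro c p
    cases h : (0 % 3).beq p
    · cases c with
      | zero => rw [runOk_zero_of_beq h]; rfl
      | succ c => rw [runOk_succ_of_beq h]; exact ih _ _
    · rw [runOk_of_beq h]; exact ih _ _

theorem runOk_mono (f : ℕ) : ∀ {c p N : ℕ}, runOk f c p N = true → runOk f (c + 1) p N = true := by
  induction f with
  | zero => intros; rfl
  | succ f ih =>
    intro c p N h
    cases h1 : (N % 3).beq p
    · rw [runOk_succ_of_beq h1]
      cases c with
      | zero =>
        rw [runOk_zero_of_beq h1] at h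
        rw [Nat.eq_of_beq_eq_true h]; exact runOk_null _ _ _
      | succ c => rw [runOk_succ_of_beq h1] at h; exact ih h
    · rw [runOk_of_beq h1] at h ⊢; exact ih h

/-- One more change of digit pays for an arbitrary choice of the digit read last. -/
theorem runOk_switch (f : ℕ) {c e N : ℕ} (p : ℕ) (h : runOk f c e N = true) :
    runOk f (c + 1) p N = true := by
  cases f with
  | zero => rfl
  | succ f =>
    -- Both hypotheses and goal lead to the state with last digit `N % 3`.
    have key : runOk f c (N % 3) (N / 3) = true := by
      cases h2 : (N % 3).beq e
      · cases c with
        | zero =>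
          rw [runOk_zero_of_beq h2] at h
          rw [Nat.eq_of_beq_eq_true h]; exact runOk_null _ _ _
        | succ c => rw [runOk_succ_of_beq h2] at h; exact runOk_mono f h
      · rw [runOk_of_beq h2] at h
        rwa [Nat.eq_of_beq_eq_true h2]
    cases h1 : (N % 3).beq p
    · rwa [runOk_succ_of_beq h1]
    · rw [runOk_of_beq h1, ← Nat.eq_of_beq_eq_true h1]
      exact runOk_mono f key

theorem runOk_block {c e M : ℕ} (he : e < 3) (h : ∀ f, runOk f c e M = true) (l : ℕ) :
    ∀ f, runOk f c e (M * 3 ^ l + e * ((3 ^ l - 1) / (3 - 1))) = true := by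
  induction l with
  | zero => simpa using h
  | succ l ih =>
    intro f
    have hodd : ∃ r, 3 ^ l = 2 * r + 1 := by
      have : Odd (3 ^ l) := Odd.pow (by decide)
      exact this
    obtain ⟨r, hr⟩ := hodd
    have e1 : (3 ^ l - 1) / (3 - 1) = r := by omega
    have e2 : (3 ^ (l + 1) - 1) / (3 - 1) = 3 * r + 1 := by rw [pow_succ]; omega
    rw [e1] at ih
    have e3 : M * 3 ^ (l + 1) + e * ((3 ^ (l + 1) - 1) / (3 - 1)) = 3 * (M * 3 ^ l + e * r) + e := by
      rw [e2, pow_succ]; ring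
    rw [e3]
    generalize M * 3 ^ l + e * r = K at ih
    cases f with
    | zero => rfl
    | succ f =>
      have h1 : (3 * K + e) % 3 = e := by omega
      have h2 : (3 * K + e) / 3 = K := by omega
      rw [runOk_of_beq (by rw [h1]; simp), h2]
      exact ih f

theorem IsConcatThreeRepdigits.runOk {N : ℕ} (h : IsConcatThreeRepdigits 3 N) (f : ℕ) :
    runOk f 3 3 N = true := by
  obtain ⟨d1, d2, d3, l1, l2, l3, -, h1, h2, h3, -, -, -, rfl⟩ := h
  have z : ∀ f, _root_.runOk f 0 d1 0 = true := fun f => runOk_null f 0 d1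
  have a1 := runOk_block h1 z l1
  have a2 := runOk_block h2 (fun f => runOk_switch f d2 (a1 f)) l2
  have a3 := runOk_block h3 (fun f => runOk_switch f d3 (a2 f)) l3
  have a4 := runOk_switch f 3 (a3 f)
  convert a4 using 2
  rw [pow_add]; ring

/-- Truncation to the last `g` digits does not increase the number of changes. -/
theorem runOk_trunc (g : ℕ) : ∀ {f c p N : ℕ}, g ≤ f → runOk f c p N = true →
    runOk g c p (N % 3 ^ g) = true := by
  induction g with
  | zero => intros; rfl
  | succ g ih =>
    intro f c p N hf h
    obtain ⟨f, rfl⟩ : ∃ f', f = f' + 1 := ⟨f - 1, by omega⟩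
    have e1 : N % 3 ^ (g + 1) % 3 = N % 3 := Nat.mod_mod_of_dvd _ (Dvd.intro_left _ rfl)
    have e2 : N % 3 ^ (g + 1) / 3 = N / 3 % 3 ^ g := by
      rw [pow_succ', Nat.mod_mul_right_div_self]
    cases h1 : (N % 3).beq p
    · cases c with
      | zero =>
        rw [runOk_zero_of_beq h1] at h
        rw [Nat.eq_of_beq_eq_true h, Nat.zero_mod]; exact runOk_null _ _ _
      | succ c =>
        rw [runOk_succ_of_beq h1] at h
        rw [runOk_succ_of_beq (by rw [e1]; exact h1), e1, e2]
        exact ih (by omega) h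
    · rw [runOk_of_beq h1] at h
      rw [runOk_of_beq (by rw [e1]; exact h1), e2]
      exact ih (by omega) h

/-- The residues modulo `3 ^ 7 = 2187` whose digits, without leading zeros, form at most three runs,
as a bitmap. -/
def runMask : ℕ :=
  22504616332551813841104356181764019046754508616288573064585664767114973070048211479492852874026609057110532877458754146518208710284489432235324005177221347753892049095030993347372086456912972395145386244247191752750423155588048225426853081792181727927990670955463388622087977650143020927044423137513615607331391452450334206977679657610169709425468061837316851977196141036550500069308969860465567890722906340111944635087064959805630212505078021436228873413736758957294661726680739038023254896296334862331892995899119101555272958933336161790379244509135474737972305871891823897137808847191628312979764412644186006014665450902979607815294536544480416288536002559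

/-- The last seven digits of `s` form more than three runs, even after dropping leading zeros. -/
def maskOut (s : ℕ) : Bool :=
  Nat.beq (Nat.land (Nat.shiftRight runMask (Nat.mod s 2187)) 1) 0

/-- `runMask` contains `k + r`, for every `r < n` such that `runOk` accepts the last seven digits of
`k + r`. -/
def maskLoop (k n : ℕ) : Bool :=
  Nat.rec true (fun r ih =>
    Bool.rec (Bool.rec ih false (maskOut (Nat.add k r))) ih (!runOk 7 3 3 (Nat.add k r))) n

theorem maskLoop_sound (k : ℕ) : ∀ n, maskLoop k n = true → ∀ r < n,
    runOk 7 3 3 (k + r) = true → maskOut (k + r) = false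
  | 0, _, r, hr, _ => absurd hr (Nat.not_lt_zero r)
  | n + 1, h, r, hr, hrun => by
    change (Bool.rec (Bool.rec (maskLoop k n) false (maskOut (k + n))) (maskLoop k n)
      (!runOk 7 3 3 (k + n)) : Bool) = true at h
    rcases Nat.lt_succ_iff_lt_or_eq.1 hr with hlt | rfl
    · refine maskLoop_sound k n ?_ r hlt hrun
      revert h
      cases maskOut (k + n) <;> cases runOk 7 3 3 (k + n) <;> simp
    · revert h
      rw [hrun]
      cases maskOut (k + r) <;> simp

/-- The range `r < 2187` is cut into `27` pieces to keep the recursion shallow. -/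
theorem runMask_check : ∀ q < 27, maskLoop (81 * q) 81 = true := by decide +kernel

theorem maskOut_of_runOk {s : ℕ} (h : runOk 60 3 3 s = true) : maskOut s = false := by
  have hlt : s % 3 ^ 7 < 2187 := Nat.mod_lt _ (by norm_num)
  have := maskLoop_sound _ 81 (runMask_check (s % 3 ^ 7 / 81) (by omega)) (s % 3 ^ 7 % 81) (by omega)
  rw [Nat.div_add_mod] at this
  replace this := this (runOk_trunc 7 (by norm_num) h)
  rw [maskOut] at this ⊢
  have e : Nat.mod (s % 3 ^ 7) 2187 = Nat.mod s 2187 := Nat.mod_mod s 2187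
  rwa [e] at this

/-- The Fibonacci numbers `F_n, …, F_0` in this order. -/
def fibDown : ℕ → List ℕ
  | 0 => [Nat.fib 0]
  | n + 1 => Nat.fib (n + 1) :: fibDown n

/-- `s` is at most `196829` or its base-`3` expansion has more than three runs of digits. The last
seven digits, which decide most cases, are looked up first. -/
def sumOk (s : ℕ) : Bool := Bool.rec (s.ble 196829 || !runOk 60 3 3 s) true (maskOut s)

/-- `sumOk` holds for `s + z`, for all members `z` of the list. -/
def check1 (s : ℕ) (l : List ℕ) : Bool :=
  List.rec true (fun z _ ih => Bool.rec false ih (sumOk (Nat.add s z))) l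

theorem check1_cons (s z : ℕ) (t : List ℕ) :
    check1 s (z :: t) = (sumOk (s + z) && check1 s t) := by
  change (Bool.rec false (check1 s t) (sumOk (s + z)) : Bool) = _
  cases sumOk (s + z) <;> rfl

/-- `sumOk` holds for all sums `x + y + z` where `y`, `z` occur in this order in the list, repetitions
allowed. -/
def check2 (x : ℕ) : List ℕ → Bool
  | [] => true
  | y :: t => check1 (x + y) (y :: t) && check2 x t

/-- `sumOk` holds for all sums `x + y + z` where `x`, `y`, `z` occur in this order in the list,
repetitions allowed. -/
def check3 : List ℕ → Bool
  | [] => true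
  | x :: t => check2 x (x :: t) && check3 t

theorem check1_sound (s : ℕ) : ∀ n, check1 s (fibDown n) = true → ∀ k ≤ n, sumOk (s + Nat.fib k) = true
  | 0, h, k, hk => by
    obtain rfl : k = 0 := by omega
    rw [fibDown, check1_cons, Bool.and_eq_true] at h
    exact h.1
  | n + 1, h, k, hk => by
    rw [fibDown, check1_cons, Bool.and_eq_true] at h
    rcases Nat.lt_or_ge n k with hk' | hk'
    · obtain rfl : k = n + 1 := by omega
      exact h.1
    · exact check1_sound s n h.2 k hk'

theorem check2_sound (x : ℕ) : ∀ n, check2 x (fibDown n) = true →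
    ∀ j ≤ n, ∀ k ≤ j, sumOk (x + Nat.fib j + Nat.fib k) = true
  | 0, h, j, hj, k, hk => by
    obtain rfl : j = 0 := by omega
    refine check1_sound _ 0 ?_ k hk
    rw [fibDown, check2, Bool.and_eq_true] at h
    exact h.1
  | n + 1, h, j, hj, k, hk => by
    rw [fibDown, check2, Bool.and_eq_true] at h
    rcases Nat.lt_or_ge n j with hj' | hj'
    · obtain rfl : j = n + 1 := by omega
      exact check1_sound _ (n + 1) h.1 k hk
    · exact check2_sound x n h.2 j hj' k hk

theorem check3_sound : ∀ n, check3 (fibDown n) = true →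
    ∀ i ≤ n, ∀ j ≤ i, ∀ k ≤ j, sumOk (Nat.fib i + Nat.fib j + Nat.fib k) = true
  | 0, h, i, hi, j, hj, k, hk => by
    obtain rfl : i = 0 := by omega
    refine check2_sound _ 0 ?_ j hj k hk
    rw [fibDown, check3, Bool.and_eq_true] at h
    exact h.1
  | n + 1, h, i, hi, j, hj, k, hk => by
    rw [fibDown, check3, Bool.and_eq_true] at h
    rcases Nat.lt_or_ge n i with hi' | hi'
    · obtain rfl : i = n + 1 := by omega
      exact check2_sound _ (n + 1) h.1 j hj k hk
    · exact check3_sound n h.2 i hi' j hj k hk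

/-- The list `F_82, …, F_0` written out. -/
def fibTable : List ℕ :=
  [61305790721611591, 37889062373143906, 23416728348467685, 14472334024676221, 8944394323791464,
   5527939700884757, 3416454622906707, 2111485077978050, 1304969544928657, 806515533049393,
   498454011879264, 308061521170129, 190392490709135, 117669030460994, 72723460248141,
   44945570212853, 27777890035288, 17167680177565, 10610209857723, 6557470319842, 4052739537881,
   2504730781961, 1548008755920, 956722026041, 591286729879, 365435296162, 225851433717,
   139583862445, 86267571272, 53316291173, 32951280099, 20365011074, 12586269025, 7778742049,
   4807526976, 2971215073, 1836311903, 1134903170, 701408733, 433494437, 267914296, 165580141,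
   102334155, 63245986, 39088169, 24157817, 14930352, 9227465, 5702887, 3524578, 2178309,
   1346269, 832040, 514229, 317811, 196418, 121393, 75025, 46368, 28657, 17711, 10946, 6765,
   4181, 2584, 1597, 987, 610, 377, 233, 144, 89, 55, 34, 21, 13, 8, 5, 3, 2, 1, 1, 0]
theorem fibTable_eq : fibDown 82 = fibTable := by decide +kernel

theorem fibTable_check : check3 fibTable = true := by decide +kernel

/-- There is no solution exceeding `196829` with all indices at most `82`. -/
theorem small_enum {i j k : ℕ} (hi : i ≤ 82) (hj : j ≤ i) (hk : k ≤ j)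
    (hC : IsConcatThreeRepdigits 3 (Nat.fib i + Nat.fib j + Nat.fib k)) :
    Nat.fib i + Nat.fib j + Nat.fib k ≤ 196829 := by
  have h := check3_sound 82 (fibTable_eq ▸ fibTable_check) i hi j hj k hk
  rw [sumOk, maskOut_of_runOk (hC.runOk 60)] at h
  simp only [hC.runOk 60, Bool.not_true, Bool.or_false] at h
  exact Nat.le_of_ble_eq_true h

theorem stmt_14 :
    (196829 = Nat.fib 27 + Nat.fib 14 + Nat.fib 9) ∧
    (196829 = 1 * ((3 ^ 1 - 1) / (3 - 1)) * 3 ^ (2 + 9) + 0 * ((3 ^ 2 - 1) / (3 - 1)) * 3 ^ 9 + 2 * ((3 ^ 9 - 1) / (3 - 1))) ∧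
    IsConcatThreeRepdigits 3 196829 ∧
    (∀ N n1 n2 n3 : ℕ, 0 < N → n3 ≤ n2 → n2 ≤ n1 →
      N = Nat.fib n1 + Nat.fib n2 + Nat.fib n3 →
      IsConcatThreeRepdigits 3 N → N ≤ 196829) := by
  refine ⟨by decide +kernel, by norm_num, ⟨1, 0, 2, 1, 2, 9, by norm_num⟩, ?_⟩
  intro N n1 n2 n3 _ h32 h21 hN hC
  by_contra! hbig
  obtain ⟨m1, m2, m3, k32, k21, hm, a, D2, D3, g, h, d, e1, e2, H⟩ := exists_LRel hbig h32 h21 hN hC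
  subst hm
  exact absurd (small_enum H.bound_seven k21 k32 hC) (by omega)
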